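/- For each d ≥ 1 and each ρ > 0 there exist δ₀ > 0 and c > 0 such that the inequality T(E) ≤ T(E⋆) − c · dist(E, O(E⋆))² holds for each ρ-strictly admissible ordered triple E = (E₁,E₂,E₃) of Lebesgue measurable subsets of ℝ^d with finite measures satisfying dist(E, O(E⋆)) ≤ δ₀ · max_{1≤j≤3} |E_j|. -/

import Mathlib

/-! The proof is a compactness argument around a second order expansion of `T` at triples of balls.
If the inequality failed for all constants, there would be triples `E n` which, after an affine
change of variables (`RS.normalize`), have the volumes of balls `B n j` of radii `r n j` with
`r n 0 = 1`, with `r n` converging to the sides `rl` of a nondegenerate triangle, lie at distance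
`δ n → 0` from the orbit, satisfy `|E n j Δ B n j| = O(δ n)`, and have defect
`T(B n) - T(E n) = o(δ n ^ 2)`. (The distance is positive by `RS.dist_pos`, as the inequality
trivially holds for triples in the closure of the orbit.)

*Expansion.* With `f_j = 1_{E_j} - 1_{B_j}` and `k_j` the overlap of the two other balls as a function
of the position, measured from its value on the sphere `∂B_j`, one has (`RS.defect_eq`)
`T(B) - T(E) = ∑ ∫ |k_j| |f_j| - ∑ T(f_i, f_j, 1_{B_k}) - T(f_0, f_1, f_2)`.
Since `|k_j|` vanishes to first order on the sphere only, `f_j` concentrates there, and its radial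
integrals, divided by `δ n`, are bounded in `L²` of three copies of the unit sphere. By
`RS.Setup.weak_limit` a subsequence converges weakly to some `G` with `‖G‖² ≤ B(G, G)`, where `B` is
the compact form given by an explicit kernel (the second sum), and `G = 0` forces
`|E_j Δ B_j| = o(δ n)`.

*Coercivity.* The form `‖x‖² - B(x, x)` is positive on the orthogonal complement of the span of the
constants on each sphere and of the infinitesimal symmetries, i.e. the boundary variations of the
balls under linear maps and translations with `v₀ + v₁ + v₂ = 0` (`RS.coercive`). Otherwise there is
a maximiser of the Rayleigh quotient, which is a continuous eigenfunction with eigenvalue at least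
`1`. Consider its part which is odd under the reflection in some hyperplane. Projecting hemispheres
orthogonally to that hyperplane turns the form into
`∬ (c₀(x) + c₁(y) + c₂(-x-y))² dx dy` over an explicit open set (`RS.odd_identity`). As this is `≤ 0`,
the `c_j` solve an additive functional equation, so they are affine with a common linear part
(`RS.odd_affine`), which means that the odd part is an infinitesimal symmetry (`RS.odd_null`), hence
is zero by orthogonality. So the eigenfunction is invariant under all reflections, therefore constant
on each sphere, and again orthogonality makes it vanish.

*Conclusion.* The volume constraints make `G` of mean zero on each sphere. Moving `E n` by
volume-preserving linear maps close to `1 + δ n • A` (`RS.unimod`) and by translations of size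
`O(δ n)` subtracts an arbitrary infinitesimal symmetry from `G` (`RS.Setup.moved`). Choosing the
component of `G` along the symmetries makes the new weak limit orthogonal to all null directions, so
it is zero by coercivity, and the moved triple is at distance `o(δ n)` from the balls. This
contradicts the choice of `δ n` as the distance to the orbit (`RS.Setup.contra`).
-/


open MeasureTheory Set

noncomputable section

/-- `ℝ^d` with Lebesgue measure. -/
abbrev Vec (d : ℕ) := EuclideanSpace ℝ (Fin d)

/-- Indicator function of a set, with value `1 : ℝ`. -/
def ind {d : ℕ} (E : Set (Vec d)) : Vec d → ℝ := E.indicator 1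

/-- Convolution of two functions on `ℝ^d`. -/
def conv {d : ℕ} (f g : Vec d → ℝ) (x : Vec d) : ℝ := ∫ y, f y * g (x - y)

/-- `E⋆`: the closed ball centered at the origin with the same measure as `E`. -/
def ballStar {d : ℕ} (E : Set (Vec d)) : Set (Vec d) :=
  Metric.closedBall 0
    (((volume E).toReal / (volume (Metric.closedBall (0 : Vec d) 1)).toReal) ^ ((1 : ℝ) / d))

/-- A triple of positive reals is `ρ`-strictly admissible. -/
def RhoStrictlyAdmissible (ρ : ℝ) (r : Fin 3 → ℝ) : Prop :=
  (∀ j, 0 < r j) ∧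
  (∀ i j k : Fin 3, ({i, j, k} : Set (Fin 3)) = Set.univ → r k ≤ (1 - ρ) * (r i + r j)) ∧
  (∀ i j, ρ * r i ≤ r j)


/-- The trilinear form `T(E₁,E₂,E₃) = ∫∫ 1_{E₁}(x) 1_{E₂}(y) 1_{E₃}(−x−y) dx dy`. -/
def Tfun {d : ℕ} (E : Fin 3 → Set (Vec d)) : ℝ :=
  ∫ p : Vec d × Vec d, ind (E 0) p.1 * ind (E 1) p.2 * ind (E 2) (-p.1 - p.2)

/-- `dist(E, O(F))`: infimum over measure-preserving linear maps `ψ` and translations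
`v` with `v₁ + v₂ + v₃ = 0` of the maximal measure of the symmetric differences
`E_j Δ (ψ(F_j) + v_j)`. -/
def tripleDist {d : ℕ} (E F : Fin 3 → Set (Vec d)) : ℝ :=
  sInf { r : ℝ | ∃ (ψ : Vec d ≃ₗ[ℝ] Vec d) (v : Fin 3 → Vec d),
    v 0 + v 1 + v 2 = 0 ∧ MeasurePreserving (⇑ψ) volume volume ∧
    r = max (volume (symmDiff (E 0) ((fun y => ψ y + v 0) '' F 0))).toReal
        (max (volume (symmDiff (E 1) ((fun y => ψ y + v 1) '' F 1))).toReal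
             (volume (symmDiff (E 2) ((fun y => ψ y + v 2) '' F 2))).toReal) }

namespace RS
open Filter Topology Metric
open scoped ENNReal

/-- The unit sphere of `ℝ^(m+1)`. -/
abbrev Sph (m : ℕ) := Metric.sphere (0 : Vec (m + 1)) 1

/-- Surface measure on the unit sphere of `ℝ^(m+1)`. -/
abbrev sig (m : ℕ) : Measure (Sph m) := (volume : Measure (Vec (m + 1))).toSphere

/-! ### Weak compactness, Rayleigh quotients and kernel operators -/

/-- `x n` converges weakly to `a` in a Hilbert space. -/
def WeakLim {X : Type*} [NormedAddCommGroup X] [InnerProductSpace ℝ X] (x : ℕ → X) (a : X) : Prop :=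
  ∀ y, Tendsto (fun n => inner ℝ (x n) y) atTop (𝓝 (inner ℝ a y))

lemma weak_seq_compact {X : Type*} [NormedAddCommGroup X] [InnerProductSpace ℝ X] [CompleteSpace X]
    [TopologicalSpace.SeparableSpace X] (x : ℕ → X) (C : ℝ) (h : ∀ n, ‖x n‖ ≤ C) :
    ∃ a : X, ∃ φ : ℕ → ℕ, StrictMono φ ∧ WeakLim (x ∘ φ) a := by
  have hc := WeakDual.isSeqCompact_closedBall ℝ X (0 : StrongDual ℝ X) C
  let u : ℕ → WeakDual ℝ X := fun n => StrongDual.toWeakDual (InnerProductSpace.toDual ℝ X (x n))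
  have hu : ∀ n, u n ∈ WeakDual.toStrongDual ⁻¹' Metric.closedBall (0 : StrongDual ℝ X) C := by
    intro n
    simp only [u, mem_preimage, mem_closedBall, dist_zero_right]
    refine le_trans (le_of_eq ?_) (h n)
    exact (InnerProductSpace.toDual ℝ X).norm_map (x n)
  obtain ⟨a, -, φ, hφ, hlim⟩ := hc hu
  refine ⟨(InnerProductSpace.toDual ℝ X).symm (WeakDual.toStrongDual a), φ, hφ, fun y => ?_⟩
  have h1 := ((WeakDual.eval_continuous (𝕜 := ℝ) y).tendsto a).comp hlim
  rw [InnerProductSpace.toDual_symm_apply]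
  exact h1

lemma WeakLim.norm_le {X : Type*} [NormedAddCommGroup X] [InnerProductSpace ℝ X]
    {x : ℕ → X} {a : X} (h : WeakLim x a) {C : ℝ} (hC : 0 ≤ C) (hx : ∀ᶠ n in atTop, ‖x n‖ ≤ C) :
    ‖a‖ ≤ C := by
  by_cases ha : ‖a‖ = 0
  · rw [ha]; exact hC
  have ha' : 0 < ‖a‖ := lt_of_le_of_ne (norm_nonneg _) (Ne.symm ha)
  have h1 : inner ℝ a a ≤ C * ‖a‖ := by
    refine le_of_tendsto (h a) ?_
    filter_upwards [hx] with n hn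
    exact (real_inner_le_norm _ _).trans (by gcongr)
  rw [real_inner_self_eq_norm_sq] at h1
  nlinarith

/-- If a weakly continuous quadratic form dominates the squared norm somewhere on a closed
subspace, it has an eigenvector there, with eigenvalue at least `1`. -/
lemma exists_eigenvector {X : Type*} [NormedAddCommGroup X] [InnerProductSpace ℝ X]
    [CompleteSpace X] [TopologicalSpace.SeparableSpace X]
    (B : LinearMap.BilinForm ℝ X) (hsym : ∀ x y, B x y = B y x) (CB : ℝ)
    (hB : ∀ x, B x x ≤ CB * ‖x‖ ^ 2)
    (hweak : ∀ (x : ℕ → X) (a : X) (C : ℝ), (∀ n, ‖x n‖ ≤ C) → WeakLim x a →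
      Tendsto (fun n => B (x n) (x n)) atTop (𝓝 (B a a)))
    (M : Submodule ℝ X) (hM : Mᗮᗮ = M) (x₀ : X) (hx₀ : x₀ ∈ M) (h0 : x₀ ≠ 0)
    (h1 : ‖x₀‖ ^ 2 ≤ B x₀ x₀) :
    ∃ x ∈ M, ‖x‖ = 1 ∧ ∃ μ : ℝ, 1 ≤ μ ∧ ∀ z ∈ M, B x z = μ * inner ℝ x z := by
  set T : Set ℝ := (fun x => B x x) '' {x | x ∈ M ∧ ‖x‖ ≤ 1} with hT
  have hbdd : BddAbove T := by
    refine ⟨max CB 0, ?_⟩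
    rintro _ ⟨x, ⟨-, hx⟩, rfl⟩
    have h2 : ‖x‖ ^ 2 ≤ 1 := by nlinarith [norm_nonneg x]
    have h3 := hB x
    have h4 : CB * ‖x‖ ^ 2 ≤ max CB 0 * ‖x‖ ^ 2 := by gcongr; exact le_max_left _ _
    have h5 : max CB 0 * ‖x‖ ^ 2 ≤ max CB 0 * 1 := by gcongr
    simp only; linarith
  have hx0n : 0 < ‖x₀‖ := norm_pos_iff.2 h0
  set S := sSup T with hS
  -- homogeneity turns the bound on the unit ball into a bound on all of `M`
  have hle : ∀ z ∈ M, B z z ≤ S * ‖z‖ ^ 2 := by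
    intro z hz
    by_cases hz0 : z = 0
    · simp [hz0]
    have hzn : 0 < ‖z‖ := norm_pos_iff.2 hz0
    have : B (‖z‖⁻¹ • z) (‖z‖⁻¹ • z) ≤ S := by
      refine le_csSup hbdd ⟨_, ⟨M.smul_mem _ hz, ?_⟩, rfl⟩
      rw [norm_smul, norm_inv, norm_norm, inv_mul_cancel₀ hzn.ne']
    simp only [map_smul, LinearMap.smul_apply, smul_eq_mul] at this
    have h2 : B z z = ‖z‖ ^ 2 * (‖z‖⁻¹ * (‖z‖⁻¹ * B z z)) := by field_simp
    rw [h2, mul_comm]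
    gcongr
  have hS1 : 1 ≤ S := by
    have h2 := h1.trans (hle x₀ hx₀)
    by_contra hlt
    push Not at hlt
    nlinarith [sq_pos_of_pos hx0n]
  have hne : T.Nonempty := ⟨_, ⟨0, ⟨M.zero_mem, by simp⟩, rfl⟩⟩
  obtain ⟨u, -, hu, huT⟩ := exists_seq_tendsto_sSup hne hbdd
  choose x hx hxu using huT
  obtain ⟨a, φ, hφ, hwl⟩ := weak_seq_compact x 1 (fun n => (hx n).2)
  have hBa : B a a = S := by
    have h2 := hweak _ a 1 (fun n => (hx (φ n)).2) hwl
    have h3 : Tendsto (fun n => B ((x ∘ φ) n) ((x ∘ φ) n)) atTop (𝓝 S) := by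
      have := hu.comp hφ.tendsto_atTop
      refine this.congr fun n => ?_
      exact (hxu (φ n)).symm
    exact tendsto_nhds_unique h2 h3
  have haM : a ∈ M := by
    rw [← hM, Submodule.mem_orthogonal']
    intro y hy
    have h2 : Tendsto (fun n => inner ℝ ((x ∘ φ) n) y) atTop (𝓝 0) := by
      refine tendsto_const_nhds.congr fun n => ?_
      exact ((Submodule.mem_orthogonal _ _).1 hy _ (hx (φ n)).1).symm
    exact tendsto_nhds_unique (hwl y) h2
  have ha1 : ‖a‖ ≤ 1 := hwl.norm_le zero_le_one (Eventually.of_forall fun n => (hx (φ n)).2)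
  have ha : ‖a‖ = 1 := by
    have h2 := hle a haM
    rw [hBa] at h2
    have : 1 ≤ ‖a‖ ^ 2 := by
      by_contra hlt
      push Not at hlt
      nlinarith
    nlinarith [norm_nonneg a]
  refine ⟨a, haM, ha, S, hS1, fun z hz => ?_⟩
  have key : ∀ t : ℝ, 0 ≤ t * (2 * (S * inner ℝ a z - B a z)) + t ^ 2 * (S * ‖z‖ ^ 2 - B z z) := by
    intro t
    have h2 := hle (a + t • z) (M.add_mem haM (M.smul_mem t hz))
    rw [norm_add_sq_real, norm_smul, inner_smul_right] at h2
    simp only [map_add, map_smul, LinearMap.add_apply, LinearMap.smul_apply, smul_eq_mul,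
      hsym z a, hBa, ha, mul_pow, Real.norm_eq_abs, sq_abs] at h2
    nlinarith
  set b := S * inner ℝ a z - B a z
  set c := S * ‖z‖ ^ 2 - B z z
  have hb : b = 0 := by
    by_contra hb
    have hc : 0 ≤ c := by have := hle z hz; simp only [c]; linarith
    have h3 := key (-b / (c + 1))
    have h4 : -b / (c + 1) * (2 * b) + (-b / (c + 1)) ^ 2 * c = -(b ^ 2 * (c + 2)) / (c + 1) ^ 2 := by
      field_simp; ring
    rw [h4] at h3
    have : 0 < b ^ 2 * (c + 2) / (c + 1) ^ 2 := by positivity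
    rw [neg_div] at h3
    linarith
  simp only [b] at hb
  linarith

section Kernel
variable {Y : Type*} [TopologicalSpace Y] [MeasurableSpace Y]

/-- A bounded symmetric measurable kernel whose sections depend continuously on the point,
in `L¹`. -/
structure GoodKernel (κ : Y → Y → ℝ) (ν : Measure Y) : Prop where
  meas : Measurable (Function.uncurry κ)
  bdd : ∃ C : ℝ, 0 ≤ C ∧ ∀ p q, |κ p q| ≤ C
  symm : ∀ p q, κ p q = κ q p
  cont : ∀ p₀, Tendsto (fun p => ∫ q, |κ p q - κ p₀ q| ∂ν) (𝓝 p₀) (𝓝 0)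

/-- The integral operator with kernel `κ`. -/
def Kop (κ : Y → Y → ℝ) (ν : Measure Y) (x : Y → ℝ) (p : Y) : ℝ := ∫ q, κ p q * x q ∂ν

variable {κ : Y → Y → ℝ} {ν : Measure Y} [IsFiniteMeasure ν]

lemma GoodKernel.meas_sec (h : GoodKernel κ ν) (p : Y) : Measurable (κ p) :=
  h.meas.comp measurable_prodMk_left

lemma lp2_integrable (x : Lp ℝ 2 ν) : Integrable x ν :=
  (Lp.memLp x).integrable (by norm_num)

lemma GoodKernel.integrable_mul (h : GoodKernel κ ν) (p : Y) {x : Y → ℝ} (hx : Integrable x ν) :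
    Integrable (fun q => κ p q * x q) ν := by
  obtain ⟨C, hC, hb⟩ := h.bdd
  exact hx.bdd_mul (c := C) (h.meas_sec p).aestronglyMeasurable (ae_of_all _ fun q => hb p q)

lemma GoodKernel.memLp_sec (h : GoodKernel κ ν) (p : Y) : MemLp (κ p) 2 ν := by
  obtain ⟨C, hC, hb⟩ := h.bdd
  exact MemLp.of_bound (h.meas_sec p).aestronglyMeasurable C (ae_of_all _ fun q => hb p q)

lemma GoodKernel.Kop_eq_inner (h : GoodKernel κ ν) (x : Lp ℝ 2 ν) (p : Y) :
    Kop κ ν x p = inner ℝ x ((h.memLp_sec p).toLp _) := by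
  rw [L2.inner_def]
  refine integral_congr_ae ?_
  filter_upwards [(h.memLp_sec p).coeFn_toLp] with q hq
  simp [hq]

lemma GoodKernel.Kop_bound (h : GoodKernel κ ν) :
    ∃ C : ℝ, 0 ≤ C ∧ ∀ (x : Lp ℝ 2 ν) p, |Kop κ ν x p| ≤ C * ‖x‖ := by
  obtain ⟨C, hC, hb⟩ := h.bdd
  refine ⟨(ν univ).toReal ^ ((1 : ℝ) / 2) * C, by positivity, fun x p => ?_⟩
  rw [h.Kop_eq_inner]
  refine (abs_real_inner_le_norm _ _).trans ?_
  rw [mul_comm]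
  gcongr
  refine (Lp.norm_le_of_ae_bound (C := C) hC ?_).trans ?_
  · filter_upwards [(h.memLp_sec p).coeFn_toLp] with q hq
    rw [hq]; exact hb p q
  · norm_num [measureUnivNNReal]; exact le_of_eq rfl

lemma GoodKernel.Kop_meas (h : GoodKernel κ ν) {x : Y → ℝ} (hx : AEStronglyMeasurable x ν) :
    AEStronglyMeasurable (Kop κ ν x) ν := by
  have h1 : AEStronglyMeasurable (fun z : Y × Y => κ z.1 z.2 * x z.2) (ν.prod ν) :=
    (h.meas.aestronglyMeasurable).mul hx.comp_snd
  exact h1.integral_prod_right'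

lemma GoodKernel.Kop_continuous (h : GoodKernel κ ν) (x : Lp ℝ 2 ν) :
    Continuous (Kop κ ν x) := by
  obtain ⟨C, hC, hb⟩ := h.bdd
  rw [continuous_iff_continuousAt]
  intro p₀
  have key : ∀ p, |Kop κ ν x p - Kop κ ν x p₀| ≤
      ‖x‖ * Real.sqrt (2 * C * ∫ q, |κ p q - κ p₀ q| ∂ν) := by
    intro p
    rw [h.Kop_eq_inner, h.Kop_eq_inner, ← inner_sub_right]
    refine (abs_real_inner_le_norm _ _).trans ?_
    gcongr
    apply Real.le_sqrt_of_sq_le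
    rw [← MemLp.toLp_sub, ← real_inner_self_eq_norm_sq, L2.inner_def, ← integral_const_mul]
    refine integral_mono_ae (L2.integrable_inner _ _) ?_ ?_
    · refine Integrable.const_mul (Integrable.abs ?_) _
      exact ((h.memLp_sec p).sub (h.memLp_sec p₀)).integrable (by norm_num)
    · filter_upwards [((h.memLp_sec p).sub (h.memLp_sec p₀)).coeFn_toLp] with q hq
      rw [hq]
      simp only [Pi.sub_apply, real_inner_self_eq_norm_sq, Real.norm_eq_abs]
      have h2 : |κ p q - κ p₀ q| ≤ 2 * C := by
        have := abs_sub (κ p q) (κ p₀ q)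
        have := hb p q
        have := hb p₀ q
        linarith
      nlinarith [abs_nonneg (κ p q - κ p₀ q)]
  rw [ContinuousAt, tendsto_iff_dist_tendsto_zero]
  refine squeeze_zero (fun _ => dist_nonneg) key ?_
  have h3 := ((h.cont p₀).const_mul (2 * C)).sqrt.const_mul ‖x‖
  simpa using h3

lemma GoodKernel.Kop_memLp (h : GoodKernel κ ν) (x : Lp ℝ 2 ν) : MemLp (Kop κ ν x) 2 ν := by
  obtain ⟨C, hC, hb⟩ := h.Kop_bound
  exact MemLp.of_bound (h.Kop_meas (Lp.aestronglyMeasurable x)) (C * ‖x‖)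
    (ae_of_all _ fun p => hb x p)

/-- The operator with kernel `κ` on `L²`. -/
def GoodKernel.KL (h : GoodKernel κ ν) : Lp ℝ 2 ν →ₗ[ℝ] Lp ℝ 2 ν where
  toFun x := (h.Kop_memLp x).toLp _
  map_add' x y := by
    rw [← MemLp.toLp_add]
    refine MemLp.toLp_congr _ _ (ae_of_all _ fun p => ?_)
    simp only [h.Kop_eq_inner, Pi.add_apply, inner_add_left]
  map_smul' c x := by
    rw [← MemLp.toLp_const_smul]
    refine MemLp.toLp_congr _ _ (ae_of_all _ fun p => ?_)
    simp [h.Kop_eq_inner, inner_smul_left]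

/-- The quadratic form `⟪K x, y⟫` as a bilinear form. -/
def GoodKernel.B (h : GoodKernel κ ν) : LinearMap.BilinForm ℝ (Lp ℝ 2 ν) :=
  (innerₗ (Lp ℝ 2 ν)).comp h.KL

lemma GoodKernel.B_apply (h : GoodKernel κ ν) (x y : Lp ℝ 2 ν) :
    h.B x y = inner ℝ (h.KL x) y := rfl

lemma GoodKernel.B_eq (h : GoodKernel κ ν) (x y : Lp ℝ 2 ν) :
    h.B x y = ∫ p, Kop κ ν x p * y p ∂ν := by
  rw [h.B_apply, L2.inner_def]
  refine integral_congr_ae ?_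
  filter_upwards [(h.Kop_memLp x).coeFn_toLp] with p hp
  change inner ℝ ((h.Kop_memLp x).toLp _ p) (y p) = _
  rw [hp]; simp [mul_comm]

lemma GoodKernel.B_symm (h : GoodKernel κ ν) (x y : Lp ℝ 2 ν) : h.B x y = h.B y x := by
  rw [h.B_eq, h.B_eq]
  unfold Kop
  simp_rw [← integral_mul_const]
  obtain ⟨C, hC, hb⟩ := h.bdd
  rw [integral_integral_swap]
  · refine integral_congr_ae (ae_of_all _ fun q => integral_congr_ae (ae_of_all _ fun p => ?_))
    simp only [h.symm p q]; ring
  · have h1 : Integrable (fun z : Y × Y => y z.1 * x z.2) (ν.prod ν) :=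
      (lp2_integrable y).mul_prod (lp2_integrable x)
    have h2 := h1.bdd_mul (c := C) h.meas.aestronglyMeasurable (ae_of_all _ fun z => hb z.1 z.2)
    refine h2.congr (ae_of_all _ fun z => ?_)
    simp [Function.uncurry]; ring

lemma GoodKernel.B_bound (h : GoodKernel κ ν) : ∃ C : ℝ, ∀ x, h.B x x ≤ C * ‖x‖ ^ 2 := by
  obtain ⟨C, hC, hb⟩ := h.Kop_bound
  refine ⟨(ν univ).toReal ^ ((1 : ℝ) / 2) * C, fun x => ?_⟩
  rw [h.B_apply]
  refine (real_inner_le_norm _ _).trans ?_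
  have : ‖h.KL x‖ ≤ (ν univ).toReal ^ ((1 : ℝ) / 2) * (C * ‖x‖) := by
    refine (Lp.norm_le_of_ae_bound (C := C * ‖x‖) (by positivity) ?_).trans ?_
    · filter_upwards [(h.Kop_memLp x).coeFn_toLp] with q hq
      change ‖(h.Kop_memLp x).toLp _ q‖ ≤ _
      rw [hq]; exact hb x q
    · norm_num [measureUnivNNReal]; exact le_of_eq rfl
  calc _ ≤ ((ν univ).toReal ^ ((1 : ℝ) / 2) * (C * ‖x‖)) * ‖x‖ := by gcongr
    _ = _ := by ring

/-- Compactness of the kernel operator: it turns weak into strong convergence, by dominated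
convergence of `p ↦ ⟪x n, κ p⟫`. -/
lemma GoodKernel.KL_tendsto (h : GoodKernel κ ν) (x : ℕ → Lp ℝ 2 ν) (a : Lp ℝ 2 ν) (C : ℝ)
    (hx : ∀ n, ‖x n‖ ≤ C) (hw : WeakLim x a) : Tendsto (fun n => h.KL (x n)) atTop (𝓝 (h.KL a)) := by
  obtain ⟨C', hC', hb⟩ := h.Kop_bound
  have hC : 0 ≤ C := (norm_nonneg _).trans (hx 0)
  have haC : ‖a‖ ≤ C := hw.norm_le hC (Eventually.of_forall hx)
  rw [tendsto_iff_norm_sub_tendsto_zero]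
  have h1 : Tendsto (fun n => ‖h.KL (x n) - h.KL a‖ ^ 2) atTop (𝓝 0) := by
    have h2 : ∀ n, ‖h.KL (x n) - h.KL a‖ ^ 2 = ∫ p, (Kop κ ν (x n) p - Kop κ ν a p) ^ 2 ∂ν := by
      intro n
      rw [← real_inner_self_eq_norm_sq, L2.inner_def]
      refine integral_congr_ae ?_
      filter_upwards [Lp.coeFn_sub (h.KL (x n)) (h.KL a), (h.Kop_memLp (x n)).coeFn_toLp,
        (h.Kop_memLp a).coeFn_toLp] with p hp h3 h4
      have h3' : h.KL (x n) p = Kop κ ν (x n) p := h3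
      have h4' : h.KL a p = Kop κ ν a p := h4
      rw [hp, Pi.sub_apply, h3', h4', real_inner_self_eq_norm_sq]
      simp
    simp_rw [h2]
    have h5 : Tendsto (fun n => ∫ p, (Kop κ ν (x n) p - Kop κ ν a p) ^ 2 ∂ν) atTop
        (𝓝 (∫ _p, (0 : ℝ) ∂ν)) := by
      refine tendsto_integral_of_dominated_convergence (fun _ => (2 * (C' * C)) ^ 2) ?_ ?_ ?_ ?_
      · intro n
        exact ((h.Kop_meas (Lp.aestronglyMeasurable _)).sub
          (h.Kop_meas (Lp.aestronglyMeasurable _))).pow 2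
      · exact integrable_const _
      · intro n
        refine ae_of_all _ fun p => ?_
        have h6 := (hb (x n) p).trans (mul_le_mul_of_nonneg_left (hx n) hC')
        have h7 := (hb a p).trans (mul_le_mul_of_nonneg_left haC hC')
        rw [Real.norm_eq_abs, abs_pow]
        have := abs_sub (Kop κ ν (x n) p) (Kop κ ν a p)
        gcongr
        linarith
      · refine ae_of_all _ fun p => ?_
        have h6 : Tendsto (fun n => Kop κ ν (x n) p) atTop (𝓝 (Kop κ ν a p)) := by
          simp_rw [h.Kop_eq_inner]
          exact hw _
        have h7 := (h6.sub_const (Kop κ ν a p)).pow 2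
        simpa using h7
    simpa using h5
  have h8 := h1.sqrt
  simpa using h8

lemma GoodKernel.B_weak (h : GoodKernel κ ν) (x : ℕ → Lp ℝ 2 ν) (a : Lp ℝ 2 ν) (C : ℝ)
    (hx : ∀ n, ‖x n‖ ≤ C) (hw : WeakLim x a) :
    Tendsto (fun n => h.B (x n) (x n)) atTop (𝓝 (h.B a a)) := by
  have hC : 0 ≤ C := (norm_nonneg _).trans (hx 0)
  have h1 := h.KL_tendsto x a C hx hw
  have h2 : ∀ n, h.B (x n) (x n) =
      inner ℝ (h.KL (x n) - h.KL a) (x n) + inner ℝ (x n) (h.KL a) := by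
    intro n
    rw [h.B_apply, inner_sub_left, real_inner_comm (x n) (h.KL a)]; ring
  simp_rw [h2]
  have h3 : Tendsto (fun n => inner ℝ (h.KL (x n) - h.KL a) (x n)) atTop (𝓝 0) := by
    rw [tendsto_iff_norm_sub_tendsto_zero] at h1
    refine squeeze_zero_norm (fun n => ?_) (by simpa using h1.mul_const C)
    refine (norm_inner_le_norm _ _).trans ?_
    gcongr
    exact hx n
  have h4 := h3.add (hw (h.KL a))
  rw [zero_add] at h4
  rwa [h.B_apply, real_inner_comm]

end Kernel

/-! ### Polar coordinates and slicing -/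

/-- The radial measure `s^m ds` on `(0, ∞)`, regarded as a measure on `ℝ`. -/
def rmeas (m : ℕ) : Measure ℝ :=
  (volume.restrict (Ioi 0)).withDensity (fun s => ENNReal.ofReal (s ^ m))

instance (m : ℕ) : SigmaFinite (rmeas m) := by
  unfold rmeas; infer_instance

lemma rmeas_eq_map (m : ℕ) : rmeas m = (Measure.volumeIoiPow m).map Subtype.val := by
  ext s hs
  have hemb : MeasurableEmbedding (Subtype.val : Ioi (0 : ℝ) → ℝ) :=
    MeasurableEmbedding.subtype_coe measurableSet_Ioi
  rw [hemb.map_apply, Measure.volumeIoiPow, rmeas, withDensity_apply _ hs,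
    withDensity_apply _ (hemb.measurable hs), Measure.restrict_restrict hs,
    setLIntegral_subtype measurableSet_Ioi _ fun a : ℝ ↦ .ofReal (a ^ m)]
  rw [Subtype.image_preimage_coe, inter_comm]

lemma polar_mp (m : ℕ) : MeasurePreserving (fun p : Sph m × ℝ => p.2 • (p.1 : Vec (m + 1)))
    ((sig m).prod (rmeas m)) volume := by
  have h1 := (volume : Measure (Vec (m + 1))).measurePreserving_homeomorphUnitSphereProd
  have hd : Module.finrank ℝ (Vec (m + 1)) - 1 = m := by simp
  rw [hd] at h1
  have h2 : MeasurePreserving (fun p : Sph m × Ioi (0 : ℝ) => (p.2 : ℝ) • (p.1 : Vec (m + 1)))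
      ((sig m).prod (Measure.volumeIoiPow m)) volume := by
    have h3 := MeasurePreserving.symm (homeomorphUnitSphereProd (Vec (m + 1))).toMeasurableEquiv h1
    have h4 : MeasurePreserving (Subtype.val : ({0}ᶜ : Set (Vec (m + 1))) → Vec (m + 1))
        ((volume : Measure (Vec (m + 1))).comap (↑)) volume := by
      refine ⟨measurable_subtype_coe, ?_⟩
      rw [map_comap_subtype_coe (measurableSet_singleton _).compl, restrict_compl_singleton]
    exact h4.comp h3
  refine ⟨by fun_prop, ?_⟩
  rw [← h2.map_eq, rmeas_eq_map]
  have h5 : (sig m).prod ((Measure.volumeIoiPow m).map Subtype.val) =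
      ((sig m).prod (Measure.volumeIoiPow m)).map (Prod.map id Subtype.val) := by
    rw [← Measure.map_prod_map _ _ measurable_id measurable_subtype_coe, Measure.map_id]
  rw [h5, Measure.map_map (by fun_prop) (by fun_prop)]
  rfl

lemma rmeas_integral (m : ℕ) (g : ℝ → ℝ) : ∫ s, g s ∂(rmeas m) = ∫ s in Ioi 0, s ^ m * g s := by
  unfold rmeas
  rw [integral_withDensity_eq_integral_toReal_smul (by fun_prop) (by simp)]
  refine setIntegral_congr_fun measurableSet_Ioi fun s hs => ?_
  have : (0 : ℝ) ≤ s ^ m := pow_nonneg (le_of_lt hs) _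
  simp [ENNReal.toReal_ofReal this]

lemma rmeas_ae_pos (m : ℕ) : ∀ᵐ s ∂(rmeas m), 0 < s := by
  have h1 : rmeas m ≪ volume.restrict (Ioi 0) := withDensity_absolutelyContinuous _ _
  exact h1.ae_le (ae_restrict_mem measurableSet_Ioi)

lemma polar_integral {m : ℕ} {f : Vec (m + 1) → ℝ} (hf : Integrable f) :
    ∫ x, f x = ∫ θ, ∫ s, f (s • (θ : Vec (m + 1))) ∂(rmeas m) ∂(sig m) := by
  rw [← (polar_mp m).map_eq, integral_map (polar_mp m).measurable.aemeasurable
    ((polar_mp m).map_eq ▸ hf.aestronglyMeasurable), integral_prod]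
  exact (polar_mp m).integrable_comp_of_integrable hf

lemma polar_integrable {m : ℕ} {f : Vec (m + 1) → ℝ} (hf : Integrable f) :
    Integrable (fun p : Sph m × ℝ => f (p.2 • (p.1 : Vec (m + 1)))) ((sig m).prod (rmeas m)) :=
  (polar_mp m).integrable_comp_of_integrable hf

/-- A fixed unit vector, the first basis vector. -/
def e0 (m : ℕ) : Vec (m + 1) := EuclideanSpace.single 0 1

lemma norm_e0 (m : ℕ) : ‖e0 m‖ = 1 := by simp [e0]

/-- The direction `x / |x|` of a vector, with the arbitrary value `e0` at the origin. -/
def dir {m : ℕ} (x : Vec (m + 1)) : Sph m :=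
  if h : x = 0 then ⟨e0 m, by simp [norm_e0]⟩
  else ⟨‖x‖⁻¹ • x, by simp [norm_smul, norm_ne_zero_iff.2 h]⟩

lemma dir_coe {m : ℕ} {x : Vec (m + 1)} (h : x ≠ 0) : (dir x : Vec (m + 1)) = ‖x‖⁻¹ • x := by
  simp [dir, h]

lemma dir_smul {m : ℕ} {s : ℝ} (hs : 0 < s) (θ : Sph m) : dir (s • (θ : Vec (m + 1))) = θ := by
  have h1 : ‖(θ : Vec (m + 1))‖ = 1 := by simp
  have h0 : s • (θ : Vec (m + 1)) ≠ 0 := by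
    rw [← norm_ne_zero_iff, norm_smul, h1]; simp [hs.ne']
  ext1
  rw [dir_coe h0, norm_smul, h1, smul_smul]
  simp [abs_of_pos hs, hs.ne']

lemma norm_smul_dir {m : ℕ} (x : Vec (m + 1)) : ‖x‖ • (dir x : Vec (m + 1)) = x := by
  by_cases h : x = 0
  · simp [h]
  · rw [dir_coe h, smul_smul, mul_inv_cancel₀ (norm_ne_zero_iff.2 h), one_smul]

lemma measurable_dir (m : ℕ) : Measurable (dir : Vec (m + 1) → Sph m) := by
  refine Measurable.subtype_mk (f := fun x : Vec (m+1) => (dir x : Vec (m+1))) ?_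
  have : (fun x : Vec (m+1) => (dir x : Vec (m+1))) =
      fun x => if x = 0 then e0 m else ‖x‖⁻¹ • x := by
    funext x
    by_cases h : x = 0 <;> simp [dir, h]
  rw [this]
  exact Measurable.ite (measurableSet_singleton 0) measurable_const (by fun_prop)

lemma continuousAt_dir {m : ℕ} {x : Vec (m + 1)} (h : x ≠ 0) :
    ContinuousAt (dir : Vec (m + 1) → Sph m) x := by
  rw [Topology.IsInducing.subtypeVal.continuousAt_iff]
  refine ContinuousAt.congr (f := fun x : Vec (m+1) => ‖x‖⁻¹ • x) ?_ ?_
  · exact (continuousAt_id.norm.inv₀ (norm_ne_zero_iff.2 h)).smul continuousAt_id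
  · filter_upwards [isOpen_ne.mem_nhds h] with y hy
    exact (dir_coe hy).symm

/-- The radial integral `θ ↦ ∫ f(sθ) s^m ds` of a function. -/
def rad {m : ℕ} (f : Vec (m + 1) → ℝ) (θ : Sph m) : ℝ :=
  ∫ s, f (s • (θ : Vec (m + 1))) ∂(rmeas m)

lemma rad_integrable {m : ℕ} {f : Vec (m + 1) → ℝ} (hf : Integrable f) :
    Integrable (rad f) (sig m) := (polar_integrable hf).integral_prod_left

lemma integral_mul_dir {m : ℕ} {f : Vec (m + 1) → ℝ} {h : Sph m → ℝ}
    (hi : Integrable (fun x => f x * h (dir x))) :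
    ∫ x, f x * h (dir x) = ∫ θ, rad f θ * h θ ∂(sig m) := by
  rw [polar_integral hi]
  refine integral_congr_ae (ae_of_all _ fun θ => ?_)
  simp only [rad]
  rw [← integral_mul_const]
  refine integral_congr_ae ?_
  filter_upwards [rmeas_ae_pos m] with s hs
  simp only [dir_smul hs]

/-- The point of `ℝ^(m+1)` with first coordinate `t` and remaining coordinates `w`. -/
def sl {m : ℕ} (p : ℝ × Vec m) : Vec (m + 1) := WithLp.toLp 2 (Fin.cons p.1 p.2.ofLp)

lemma sl_mp (m : ℕ) : MeasurePreserving (sl : ℝ × Vec m → Vec (m + 1)) volume volume := by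
  have h1 := (volume_preserving_piFinSuccAbove (fun _ : Fin (m + 1) => ℝ) 0).symm
  have h2 := PiLp.volume_preserving_toLp (Fin (m + 1))
  have h3 : MeasurePreserving (Prod.map id (WithLp.ofLp) : ℝ × Vec m → ℝ × (Fin m → ℝ))
      volume volume := (MeasurePreserving.id _).prod (PiLp.volume_preserving_ofLp (Fin m))
  have h4 := h2.comp (h1.comp h3)
  have h5 : (sl : ℝ × Vec m → Vec (m + 1)) = (WithLp.toLp 2) ∘
      (MeasurableEquiv.piFinSuccAbove (fun _ : Fin (m + 1) => ℝ) 0).symm ∘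
      (Prod.map id (WithLp.ofLp)) := by
    funext p
    simp [sl, MeasurableEquiv.piFinSuccAbove, Fin.insertNthEquiv]
  rw [h5]; exact h4

lemma sl_zero {m : ℕ} (p : ℝ × Vec m) : (sl p) 0 = p.1 := by simp [sl]
lemma sl_succ {m : ℕ} (p : ℝ × Vec m) (i : Fin m) : (sl p) i.succ = p.2 i := by simp [sl]

lemma sl_inner {m : ℕ} (p q : ℝ × Vec m) :
    inner ℝ (sl p) (sl q) = p.1 * q.1 + inner ℝ p.2 q.2 := by
  simp [PiLp.inner_apply, Fin.sum_univ_succ, sl_zero, sl_succ, mul_comm]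

lemma sl_norm_sq {m : ℕ} (p : ℝ × Vec m) : ‖sl p‖ ^ 2 = p.1 ^ 2 + ‖p.2‖ ^ 2 := by
  rw [← real_inner_self_eq_norm_sq, sl_inner, real_inner_self_eq_norm_sq]; ring

/-- The last `m` coordinates of a vector. -/
def tl {m : ℕ} (x : Vec (m + 1)) : Vec m := WithLp.toLp 2 (fun i => x i.succ)

lemma sl_tl {m : ℕ} (x : Vec (m + 1)) : sl (x 0, tl x) = x := by
  ext i
  refine Fin.cases ?_ (fun i => ?_) i
  · simp [sl]
  · simp [sl, tl]

lemma tl_sl {m : ℕ} (p : ℝ × Vec m) : tl (sl p) = p.2 := by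
  ext i; simp [sl, tl]

lemma continuous_sl (m : ℕ) : Continuous (sl : ℝ × Vec m → Vec (m + 1)) := by
  unfold sl
  refine (PiLp.continuous_toLp 2 _).comp ?_
  refine continuous_pi fun i => ?_
  refine Fin.cases ?_ (fun i => ?_) i
  · simpa using continuous_fst
  · simp only [Fin.cons_succ]; fun_prop

lemma sl_emb (m : ℕ) : MeasurableEmbedding (sl : ℝ × Vec m → Vec (m + 1)) := by
  refine (continuous_sl m).measurableEmbedding ?_
  intro p q h
  have h1 := sl_zero p; rw [h, sl_zero] at h1
  have h2 := tl_sl p; rw [h, tl_sl] at h2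
  exact Prod.ext h1.symm h2.symm

/-! ### The trilinear form on functions -/

section T3
variable {d : ℕ}

/-- The trilinear form `∫∫ f(x) g(y) h(-x-y) dx dy`. -/
def T3 (f g h : Vec d → ℝ) : ℝ :=
  ∫ p : Vec d × Vec d, f p.1 * g p.2 * h (-p.1 - p.2)

/-- Measurable integrable functions bounded by `1`. -/
structure Nice (f : Vec d → ℝ) : Prop where
  meas : Measurable f
  int : Integrable f
  le : ∀ x, |f x| ≤ 1

lemma Nice.abs {f : Vec d → ℝ} (hf : Nice f) : Nice (fun x => |f x|) :=
  ⟨hf.meas.abs, hf.int.abs, fun x => by rw [abs_abs]; exact hf.le x⟩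

lemma T3_integrable {f g h : Vec d → ℝ} (hf : Integrable f) (hg : Integrable g)
    (hh : Measurable h) (hb : ∀ x, |h x| ≤ 1) :
    Integrable (fun p : Vec d × Vec d => f p.1 * g p.2 * h (-p.1 - p.2)) := by
  refine (hf.mul_prod hg).mul_bdd (c := 1) ?_ (ae_of_all _ fun p => ?_)
  · exact (hh.comp (by fun_prop)).aestronglyMeasurable
  · exact hb _

lemma T3_abs_le {f g h : Vec d → ℝ} (hf : Integrable f) (hg : Integrable g)
    (hb : ∀ x, |h x| ≤ 1) : |T3 f g h| ≤ (∫ x, |f x|) * ∫ x, |g x| := by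
  have h1 : (∫ x, |f x|) * ∫ x, |g x| = ∫ p : Vec d × Vec d, |f p.1| * |g p.2| :=
    (integral_prod_mul (fun x => |f x|) (fun x => |g x|)).symm
  rw [h1]
  rw [T3, ← Real.norm_eq_abs]
  refine norm_integral_le_of_norm_le (hf.abs.mul_prod hg.abs) (ae_of_all _ fun p => ?_)
  rw [Real.norm_eq_abs, abs_mul, abs_mul]
  exact mul_le_of_le_one_right (by positivity) (hb _)

lemma T3_swap12 (f g h : Vec d → ℝ) : T3 f g h = T3 g f h := by
  unfold T3
  rw [Measure.volume_eq_prod, ← (Measure.measurePreserving_swap (μ := (volume : Measure (Vec d)))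
    (ν := (volume : Measure (Vec d)))).integral_comp MeasurableEquiv.prodComm.measurableEmbedding]
  refine integral_congr_ae (ae_of_all _ fun p => ?_)
  simp only [Prod.fst_swap, Prod.snd_swap]
  rw [mul_comm (f p.2), sub_eq_add_neg, sub_eq_add_neg, add_comm]

/-- `(x, y) ↦ (x, -x-y)` preserves Lebesgue measure. -/
lemma shear_mp : MeasurePreserving (fun p : Vec d × Vec d => (p.1, -p.1 - p.2)) volume volume := by
  refine MeasurePreserving.skew_product (f := fun x : Vec d => x) (g := fun x y => -x - y)
    (MeasurePreserving.id _) (by fun_prop) (ae_of_all _ fun x => ?_)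
  exact (Measure.measurePreserving_sub_left volume (-x)).map_eq

/-- The shear `(x, y) ↦ (x, -x-y)`, an involution. -/
def shear : (Vec d × Vec d) ≃ᵐ (Vec d × Vec d) where
  toFun p := (p.1, -p.1 - p.2)
  invFun p := (p.1, -p.1 - p.2)
  left_inv p := by ext1 <;> simp
  right_inv p := by ext1 <;> simp
  measurable_toFun := by dsimp; fun_prop
  measurable_invFun := by dsimp; fun_prop

lemma T3_swap23 (f g h : Vec d → ℝ) : T3 f g h = T3 f h g := by
  unfold T3
  rw [← (shear_mp (d := d)).integral_comp shear.measurableEmbedding]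
  refine integral_congr_ae (ae_of_all _ fun p => ?_)
  have : -p.1 - (-p.1 - p.2) = p.2 := by abel
  simp only [this]; ring

lemma T3_add1 {f f' g h : Vec d → ℝ} (hf : Nice f) (hf' : Nice f') (hg : Nice g) (hh : Nice h) :
    T3 (fun x => f x + f' x) g h = T3 f g h + T3 f' g h := by
  unfold T3
  rw [← integral_add (T3_integrable hf.int hg.int hh.meas hh.le)
    (T3_integrable hf'.int hg.int hh.meas hh.le)]
  refine integral_congr_ae (ae_of_all _ fun p => ?_)
  simp only; ring

lemma T3_add2 {f f' g h : Vec d → ℝ} (hf : Nice f) (hf' : Nice f') (hg : Nice g) (hh : Nice h) :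
    T3 g (fun x => f x + f' x) h = T3 g f h + T3 g f' h := by
  rw [T3_swap12, T3_add1 hf hf' hg hh, T3_swap12 f, T3_swap12 f']

lemma T3_add3 {f f' g h : Vec d → ℝ} (hf : Nice f) (hf' : Nice f') (hg : Nice g) (hh : Nice h) :
    T3 g h (fun x => f x + f' x) = T3 g h f + T3 g h f' := by
  rw [T3_swap23, T3_add2 hf hf' hg hh, T3_swap23 g f, T3_swap23 g f']

/-- Expansion of `T(e) - T(b)` for `e = b + f`. -/
lemma T3_expand {b f : Fin 3 → Vec d → ℝ} (hb : ∀ j, Nice (b j)) (hf : ∀ j, Nice (f j))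
    (he : ∀ j, Nice (fun x => b j x + f j x)) :
    T3 (fun x => b 0 x + f 0 x) (fun x => b 1 x + f 1 x) (fun x => b 2 x + f 2 x) =
      T3 (b 0) (b 1) (b 2) +
      (T3 (f 0) (b 1) (b 2) + T3 (f 1) (b 0) (b 2) + T3 (f 2) (b 0) (b 1)) +
      (T3 (f 0) (f 1) (b 2) + T3 (f 0) (f 2) (b 1) + T3 (f 1) (f 2) (b 0)) +
      T3 (f 0) (f 1) (f 2) := by
  rw [T3_add1 (hb 0) (hf 0) (he 1) (he 2), T3_add2 (hb 1) (hf 1) (hb 0) (he 2),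
    T3_add2 (hb 1) (hf 1) (hf 0) (he 2), T3_add3 (hb 2) (hf 2) (hb 0) (hb 1),
    T3_add3 (hb 2) (hf 2) (hb 0) (hf 1), T3_add3 (hb 2) (hf 2) (hf 0) (hb 1),
    T3_add3 (hb 2) (hf 2) (hf 0) (hf 1)]
  rw [T3_swap12 (b 0) (f 1) (b 2), T3_swap23 (b 0) (b 1) (f 2), T3_swap12 (b 0) (f 2) (b 1),
    T3_swap12 (b 0) (f 1) (f 2), T3_swap23 (f 1) (b 0) (f 2), T3_swap23 (f 0) (b 1) (f 2)]
  ring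

/-- The function `x ↦ ∫ b(y) b'(-x-y) dy`. -/
def KK (b b' : Vec d → ℝ) (x : Vec d) : ℝ := ∫ y, b y * b' (-x - y)

lemma T3_eq_KK {f b b' : Vec d → ℝ} (hf : Nice f) (hb : Nice b) (hb' : Nice b') :
    T3 f b b' = ∫ x, f x * KK b b' x := by
  unfold T3 KK
  rw [Measure.volume_eq_prod, integral_prod]
  · refine integral_congr_ae (ae_of_all _ fun x => ?_)
    simp only
    rw [← integral_const_mul]
    simp only [mul_assoc]
  · exact T3_integrable hf.int hb.int hb'.meas hb'.le

lemma nice_ind {E : Set (Vec d)} (hE : MeasurableSet E) (hv : volume E ≠ ⊤) : Nice (ind E) := by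
  refine ⟨measurable_one.indicator hE, ?_, fun x => ?_⟩
  · exact (integrable_indicator_iff hE).2 (integrableOn_const hv)
  · by_cases h : x ∈ E <;> simp [ind, h]

lemma integral_ind {E : Set (Vec d)} (hE : MeasurableSet E) : ∫ x, ind E x = volume.real E :=
  integral_indicator_one hE

lemma nice_ind_sub {E F : Set (Vec d)} (hE : MeasurableSet E) (hv : volume E ≠ ⊤)
    (hF : MeasurableSet F) (hw : volume F ≠ ⊤) : Nice (fun x => ind E x - ind F x) := by
  refine ⟨(nice_ind hE hv).meas.sub (nice_ind hF hw).meas,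
    (nice_ind hE hv).int.sub (nice_ind hF hw).int, fun x => ?_⟩
  by_cases h : x ∈ E <;> by_cases h' : x ∈ F <;> simp [ind, h, h']

lemma abs_ind_sub (E F : Set (Vec d)) (x : Vec d) :
    |ind E x - ind F x| = ind (symmDiff E F) x := by
  by_cases h : x ∈ E <;> by_cases h' : x ∈ F <;> simp [ind, h, h', Set.mem_symmDiff]

lemma integral_abs_ind_sub {E F : Set (Vec d)} (hE : MeasurableSet E) (hF : MeasurableSet F) :
    ∫ x, |ind E x - ind F x| = volume.real (symmDiff E F) := by
  simp_rw [abs_ind_sub]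
  exact integral_ind (hE.symmDiff hF)

end T3

/-! ### Overlap of two balls -/

/-- The centered closed ball of radius `p`. -/
abbrev Bl (d : ℕ) (p : ℝ) : Set (Vec d) := closedBall 0 p

lemma nice_Bl (d : ℕ) (p : ℝ) : Nice (ind (Bl d p)) :=
  nice_ind measurableSet_closedBall measure_closedBall_lt_top.ne

lemma exists_isometry {m : ℕ} {x y : Vec m} (h : ‖x‖ = ‖y‖) :
    ∃ U : Vec m ≃ₗᵢ[ℝ] Vec m, U x = y :=
  ⟨Submodule.reflection (Submodule.span ℝ {x - y})ᗮ, Submodule.reflection_sub h⟩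

lemma ind_Bl {d : ℕ} (p : ℝ) (x : Vec d) : ind (Bl d p) x = if ‖x‖ ≤ p then 1 else 0 := by
  simp [ind, indicator]

lemma ind_Bl_iso {d : ℕ} (p : ℝ) (U : Vec d ≃ₗᵢ[ℝ] Vec d) (x : Vec d) :
    ind (Bl d p) (U x) = ind (Bl d p) x := by
  simp [ind_Bl]

lemma KK_iso {d : ℕ} (p q : ℝ) (U : Vec d ≃ₗᵢ[ℝ] Vec d) (x : Vec d) :
    KK (ind (Bl d p)) (ind (Bl d q)) (U x) = KK (ind (Bl d p)) (ind (Bl d q)) x := by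
  unfold KK
  rw [← U.measurePreserving.integral_comp U.toHomeomorph.measurableEmbedding]
  refine integral_congr_ae (ae_of_all _ fun y => ?_)
  simp only
  rw [ind_Bl_iso, ← map_neg, ← map_sub, ind_Bl_iso]

/-- Length of the overlap of `[-a, a]` and `[-b, b] - s`. -/
def ovl (a b s : ℝ) : ℝ := max 0 (min a (b - s) - max (-a) (-b - s))

lemma ovl_anti {a b s s' : ℝ} (hs : 0 ≤ s) (hss : s ≤ s') : ovl a b s' ≤ ovl a b s := by
  unfold ovl
  refine max_le_max le_rfl ?_
  rcases le_total a (b - s) with h1 | h1 <;> rcases le_total a (b - s') with h2 | h2 <;>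
  rcases le_total (-a) (-b - s) with h3 | h3 <;> rcases le_total (-a) (-b - s') with h4 | h4 <;>
  simp only [min_eq_left, min_eq_right, max_eq_left, max_eq_right, h1, h2, h3, h4] <;> linarith

lemma ovl_gap {a b s s' : ℝ} (hss : s ≤ s') (h1 : |a - b| ≤ s) (h2 : s' ≤ a + b) :
    ovl a b s - ovl a b s' = s' - s := by
  rw [abs_le] at h1
  have e1 : ovl a b s = a + b - s := by
    unfold ovl
    rw [min_eq_right (by linarith), max_eq_left (a := -a) (by linarith), max_eq_right (by linarith)]
    ring
  have e2 : ovl a b s' = a + b - s' := by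
    unfold ovl
    rw [min_eq_right (by linarith), max_eq_left (a := -a) (by linarith), max_eq_right (by linarith)]
    ring
  rw [e1, e2]; ring

lemma ovl_integral {a b : ℝ} (ha : 0 ≤ a) (hb : 0 ≤ b) (s : ℝ) :
    ∫ t : ℝ, (if t ^ 2 ≤ a then (1 : ℝ) else 0) * (if (s + t) ^ 2 ≤ b then 1 else 0) =
      ovl (√a) (√b) s := by
  have h1 : (fun t : ℝ => (if t ^ 2 ≤ a then (1 : ℝ) else 0) * (if (s + t) ^ 2 ≤ b then 1 else 0)) =
      (Icc (max (-√a) (-√b - s)) (min (√a) (√b - s))).indicator 1 := by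
    funext t
    have e1 : t ^ 2 ≤ a ↔ -√a ≤ t ∧ t ≤ √a := by
      rw [← abs_le, ← Real.sqrt_le_sqrt_iff ha, Real.sqrt_sq_eq_abs]
    have e2 : (s + t) ^ 2 ≤ b ↔ -√b ≤ s + t ∧ s + t ≤ √b := by
      rw [← abs_le, ← Real.sqrt_le_sqrt_iff hb, Real.sqrt_sq_eq_abs]
    have e3 : t ∈ Icc (max (-√a) (-√b - s)) (min (√a) (√b - s)) ↔
        t ^ 2 ≤ a ∧ (s + t) ^ 2 ≤ b := by
      rw [e1, e2, mem_Icc, max_le_iff, le_min_iff]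
      constructor
      · rintro ⟨⟨h1, h2⟩, h3, h4⟩; exact ⟨⟨h1, h3⟩, by linarith, by linarith⟩
      · rintro ⟨⟨h1, h3⟩, h2, h4⟩; exact ⟨⟨h1, by linarith⟩, h3, by linarith⟩
    by_cases h : t ∈ Icc (max (-√a) (-√b - s)) (min (√a) (√b - s))
    · rw [indicator_of_mem h]; obtain ⟨h3, h4⟩ := e3.1 h; simp [h3, h4]
    · rw [indicator_of_notMem h]
      by_cases h3 : t ^ 2 ≤ a
      · have : ¬ (s + t) ^ 2 ≤ b := fun h4 => h (e3.2 ⟨h3, h4⟩)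
        simp [this]
      · simp [h3]
  rw [h1, integral_indicator_one measurableSet_Icc, Real.volume_real_Icc, ovl, max_comm]

/-- Overlap of the slices over `|w|² = u` of two balls with radii `p`, `q` and centers at
distance `s`. -/
def slo (p q s u : ℝ) : ℝ :=
  ∫ t : ℝ, (if t ^ 2 ≤ p ^ 2 - u then (1 : ℝ) else 0) * (if (s + t) ^ 2 ≤ q ^ 2 - u then 1 else 0)

lemma slo_anti {p q s s' u : ℝ} (hs : 0 ≤ s) (hss : s ≤ s') : slo p q s' u ≤ slo p q s u := by
  unfold slo
  by_cases ha : 0 ≤ p ^ 2 - u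
  · by_cases hb : 0 ≤ q ^ 2 - u
    · rw [ovl_integral ha hb, ovl_integral ha hb]; exact ovl_anti hs hss
    · have : ∀ t : ℝ, ¬ t ^ 2 ≤ q ^ 2 - u := fun t h => hb ((sq_nonneg t).trans h)
      simp [this]
  · have : ∀ t : ℝ, ¬ t ^ 2 ≤ p ^ 2 - u := fun t h => ha ((sq_nonneg t).trans h)
    simp [this]

/-- `16` times the squared area of the triangle with sides `s`, `p`, `q` (Heron). -/
def heron (s p q : ℝ) : ℝ := 4 * p ^ 2 * q ^ 2 - (s ^ 2 - p ^ 2 - q ^ 2) ^ 2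

lemma heron_cond {s p q u : ℝ} (hs : 0 < s) (h : 4 * u * s ^ 2 ≤ heron s p q) :
    0 ≤ p ^ 2 - u ∧ 0 ≤ q ^ 2 - u ∧ |√(p ^ 2 - u) - √(q ^ 2 - u)| ≤ s ∧
      s ≤ √(p ^ 2 - u) + √(q ^ 2 - u) := by
  set a := p ^ 2 - u with ha
  set b := q ^ 2 - u with hb
  have h1 : (s ^ 2 - a - b) ^ 2 ≤ 4 * (a * b) := by
    unfold heron at h; rw [ha, hb]; nlinarith
  have hs2 : 0 < s ^ 2 := by positivity
  have ha0 : 0 ≤ a := by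
    by_contra hn
    push Not at hn
    rcases le_or_gt b 0 with hb0 | hb0
    · nlinarith [mul_nonneg_of_nonpos_of_nonpos hn.le hb0, sq_nonneg (a - b),
        mul_pos hs2 (neg_pos.2 hn), mul_nonneg hs2.le (neg_nonneg.2 hb0)]
    · nlinarith [mul_pos (neg_pos.2 hn) hb0, sq_nonneg (s ^ 2 - a - b)]
  have hb0 : 0 ≤ b := by
    by_contra hn
    push Not at hn
    rcases ha0.eq_or_lt with h0 | h0
    · rw [← h0] at h1; nlinarith [mul_pos hs2 (neg_pos.2 hn)]
    · nlinarith [mul_pos (neg_pos.2 hn) h0, sq_nonneg (s ^ 2 - a - b)]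
  have hsa := Real.sq_sqrt ha0
  have hsb := Real.sq_sqrt hb0
  have h2 : |s ^ 2 - a - b| ≤ 2 * (√a * √b) := by
    refine abs_le_of_sq_le_sq ?_ (by positivity)
    calc _ ≤ 4 * (a * b) := h1
      _ = 4 * ((√a) ^ 2 * (√b) ^ 2) := by rw [hsa, hsb]
      _ = _ := by ring
  rw [abs_le] at h2
  refine ⟨ha0, hb0, ?_, ?_⟩
  · refine abs_le_of_sq_le_sq ?_ hs.le
    nlinarith [h2.1, h2.2]
  · refine le_of_sq_le_sq ?_ (by positivity)
    nlinarith [h2.1, h2.2]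

lemma slo_gap {p q s s' u : ℝ} (hs : 0 < s) (hss : s ≤ s') (h : 4 * u * s ^ 2 ≤ heron s p q)
    (h' : 4 * u * s' ^ 2 ≤ heron s' p q) : slo p q s u - slo p q s' u = s' - s := by
  obtain ⟨h1, h2, h3, -⟩ := heron_cond hs h
  obtain ⟨-, -, -, h4⟩ := heron_cond (hs.trans_le hss) h'
  unfold slo
  rw [ovl_integral h1 h2, ovl_integral h1 h2, ovl_gap hss h3 h4]

lemma sl_smul_e0 {m : ℕ} (s : ℝ) : s • e0 m = sl (s, 0) := by
  ext i
  refine Fin.cases ?_ (fun i => ?_) i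
  · simp [sl, e0]
  · simp [sl, e0]

lemma sl_norm_le {m : ℕ} {p : ℝ} (hp : 0 ≤ p) (z : ℝ × Vec m) :
    ‖sl z‖ ≤ p ↔ z.1 ^ 2 ≤ p ^ 2 - ‖z.2‖ ^ 2 := by
  rw [← sq_le_sq₀ (norm_nonneg _) hp, sl_norm_sq, le_sub_iff_add_le]

lemma KK_slice {m : ℕ} {p q : ℝ} (hp : 0 ≤ p) (hq : 0 ≤ q) (s : ℝ) :
    Integrable (fun w : Vec m => slo p q s (‖w‖ ^ 2)) ∧
    KK (ind (Bl (m + 1) p)) (ind (Bl (m + 1) q)) (s • e0 m) =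
      ∫ w : Vec m, slo p q s (‖w‖ ^ 2) := by
  have hi : Integrable (fun y : Vec (m + 1) =>
      ind (Bl (m + 1) p) y * ind (Bl (m + 1) q) (-(s • e0 m) - y)) := by
    refine (nice_Bl (m + 1) p).int.mul_bdd (c := 1) ?_ (ae_of_all _ fun y => ?_)
    · exact ((nice_Bl (m + 1) q).meas.comp (by fun_prop)).aestronglyMeasurable
    · exact (nice_Bl (m + 1) q).le _
  have hi2 := (sl_mp m).integrable_comp_of_integrable hi
  have e1 : ∀ z : ℝ × Vec m, ind (Bl (m + 1) p) (sl z) * ind (Bl (m + 1) q) (-(s • e0 m) - sl z) =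
      (if z.1 ^ 2 ≤ p ^ 2 - ‖z.2‖ ^ 2 then (1 : ℝ) else 0) *
        (if (s + z.1) ^ 2 ≤ q ^ 2 - ‖z.2‖ ^ 2 then 1 else 0) := by
    intro z
    have : ‖-(s • e0 m) - sl z‖ = ‖sl (s + z.1, z.2)‖ := by
      rw [← norm_neg]; congr 1
      rw [sl_smul_e0]
      ext i
      refine Fin.cases ?_ (fun i => ?_) i
      · simp [sl]; ring
      · simp [sl]
    rw [ind_Bl, ind_Bl, this]
    simp only [sl_norm_le hp, sl_norm_le hq]
  have hi3 : Integrable (fun z : ℝ × Vec m =>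
      (if z.1 ^ 2 ≤ p ^ 2 - ‖z.2‖ ^ 2 then (1 : ℝ) else 0) *
        (if (s + z.1) ^ 2 ≤ q ^ 2 - ‖z.2‖ ^ 2 then 1 else 0)) (volume.prod volume) := by
    simp only [Function.comp_def, e1] at hi2
    exact hi2
  refine ⟨hi3.integral_prod_right, ?_⟩
  unfold KK
  rw [← (sl_mp m).integral_comp (sl_emb m)]
  simp only [e1]
  exact integral_prod_symm _ hi3

/-- The overlap of two balls depends only on the distance of the centers. -/
lemma KK_radial {m : ℕ} {p q : ℝ} (hp : 0 ≤ p) (hq : 0 ≤ q) (x : Vec (m + 1)) :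
    KK (ind (Bl (m + 1) p)) (ind (Bl (m + 1) q)) x = ∫ w : Vec m, slo p q ‖x‖ (‖w‖ ^ 2) := by
  obtain ⟨U, hU⟩ := exists_isometry (x := ‖x‖ • e0 m) (y := x) (by simp [norm_smul, norm_e0])
  rw [← (KK_slice hp hq ‖x‖).2, ← KK_iso p q U (‖x‖ • e0 m), hU]

lemma KK_anti {m : ℕ} {p q : ℝ} (hp : 0 ≤ p) (hq : 0 ≤ q) {x x' : Vec (m + 1)} (h : ‖x‖ ≤ ‖x'‖) :
    KK (ind (Bl (m + 1) p)) (ind (Bl (m + 1) q)) x' ≤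
      KK (ind (Bl (m + 1) p)) (ind (Bl (m + 1) q)) x := by
  rw [KK_radial hp hq, KK_radial hp hq]
  exact integral_mono (KK_slice hp hq _).1 (KK_slice hp hq _).1
    fun w => slo_anti (norm_nonneg _) h

/-- The overlap of two balls decreases at least at the rate given by the cross-section of
radius `R` of the lens. -/
lemma KK_gap {m : ℕ} {p q R : ℝ} (hp : 0 ≤ p) (hq : 0 ≤ q) {x x' : Vec (m + 1)}
    (hx : 0 < ‖x‖) (hxx : ‖x‖ ≤ ‖x'‖) (h : 4 * R ^ 2 * ‖x‖ ^ 2 ≤ heron ‖x‖ p q)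
    (h' : 4 * R ^ 2 * ‖x'‖ ^ 2 ≤ heron ‖x'‖ p q) :
    (‖x'‖ - ‖x‖) * volume.real (Bl m R) ≤
      KK (ind (Bl (m + 1) p)) (ind (Bl (m + 1) q)) x -
      KK (ind (Bl (m + 1) p)) (ind (Bl (m + 1) q)) x' := by
  rw [KK_radial hp hq, KK_radial hp hq, ← integral_sub (KK_slice hp hq _).1 (KK_slice hp hq _).1,
    ← integral_ind measurableSet_closedBall, ← integral_const_mul]
  refine integral_mono ((nice_Bl m R).int.const_mul _)
    ((KK_slice hp hq _).1.sub (KK_slice hp hq _).1) fun w => ?_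
  simp only
  rw [ind_Bl]
  split_ifs with hw
  · have hw2 : ‖w‖ ^ 2 ≤ R ^ 2 := by gcongr
    rw [slo_gap hx hxx (le_trans (by gcongr) h) (le_trans (by gcongr) h'), mul_one]
  · rw [mul_zero]; exact sub_nonneg.2 (slo_anti (norm_nonneg _) hxx)

/-! ### The limiting quadratic form -/

/-- The `m`-dimensional latitude sphere `⟨θ₀, θ⟩ = t`, `|t| < 1`, is null: the cone over it has
disjoint translates along `θ₀`. -/
lemma latitude_null {m : ℕ} (θ₀ : Sph m) {t : ℝ} (ht : |t| < 1) :
    sig m {θ | inner ℝ (θ₀ : Vec (m + 1)) (θ : Vec (m + 1)) = t} = 0 := by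
  have hms : MeasurableSet {θ : Sph m | inner ℝ (θ₀ : Vec (m + 1)) (θ : Vec (m + 1)) = t} :=
    (isClosed_eq (by fun_prop) continuous_const).measurableSet
  rw [Measure.toSphere_apply' _ hms]
  refine mul_eq_zero_of_right _ ?_
  set C : Set (Vec (m + 1)) := {y | inner ℝ (θ₀ : Vec (m + 1)) y = t * ‖y‖} with hC
  have hCn : volume C = 0 := by
    have hCm : MeasurableSet C := (isClosed_eq (by fun_prop) (by fun_prop)).measurableSet
    refine Measure.addHaar_eq_zero_of_disjoint_translates volume
      (fun n : ℕ => ((1 : ℝ) / (n + 1)) • (θ₀ : Vec (m + 1))) ?_ ?_ hCm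
    · refine (isBounded_iff_forall_norm_le.2 ⟨1, ?_⟩)
      rintro _ ⟨n, rfl⟩
      have : (1 : ℝ) / (n + 1) ≤ 1 := by
        rw [div_le_one (by positivity)]; linarith [(n.cast_nonneg : (0 : ℝ) ≤ n)]
      simp only [norm_smul, norm_eq_of_mem_sphere, mul_one, Real.norm_eq_abs]
      rw [abs_of_nonneg (by positivity)]; exact this
    · intro k l hkl
      simp only [Function.onFun, disjoint_left, singleton_add]
      rintro _ ⟨y, hy, rfl⟩ ⟨z, hz, hzy⟩
      simp only [hC, mem_ofPred_eq] at hy hz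
      have h1 : inner ℝ (θ₀ : Vec (m + 1)) (θ₀ : Vec (m + 1)) = 1 := by
        rw [real_inner_self_eq_norm_sq]; simp
      set a : ℝ := (1 : ℝ) / (l + 1) - 1 / (k + 1) with ha
      have hyz : y = z + a • (θ₀ : Vec (m + 1)) := by
        rw [ha, sub_smul, ← sub_eq_zero]
        have : (1 / ((l : ℝ) + 1)) • (θ₀ : Vec (m + 1)) + z
          = (1 / ((k : ℝ) + 1)) • (θ₀ : Vec (m + 1)) + y := hzy
        rw [← sub_eq_zero] at this
        rw [← neg_eq_zero, ← this]; abel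
      have h2 : a = t * (‖y‖ - ‖z‖) := by
        have : inner ℝ (θ₀ : Vec (m + 1)) y = inner ℝ (θ₀ : Vec (m + 1)) z + a := by
          rw [hyz, inner_add_right, inner_smul_right, h1]; ring
        rw [hy, hz] at this; linarith
      have h3 : |‖y‖ - ‖z‖| ≤ |a| := by
        refine (abs_norm_sub_norm_le y z).trans ?_
        rw [hyz, add_sub_cancel_left, norm_smul]; simp
      have ha0 : a ≠ 0 := by
        rw [ha, sub_ne_zero]
        intro h
        rw [div_eq_div_iff (by positivity) (by positivity)] at h
        apply hkl
        have : (k : ℝ) = l := by linarith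
        exact_mod_cast this
      have h4 : |a| = |t| * |‖y‖ - ‖z‖| := by rw [← abs_mul, ← h2]
      have h5 : 0 < |a| := abs_pos.2 ha0
      have h6 : |t| * |‖y‖ - ‖z‖| ≤ |t| * |a| := by gcongr
      nlinarith
  refine measure_mono_null ?_ hCn
  rintro _ ⟨s, hs, _, ⟨θ, hθ, rfl⟩, rfl⟩
  simp only [mem_ofPred_eq] at hθ
  simp only [hC, mem_ofPred_eq, smul_eq_mul, inner_smul_right, hθ, norm_smul, Real.norm_eq_abs,
    norm_eq_of_mem_sphere, abs_of_pos hs.1]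
  ring

/-- Positive side lengths satisfying the strict triangle inequalities. -/
structure Tri (r : Fin 3 → ℝ) : Prop where
  pos : ∀ j, 0 < r j
  tri : ∀ j, 2 * r j < r 0 + r 1 + r 2

/-- The element of `Fin 3` different from two given distinct elements. -/
def thd (i j : Fin 3) : Fin 3 := -(i + j)

lemma thd_sum {i j : Fin 3} (h : i ≠ j) (g : Fin 3 → ℝ) :
    g 0 + g 1 + g 2 = g i + g j + g (thd i j) := by
  have e : ∀ k l : Fin 3, k ≠ l → (k = 0 ∧ l = 1 ∧ thd k l = 2) ∨ (k = 1 ∧ l = 0 ∧ thd k l = 2) ∨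
      (k = 0 ∧ l = 2 ∧ thd k l = 1) ∨ (k = 2 ∧ l = 0 ∧ thd k l = 1) ∨
      (k = 1 ∧ l = 2 ∧ thd k l = 0) ∨ (k = 2 ∧ l = 1 ∧ thd k l = 0) := by decide
  rcases e i j h with ⟨h1, h2, h3⟩ | ⟨h1, h2, h3⟩ | ⟨h1, h2, h3⟩ | ⟨h1, h2, h3⟩ | ⟨h1, h2, h3⟩ |
    ⟨h1, h2, h3⟩ <;> rw [h3, h1, h2] <;> ring

/-- Cosine of the angle between two points of the spheres of radii `r i`, `r j` whose sum has
norm equal to the third radius. -/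
def tt (r : Fin 3 → ℝ) (i j : Fin 3) : ℝ :=
  (r 0 ^ 2 + r 1 ^ 2 + r 2 ^ 2 - 2 * r i ^ 2 - 2 * r j ^ 2) / (2 * r i * r j)

lemma tt_eq (r : Fin 3 → ℝ) {i j : Fin 3} (h : i ≠ j) :
    tt r i j = (r (thd i j) ^ 2 - r i ^ 2 - r j ^ 2) / (2 * r i * r j) := by
  rw [tt, thd_sum h (fun k => r k ^ 2)]; congr 1; ring

lemma tt_symm (r : Fin 3 → ℝ) (i j : Fin 3) : tt r i j = tt r j i := by
  unfold tt; congr 1 <;> ring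

lemma Tri.tri' {r : Fin 3 → ℝ} (hr : Tri r) {i j : Fin 3} (h : i ≠ j) :
    r (thd i j) < r i + r j ∧ r i < r j + r (thd i j) ∧ r j < r i + r (thd i j) := by
  have h1 := thd_sum h r
  have h2 := hr.tri i
  have h3 := hr.tri j
  have h4 := hr.tri (thd i j)
  refine ⟨?_, ?_, ?_⟩ <;> linarith

lemma Tri.tt_lt {r : Fin 3 → ℝ} (hr : Tri r) {i j : Fin 3} (h : i ≠ j) : |tt r i j| < 1 := by
  obtain ⟨h1, h2, h3⟩ := hr.tri' h
  have hi := hr.pos i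
  have hj := hr.pos j
  have hk := hr.pos (thd i j)
  rw [tt_eq r h, abs_lt, lt_div_iff₀ (by positivity), div_lt_iff₀ (by positivity)]
  constructor <;> nlinarith

/-- `16` times the squared area of the triangle. -/
def HH (r : Fin 3 → ℝ) : ℝ := heron (r 0) (r 1) (r 2)

lemma HH_eq (r : Fin 3 → ℝ) {i j : Fin 3} (h : i ≠ j) : HH r = heron (r (thd i j)) (r i) (r j) := by
  have h1 := thd_sum h (fun k => r k ^ 2)
  have h2 := thd_sum h (fun k => r k ^ 4)
  have e : ∀ a b c : ℝ, heron a b c = (a ^ 2 + b ^ 2 + c ^ 2) ^ 2 - 2 * (a ^ 4 + b ^ 4 + c ^ 4) := by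
    intro a b c; unfold heron; ring
  rw [HH, e, e]; linear_combination (exp := 1) (r 0 ^ 2 + r 1 ^ 2 + r 2 ^ 2 + r i ^ 2 + r j ^ 2 + r (thd i j) ^ 2) * h1 - 2 * h2

lemma heron_pos {s p q : ℝ} (h1 : s < p + q) (h2 : p < q + s) (h3 : q < p + s) :
    0 < heron s p q := by
  have : heron s p q = (s + p + q) * (p + q - s) * ((q + s - p) * (p + s - q)) := by
    unfold heron; ring
  rw [this]
  have : 0 < s + p + q := by linarith
  have := mul_pos (mul_pos this (sub_pos.2 h1)) (mul_pos (sub_pos.2 h2) (sub_pos.2 h3))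
  linarith

lemma Tri.HH_pos {r : Fin 3 → ℝ} (hr : Tri r) : 0 < HH r := by
  obtain ⟨h1, h2, h3⟩ := hr.tri' (i := 1) (j := 2) (by decide)
  rw [HH_eq r (i := 1) (j := 2) (by decide)]
  exact heron_pos h1 h2 h3

/-- Altitude of the triangle on the side `r j`: the radius of the intersection of the spheres
with the other two radii, when their centers have distance `r j`. -/
def RR (r : Fin 3 → ℝ) (j : Fin 3) : ℝ := √(HH r) / (2 * r j)

lemma Tri.RR_pos {r : Fin 3 → ℝ} (hr : Tri r) (j : Fin 3) : 0 < RR r j :=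
  div_pos (Real.sqrt_pos.2 hr.HH_pos) (by linarith [hr.pos j])

lemma Tri.RR_sq {r : Fin 3 → ℝ} (hr : Tri r) (j : Fin 3) : 4 * RR r j ^ 2 * r j ^ 2 = HH r := by
  have := hr.pos j
  rw [RR, div_pow, Real.sq_sqrt hr.HH_pos.le]; field_simp; ring

/-- Volume of the `m`-dimensional lens cross-section. -/
def aa (m : ℕ) (r : Fin 3 → ℝ) (j : Fin 3) : ℝ := volume.real (Bl m (RR r j))

lemma Tri.aa_pos (m : ℕ) {r : Fin 3 → ℝ} (hr : Tri r) (j : Fin 3) : 0 < aa m r j :=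
  ENNReal.toReal_pos (measure_closedBall_pos _ _ (hr.RR_pos j)).ne' measure_closedBall_lt_top.ne

/-- Weights of the three spheres. -/
def al (m : ℕ) (r : Fin 3 → ℝ) (j : Fin 3) : ℝ := aa m r j / (2 * r j ^ m)

lemma Tri.al_pos (m : ℕ) {r : Fin 3 → ℝ} (hr : Tri r) (j : Fin 3) : 0 < al m r j :=
  div_pos (hr.aa_pos m j) (by have := hr.pos j; positivity)

/-- Three copies of the unit sphere. -/
abbrev YY (m : ℕ) := Fin 3 × Sph m

/-- The measure on three copies of the sphere with weights `al`. -/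
def nu (m : ℕ) (r : Fin 3 → ℝ) : Measure (YY m) :=
  ∑ j, ENNReal.ofReal (al m r j) • (sig m).map (Prod.mk j)

instance (m : ℕ) (r : Fin 3 → ℝ) : IsFiniteMeasure (nu m r) := by
  unfold nu
  have : ∀ j : Fin 3, IsFiniteMeasure (ENNReal.ofReal (al m r j) • (sig m).map (Prod.mk j)) :=
    fun j => by
      have : IsFiniteMeasure ((sig m).map (Prod.mk j)) := inferInstance
      exact Measure.smul_finite _ ENNReal.ofReal_ne_top
  infer_instance

lemma emb_mk {m : ℕ} (j : Fin 3) : MeasurableEmbedding (Prod.mk j : Sph m → YY m) :=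
  MeasurableEmbedding.prodMk_left j MeasurableEmbedding.id

lemma nu_ae {m : ℕ} {r : Fin 3 → ℝ} (hr : Tri r) {P : YY m → Prop} :
    (∀ᵐ y ∂(nu m r), P y) ↔ ∀ j, ∀ᵐ θ ∂(sig m), P (j, θ) := by
  unfold nu
  rw [ae_iff]
  simp only [Measure.coe_finsetSum, Measure.smul_apply, Finset.sum_apply, Finset.sum_eq_zero_iff,
    Finset.mem_univ, true_imp_iff, smul_eq_mul, mul_eq_zero, (emb_mk _).map_apply,
    Measure.coe_smul, Pi.smul_apply]
  refine forall_congr' fun j => ?_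
  rw [ae_iff]
  have := hr.al_pos m j
  simp [this]

lemma nu_integrable {m : ℕ} {r : Fin 3 → ℝ} (hr : Tri r) {g : YY m → ℝ} :
    Integrable g (nu m r) ↔ ∀ j, Integrable (fun θ => g (j, θ)) (sig m) := by
  unfold nu
  rw [integrable_finsetSum_measure]
  simp only [Finset.mem_univ, true_imp_iff]
  refine forall_congr' fun j => ?_
  rw [integrable_smul_measure (by simp [hr.al_pos m j]) ENNReal.ofReal_ne_top,
    (emb_mk j).integrable_map_iff]
  rfl

lemma nu_integral {m : ℕ} {r : Fin 3 → ℝ} (hr : Tri r) {g : YY m → ℝ}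
    (hg : ∀ j, Integrable (fun θ => g (j, θ)) (sig m)) :
    ∫ y, g y ∂(nu m r) = ∑ j, al m r j * ∫ θ, g (j, θ) ∂(sig m) := by
  have h1 := (nu_integrable hr).2 hg
  unfold nu at h1 ⊢
  rw [integrable_finsetSum_measure] at h1
  rw [integral_finsetSum_measure h1]
  refine Finset.sum_congr rfl fun j _ => ?_
  rw [integral_smul_measure, (emb_mk j).integral_map, ENNReal.toReal_ofReal (hr.al_pos m j).le,
    smul_eq_mul]

/-- The interaction kernel on three copies of the sphere. -/
def ker (m : ℕ) (r : Fin 3 → ℝ) (p q : YY m) : ℝ :=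
  if p.1 = q.1 then 0 else
    (1 / 2) / (al m r p.1 * al m r q.1) *
      (if inner ℝ (p.2 : Vec (m + 1)) (q.2 : Vec (m + 1)) ≤ tt r p.1 q.1 then 1 else 0)

lemma ker_bdd (m : ℕ) {r : Fin 3 → ℝ} (hr : Tri r) :
    ∃ C : ℝ, 0 ≤ C ∧ ∀ p q, |ker m r p q| ≤ C := by
  have h0 : ∀ i j, 0 ≤ (1 / 2) / (al m r i * al m r j) := fun i j => by
    have := hr.al_pos m i
    have := hr.al_pos m j
    positivity
  refine ⟨∑ i, ∑ j, (1 / 2) / (al m r i * al m r j),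
    Finset.sum_nonneg fun i _ => Finset.sum_nonneg fun j _ => h0 i j, fun p q => ?_⟩
  have h1 : (1 / 2) / (al m r p.1 * al m r q.1) ≤ ∑ i, ∑ j, (1 / 2) / (al m r i * al m r j) :=
    (Finset.single_le_sum (f := fun j => (1 / 2) / (al m r p.1 * al m r j)) (fun j _ => h0 p.1 j)
      (Finset.mem_univ q.1)).trans
    (Finset.single_le_sum (f := fun i => ∑ j, (1 / 2) / (al m r i * al m r j))
      (fun i _ => Finset.sum_nonneg fun j _ => h0 i j) (Finset.mem_univ p.1))
  unfold ker
  split_ifs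
  · simp only [abs_zero]; exact (h0 _ _).trans h1
  · rw [mul_one, abs_of_nonneg (h0 _ _)]; exact h1
  · simp only [mul_zero, abs_zero]; exact (h0 _ _).trans h1

lemma ker_meas (m : ℕ) (r : Fin 3 → ℝ) : Measurable (Function.uncurry (ker m r)) := by
  unfold ker Function.uncurry
  have hfin : ∀ g : Fin 3 → Fin 3 → ℝ,
      Measurable (fun z : YY m × YY m => g z.1.1 z.2.1) := fun g =>
    (measurable_of_countable (fun z : Fin 3 × Fin 3 => g z.1 z.2)).comp
      (measurable_fst.fst.prodMk measurable_snd.fst)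
  refine Measurable.ite ?_ measurable_const ?_
  · exact measurableSet_eq_fun measurable_fst.fst measurable_snd.fst
  · refine (hfin (fun i j => (1 / 2) / (al m r i * al m r j))).mul (Measurable.ite ?_
      measurable_const measurable_const)
    exact measurableSet_le (by fun_prop) (hfin _)

lemma ker_good (m : ℕ) {r : Fin 3 → ℝ} (hr : Tri r) : GoodKernel (ker m r) (nu m r) where
  meas := ker_meas m r
  bdd := ker_bdd m hr
  symm p q := by
    unfold ker
    rw [tt_symm r p.1 q.1, real_inner_comm, mul_comm (al m r p.1)]
    simp only [eq_comm]
  cont p₀ := by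
    obtain ⟨C, hC, hb⟩ := ker_bdd m hr
    have h1 : ∀ p : YY m, Measurable (ker m r p) := fun p =>
      (ker_meas m r).comp measurable_prodMk_left
    have h2 : Tendsto (fun p => ∫ q, |ker m r p q - ker m r p₀ q| ∂(nu m r)) (𝓝 p₀)
        (𝓝 (∫ q, (fun _ => (0 : ℝ)) q ∂(nu m r))) := by
      refine tendsto_integral_filter_of_dominated_convergence (fun _ => 2 * C) ?_ ?_
        (integrable_const _) ?_
      · exact Eventually.of_forall fun p => ((h1 p).sub (h1 p₀)).abs.aestronglyMeasurable
      · refine Eventually.of_forall fun p => ae_of_all _ fun q => ?_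
        rw [Real.norm_eq_abs, abs_abs]
        refine (abs_sub _ _).trans ?_
        linarith [hb p q, hb p₀ q]
      · rw [nu_ae hr]
        intro j
        obtain ⟨i, θ₀⟩ := p₀
        by_cases hij : i = j
        · subst hij
          refine ae_of_all _ fun θ => ?_
          refine tendsto_const_nhds.congr' ?_
          rw [nhds_prod_eq, nhds_discrete]
          refine ((eventually_pure.2 rfl : ∀ᶠ k in pure i, k = i).prod_inl _).mono fun p hp => ?_
          simp [ker, hp]
        · have hn : ∀ᵐ (θ : Sph m) ∂(sig m), inner ℝ (θ₀ : Vec (m + 1)) (θ : Vec (m + 1)) ≠ tt r i j := by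
            rw [ae_iff]; simpa using latitude_null θ₀ (hr.tt_lt hij)
          filter_upwards [hn] with θ hθ
          refine tendsto_const_nhds.congr' ?_
          have hc : Tendsto (fun p : YY m => inner ℝ (p.2 : Vec (m + 1)) (θ : Vec (m + 1)))
              (𝓝 (i, θ₀)) (𝓝 (inner ℝ (θ₀ : Vec (m + 1)) (θ : Vec (m + 1)))) :=
            (Continuous.tendsto (by fun_prop) (i, θ₀))
          have hi : ∀ᶠ p : YY m in 𝓝 (i, θ₀), p.1 = i := by
            rw [nhds_prod_eq, nhds_discrete]
            exact (eventually_pure.2 rfl : ∀ᶠ k in pure i, k = i).prod_inl _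
          rcases lt_or_gt_of_ne hθ with h | h
          · filter_upwards [hi, hc.eventually_lt_const h] with p hp hpl
            simp only [ker, hp, hij, if_false, hpl.le, h.le, if_true, sub_self, abs_zero]
          · filter_upwards [hi, hc.eventually_const_lt h] with p hp hpl
            simp only [ker, hp, hij, if_false, not_le.2 hpl, not_le.2 h, sub_self, abs_zero]
    simpa using h2

/-! ### Second order expansion of the defect -/

/-- The smaller index different from `j`. -/
def o1 (j : Fin 3) : Fin 3 := if j = 0 then 1 else 0

/-- The larger index different from `j`. -/
def o2 (j : Fin 3) : Fin 3 := if j = 2 then 1 else 2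

lemma o12 : ∀ j : Fin 3, o1 j ≠ o2 j ∧ thd (o1 j) (o2 j) = j := by decide

/-- The difference of the indicators of `E j` and of the ball of radius `r j`. -/
def ff {d : ℕ} (r : Fin 3 → ℝ) (E : Fin 3 → Set (Vec d)) (j : Fin 3) (x : Vec d) : ℝ :=
  ind (E j) x - ind (Bl d (r j)) x

/-- The convolution of the two balls with radii other than `r j`. -/
def Kj (m : ℕ) (r : Fin 3 → ℝ) (j : Fin 3) (x : Vec (m + 1)) : ℝ :=
  KK (ind (Bl (m + 1) (r (o1 j)))) (ind (Bl (m + 1) (r (o2 j)))) x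

/-- Deviation of `Kj` from its value on the sphere of radius `r j`. -/
def kk (m : ℕ) (r : Fin 3 → ℝ) (j : Fin 3) (x : Vec (m + 1)) : ℝ :=
  |Kj m r j x - Kj m r j (r j • e0 m)|

lemma norm_smul_e0 {m : ℕ} {s : ℝ} (hs : 0 ≤ s) : ‖s • e0 m‖ = s := by
  rw [norm_smul, norm_e0, mul_one, Real.norm_of_nonneg hs]

lemma nice_ff {d : ℕ} {r : Fin 3 → ℝ} {E : Fin 3 → Set (Vec d)} {j : Fin 3}
    (hE : MeasurableSet (E j)) (hv : volume (E j) = volume (Bl d (r j))) : Nice (ff r E j) :=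
  nice_ind_sub hE (by rw [hv]; exact measure_closedBall_lt_top.ne) measurableSet_closedBall
    measure_closedBall_lt_top.ne

lemma integral_ff {d : ℕ} {r : Fin 3 → ℝ} {E : Fin 3 → Set (Vec d)} {j : Fin 3}
    (hE : MeasurableSet (E j)) (hv : volume (E j) = volume (Bl d (r j))) : ∫ x, ff r E j x = 0 := by
  unfold ff
  rw [integral_sub (nice_ind hE (by rw [hv]; exact measure_closedBall_lt_top.ne)).int
    (nice_Bl d _).int, integral_ind hE, integral_ind measurableSet_closedBall, measureReal_def,
    measureReal_def, hv, sub_self]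

lemma ff_nonpos {d : ℕ} {r : Fin 3 → ℝ} {E : Fin 3 → Set (Vec d)} {j : Fin 3} {x : Vec d}
    (h : ‖x‖ ≤ r j) : ff r E j x ≤ 0 := by
  rw [ff, ind_Bl, if_pos h, ind, indicator]; split_ifs <;> simp

lemma ff_nonneg {d : ℕ} {r : Fin 3 → ℝ} {E : Fin 3 → Set (Vec d)} {j : Fin 3} {x : Vec d}
    (h : r j < ‖x‖) : 0 ≤ ff r E j x := by
  rw [ff, ind_Bl, if_neg (not_le.2 h), ind, indicator]; split_ifs <;> simp

lemma mul_KK_integrable {d : ℕ} {f b b' : Vec d → ℝ} (hf : Nice f) (hb : Nice b) (hb' : Nice b') :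
    Integrable (fun x => f x * KK b b' x) := by
  have h := (T3_integrable hf.int hb.int hb'.meas hb'.le)
  have := h.integral_prod_left
  simp only [mul_assoc, integral_const_mul] at this
  exact this

lemma kk_mul_abs {m : ℕ} {r : Fin 3 → ℝ} (hr : ∀ j, 0 ≤ r j) (E : Fin 3 → Set (Vec (m + 1)))
    (j : Fin 3) (x : Vec (m + 1)) :
    kk m r j x * |ff r E j x| = ff r E j x * Kj m r j (r j • e0 m) - ff r E j x * Kj m r j x := by
  rcases le_or_gt ‖x‖ (r j) with h | h
  · have h1 := ff_nonpos (E := E) h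
    have h2 : Kj m r j (r j • e0 m) ≤ Kj m r j x :=
      KK_anti (hr _) (hr _) (by rwa [norm_smul_e0 (hr j)])
    rw [kk, abs_of_nonneg (sub_nonneg.2 h2), abs_of_nonpos h1]; ring
  · have h1 := ff_nonneg (E := E) h
    have h2 : Kj m r j x ≤ Kj m r j (r j • e0 m) :=
      KK_anti (hr _) (hr _) (by rw [norm_smul_e0 (hr j)]; exact h.le)
    rw [kk, abs_of_nonpos (sub_nonpos.2 h2), abs_of_nonneg h1]; ring

lemma kk_integrable {m : ℕ} {r : Fin 3 → ℝ} (hr : ∀ j, 0 ≤ r j) {E : Fin 3 → Set (Vec (m + 1))}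
    {j : Fin 3} (hE : MeasurableSet (E j)) (hv : volume (E j) = volume (Bl (m + 1) (r j))) :
    Integrable (fun x => kk m r j x * |ff r E j x|) := by
  simp only [kk_mul_abs hr]
  exact ((nice_ff hE hv).int.mul_const _).sub
    (mul_KK_integrable (nice_ff hE hv) (nice_Bl _ _) (nice_Bl _ _))

lemma kk_integral {m : ℕ} {r : Fin 3 → ℝ} (hr : ∀ j, 0 ≤ r j) {E : Fin 3 → Set (Vec (m + 1))}
    {j : Fin 3} (hE : MeasurableSet (E j)) (hv : volume (E j) = volume (Bl (m + 1) (r j))) :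
    ∫ x, kk m r j x * |ff r E j x| =
      - T3 (ff r E j) (ind (Bl (m + 1) (r (o1 j)))) (ind (Bl (m + 1) (r (o2 j)))) := by
  simp only [kk_mul_abs hr]
  unfold Kj
  rw [integral_sub ((nice_ff hE hv).int.mul_const _)
    (mul_KK_integrable (nice_ff hE hv) (nice_Bl _ _) (nice_Bl _ _)), integral_mul_const,
    integral_ff hE hv, zero_mul, zero_sub, T3_eq_KK (nice_ff hE hv) (nice_Bl _ _) (nice_Bl _ _)]

/-- Total first order defect. -/
def DD (m : ℕ) (r : Fin 3 → ℝ) (E : Fin 3 → Set (Vec (m + 1))) : ℝ :=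
  ∑ j, ∫ x, kk m r j x * |ff r E j x|

/-- Sum of the three second order interaction terms. -/
def CR {d : ℕ} (r : Fin 3 → ℝ) (f : Fin 3 → Vec d → ℝ) : ℝ :=
  T3 (f 0) (f 1) (ind (Bl d (r 2))) + T3 (f 0) (f 2) (ind (Bl d (r 1))) +
    T3 (f 1) (f 2) (ind (Bl d (r 0)))

/-- The exact expansion of the defect: the linear terms have a sign because `E j` and the ball
have the same volume. -/
lemma defect_eq {m : ℕ} {r : Fin 3 → ℝ} (hr : ∀ j, 0 ≤ r j) {E : Fin 3 → Set (Vec (m + 1))}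
    (hE : ∀ j, MeasurableSet (E j)) (hv : ∀ j, volume (E j) = volume (Bl (m + 1) (r j))) :
    Tfun (fun j => Bl (m + 1) (r j)) - Tfun E =
      DD m r E - CR r (ff r E) - T3 (ff r E 0) (ff r E 1) (ff r E 2) := by
  have he : ∀ j, (fun x => ind (Bl (m + 1) (r j)) x + ff r E j x) = ind (E j) := by
    intro j; funext x; simp [ff]
  have h := T3_expand (b := fun j => ind (Bl (m + 1) (r j))) (f := ff r E)
    (fun j => nice_Bl _ _) (fun j => nice_ff (hE j) (hv j))
    (fun j => by
      rw [he]; exact nice_ind (hE j) (by rw [hv]; exact measure_closedBall_lt_top.ne))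
  have h0 : ∀ F : Fin 3 → Set (Vec (m + 1)), Tfun F = T3 (ind (F 0)) (ind (F 1)) (ind (F 2)) :=
    fun F => rfl
  simp only [he] at h
  rw [h0, h0, h, DD, Fin.sum_univ_three, kk_integral hr (hE 0) (hv 0), kk_integral hr (hE 1) (hv 1),
    kk_integral hr (hE 2) (hv 2), CR]
  simp only [show o1 0 = 1 from rfl, show o2 0 = 2 from rfl, show o1 1 = 0 from rfl,
    show o2 1 = 2 from rfl, show o1 2 = 0 from rfl, show o2 2 = 1 from rfl]
  ring

lemma T3_abs_le' {d : ℕ} {f g h : Vec d → ℝ} (hf : Nice f) (hg : Nice g) (hh : Nice h) {a b : ℝ}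
    (ha : ∫ x, |f x| ≤ a) (hb : ∫ x, |g x| ≤ b) : |T3 f g h| ≤ a * b := by
  refine (T3_abs_le hf.int hg.int hh.le).trans ?_
  have h1 : 0 ≤ ∫ x, |f x| := integral_nonneg fun _ => abs_nonneg _
  have h2 : 0 ≤ ∫ x, |g x| := integral_nonneg fun _ => abs_nonneg _
  exact mul_le_mul ha hb h2 (h1.trans ha)

lemma kk_gap {m : ℕ} {r : Fin 3 → ℝ} (hr : ∀ j, 0 < r j) {R η : ℝ} (hη : 0 < η) {j : Fin 3}
    (h : ∀ s, |s - r j| ≤ η → 0 < s ∧ 4 * R ^ 2 * s ^ 2 ≤ heron s (r (o1 j)) (r (o2 j)))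
    (x : Vec (m + 1)) :
    volume.real (Bl m R) * min |‖x‖ - r j| η ≤ kk m r j x := by
  have hr0 : ∀ j, 0 ≤ r j := fun j => (hr j).le
  have key : ∀ x : Vec (m + 1), |‖x‖ - r j| ≤ η → volume.real (Bl m R) * |‖x‖ - r j| ≤ kk m r j x := by
    intro x hx
    have hn := norm_smul_e0 (m := m) (hr0 j)
    have h1 := h (r j) (by simp [hη.le])
    have h2 := h ‖x‖ hx
    rcases le_total ‖x‖ (r j) with hl | hl
    · have := KK_gap (m := m) (hr0 (o1 j)) (hr0 (o2 j)) (x := x) (x' := r j • e0 m) (R := R)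
        h2.1 (by rwa [hn]) h2.2 (by rw [hn]; exact h1.2)
      rw [hn] at this
      rw [abs_of_nonpos (sub_nonpos.2 hl), kk]
      refine le_trans ?_ (le_abs_self _)
      unfold Kj; linarith
    · have := KK_gap (m := m) (hr0 (o1 j)) (hr0 (o2 j)) (x := r j • e0 m) (x' := x) (R := R)
        (by rw [hn]; exact hr j) (by rwa [hn]) (by rw [hn]; exact h1.2) h2.2
      rw [hn] at this
      rw [abs_of_nonneg (sub_nonneg.2 hl), kk]
      refine le_trans ?_ (neg_le_abs _)
      unfold Kj; linarith
  rcases le_or_gt |‖x‖ - r j| η with hx | hx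
  · rw [min_eq_left hx]; exact key x hx
  · rw [min_eq_right hx.le]
    have hrη : η < r j := by
      by_contra hc
      have := (h 0 (by rw [zero_sub, abs_neg, abs_of_pos (hr j)]; exact not_lt.1 hc)).1
      exact lt_irrefl _ this
    rcases le_total ‖x‖ (r j) with hl | hl
    · rw [abs_of_nonpos (sub_nonpos.2 hl)] at hx
      have h1 := key ((r j - η) • e0 m) (by
        rw [norm_smul_e0 (by linarith)]; simp [abs_of_pos hη])
      rw [norm_smul_e0 (by linarith), show r j - η - r j = -η by ring, abs_neg, abs_of_pos hη] at h1
      refine h1.trans ?_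
      have h2 : Kj m r j ((r j - η) • e0 m) ≤ Kj m r j x :=
        KK_anti (hr0 _) (hr0 _) (by rw [norm_smul_e0 (by linarith)]; linarith)
      have h3 : Kj m r j (r j • e0 m) ≤ Kj m r j ((r j - η) • e0 m) :=
        KK_anti (hr0 _) (hr0 _) (by
          rw [norm_smul_e0 (by linarith), norm_smul_e0 (hr0 j)]; linarith)
      rw [kk, kk, abs_of_nonneg (by linarith), abs_of_nonneg (by linarith)]
      linarith
    · rw [abs_of_nonneg (sub_nonneg.2 hl)] at hx
      have h1 := key ((r j + η) • e0 m) (by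
        rw [norm_smul_e0 (by linarith)]; simp [abs_of_pos hη])
      rw [norm_smul_e0 (by linarith), show r j + η - r j = η by ring, abs_of_pos hη] at h1
      refine h1.trans ?_
      have h2 : Kj m r j x ≤ Kj m r j ((r j + η) • e0 m) :=
        KK_anti (hr0 _) (hr0 _) (by rw [norm_smul_e0 (by linarith)]; linarith)
      have h3 : Kj m r j ((r j + η) • e0 m) ≤ Kj m r j (r j • e0 m) :=
        KK_anti (hr0 _) (hr0 _) (by
          rw [norm_smul_e0 (hr0 j), norm_smul_e0 (by linarith)]; linarith)
      rw [kk, kk, abs_of_nonpos (by linarith), abs_of_nonpos (by linarith)]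
      linarith

/-- Uniform lower bound on `kk` with a constant as close as desired to the one of the limiting
triangle. -/
lemma kk_lower (m : ℕ) {rl : Fin 3 → ℝ} (hl : Tri rl) {r : ℕ → Fin 3 → ℝ}
    (hlim : ∀ j, Tendsto (fun n => r n j) atTop (𝓝 (rl j))) {lam : ℝ} (h1 : lam < 1) :
    ∃ η > 0, ∀ᶠ n in atTop, ∀ j, ∀ x : Vec (m + 1),
      lam * aa m rl j * min |‖x‖ - r n j| η ≤ kk m (r n) j x := by
  obtain ⟨s, hs0, hs1, hsl⟩ : ∃ s : ℝ, 0 < s ∧ s < 1 ∧ lam < s ^ m := by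
    have hc : Tendsto (fun s : ℝ => s ^ m) (𝓝[<] 1) (𝓝 1) := by
      have : ContinuousAt (fun s : ℝ => s ^ m) 1 := by fun_prop
      simpa using this.tendsto.mono_left nhdsWithin_le_nhds
    have e1 := hc.eventually_const_lt h1
    have e2 : ∀ᶠ s : ℝ in 𝓝[<] 1, 0 < s := nhdsWithin_le_nhds (lt_mem_nhds one_pos)
    obtain ⟨s, hs⟩ := (e1.and (e2.and self_mem_nhdsWithin)).exists
    exact ⟨s, hs.2.1, hs.2.2, hs.1⟩
  have hR : ∀ j, lam * aa m rl j ≤ volume.real (Bl m (s * RR rl j)) := by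
    intro j
    have e : ∀ R : ℝ, 0 ≤ R → volume.real (Bl m R) = R ^ m * volume.real (Bl m 1) := by
      intro R hR
      have := Measure.addHaar_real_closedBall' (volume : Measure (Vec m)) 0 hR
      simpa using this
    have hRp := hl.RR_pos j
    rw [aa, e (RR rl j) hRp.le, e (s * RR rl j) (by positivity), mul_pow]
    have : 0 ≤ RR rl j ^ m * volume.real (Bl m 1) := by positivity
    nlinarith
  have hev : ∀ j, ∀ᶠ z : ℝ × ℝ × ℝ in 𝓝 (rl j, rl (o1 j), rl (o2 j)),
      0 < z.1 ∧ 4 * (s * RR rl j) ^ 2 * z.1 ^ 2 < heron z.1 z.2.1 z.2.2 := by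
    intro j
    have c1 : Continuous fun z : ℝ × ℝ × ℝ => z.1 := by fun_prop
    have c2 : Continuous fun z : ℝ × ℝ × ℝ => 4 * (s * RR rl j) ^ 2 * z.1 ^ 2 := by fun_prop
    have c3 : Continuous fun z : ℝ × ℝ × ℝ => heron z.1 z.2.1 z.2.2 := by unfold heron; fun_prop
    refine ((c1.tendsto (rl j, rl (o1 j), rl (o2 j))).eventually_const_lt (hl.pos j)).and
      (c2.continuousAt.eventually_lt c3.continuousAt ?_)
    have := HH_eq rl (o12 j).1
    rw [(o12 j).2] at this
    simp only
    rw [← this, ← hl.RR_sq j]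
    have hp := hl.pos j
    have hRp := hl.RR_pos j
    have : s ^ 2 < 1 := by nlinarith
    have : 0 < 4 * RR rl j ^ 2 * rl j ^ 2 := by positivity
    nlinarith
  have : ∃ ε > 0, ∀ j, ∀ z : ℝ × ℝ × ℝ, dist z (rl j, rl (o1 j), rl (o2 j)) < ε →
      0 < z.1 ∧ 4 * (s * RR rl j) ^ 2 * z.1 ^ 2 < heron z.1 z.2.1 z.2.2 := by
    choose ε hε hz using fun j => Metric.eventually_nhds_iff.1 (hev j)
    refine ⟨min (ε 0) (min (ε 1) (ε 2)), by simp [hε], fun j z h => hz j (h.trans_le ?_)⟩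
    fin_cases j <;> simp
  obtain ⟨ε, hε, hz⟩ := this
  refine ⟨ε / 2, by linarith, ?_⟩
  have hn : ∀ᶠ n in atTop, ∀ j, |r n j - rl j| < ε / 2 ∧ 0 < r n j := by
    rw [eventually_all]
    intro j
    have e1 := Metric.tendsto_nhds.1 (hlim j) (ε / 2) (by linarith)
    filter_upwards [e1, (hlim j).eventually_const_lt (hl.pos j)] with n a b
    exact ⟨a, b⟩
  filter_upwards [hn] with n hn j x
  refine le_trans ?_ (kk_gap (R := s * RR rl j) (fun j => (hn j).2) (by linarith : 0 < ε / 2) ?_ x)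
  · have : 0 ≤ min |‖x‖ - r n j| (ε / 2) := le_min (abs_nonneg _) (by linarith)
    exact mul_le_mul_of_nonneg_right (hR j) this
  · intro t ht
    have := hz j (t, r n (o1 j), r n (o2 j)) (by
      rw [Prod.dist_eq, Prod.dist_eq, max_lt_iff, max_lt_iff]
      refine ⟨?_, ?_, ?_⟩
      · rw [Real.dist_eq]
        have := abs_sub_le t (r n j) (rl j)
        simp only
        linarith [(hn j).1]
      · rw [Real.dist_eq]; simp only; linarith [(hn (o1 j)).1]
      · rw [Real.dist_eq]; simp only; linarith [(hn (o2 j)).1])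
    exact ⟨this.1, this.2.le⟩

/-! ### Concentration near the spheres -/

/-- Bathtub inequality: a density bounded by `M` has first moment at least that of the density
`M` on an interval of the same mass. -/
lemma one_sided {Ψ : ℝ → ℝ} (hi : Integrable Ψ) (h0 : ∀ s, 0 ≤ Ψ s) {M : ℝ} (hM : 0 < M)
    (hb : ∀ s, Ψ s ≤ M) {r : ℝ} (hs : ∀ s, s < r → Ψ s = 0)
    (hi2 : Integrable (fun s => Ψ s * |s - r|)) :
    (∫ s, Ψ s) ^ 2 ≤ 2 * M * ∫ s, Ψ s * |s - r| := by
  set A := ∫ s, Ψ s with hA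
  have hA0 : 0 ≤ A := integral_nonneg h0
  set c := A / M with hc
  have hc0 : 0 ≤ c := by positivity
  have h1 : ∫ s in Icc r (r + c), M * (s - r - c) = - (M * c ^ 2 / 2) := by
    rw [integral_Icc_eq_integral_Ioc, ← intervalIntegral.integral_of_le (by linarith)]
    have hd : ∀ x ∈ uIcc r (r + c), HasDerivAt (fun s => M * (s - r - c) ^ 2 / 2) (M * (x - r - c)) x := by
      intro x _
      have := (((((hasDerivAt_id x).sub_const r).sub_const c).pow 2).const_mul M).div_const 2
      exact this.congr_deriv (by simp; ring)
    rw [intervalIntegral.integral_eq_sub_of_hasDerivAt hd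
      ((by fun_prop : Continuous _).intervalIntegrable _ _)]
    ring
  have h2 : ∫ s, (Icc r (r + c)).indicator (fun s => M * (s - r - c)) s ≤
      ∫ s, (Ψ s * |s - r| - c * Ψ s) := by
    refine integral_mono ?_ (hi2.sub (hi.const_mul c)) fun s => ?_
    · rw [integrable_indicator_iff measurableSet_Icc]
      exact (by fun_prop : Continuous _).continuousOn.integrableOn_Icc
    · simp only [indicator]
      split_ifs with h
      · rw [abs_of_nonneg (by linarith [h.1])]
        nlinarith [hb s, h0 s, h.2]
      · rcases lt_or_ge s r with h' | h'
        · simp [hs s h']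
        · have : r + c < s := by
            by_contra hcon; exact h ⟨h', not_lt.1 hcon⟩
          rw [abs_of_nonneg (by linarith)]
          nlinarith [h0 s]
  rw [integral_indicator measurableSet_Icc, h1, integral_sub hi2 (hi.const_mul c),
    integral_const_mul, ← hA] at h2
  have e : c * M = A := by rw [hc]; field_simp
  have e2 : 2 * M * (M * c ^ 2 / 2) = A ^ 2 := by rw [← e]; ring
  have e3 : M * (c * A) = A ^ 2 := by rw [← mul_assoc, mul_comm M c, e]; ring
  nlinarith

lemma one_sided' {Ψ : ℝ → ℝ} (hi : Integrable Ψ) (h0 : ∀ s, 0 ≤ Ψ s) {M : ℝ} (hM : 0 < M)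
    (hb : ∀ s, Ψ s ≤ M) {r : ℝ} (hs : ∀ s, r < s → Ψ s = 0)
    (hi2 : Integrable (fun s => Ψ s * |s - r|)) :
    (∫ s, Ψ s) ^ 2 ≤ 2 * M * ∫ s, Ψ s * |s - r| := by
  have e : ∀ s, |2 * r - s - r| = |s - r| := fun s => by
    rw [show 2 * r - s - r = -(s - r) by ring, abs_neg]
  have h := one_sided (Ψ := fun s => Ψ (2 * r - s)) (hi.comp_sub_left _) (fun s => h0 _) hM
    (fun s => hb _) (r := r) (fun s h => hs _ (by linarith)) (by
      have := hi2.comp_sub_left (2 * r)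
      simpa only [e] using this)
  rw [integral_sub_left_eq_self (fun s => Ψ s) volume (2 * r)] at h
  have e2 : ∫ s, Ψ (2 * r - s) * |s - r| = ∫ s, Ψ s * |s - r| := by
    rw [← integral_sub_left_eq_self (fun s => Ψ s * |s - r|) volume (2 * r)]
    simp only [e]
  rwa [e2] at h

lemma two_sided {Φ : ℝ → ℝ} (hi : Integrable Φ) {M : ℝ} (hM : 0 < M)
    (hb : ∀ s, |Φ s| ≤ M) {r : ℝ} (hn : ∀ s, s < r → Φ s ≤ 0) (hp : ∀ s, r < s → 0 ≤ Φ s)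
    (hi2 : Integrable (fun s => |Φ s| * |s - r|)) :
    (∫ s, Φ s) ^ 2 ≤ 2 * M * ∫ s, |Φ s| * |s - r| ∧
    (∫ s, |Φ s|) ^ 2 ≤ 4 * M * ∫ s, |Φ s| * |s - r| := by
  have hi' : Integrable (fun s => -Φ s) := hi.neg
  have hpp := hi.pos_part
  have hnp := hi'.pos_part
  have i1 : Integrable (fun s => max (Φ s) 0 * |s - r|) := by
    refine hi2.mono (hpp.aestronglyMeasurable.mul (by fun_prop)) (ae_of_all _ fun s => ?_)
    rw [norm_mul, norm_mul, Real.norm_eq_abs, Real.norm_eq_abs |Φ s|, abs_abs,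
      abs_of_nonneg (le_max_right (Φ s) 0)]
    exact mul_le_mul_of_nonneg_right (max_le (le_abs_self _) (abs_nonneg _)) (norm_nonneg _)
  have i2 : Integrable (fun s => max (-Φ s) 0 * |s - r|) := by
    refine hi2.mono (hnp.aestronglyMeasurable.mul (by fun_prop)) (ae_of_all _ fun s => ?_)
    rw [norm_mul, norm_mul, Real.norm_eq_abs, Real.norm_eq_abs |Φ s|, abs_abs,
      abs_of_nonneg (le_max_right (-Φ s) 0)]
    exact mul_le_mul_of_nonneg_right (max_le (neg_le_abs _) (abs_nonneg _)) (norm_nonneg _)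
  have a1 := one_sided hpp (fun s => le_max_right _ _) hM
    (fun s => max_le ((le_abs_self _).trans (hb s)) hM.le) (r := r)
    (fun s h => max_eq_right (hn s h)) i1
  have a2 := one_sided' hnp (fun s => le_max_right _ _) hM
    (fun s => max_le ((neg_le_abs _).trans (hb s)) hM.le) (r := r)
    (fun s h => max_eq_right (by linarith [hp s h])) i2
  have e1 : ∀ s, Φ s = max (Φ s) 0 - max (-Φ s) 0 := fun s => by
    rcases le_total (Φ s) 0 with h | h
    · rw [max_eq_right h, max_eq_left (by linarith)]; ring
    · rw [max_eq_left h, max_eq_right (by linarith)]; ring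
  have e2 : ∀ s, |Φ s| = max (Φ s) 0 + max (-Φ s) 0 := fun s => by
    rcases le_total (Φ s) 0 with h | h
    · rw [max_eq_right h, max_eq_left (by linarith), abs_of_nonpos h]; ring
    · rw [max_eq_left h, max_eq_right (by linarith), abs_of_nonneg h]; ring
  have f1 : ∫ s, Φ s = (∫ s, max (Φ s) 0) - ∫ s, max (-Φ s) 0 := by
    rw [← integral_sub hpp hnp]; exact integral_congr_ae (ae_of_all _ e1)
  have f2 : ∫ s, |Φ s| = (∫ s, max (Φ s) 0) + ∫ s, max (-Φ s) 0 := by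
    rw [← integral_add hpp hnp]; exact integral_congr_ae (ae_of_all _ e2)
  have f3 : ∫ s, |Φ s| * |s - r| =
      (∫ s, max (Φ s) 0 * |s - r|) + ∫ s, max (-Φ s) 0 * |s - r| := by
    rw [← integral_add i1 i2]
    refine integral_congr_ae (ae_of_all _ fun s => ?_)
    simp only
    rw [← add_mul, ← e2]
  have p1 : 0 ≤ ∫ s, max (Φ s) 0 := integral_nonneg fun s => le_max_right _ _
  have p2 : 0 ≤ ∫ s, max (-Φ s) 0 := integral_nonneg fun s => le_max_right _ _
  rw [f1, f2, f3]
  constructor <;> nlinarith [sq_nonneg ((∫ s, max (Φ s) 0) - ∫ s, max (-Φ s) 0)]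

/-- The part of `ff` within distance `η` of the sphere of radius `r j`. -/
def gg {d : ℕ} (r : Fin 3 → ℝ) (E : Fin 3 → Set (Vec d)) (η : ℝ) (j : Fin 3) (x : Vec d) : ℝ :=
  if |‖x‖ - r j| ≤ η then ff r E j x else 0

lemma abs_gg_le {d : ℕ} (r : Fin 3 → ℝ) (E : Fin 3 → Set (Vec d)) (η : ℝ) (j : Fin 3) (x : Vec d) :
    |gg r E η j x| ≤ |ff r E j x| := by
  unfold gg; split_ifs <;> simp

lemma nice_gg {d : ℕ} {r : Fin 3 → ℝ} {E : Fin 3 → Set (Vec d)} {j : Fin 3} (η : ℝ)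
    (hf : Nice (ff r E j)) : Nice (gg r E η j) := by
  have hm : Measurable (gg r E η j) :=
    Measurable.ite (measurableSet_le (by fun_prop) measurable_const) hf.meas measurable_const
  exact ⟨hm, hf.int.mono hm.aestronglyMeasurable (ae_of_all _ fun x => abs_gg_le r E η j x),
    fun x => (abs_gg_le r E η j x).trans (hf.le x)⟩

/-- First moment of `gg` with respect to the distance from the sphere. -/
def gI {d : ℕ} (r : Fin 3 → ℝ) (E : Fin 3 → Set (Vec d)) (η : ℝ) (j : Fin 3) (x : Vec d) : ℝ :=
  |gg r E η j x| * |‖x‖ - r j|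

lemma gI_le {d : ℕ} (r : Fin 3 → ℝ) (E : Fin 3 → Set (Vec d)) {η : ℝ} (j : Fin 3)
    (x : Vec d) : gI r E η j x ≤ |gg r E η j x| * η := by
  unfold gI gg
  split_ifs with h
  · gcongr
  · simp

lemma gI_integrable {d : ℕ} {r : Fin 3 → ℝ} {E : Fin 3 → Set (Vec d)} {j : Fin 3} {η : ℝ}
    (hf : Nice (ff r E j)) : Integrable (gI r E η j) := by
  have hg := nice_gg η hf
  have hm : Measurable (gI r E η j) := hg.meas.abs.mul (by fun_prop)
  refine (hg.int.abs.mul_const η).mono' hm.aestronglyMeasurable (ae_of_all _ fun x => ?_)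
  rw [Real.norm_of_nonneg (by unfold gI; positivity)]
  exact gI_le r E j x

lemma rad_bounds {m : ℕ} {r : Fin 3 → ℝ} {E : Fin 3 → Set (Vec (m + 1))} {j : Fin 3} {η : ℝ}
    (hη : 0 < η) (hr : 0 < r j) (hf : Nice (ff r E j)) (θ : Sph m) :
    (rad (gg r E η j) θ) ^ 2 ≤ 2 * (r j + η) ^ m * rad (gI r E η j) θ ∧
    (rad (fun x => |gg r E η j x|) θ) ^ 2 ≤ 4 * (r j + η) ^ m * rad (gI r E η j) θ := by
  have hg := nice_gg η hf
  have hM : 0 < (r j + η) ^ m := by positivity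
  set Φ : ℝ → ℝ := (Ioi 0).indicator fun s => s ^ m * gg r E η j (s • (θ : Vec (m + 1))) with hΦ
  have hnorm : ∀ s : ℝ, 0 < s → ‖s • (θ : Vec (m + 1))‖ = s := fun s hs => by
    rw [norm_smul]; simp [abs_of_pos hs]
  have hΦm : Measurable Φ := by
    refine Measurable.indicator ?_ measurableSet_Ioi
    exact (by fun_prop : Measurable fun s : ℝ => s ^ m).mul (hg.meas.comp (by fun_prop))
  have hval : ∀ s, 0 < s → Φ s = s ^ m * gg r E η j (s • (θ : Vec (m + 1))) := fun s hs =>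
    indicator_of_mem hs _
  have hval0 : ∀ s, ¬ 0 < s → Φ s = 0 := fun s hs => indicator_of_notMem hs _
  have hsupp : ∀ s, η < |s - r j| → Φ s = 0 := by
    intro s hs
    by_cases h : 0 < s
    · rw [hval s h, gg, hnorm s h, if_neg (not_le.2 hs), mul_zero]
    · exact hval0 s h
  have hb : ∀ s, |Φ s| ≤ (r j + η) ^ m := by
    intro s
    by_cases h : 0 < s
    · rcases lt_or_ge η |s - r j| with h1 | h1
      · rw [hsupp s h1, abs_zero]; exact hM.le
      · rw [hval s h, abs_mul, abs_of_pos (by positivity)]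
        have h2 : s ≤ r j + η := by linarith [(abs_le.1 h1).2]
        calc s ^ m * |gg r E η j (s • (θ : Vec (m + 1)))| ≤ s ^ m * 1 := by
              gcongr; exact hg.le _
          _ ≤ (r j + η) ^ m := by rw [mul_one]; gcongr
    · rw [hval0 s h, abs_zero]; exact hM.le
  have hdom : Integrable ((Icc (r j - η) (r j + η)).indicator fun _ => (r j + η) ^ m) := by
    rw [integrable_indicator_iff measurableSet_Icc]
    exact integrableOn_const (by simp)
  have hin : ∀ s, s ∉ Icc (r j - η) (r j + η) → η < |s - r j| := by
    intro s hs
    by_contra hc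
    rw [not_lt, abs_le] at hc
    exact hs ⟨by linarith [hc.1], by linarith [hc.2]⟩
  have hi : Integrable Φ := by
    refine hdom.mono' hΦm.aestronglyMeasurable (ae_of_all _ fun s => ?_)
    by_cases hs : s ∈ Icc (r j - η) (r j + η)
    · rw [indicator_of_mem hs]; exact hb s
    · rw [indicator_of_notMem hs, hsupp s (hin s hs), norm_zero]
  have hi2 : Integrable (fun s => |Φ s| * |s - r j|) := by
    refine (hdom.mul_const η).mono' (hΦm.abs.mul (by fun_prop)).aestronglyMeasurable
      (ae_of_all _ fun s => ?_)
    rw [Real.norm_of_nonneg (by positivity)]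
    by_cases hs : s ∈ Icc (r j - η) (r j + η)
    · rw [indicator_of_mem hs]
      have : |s - r j| ≤ η := abs_le.2 ⟨by linarith [hs.1], by linarith [hs.2]⟩
      exact mul_le_mul (hb s) this (abs_nonneg _) hM.le
    · rw [indicator_of_notMem hs, hsupp s (hin s hs)]; simp
  have hn : ∀ s, s < r j → Φ s ≤ 0 := by
    intro s hs
    by_cases h : 0 < s
    · rw [hval s h, gg]
      split_ifs
      · exact mul_nonpos_of_nonneg_of_nonpos (by positivity) (ff_nonpos (by rw [hnorm s h]; exact hs.le))
      · simp
    · rw [hval0 s h]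
  have hp : ∀ s, r j < s → 0 ≤ Φ s := by
    intro s hs
    have h : 0 < s := hr.trans hs
    rw [hval s h, gg]
    split_ifs
    · exact mul_nonneg (by positivity) (ff_nonneg (by rw [hnorm s h]; exact hs))
    · simp
  have key := two_sided hi hM hb hn hp hi2
  have r1 : rad (gg r E η j) θ = ∫ s, Φ s := by
    rw [rad, rmeas_integral, ← integral_indicator measurableSet_Ioi]
  have r2 : rad (fun x => |gg r E η j x|) θ = ∫ s, |Φ s| := by
    rw [rad, rmeas_integral, ← integral_indicator measurableSet_Ioi]
    refine integral_congr_ae (ae_of_all _ fun s => ?_)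
    simp only
    by_cases h : 0 < s
    · rw [indicator_of_mem (mem_Ioi.2 h), hval s h, abs_mul, abs_of_pos (by positivity : 0 < s ^ m)]
    · rw [indicator_of_notMem (by simpa using h), hval0 s h, abs_zero]
  have r3 : rad (gI r E η j) θ = ∫ s, |Φ s| * |s - r j| := by
    rw [rad, rmeas_integral, ← integral_indicator measurableSet_Ioi]
    refine integral_congr_ae (ae_of_all _ fun s => ?_)
    simp only
    by_cases h : 0 < s
    · rw [indicator_of_mem (mem_Ioi.2 h), hval s h, abs_mul, abs_of_pos (by positivity : 0 < s ^ m),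
        gI, hnorm s h]
      ring
    · rw [indicator_of_notMem (by simpa using h), hval0 s h]; simp
  rw [r1, r2, r3]
  exact key

/-! ### Interaction terms on the sphere -/

lemma prod_mul_bdd {X Y : Type*} [MeasurableSpace X] [MeasurableSpace Y] {μ : Measure X}
    {ν : Measure Y} [SFinite μ] [SFinite ν] {f : X → ℝ} {g : Y → ℝ} (hf : Integrable f μ)
    (hg : Integrable g ν) {h : X × Y → ℝ} (hh : Measurable h) {C : ℝ} (hb : ∀ z, |h z| ≤ C) :
    Integrable (fun z => f z.1 * g z.2 * h z) (μ.prod ν) :=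
  (hf.mul_prod hg).mul_bdd hh.aestronglyMeasurable (ae_of_all _ hb)

lemma integral_prod_dir {m : ℕ} {f g : Vec (m + 1) → ℝ} (hf : Integrable f) (hg : Integrable g)
    {h : Sph m × Sph m → ℝ} (hh : Measurable h) {C : ℝ} (hb : ∀ z, |h z| ≤ C) :
    ∫ p : Vec (m + 1) × Vec (m + 1), f p.1 * g p.2 * h (dir p.1, dir p.2) =
      ∫ z, rad f z.1 * rad g z.2 * h z ∂((sig m).prod (sig m)) := by
  have hd := measurable_dir m
  have h1 : ∀ θ, ∫ y, g y * h (θ, dir y) = ∫ θ', rad g θ' * h (θ, θ') ∂(sig m) := by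
    intro θ
    exact integral_mul_dir (h := fun θ' => h (θ, θ')) (hg.mul_bdd
      (hh.comp (measurable_const.prodMk hd)).aestronglyMeasurable (ae_of_all _ fun y => hb _))
  have hP : Measurable fun p : Vec (m + 1) × Vec (m + 1) => h (dir p.1, dir p.2) :=
    hh.comp ((hd.comp measurable_fst).prodMk (hd.comp measurable_snd))
  have hI := prod_mul_bdd hf hg hP (fun z => hb _)
  rw [Measure.volume_eq_prod, integral_prod _ hI,
    integral_prod _ (prod_mul_bdd (rad_integrable hf) (rad_integrable hg) hh hb)]
  have hI1 := hI.integral_prod_left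
  simp only [mul_assoc, integral_const_mul] at hI1 ⊢
  simp only [h1] at hI1 ⊢
  exact integral_mul_dir (h := fun θ => ∫ θ', rad g θ' * h (θ, θ') ∂(sig m)) hI1

/-- Pairs of points on the sphere whose inner product is close to `t`. -/
def NN (m : ℕ) (t ε : ℝ) : Set (Sph m × Sph m) :=
  {z | |inner ℝ (z.1 : Vec (m + 1)) (z.2 : Vec (m + 1)) - t| ≤ ε}

lemma NN_meas (m : ℕ) (t ε : ℝ) : MeasurableSet (NN m t ε) :=
  (isClosed_le (by fun_prop) continuous_const).measurableSet

lemma NN_small (m : ℕ) {t : ℝ} (ht : |t| < 1) {τ : ℝ} (hτ : 0 < τ) :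
    ∃ ε > 0, ((sig m).prod (sig m)).real (NN m t ε) < τ := by
  have h0 : ((sig m).prod (sig m)) (⋂ k : ℕ, NN m t (1 / (k + 1))) = 0 := by
    rw [Measure.measure_prod_null (MeasurableSet.iInter fun k => NN_meas m t _)]
    refine ae_of_all _ fun θ => measure_mono_null ?_ (latitude_null θ ht)
    intro θ' hθ'
    simp only [mem_preimage, mem_iInter, NN, mem_ofPred_eq] at hθ' ⊢
    have : |inner ℝ (θ : Vec (m + 1)) (θ' : Vec (m + 1)) - t| ≤ 0 :=
      ge_of_tendsto' tendsto_one_div_add_atTop_nhds_zero_nat hθ'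
    linarith [abs_nonpos_iff.1 this]
  have h1 := tendsto_measure_iInter_atTop (μ := (sig m).prod (sig m))
    (s := fun k : ℕ => NN m t (1 / (k + 1))) (fun k => (NN_meas m t _).nullMeasurableSet)
    (fun k l hkl z hz => by
      simp only [NN, mem_ofPred_eq] at hz ⊢
      refine hz.trans ?_
      have : (k : ℝ) ≤ l := by exact_mod_cast hkl
      exact one_div_le_one_div_of_le (by positivity) (by linarith))
    ⟨0, measure_ne_top _ _⟩
  rw [h0] at h1
  have h2 := (ENNReal.tendsto_toReal (by simp)).comp h1
  simp only [ENNReal.toReal_zero] at h2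
  obtain ⟨k, hk⟩ := (h2.eventually_lt_const hτ).exists
  exact ⟨1 / (k + 1), by positivity, hk⟩

/-- Interactions supported on pairs with nearly constant angle are controlled by the `L²` norms
of the radial marginals and the measure of the set of such pairs. -/
lemma cross_err {m : ℕ} {g g' : Vec (m + 1) → ℝ} (hg : Integrable g) (hg' : Integrable g')
    (h2 : Integrable (fun θ => rad (fun x => |g x|) θ ^ 2) (sig m))
    (h2' : Integrable (fun θ => rad (fun x => |g' x|) θ ^ 2) (sig m))
    {W : Vec (m + 1) × Vec (m + 1) → ℝ} {t ε τ : ℝ} (hτ : 0 < τ)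
    (hW : ∀ p, |g p.1 * g' p.2 * W p| ≤
      |g p.1| * |g' p.2| * (NN m t ε).indicator 1 (dir p.1, dir p.2)) :
    |∫ p, g p.1 * g' p.2 * W p| ≤
      τ / 2 * ((∫ θ, rad (fun x => |g x|) θ ^ 2 ∂(sig m)) *
        ∫ θ, rad (fun x => |g' x|) θ ^ 2 ∂(sig m)) +
      1 / (2 * τ) * ((sig m).prod (sig m)).real (NN m t ε) := by
  have hNm : Measurable ((NN m t ε).indicator (1 : Sph m × Sph m → ℝ)) :=
    measurable_one.indicator (NN_meas m t ε)
  have hNb : ∀ z, |(NN m t ε).indicator (1 : Sph m × Sph m → ℝ) z| ≤ 1 := by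
    intro z; simp only [indicator]; split_ifs <;> simp
  have hd := measurable_dir m
  have hP : Measurable fun p : Vec (m + 1) × Vec (m + 1) =>
      (NN m t ε).indicator (1 : Sph m × Sph m → ℝ) (dir p.1, dir p.2) :=
    hNm.comp ((hd.comp measurable_fst).prodMk (hd.comp measurable_snd))
  have s1 : |∫ p, g p.1 * g' p.2 * W p| ≤ ∫ p : Vec (m + 1) × Vec (m + 1),
      |g p.1| * |g' p.2| * (NN m t ε).indicator 1 (dir p.1, dir p.2) := by
    refine (abs_integral_le_integral_abs).trans ?_
    refine integral_mono_of_nonneg (ae_of_all _ fun _ => abs_nonneg _) ?_ (ae_of_all _ hW)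
    exact prod_mul_bdd hg.abs hg'.abs hP (fun z => hNb _)
  rw [integral_prod_dir hg.abs hg'.abs hNm hNb] at s1
  refine s1.trans ?_
  have i2 := h2.mul_prod h2'
  have hNi : Integrable ((NN m t ε).indicator (1 : Sph m × Sph m → ℝ)) ((sig m).prod (sig m)) :=
    (integrable_const (1 : ℝ)).indicator (NN_meas m t ε)
  rw [← integral_prod_mul, ← integral_indicator_one (NN_meas m t ε), ← integral_const_mul,
    ← integral_const_mul, ← integral_add (i2.const_mul _) (hNi.const_mul _)]
  refine integral_mono (prod_mul_bdd (rad_integrable hg.abs) (rad_integrable hg'.abs) hNm hNb)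
    ((i2.const_mul _).add (hNi.const_mul _)) fun z => ?_
  simp only
  set a := rad (fun x => |g x|) z.1
  set b := rad (fun x => |g' x|) z.2
  by_cases hz : z ∈ NN m t ε
  · rw [indicator_of_mem hz]
    simp only [Pi.one_apply, mul_one]
    have h1 : τ / 2 * (a ^ 2 * b ^ 2) + 1 / (2 * τ) - a * b = (τ * (a * b) - 1) ^ 2 / (2 * τ) := by
      field_simp; ring
    have h2 : 0 ≤ (τ * (a * b) - 1) ^ 2 / (2 * τ) := by positivity
    linarith
  · rw [indicator_of_notMem hz]; simp only [mul_zero, add_zero]; positivity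

lemma near_geom {rl : Fin 3 → ℝ} (hl : Tri rl) {i j : Fin 3} (hij : i ≠ j) {ε : ℝ} (hε : 0 < ε) :
    ∃ ω > 0, ∀ s s' u : ℝ, |s - rl i| < ω → |s' - rl j| < ω → |u - rl (thd i j)| < ω →
      0 < s ∧ 0 < s' ∧ |(u ^ 2 - s ^ 2 - s' ^ 2) / (2 * s * s') - tt rl i j| < ε := by
  have hi := hl.pos i
  have hj := hl.pos j
  have c1 : ContinuousAt (fun z : ℝ × ℝ × ℝ =>
      (z.2.2 ^ 2 - z.1 ^ 2 - z.2.1 ^ 2) / (2 * z.1 * z.2.1)) (rl i, rl j, rl (thd i j)) := by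
    refine ContinuousAt.div (by fun_prop) (by fun_prop) ?_
    simp only; positivity
  have h3 := Metric.tendsto_nhds.1 c1.tendsto ε hε
  simp only [Real.dist_eq] at h3
  rw [← tt_eq rl hij] at h3
  have h1 : ∀ᶠ z : ℝ × ℝ × ℝ in 𝓝 (rl i, rl j, rl (thd i j)), 0 < z.1 :=
    (continuous_fst.tendsto _).eventually_const_lt hi
  have h2 : ∀ᶠ z : ℝ × ℝ × ℝ in 𝓝 (rl i, rl j, rl (thd i j)), 0 < z.2.1 :=
    ((continuous_fst.comp continuous_snd).tendsto _).eventually_const_lt hj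
  obtain ⟨ω, hω, h⟩ := Metric.eventually_nhds_iff.1 (h1.and (h2.and h3))
  refine ⟨ω, hω, fun s s' u hs hs' hu => ?_⟩
  have := h (y := (s, s', u)) (by
    rw [Prod.dist_eq, Prod.dist_eq, max_lt_iff, max_lt_iff]; exact ⟨hs, hs', hu⟩)
  exact this

lemma norm_sub_dir {m : ℕ} (x y : Vec (m + 1)) :
    ‖-x - y‖ ^ 2 = ‖x‖ ^ 2 + ‖y‖ ^ 2 +
      2 * ‖x‖ * ‖y‖ * inner ℝ (dir x : Vec (m + 1)) (dir y : Vec (m + 1)) := by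
  have : inner ℝ x y = ‖x‖ * ‖y‖ * inner ℝ (dir x : Vec (m + 1)) (dir y : Vec (m + 1)) := by
    conv_lhs => rw [← norm_smul_dir x, ← norm_smul_dir y]
    rw [inner_smul_left, inner_smul_right]; simp; ring
  rw [← neg_add', norm_neg, norm_add_sq_real, this]; ring

/-- The indicator that the third point lies in the limiting third ball. -/
def hv (m : ℕ) (r : Fin 3 → ℝ) (i j : Fin 3) (z : Sph m × Sph m) : ℝ :=
  if inner ℝ (z.1 : Vec (m + 1)) (z.2 : Vec (m + 1)) ≤ tt r i j then 1 else 0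

lemma hv_meas (m : ℕ) (r : Fin 3 → ℝ) (i j : Fin 3) : Measurable (hv m r i j) :=
  Measurable.ite (measurableSet_le (by fun_prop) measurable_const) measurable_const measurable_const

lemma hv_bdd (m : ℕ) (r : Fin 3 → ℝ) (i j : Fin 3) (z) : |hv m r i j z| ≤ 1 := by
  unfold hv; split_ifs <;> simp

lemma memLp_nu {m : ℕ} {r : Fin 3 → ℝ} (hr : Tri r) {F : Fin 3 → Sph m → ℝ}
    (h1 : ∀ j, Integrable (F j) (sig m)) (h2 : ∀ j, Integrable (fun θ => F j θ ^ 2) (sig m)) :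
    MemLp (fun p : YY m => F p.1 p.2) 2 (nu m r) := by
  rw [memLp_two_iff_integrable_sq ((nu_integrable hr).2 h1).aestronglyMeasurable]
  exact (nu_integrable hr).2 h2

lemma memLp_nu_int {m : ℕ} {r : Fin 3 → ℝ} (hr : Tri r) {F : Fin 3 → Sph m → ℝ}
    (h : MemLp (fun p : YY m => F p.1 p.2) 2 (nu m r)) :
    (∀ j, Integrable (F j) (sig m)) ∧ (∀ j, Integrable (fun θ => F j θ ^ 2) (sig m)) :=
  ⟨(nu_integrable hr).1 (h.integrable (by norm_num)),
   (nu_integrable hr).1 ((memLp_two_iff_integrable_sq h.1).1 h)⟩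

lemma norm_sq_nu {m : ℕ} {r : Fin 3 → ℝ} (hr : Tri r) {F : Fin 3 → Sph m → ℝ}
    (h : MemLp (fun p : YY m => F p.1 p.2) 2 (nu m r)) :
    ‖h.toLp _‖ ^ 2 = ∑ j, al m r j * ∫ θ, F j θ ^ 2 ∂(sig m) := by
  rw [← nu_integral (m := m) hr (g := fun p => F p.1 p.2 ^ 2) (memLp_nu_int hr h).2,
    ← real_inner_self_eq_norm_sq, L2.inner_def]
  refine integral_congr_ae ?_
  filter_upwards [h.coeFn_toLp] with p hp
  rw [hp]; simp [sq]

/-- The interaction of two of the three components. -/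
def QQ (m : ℕ) (r : Fin 3 → ℝ) (F : Fin 3 → Sph m → ℝ) (i j : Fin 3) : ℝ :=
  ∫ z, F i z.1 * F j z.2 * hv m r i j z ∂((sig m).prod (sig m))

lemma QQ_symm (m : ℕ) (r : Fin 3 → ℝ) (F : Fin 3 → Sph m → ℝ) (i j : Fin 3) :
    QQ m r F i j = QQ m r F j i := by
  unfold QQ
  rw [← integral_prod_swap]
  refine integral_congr_ae (ae_of_all _ fun z => ?_)
  have : hv m r i j z.swap = hv m r j i z := by
    simp only [hv, tt_symm r i j, real_inner_comm (z.1 : Vec (m + 1)), Prod.fst_swap, Prod.snd_swap]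
  simp only [this, Prod.fst_swap, Prod.snd_swap]; ring

lemma B_cross {m : ℕ} {r : Fin 3 → ℝ} (hr : Tri r) {F : Fin 3 → Sph m → ℝ}
    (h : MemLp (fun p : YY m => F p.1 p.2) 2 (nu m r)) :
    (ker_good m hr).B (h.toLp _) (h.toLp _) = QQ m r F 0 1 + QQ m r F 0 2 + QQ m r F 1 2 := by
  have hF1 := (memLp_nu_int hr h).1
  have ha := fun j => (hr.al_pos m j).ne'
  have hk : ∀ p : YY m, Kop (ker m r) (nu m r) (h.toLp _) p =
      ∑ j, al m r j * ∫ θ', ker m r p (j, θ') * F j θ' ∂(sig m) := by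
    intro p
    rw [Kop, ← nu_integral (m := m) hr (g := fun q => ker m r p q * F q.1 q.2)]
    · refine integral_congr_ae ?_
      filter_upwards [h.coeFn_toLp] with q hq
      rw [hq]
    · exact (nu_integrable hr).1 ((ker_good m hr).integrable_mul p (h.integrable (by norm_num)))
  have hInt : ∀ i j, Integrable (fun z : Sph m × Sph m => F i z.1 * F j z.2 * hv m r i j z)
      ((sig m).prod (sig m)) := fun i j =>
    prod_mul_bdd (hF1 i) (hF1 j) (hv_meas m r i j) (hv_bdd m r i j)
  have hQ : ∀ i j, QQ m r F i j = ∫ θ, F i θ * ∫ θ', hv m r i j (θ, θ') * F j θ' ∂(sig m) ∂(sig m) := by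
    intro i j
    rw [QQ, integral_prod _ (hInt i j)]
    refine integral_congr_ae (ae_of_all _ fun θ => ?_)
    simp only
    rw [← integral_const_mul]
    refine integral_congr_ae (ae_of_all _ fun θ' => ?_)
    simp only; ring
  have hQi : ∀ i j, Integrable (fun θ => F i θ * ∫ θ', hv m r i j (θ, θ') * F j θ' ∂(sig m)) (sig m) := by
    intro i j
    refine (hInt i j).integral_prod_left.congr (ae_of_all _ fun θ => ?_)
    simp only
    rw [← integral_const_mul]
    refine integral_congr_ae (ae_of_all _ fun θ' => ?_)
    simp only; ring
  have hker : ∀ i j, i ≠ j → ∀ θ, ∫ θ', ker m r (i, θ) (j, θ') * F j θ' ∂(sig m) =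
      (1 / 2) / (al m r i * al m r j) * ∫ θ', hv m r i j (θ, θ') * F j θ' ∂(sig m) := by
    intro i j hij θ
    rw [← integral_const_mul]
    refine integral_congr_ae (ae_of_all _ fun θ' => ?_)
    simp only [ker, hv, hij, if_false]; ring
  have hker0 : ∀ i θ, ∫ θ', ker m r (i, θ) (i, θ') * F i θ' ∂(sig m) = 0 := by
    intro i θ; simp [ker]
  rw [GoodKernel.B_eq]
  have e1 : ∫ p, Kop (ker m r) (nu m r) (h.toLp _) p * (h.toLp _ : Lp ℝ 2 (nu m r)) p ∂(nu m r) =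
      ∫ p : YY m, Kop (ker m r) (nu m r) (h.toLp _) p * F p.1 p.2 ∂(nu m r) := by
    refine integral_congr_ae ?_
    filter_upwards [h.coeFn_toLp] with q hq
    rw [hq]
  have hKi : Integrable (fun p : YY m => Kop (ker m r) (nu m r) (h.toLp _) p * F p.1 p.2) (nu m r) :=
    MemLp.integrable_mul ((ker_good m hr).Kop_memLp _) h
  rw [e1, nu_integral hr ((nu_integrable hr).1 hKi)]
  have e2 : ∀ i j k, i ≠ j → i ≠ k → j ≠ k → al m r i * ∫ θ, Kop (ker m r) (nu m r) (h.toLp _) (i, θ) * F i θ ∂(sig m) =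
      1 / 2 * QQ m r F i j + 1 / 2 * QQ m r F i k := by
    intro i j k hij hik hjk
    rw [hQ, hQ, ← integral_const_mul, ← integral_const_mul, ← integral_const_mul,
      ← integral_add ((hQi i j).const_mul _) ((hQi i k).const_mul _)]
    refine integral_congr_ae (ae_of_all _ fun θ => ?_)
    simp only
    have hu : (Finset.univ : Finset (Fin 3)) = {i, j, k} := by
      revert i j k; decide
    rw [hk, hu, Finset.sum_insert (by simp [hij, hik]), Finset.sum_insert (by simp [hjk]),
      Finset.sum_singleton, hker0, hker i j hij, hker i k hik]
    have := ha i; have := ha j; have := ha k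
    field_simp; ring
  rw [Fin.sum_univ_three, e2 0 1 2 (by decide) (by decide) (by decide),
    e2 1 0 2 (by decide) (by decide) (by decide), e2 2 0 1 (by decide) (by decide) (by decide),
    QQ_symm m r F 1 0, QQ_symm m r F 2 0, QQ_symm m r F 2 1]
  ring

/-! ### Second order limit of almost optimal triples -/

/-- A sequence of triples `E n` at distance `O(δ n)`, `δ n → 0`, from the balls of radii `r n`,
with the same volumes, with `r n` converging to the sides of a nondegenerate triangle, and whose
defect in the Riesz–Sobolev inequality is `o(δ n ^ 2)`. -/
structure Setup (m : ℕ) (r : ℕ → Fin 3 → ℝ) (rl : Fin 3 → ℝ) (E : ℕ → Fin 3 → Set (Vec (m + 1)))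
    (δ : ℕ → ℝ) (C : ℝ) : Prop where
  tri : Tri rl
  lim : ∀ j, Tendsto (fun n => r n j) atTop (𝓝 (rl j))
  pos : ∀ n j, 0 < r n j
  meas : ∀ n j, MeasurableSet (E n j)
  vol : ∀ n j, volume (E n j) = volume (Bl (m + 1) (r n j))
  dpos : ∀ n, 0 < δ n
  dlim : Tendsto δ atTop (𝓝 0)
  close : ∀ n j, ∫ x, |ff (r n) (E n) j x| ≤ C * δ n
  defect : ∃ ε : ℕ → ℝ, Tendsto ε atTop (𝓝 0) ∧
    ∀ n, Tfun (fun j => Bl (m + 1) (r n j)) - Tfun (E n) ≤ ε n * δ n ^ 2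

namespace Setup

variable {m : ℕ} {r : ℕ → Fin 3 → ℝ} {rl : Fin 3 → ℝ} {E : ℕ → Fin 3 → Set (Vec (m + 1))}
  {δ : ℕ → ℝ} {C : ℝ}

lemma comp (S : Setup m r rl E δ C) {φ : ℕ → ℕ} (hφ : StrictMono φ) :
    Setup m (r ∘ φ) rl (E ∘ φ) (δ ∘ φ) C where
  tri := S.tri
  lim j := (S.lim j).comp hφ.tendsto_atTop
  pos n j := S.pos _ j
  meas n j := S.meas _ j
  vol n j := S.vol _ j
  dpos n := S.dpos _
  dlim := S.dlim.comp hφ.tendsto_atTop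
  close n j := S.close _ j
  defect := by
    obtain ⟨ε, h1, h2⟩ := S.defect
    exact ⟨ε ∘ φ, h1.comp hφ.tendsto_atTop, fun n => h2 _⟩

lemma nf (S : Setup m r rl E δ C) (n : ℕ) (j : Fin 3) : Nice (ff (r n) (E n) j) :=
  nice_ff (S.meas n j) (S.vol n j)

lemma ng (S : Setup m r rl E δ C) (n : ℕ) (j : Fin 3) : Nice (gg (r n) (E n) (√(δ n)) j) :=
  nice_gg _ (S.nf n j)

lemma C_nonneg (S : Setup m r rl E δ C) : 0 ≤ C := by
  have h := S.close 0 0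
  have h1 : 0 ≤ ∫ x, |ff (r 0) (E 0) 0 x| := integral_nonneg fun _ => abs_nonneg _
  by_contra hc
  have := mul_neg_of_neg_of_pos (not_le.1 hc) (S.dpos 0)
  linarith

lemma nfg (S : Setup m r rl E δ C) (n : ℕ) (j : Fin 3) :
    Nice (fun x => ff (r n) (E n) j x - gg (r n) (E n) (√(δ n)) j x) := by
  refine ⟨(S.nf n j).meas.sub (S.ng n j).meas, (S.nf n j).int.sub (S.ng n j).int, fun x => ?_⟩
  unfold gg
  split_ifs
  · simp
  · rw [sub_zero]; exact (S.nf n j).le x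

lemma closeg (S : Setup m r rl E δ C) (n : ℕ) (j : Fin 3) :
    ∫ x, |gg (r n) (E n) (√(δ n)) j x| ≤ C * δ n :=
  (integral_mono (S.ng n j).int.abs (S.nf n j).int.abs fun x => abs_gg_le _ _ _ _ _).trans
    (S.close n j)

lemma eta_lim (S : Setup m r rl E δ C) : Tendsto (fun n => √(δ n)) atTop (𝓝 0) := by
  have := (Real.continuous_sqrt.tendsto 0).comp S.dlim
  rw [Real.sqrt_zero] at this
  exact this

lemma kk_nonneg_int (S : Setup m r rl E δ C) (n : ℕ) (j : Fin 3) :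
    0 ≤ ∫ x, kk m (r n) j x * |ff (r n) (E n) j x| :=
  integral_nonneg fun _ => mul_nonneg (abs_nonneg _) (abs_nonneg _)

lemma kk_le_DD (S : Setup m r rl E δ C) (n : ℕ) (j : Fin 3) :
    ∫ x, kk m (r n) j x * |ff (r n) (E n) j x| ≤ DD m (r n) (E n) :=
  Finset.single_le_sum (f := fun j => ∫ x, kk m (r n) j x * |ff (r n) (E n) j x|)
    (fun j _ => S.kk_nonneg_int n j) (Finset.mem_univ j)

lemma DD_le (S : Setup m r rl E δ C) :
    ∃ C1 : ℝ, 0 ≤ C1 ∧ ∀ᶠ n in atTop, DD m (r n) (E n) ≤ C1 * δ n ^ 2 := by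
  obtain ⟨ε, h1, h2⟩ := S.defect
  refine ⟨1 + 4 * C ^ 2, by positivity, ?_⟩
  filter_upwards [h1.eventually_lt_const one_pos] with n hn
  have h3 := defect_eq (fun j => (S.pos n j).le) (S.meas n) (S.vol n)
  have h4 := h2 n
  have hT : ∀ (i j : Fin 3) (h : Vec (m + 1) → ℝ), Nice h →
      T3 (ff (r n) (E n) i) (ff (r n) (E n) j) h ≤ C ^ 2 * δ n ^ 2 := fun i j h hh =>
    (le_abs_self _).trans ((T3_abs_le' (S.nf n i) (S.nf n j) hh (S.close n i) (S.close n j)).trans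
      (by ring_nf; rfl))
  have a1 := hT 0 1 _ (nice_Bl (m + 1) (r n 2))
  have a2 := hT 0 2 _ (nice_Bl (m + 1) (r n 1))
  have a3 := hT 1 2 _ (nice_Bl (m + 1) (r n 0))
  have a4 := hT 0 1 _ (S.nf n 2)
  have a5 : ε n * δ n ^ 2 ≤ 1 * δ n ^ 2 := by gcongr
  rw [CR] at h3
  nlinarith

lemma lower (S : Setup m r rl E δ C) {lam : ℝ} (h0 : 0 < lam) (h1 : lam < 1) :
    ∀ᶠ n in atTop, ∀ j, ∀ x : Vec (m + 1),
      lam * aa m rl j * min |‖x‖ - r n j| (√(δ n)) ≤ kk m (r n) j x := by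
  obtain ⟨η, hη, h⟩ := kk_lower m S.tri S.lim h1
  filter_upwards [h, S.eta_lim.eventually_lt_const hη] with n hn hd j x
  refine le_trans ?_ (hn j x)
  have := (S.tri.aa_pos m j)
  gcongr

lemma moment (S : Setup m r rl E δ C) {lam : ℝ} (h0 : 0 < lam) (h1 : lam < 1) :
    ∀ᶠ n in atTop, ∀ j, lam * aa m rl j * ∫ x, gI (r n) (E n) (√(δ n)) j x ≤
      ∫ x, kk m (r n) j x * |ff (r n) (E n) j x| := by
  filter_upwards [S.lower h0 h1] with n hn j
  rw [← integral_const_mul]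
  refine integral_mono ((gI_integrable (S.nf n j)).const_mul _)
    (kk_integrable (fun j => (S.pos n j).le) (S.meas n j) (S.vol n j)) fun x => ?_
  have h := hn j x
  simp only [gI, gg]
  split_ifs with hx
  · rw [min_eq_left hx] at h
    calc _ = lam * aa m rl j * |‖x‖ - r n j| * |ff (r n) (E n) j x| := by ring
      _ ≤ _ := by gcongr
  · simp only [abs_zero, zero_mul, mul_zero]
    exact mul_nonneg (abs_nonneg _) (abs_nonneg _)

/-- The mass at distance more than `√δ` from the spheres is `o(δ)`. -/
lemma far (S : Setup m r rl E δ C) (j : Fin 3) :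
    Tendsto (fun n => (∫ x, |ff (r n) (E n) j x - gg (r n) (E n) (√(δ n)) j x|) / δ n) atTop
      (𝓝 0) := by
  obtain ⟨C1, hC1, hD⟩ := S.DD_le
  have ha := S.tri.aa_pos m j
  have hlim : Tendsto (fun n => 2 * C1 / aa m rl j * √(δ n)) atTop (𝓝 0) := by
    simpa using S.eta_lim.const_mul (2 * C1 / aa m rl j)
  refine squeeze_zero' (Eventually.of_forall fun n => div_nonneg
    (integral_nonneg fun _ => abs_nonneg _) (S.dpos n).le) ?_ hlim
  filter_upwards [hD, S.lower (lam := 1 / 2) (by norm_num) (by norm_num)] with n hn hl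
  have hd := S.dpos n
  have hs : 0 < √(δ n) := Real.sqrt_pos.2 hd
  have key : 1 / 2 * aa m rl j * √(δ n) *
      (∫ x, |ff (r n) (E n) j x - gg (r n) (E n) (√(δ n)) j x|) ≤ C1 * δ n ^ 2 := by
    refine le_trans ?_ ((S.kk_le_DD n j).trans hn)
    rw [← integral_const_mul]
    refine integral_mono ((S.nfg n j).int.abs.const_mul _)
      (kk_integrable (fun j => (S.pos n j).le) (S.meas n j) (S.vol n j)) fun x => ?_
    have h := hl j x
    simp only [gg]
    split_ifs with hx
    · simp only [sub_self, abs_zero, mul_zero]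
      exact mul_nonneg (abs_nonneg _) (abs_nonneg _)
    · rw [min_eq_right (not_le.1 hx).le] at h
      rw [sub_zero]
      gcongr
  rw [div_le_iff₀ hd]
  set I := ∫ x, |ff (r n) (E n) j x - gg (r n) (E n) (√(δ n)) j x|
  have h2 : δ n = √(δ n) * √(δ n) := (Real.mul_self_sqrt hd.le).symm
  have h3 : (1 / 2 * aa m rl j * √(δ n)) * I ≤ (1 / 2 * aa m rl j * √(δ n)) *
      (2 * C1 / aa m rl j * √(δ n) * δ n) := by
    refine key.trans (le_of_eq ?_)
    field_simp
    nth_rewrite 1 [h2]; ring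
  exact le_of_mul_le_mul_left h3 (by positivity)

lemma rad_sq_int (S : Setup m r rl E δ C) (n : ℕ) (j : Fin 3) :
    Integrable (fun θ => rad (fun x => |gg (r n) (E n) (√(δ n)) j x|) θ ^ 2) (sig m) ∧
    Integrable (fun θ => rad (gg (r n) (E n) (√(δ n)) j) θ ^ 2) (sig m) := by
  have h := rad_integrable (gI_integrable (η := √(δ n)) (S.nf n j))
  have hb := rad_bounds (η := √(δ n)) (Real.sqrt_pos.2 (S.dpos n)) (S.pos n j) (S.nf n j)
  refine ⟨(h.const_mul (4 * (r n j + √(δ n)) ^ m)).mono'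
    ((rad_integrable (S.ng n j).int.abs).aestronglyMeasurable.pow 2) (ae_of_all _ fun θ => ?_),
    (h.const_mul (2 * (r n j + √(δ n)) ^ m)).mono'
    ((rad_integrable (S.ng n j).int).aestronglyMeasurable.pow 2) (ae_of_all _ fun θ => ?_)⟩
  · rw [Real.norm_of_nonneg (by positivity)]; exact (hb θ).2
  · rw [Real.norm_of_nonneg (by positivity)]; exact (hb θ).1

lemma rad_sq_le (S : Setup m r rl E δ C) (n : ℕ) (j : Fin 3) :
    ∫ θ, rad (fun x => |gg (r n) (E n) (√(δ n)) j x|) θ ^ 2 ∂(sig m) ≤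
      4 * (r n j + √(δ n)) ^ m * ∫ x, gI (r n) (E n) (√(δ n)) j x ∧
    ∫ θ, rad (gg (r n) (E n) (√(δ n)) j) θ ^ 2 ∂(sig m) ≤
      2 * (r n j + √(δ n)) ^ m * ∫ x, gI (r n) (E n) (√(δ n)) j x := by
  have hi := gI_integrable (η := √(δ n)) (S.nf n j)
  have h := rad_integrable hi
  have hb := rad_bounds (η := √(δ n)) (Real.sqrt_pos.2 (S.dpos n)) (S.pos n j) (S.nf n j)
  have e : ∫ x, gI (r n) (E n) (√(δ n)) j x = ∫ θ, rad (gI (r n) (E n) (√(δ n)) j) θ ∂(sig m) :=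
    polar_integral hi
  rw [e, ← integral_const_mul, ← integral_const_mul]
  exact ⟨integral_mono (S.rad_sq_int n j).1 (h.const_mul _) fun θ => (hb θ).2,
    integral_mono (S.rad_sq_int n j).2 (h.const_mul _) fun θ => (hb θ).1⟩

lemma M_lim (S : Setup m r rl E δ C) (j : Fin 3) :
    Tendsto (fun n => (r n j + √(δ n)) ^ m) atTop (𝓝 (rl j ^ m)) := by
  simpa using ((S.lim j).add S.eta_lim).pow m

lemma gI_nonneg (n : ℕ) (j : Fin 3) : 0 ≤ ∫ x, gI (r n) (E n) (√(δ n)) j x :=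
  integral_nonneg fun _ => mul_nonneg (abs_nonneg _) (abs_nonneg _)

lemma P_sq_DD (S : Setup m r rl E δ C) (j : Fin 3) :
    ∃ A : ℝ, 0 ≤ A ∧ ∀ᶠ n in atTop,
      ∫ θ, rad (fun x => |gg (r n) (E n) (√(δ n)) j x|) θ ^ 2 ∂(sig m) ≤ A * DD m (r n) (E n) := by
  have ha := S.tri.aa_pos m j
  have hr := S.tri.pos j
  refine ⟨4 * (rl j ^ m + 1) * (2 / aa m rl j), by positivity, ?_⟩
  filter_upwards [S.moment (lam := 1 / 2) (by norm_num) (by norm_num),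
    (S.M_lim j).eventually_lt_const (lt_add_one _)] with n hm hM
  refine (S.rad_sq_le n j).1.trans ?_
  have h1 : ∫ x, gI (r n) (E n) (√(δ n)) j x ≤ 2 / aa m rl j * DD m (r n) (E n) := by
    have := (hm j).trans (S.kk_le_DD n j)
    rw [div_mul_eq_mul_div, le_div_iff₀ ha]; linarith
  have h0 := gI_nonneg (r := r) (E := E) (δ := δ) n j
  rw [mul_assoc (4 * (rl j ^ m + 1))]
  exact mul_le_mul (by linarith) h1 h0 (by positivity)

lemma P_sq (S : Setup m r rl E δ C) (j : Fin 3) :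
    ∃ A : ℝ, 0 ≤ A ∧ ∀ᶠ n in atTop,
      ∫ θ, rad (fun x => |gg (r n) (E n) (√(δ n)) j x|) θ ^ 2 ∂(sig m) ≤ A * δ n ^ 2 := by
  obtain ⟨A, hA, h⟩ := S.P_sq_DD j
  obtain ⟨C1, hC1, hD⟩ := S.DD_le
  refine ⟨A * C1, by positivity, ?_⟩
  filter_upwards [h, hD] with n h1 h2
  exact h1.trans ((mul_le_mul_of_nonneg_left h2 hA).trans (le_of_eq (by ring)))

/-- Lower bound of the linear terms by the `L²` norm of the radial marginals. -/
lemma F_sq (S : Setup m r rl E δ C) {lam : ℝ} (h0 : 0 < lam) (h1 : lam < 1) :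
    ∀ᶠ n in atTop, lam * ∑ j, al m rl j *
      ∫ θ, rad (gg (r n) (E n) (√(δ n)) j) θ ^ 2 ∂(sig m) ≤ DD m (r n) (E n) := by
  have hs0 : 0 < √lam := Real.sqrt_pos.2 h0
  have hs1 : √lam < 1 := by
    rw [Real.sqrt_lt' one_pos]; linarith
  have hss : √lam * √lam = lam := Real.mul_self_sqrt h0.le
  have hM : ∀ᶠ n in atTop, ∀ j, √lam * (r n j + √(δ n)) ^ m < rl j ^ m := by
    rw [eventually_all]
    intro j
    have hp : 0 < rl j ^ m := by have := S.tri.pos j; positivity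
    exact ((S.M_lim j).const_mul (√lam)).eventually_lt_const (by nlinarith)
  filter_upwards [S.moment hs0 hs1, hM] with n hm hM
  rw [DD, Finset.mul_sum]
  refine Finset.sum_le_sum fun j _ => le_trans ?_ (hm j)
  have hr := S.tri.pos j
  have ha := S.tri.aa_pos m j
  have hI := gI_nonneg (r := r) (E := E) (δ := δ) n j
  have hal := S.tri.al_pos m j
  calc lam * (al m rl j * ∫ θ, rad (gg (r n) (E n) (√(δ n)) j) θ ^ 2 ∂(sig m))
      ≤ lam * (al m rl j * (2 * (r n j + √(δ n)) ^ m * ∫ x, gI (r n) (E n) (√(δ n)) j x)) := by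
        gcongr; exact (S.rad_sq_le n j).2
    _ = √lam * (aa m rl j * (√lam * (r n j + √(δ n)) ^ m) / rl j ^ m *
        ∫ x, gI (r n) (E n) (√(δ n)) j x) := by
        rw [al]; nth_rewrite 1 [← hss]; field_simp
    _ ≤ √lam * (aa m rl j * ∫ x, gI (r n) (E n) (√(δ n)) j x) := by
        gcongr
        rw [div_le_iff₀ (by positivity)]
        exact mul_le_mul_of_nonneg_left (hM j).le ha.le
    _ = _ := by ring

lemma cross_small (S : Setup m r rl E δ C) (i j : Fin 3) {t : ℝ} (ht : |t| < 1)
    {W : ℕ → Vec (m + 1) × Vec (m + 1) → ℝ}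
    (hW : ∀ ε > 0, ∀ᶠ n in atTop, ∀ p : Vec (m + 1) × Vec (m + 1),
      |gg (r n) (E n) (√(δ n)) i p.1 * gg (r n) (E n) (√(δ n)) j p.2 * W n p| ≤
      |gg (r n) (E n) (√(δ n)) i p.1| * |gg (r n) (E n) (√(δ n)) j p.2| *
        (NN m t ε).indicator 1 (dir p.1, dir p.2)) :
    Tendsto (fun n => (∫ p : Vec (m + 1) × Vec (m + 1), gg (r n) (E n) (√(δ n)) i p.1 *
      gg (r n) (E n) (√(δ n)) j p.2 * W n p) / δ n ^ 2) atTop (𝓝 0) := by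
  obtain ⟨A, hA, hPi⟩ := S.P_sq i
  obtain ⟨A', hA', hPj⟩ := S.P_sq j
  rw [Metric.tendsto_nhds]
  intro κ hκ
  set τ := κ / (A * A' + 1) with hτd
  have hτ : 0 < τ := by positivity
  obtain ⟨ε, hε, hN⟩ := NN_small m ht (τ := τ * κ / 2) (by positivity)
  filter_upwards [hPi, hPj, hW ε hε] with n h1 h2 h3
  have hd := S.dpos n
  have key := cross_err (S.ng n i).int (S.ng n j).int (S.rad_sq_int n i).1 (S.rad_sq_int n j).1
    (τ := τ / δ n ^ 2) (by positivity) h3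
  rw [Real.dist_eq, sub_zero, abs_div, abs_of_pos (by positivity : 0 < δ n ^ 2),
    div_lt_iff₀ (by positivity)]
  refine key.trans_lt ?_
  set p := ∫ θ, rad (fun x => |gg (r n) (E n) (√(δ n)) i x|) θ ^ 2 ∂(sig m)
  set q := ∫ θ, rad (fun x => |gg (r n) (E n) (√(δ n)) j x|) θ ^ 2 ∂(sig m)
  have hp : 0 ≤ p := integral_nonneg fun _ => sq_nonneg _
  have hq : 0 ≤ q := integral_nonneg fun _ => sq_nonneg _
  have e1 : τ / δ n ^ 2 / 2 * (p * q) ≤ κ / 2 * δ n ^ 2 := by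
    calc τ / δ n ^ 2 / 2 * (p * q) ≤ τ / δ n ^ 2 / 2 * ((A * δ n ^ 2) * (A' * δ n ^ 2)) := by
          gcongr
      _ = τ * (A * A') / 2 * δ n ^ 2 := by field_simp
      _ ≤ κ / 2 * δ n ^ 2 := by
          have : τ * (A * A' + 1) = κ := by rw [hτd]; field_simp
          gcongr
          nlinarith
  have e2 : 1 / (2 * (τ / δ n ^ 2)) * ((sig m).prod (sig m)).real (NN m t ε) <
      κ / 2 * δ n ^ 2 := by
    calc 1 / (2 * (τ / δ n ^ 2)) * ((sig m).prod (sig m)).real (NN m t ε)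
        < 1 / (2 * (τ / δ n ^ 2)) * (τ * κ / 2) := by gcongr
      _ = κ / 4 * δ n ^ 2 := by field_simp; ring
      _ ≤ κ / 2 * δ n ^ 2 := by gcongr; linarith
  linarith

lemma near (S : Setup m r rl E δ C) {ω : ℝ} (hω : 0 < ω) :
    ∀ᶠ n in atTop, ∀ j s, |s - r n j| ≤ √(δ n) → |s - rl j| < ω := by
  have h : ∀ᶠ n in atTop, ∀ j, |r n j - rl j| < ω / 2 := by
    rw [eventually_all]
    intro j
    exact Metric.tendsto_nhds.1 (S.lim j) (ω / 2) (by linarith)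
  filter_upwards [h, S.eta_lim.eventually_lt_const (half_pos hω)] with n h1 h2 j s hs
  have := abs_sub_le s (r n j) (rl j)
  linarith [h1 j]

lemma gg_ne {n : ℕ} {j : Fin 3} {x : Vec (m + 1)} (h : gg (r n) (E n) (√(δ n)) j x ≠ 0) :
    |‖x‖ - r n j| ≤ √(δ n) := by
  by_contra hc
  exact h (if_neg hc)

lemma pair_near (S : Setup m r rl E δ C) {i j : Fin 3} (hij : i ≠ j) :
    Tendsto (fun n => (T3 (gg (r n) (E n) (√(δ n)) i) (gg (r n) (E n) (√(δ n)) j)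
      (ind (Bl (m + 1) (r n (thd i j)))) -
      QQ m rl (fun k => rad (gg (r n) (E n) (√(δ n)) k)) i j) / δ n ^ 2) atTop (𝓝 0) := by
  have h := S.cross_small i j (S.tri.tt_lt hij) (W := fun n p =>
    ind (Bl (m + 1) (r n (thd i j))) (-p.1 - p.2) - hv m rl i j (dir p.1, dir p.2)) ?_
  · refine h.congr fun n => ?_
    congr 1
    rw [QQ, ← integral_prod_dir (S.ng n i).int (S.ng n j).int (hv_meas m rl i j) (hv_bdd m rl i j),
      T3, ← integral_sub (T3_integrable (S.ng n i).int (S.ng n j).int (nice_Bl _ _).meas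
        (nice_Bl _ _).le)]
    · refine integral_congr_ae (ae_of_all _ fun p => ?_)
      simp only; ring
    · have hd := measurable_dir m
      exact prod_mul_bdd (S.ng n i).int (S.ng n j).int (h := fun p => hv m rl i j (dir p.1, dir p.2))
        ((hv_meas m rl i j).comp ((hd.comp measurable_fst).prodMk (hd.comp measurable_snd)))
        (fun z => hv_bdd m rl i j _)
  · intro ε hε
    obtain ⟨ω, hω, hg⟩ := near_geom S.tri hij hε
    filter_upwards [S.near hω] with n hn p
    rw [abs_mul, abs_mul]
    by_cases h1 : gg (r n) (E n) (√(δ n)) i p.1 = 0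
    · simp [h1]
    by_cases h2 : gg (r n) (E n) (√(δ n)) j p.2 = 0
    · simp [h2]
    refine mul_le_mul_of_nonneg_left ?_ (by positivity)
    obtain ⟨p1, p2, h3⟩ := hg ‖p.1‖ ‖p.2‖ (r n (thd i j)) (hn i _ (gg_ne h1)) (hn j _ (gg_ne h2))
      (hn _ _ (by simp))
    have hk := S.pos n (thd i j)
    have hiff : ‖-p.1 - p.2‖ ≤ r n (thd i j) ↔
        inner ℝ (dir p.1 : Vec (m + 1)) (dir p.2 : Vec (m + 1)) ≤
        (r n (thd i j) ^ 2 - ‖p.1‖ ^ 2 - ‖p.2‖ ^ 2) / (2 * ‖p.1‖ * ‖p.2‖) := by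
      rw [le_div_iff₀ (by positivity), ← sq_le_sq₀ (norm_nonneg _) hk.le, norm_sub_dir]
      constructor <;> intro h <;> linarith
    set c := (r n (thd i j) ^ 2 - ‖p.1‖ ^ 2 - ‖p.2‖ ^ 2) / (2 * ‖p.1‖ * ‖p.2‖)
    rw [abs_lt] at h3
    by_cases hN : (dir p.1, dir p.2) ∈ NN m (tt rl i j) ε
    · rw [indicator_of_mem hN, ind_Bl, hv]
      split_ifs <;> simp
    · rw [indicator_of_notMem hN, ind_Bl, hv]
      have hN' : ¬ |inner ℝ (dir p.1 : Vec (m + 1)) (dir p.2 : Vec (m + 1)) - tt rl i j| ≤ ε := hN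
      rw [abs_le] at hN'
      have he : (inner ℝ (dir p.1 : Vec (m + 1)) (dir p.2 : Vec (m + 1)) ≤ c) ↔
          (inner ℝ (dir p.1 : Vec (m + 1)) (dir p.2 : Vec (m + 1)) ≤ tt rl i j) := by
        constructor <;> intro h <;> by_contra h' <;>
          exact hN' ⟨by linarith, by linarith⟩
      simp only [hiff, he, sub_self, abs_zero, le_refl]

lemma cubic_near (S : Setup m r rl E δ C) :
    Tendsto (fun n => T3 (gg (r n) (E n) (√(δ n)) 0) (gg (r n) (E n) (√(δ n)) 1)
      (gg (r n) (E n) (√(δ n)) 2) / δ n ^ 2) atTop (𝓝 0) := by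
  refine S.cross_small 0 1 (S.tri.tt_lt (by decide : (0 : Fin 3) ≠ 1)) (W := fun n p =>
    gg (r n) (E n) (√(δ n)) 2 (-p.1 - p.2)) ?_
  intro ε hε
  obtain ⟨ω, hω, hg⟩ := near_geom S.tri (by decide : (0 : Fin 3) ≠ 1) hε
  filter_upwards [S.near hω] with n hn p
  rw [abs_mul, abs_mul]
  by_cases h1 : gg (r n) (E n) (√(δ n)) 0 p.1 = 0
  · simp [h1]
  by_cases h2 : gg (r n) (E n) (√(δ n)) 1 p.2 = 0
  · simp [h2]
  refine mul_le_mul_of_nonneg_left ?_ (by positivity)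
  by_cases h3 : gg (r n) (E n) (√(δ n)) 2 (-p.1 - p.2) = 0
  · rw [h3, abs_zero]; exact indicator_nonneg (fun _ _ => zero_le_one) _
  obtain ⟨p1, p2, h4⟩ := hg ‖p.1‖ ‖p.2‖ ‖-p.1 - p.2‖ (hn _ _ (gg_ne h1)) (hn _ _ (gg_ne h2))
    (hn 2 _ (gg_ne h3))
  rw [norm_sub_dir, show (‖p.1‖ ^ 2 + ‖p.2‖ ^ 2 + 2 * ‖p.1‖ * ‖p.2‖ *
    inner ℝ (dir p.1 : Vec (m + 1)) (dir p.2 : Vec (m + 1)) - ‖p.1‖ ^ 2 - ‖p.2‖ ^ 2) /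
    (2 * ‖p.1‖ * ‖p.2‖) = inner ℝ (dir p.1 : Vec (m + 1)) (dir p.2 : Vec (m + 1)) by
      field_simp; ring] at h4
  rw [indicator_of_mem (by exact h4.le)]
  exact (S.ng n 2).le _

end Setup

lemma T3_sub_le {d : ℕ} {f f' g g' h : Vec d → ℝ} (hf' : Nice f') (hg : Nice g) (hg' : Nice g')
    (hfg : Nice (fun x => f x - g x)) (hfg' : Nice (fun x => f' x - g' x)) (hh : Nice h) :
    |T3 f f' h - T3 g g' h| ≤
      (∫ x, |f x - g x|) * (∫ x, |f' x|) + (∫ x, |g x|) * ∫ x, |f' x - g' x| := by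
  have e1 : T3 f f' h = T3 g f' h + T3 (fun x => f x - g x) f' h := by
    rw [← T3_add1 hg hfg hf' hh]; congr 1; ext x; ring
  have e2 : T3 g f' h = T3 g g' h + T3 g (fun x => f' x - g' x) h := by
    rw [← T3_add2 hg' hfg' hg hh]; congr 1; ext x; ring
  have b1 := T3_abs_le hfg.int hf'.int hh.le
  have b2 := T3_abs_le hg.int hfg'.int hh.le
  rw [e1, e2]
  rw [abs_le] at *
  constructor <;> linarith [b1.1, b1.2, b2.1, b2.2]

lemma sq_int_avg {X : Type*} [MeasurableSpace X] (μ : Measure X) [IsFiniteMeasure μ] {P : X → ℝ}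
    (h1 : Integrable P μ) (h2 : Integrable (fun x => P x ^ 2) μ) {δ η : ℝ} (hδ : 0 < δ)
    (hη : 0 < η) (hq : (∫ x, P x ^ 2 ∂μ) / δ ^ 2 ≤ η ^ 2) :
    (∫ x, P x ∂μ) / δ ≤ η * (μ.real univ + 1) := by
  have h : ∫ x, P x ∂μ ≤ ∫ x, (δ * η + P x ^ 2 * (1 / (δ * η))) ∂μ := by
    refine integral_mono h1 ((integrable_const _).add (h2.mul_const _)) fun x => ?_
    have hp : 0 < δ * η := by positivity
    have : P x - (δ * η + P x ^ 2 * (1 / (δ * η))) =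
        -((δ * η - P x / 2) ^ 2 + 3 / 4 * P x ^ 2) / (δ * η) := by field_simp; ring
    have h0 : -((δ * η - P x / 2) ^ 2 + 3 / 4 * P x ^ 2) / (δ * η) ≤ 0 :=
      div_nonpos_of_nonpos_of_nonneg (by nlinarith [sq_nonneg (δ * η - P x / 2), sq_nonneg (P x)])
        hp.le
    simp only
    linarith
  rw [integral_add (integrable_const _) (h2.mul_const _), integral_mul_const (1 / (δ * η)),
    integral_const, smul_eq_mul] at h
  rw [div_le_iff₀ hδ]
  refine h.trans ?_
  rw [div_le_iff₀ (by positivity)] at hq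
  have : (∫ x, P x ^ 2 ∂μ) * (1 / (δ * η)) ≤ δ * η := by
    rw [mul_one_div, div_le_iff₀ (by positivity)]; linarith
  nlinarith

lemma sep_nu (m : ℕ) (r : Fin 3 → ℝ) :
    TopologicalSpace.SeparableSpace (Lp ℝ 2 (nu m r)) := by
  have : Fact ((2 : ℝ≥0∞) ≠ ⊤) := ⟨by norm_num⟩
  infer_instance

/-- The test function `h`, put on the `j`-th sphere and divided by the weight of that sphere. -/
def single {m : ℕ} (r : Fin 3 → ℝ) (j : Fin 3) (h : Sph m → ℝ) (p : YY m) : ℝ :=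
  if p.1 = j then h p.2 / al m r j else 0

lemma single_memLp {m : ℕ} {r : Fin 3 → ℝ} (hr : Tri r) (j : Fin 3) {h : Sph m → ℝ}
    (hm : Measurable h) {K : ℝ} (hK : ∀ θ, |h θ| ≤ K) : MemLp (single r j h) 2 (nu m r) := by
  have hr' := hr
  have : IsFiniteMeasure (nu m r) := by infer_instance
  refine MemLp.of_bound (C := K / al m r j) ?_ (ae_of_all _ fun p => ?_)
  · refine Measurable.aestronglyMeasurable (Measurable.ite ?_ ?_ measurable_const)
    · exact measurable_fst (measurableSet_singleton j)
    · exact (hm.comp measurable_snd).div_const _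
  · have ha := hr.al_pos m j
    have hK0 : 0 ≤ K := (abs_nonneg _).trans (hK p.2)
    unfold single
    split_ifs
    · rw [Real.norm_eq_abs, abs_div, abs_of_pos ha]; gcongr; exact hK _
    · rw [norm_zero]; positivity

lemma inner_single {m : ℕ} {r : Fin 3 → ℝ} (hr : Tri r) (G : Lp ℝ 2 (nu m r)) (j : Fin 3)
    {h : Sph m → ℝ} (hm : Measurable h) {K : ℝ} (hK : ∀ θ, |h θ| ≤ K) :
    inner ℝ G ((single_memLp hr j hm hK).toLp _) = ∫ θ, G (j, θ) * h θ ∂(sig m) := by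
  have ha := (hr.al_pos m j).ne'
  have hGi := (nu_integrable hr).1 (lp2_integrable G)
  have h1 : inner ℝ G ((single_memLp hr j hm hK).toLp _) = ∫ p, G p * single r j h p ∂(nu m r) := by
    rw [L2.inner_def]
    refine integral_congr_ae ?_
    filter_upwards [(single_memLp hr j hm hK).coeFn_toLp] with p hp
    rw [hp]; simp [mul_comm]
  rw [h1, nu_integral hr]
  · rw [Finset.sum_eq_single j]
    · rw [← integral_const_mul]
      refine integral_congr_ae (ae_of_all _ fun θ => ?_)
      simp only [single, if_true]; field_simp
    · intro k _ hk; simp [single, hk]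
    · simp
  · intro k
    have hb : ∀ θ, |single r j h (k, θ)| ≤ K / al m r j := by
      intro θ
      have ha := hr.al_pos m j
      have hK0 : 0 ≤ K := (abs_nonneg _).trans (hK θ)
      unfold single
      split_ifs
      · rw [abs_div, abs_of_pos ha]; gcongr; exact hK _
      · rw [abs_zero]; positivity
    refine (hGi k).mul_bdd (c := K / al m r j) ?_ (ae_of_all _ hb)
    refine Measurable.aestronglyMeasurable ?_
    unfold single
    by_cases hk : k = j
    · simp only [hk, if_true]; exact hm.div_const _
    · simp [hk]

namespace Setup

variable {m : ℕ} {r : ℕ → Fin 3 → ℝ} {rl : Fin 3 → ℝ} {E : ℕ → Fin 3 → Set (Vec (m + 1))}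
  {δ : ℕ → ℝ} {C : ℝ}

lemma pair_diff (S : Setup m r rl E δ C) (i j : Fin 3) {h : ℕ → Vec (m + 1) → ℝ}
    (hh : ∀ n, Nice (h n)) :
    Tendsto (fun n => (T3 (ff (r n) (E n) i) (ff (r n) (E n) j) (h n) -
      T3 (gg (r n) (E n) (√(δ n)) i) (gg (r n) (E n) (√(δ n)) j) (h n)) / δ n ^ 2) atTop (𝓝 0) := by
  have hl := ((S.far i).mul_const C).add ((S.far j).const_mul C)
  rw [zero_mul, mul_zero, add_zero] at hl
  refine squeeze_zero_norm (fun n => ?_) hl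
  have hd := S.dpos n
  have h1 := T3_sub_le (S.nf n j) (S.ng n i) (S.ng n j) (S.nfg n i) (S.nfg n j) (hh n)
  rw [Real.norm_eq_abs, abs_div, abs_of_pos (by positivity : 0 < δ n ^ 2), div_le_iff₀ (by positivity)]
  refine h1.trans ?_
  have a0 : 0 ≤ ∫ x, |ff (r n) (E n) i x - gg (r n) (E n) (√(δ n)) i x| :=
    integral_nonneg fun _ => abs_nonneg _
  have b0 : 0 ≤ ∫ x, |ff (r n) (E n) j x - gg (r n) (E n) (√(δ n)) j x| :=
    integral_nonneg fun _ => abs_nonneg _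
  have c1 := mul_le_mul_of_nonneg_left (S.close n j) a0
  have c2 := mul_le_mul_of_nonneg_right (S.closeg n i) b0
  refine (add_le_add c1 c2).trans (le_of_eq ?_)
  field_simp

lemma cubic (S : Setup m r rl E δ C) :
    Tendsto (fun n => T3 (ff (r n) (E n) 0) (ff (r n) (E n) 1) (ff (r n) (E n) 2) / δ n ^ 2) atTop
      (𝓝 0) := by
  have h1 := S.pair_diff 0 1 (fun n => S.nf n 2)
  have h2 : Tendsto (fun n => T3 (gg (r n) (E n) (√(δ n)) 0) (fun x => ff (r n) (E n) 2 x -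
      gg (r n) (E n) (√(δ n)) 2 x) (gg (r n) (E n) (√(δ n)) 1) / δ n ^ 2) atTop (𝓝 0) := by
    have hl := (S.far 2).const_mul C
    rw [mul_zero] at hl
    refine squeeze_zero_norm (fun n => ?_) hl
    have hd := S.dpos n
    rw [Real.norm_eq_abs, abs_div, abs_of_pos (by positivity : 0 < δ n ^ 2),
      div_le_iff₀ (by positivity)]
    refine (T3_abs_le' (S.ng n 0) (S.nfg n 2) (S.ng n 1) (S.closeg n 0) le_rfl).trans
      (le_of_eq ?_)
    field_simp
  have h3 := (h1.add h2).add S.cubic_near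
  rw [add_zero, add_zero] at h3
  refine h3.congr fun n => ?_
  rw [T3_swap23 (gg (r n) (E n) (√(δ n)) 0) _ (gg (r n) (E n) (√(δ n)) 1)]
  have e : T3 (gg (r n) (E n) (√(δ n)) 0) (gg (r n) (E n) (√(δ n)) 1) (ff (r n) (E n) 2) =
      T3 (gg (r n) (E n) (√(δ n)) 0) (gg (r n) (E n) (√(δ n)) 1) (gg (r n) (E n) (√(δ n)) 2) +
      T3 (gg (r n) (E n) (√(δ n)) 0) (gg (r n) (E n) (√(δ n)) 1) (fun x => ff (r n) (E n) 2 x -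
      gg (r n) (E n) (√(δ n)) 2 x) := by
    rw [← T3_add3 (S.ng n 2) (S.nfg n 2) (S.ng n 0) (S.ng n 1)]; congr 1; ext x; ring
  rw [e]; ring

lemma memX (S : Setup m r rl E δ C) (n : ℕ) :
    MemLp (fun p : YY m => rad (gg (r n) (E n) (√(δ n)) p.1) p.2 / δ n) 2 (nu m rl) := by
  refine memLp_nu S.tri (F := fun j θ => rad (gg (r n) (E n) (√(δ n)) j) θ / δ n) (fun j => ?_)
    (fun j => ?_)
  · exact (rad_integrable (S.ng n j).int).div_const _
  · simp only [div_pow]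
    exact (S.rad_sq_int n j).2.div_const _

/-- The rescaled radial marginals, as an element of the Hilbert space. -/
def XX (S : Setup m r rl E δ C) (n : ℕ) : Lp ℝ 2 (nu m rl) := (S.memX n).toLp _

lemma norm_XX (S : Setup m r rl E δ C) (n : ℕ) : ‖S.XX n‖ ^ 2 =
    (∑ j, al m rl j * ∫ θ, rad (gg (r n) (E n) (√(δ n)) j) θ ^ 2 ∂(sig m)) / δ n ^ 2 := by
  rw [XX, norm_sq_nu S.tri (F := fun j θ => rad (gg (r n) (E n) (√(δ n)) j) θ / δ n) (S.memX n),
    Finset.sum_div]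
  refine Finset.sum_congr rfl fun j _ => ?_
  simp only [div_pow, integral_div]; ring

lemma B_XX (S : Setup m r rl E δ C) (n : ℕ) : (ker_good m S.tri).B (S.XX n) (S.XX n) =
    (QQ m rl (fun k => rad (gg (r n) (E n) (√(δ n)) k)) 0 1 +
     QQ m rl (fun k => rad (gg (r n) (E n) (√(δ n)) k)) 0 2 +
     QQ m rl (fun k => rad (gg (r n) (E n) (√(δ n)) k)) 1 2) / δ n ^ 2 := by
  rw [XX, B_cross S.tri (F := fun j θ => rad (gg (r n) (E n) (√(δ n)) j) θ / δ n) (S.memX n)]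
  have : ∀ i j, QQ m rl (fun j θ => rad (gg (r n) (E n) (√(δ n)) j) θ / δ n) i j =
      QQ m rl (fun k => rad (gg (r n) (E n) (√(δ n)) k)) i j / δ n ^ 2 := by
    intro i j
    unfold QQ
    rw [← integral_div]
    refine integral_congr_ae (ae_of_all _ fun z => ?_)
    simp only; ring
  rw [this, this, this]; ring

lemma main_ineq (S : Setup m r rl E δ C) : ∃ e : ℕ → ℝ, Tendsto e atTop (𝓝 0) ∧
    ∀ n, DD m (r n) (E n) / δ n ^ 2 ≤ (ker_good m S.tri).B (S.XX n) (S.XX n) + e n := by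
  obtain ⟨ε, h1, h2⟩ := S.defect
  have l1 := (S.pair_diff 0 1 (fun n => nice_Bl (m + 1) (r n 2))).add
    (S.pair_near (by decide : (0 : Fin 3) ≠ 1))
  have l2 := (S.pair_diff 0 2 (fun n => nice_Bl (m + 1) (r n 1))).add
    (S.pair_near (by decide : (0 : Fin 3) ≠ 2))
  have l3 := (S.pair_diff 1 2 (fun n => nice_Bl (m + 1) (r n 0))).add
    (S.pair_near (by decide : (1 : Fin 3) ≠ 2))
  have l := (((h1.add l1).add l2).add l3).add S.cubic
  simp only [add_zero] at l
  refine ⟨_, l, fun n => ?_⟩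
  have hd := S.dpos n
  have h3 := defect_eq (fun j => (S.pos n j).le) (S.meas n) (S.vol n)
  have h4 := h2 n
  rw [h3, CR] at h4
  rw [S.B_XX, div_le_iff₀ (by positivity)]
  have t1 : thd 0 1 = 2 := by decide
  have t2 : thd 0 2 = 1 := by decide
  have t3 : thd 1 2 = 0 := by decide
  rw [t1, t2, t3]
  refine (sub_nonneg.1 ?_)
  have : 0 ≤ ε n * δ n ^ 2 - (DD m (r n) (E n) - (T3 (ff (r n) (E n) 0) (ff (r n) (E n) 1)
      (ind (Bl (m + 1) (r n 2))) + T3 (ff (r n) (E n) 0) (ff (r n) (E n) 2)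
      (ind (Bl (m + 1) (r n 1))) + T3 (ff (r n) (E n) 1) (ff (r n) (E n) 2)
      (ind (Bl (m + 1) (r n 0)))) - T3 (ff (r n) (E n) 0) (ff (r n) (E n) 1) (ff (r n) (E n) 2)) :=
    sub_nonneg.2 h4
  refine this.trans (le_of_eq ?_)
  field_simp
  ring

lemma norm_le_DD (S : Setup m r rl E δ C) {lam : ℝ} (h0 : 0 < lam) (h1 : lam < 1) :
    ∀ᶠ n in atTop, lam * ‖S.XX n‖ ^ 2 ≤ DD m (r n) (E n) / δ n ^ 2 := by
  filter_upwards [S.F_sq h0 h1] with n hn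
  have hd := S.dpos n
  rw [norm_XX, ← mul_div_assoc]
  gcongr

/-- Pairings of the perturbation with functions of the direction are governed by the radial
marginals `XX`. -/
lemma pairing (S : Setup m r rl E δ C) (j : Fin 3) {h : Sph m → ℝ} (hm : Measurable h) {K : ℝ}
    (hK : ∀ θ, |h θ| ≤ K) :
    Tendsto (fun n => (∫ x, ff (r n) (E n) j x * h (dir x)) / δ n -
      inner ℝ (S.XX n) ((single_memLp S.tri j hm hK).toLp _)) atTop (𝓝 0) := by
  have hl := (S.far j).mul_const K
  rw [zero_mul] at hl
  refine squeeze_zero_norm (fun n => ?_) hl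
  have hd := S.dpos n
  have hmd : AEStronglyMeasurable (fun x : Vec (m + 1) => h (dir x)) volume :=
    (hm.comp (measurable_dir m)).aestronglyMeasurable
  have hb : ∀ᵐ x : Vec (m + 1), ‖h (dir x)‖ ≤ K := ae_of_all _ fun x => hK _
  have e : inner ℝ (S.XX n) ((single_memLp S.tri j hm hK).toLp _) =
      (∫ x, gg (r n) (E n) (√(δ n)) j x * h (dir x)) / δ n := by
    rw [inner_single S.tri _ j hm hK, integral_mul_dir ((S.ng n j).int.mul_bdd hmd hb), ← integral_div]
    refine integral_congr_ae ?_
    have := (nu_ae S.tri).1 (S.memX n).coeFn_toLp j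
    filter_upwards [this] with θ hθ
    rw [XX, hθ]; ring
  rw [e, ← sub_div, ← integral_sub ((S.nf n j).int.mul_bdd hmd hb) ((S.ng n j).int.mul_bdd hmd hb),
    Real.norm_eq_abs, abs_div, abs_of_pos hd, div_mul_eq_mul_div]
  gcongr
  refine (abs_integral_le_integral_abs).trans ?_
  rw [← integral_mul_const]
  refine integral_mono_of_nonneg (ae_of_all _ fun _ => abs_nonneg _)
    ((S.nfg n j).int.abs.mul_const _) (ae_of_all _ fun x => ?_)
  simp only [← sub_mul, abs_mul]
  gcongr
  exact hK _

/-- Along a subsequence the rescaled perturbations have a weak limit `G` on the three spheres,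
on which the limiting quadratic form is nonpositive; if `G` vanishes, the perturbations are
`o(δ)` in measure. -/
theorem weak_limit (S : Setup m r rl E δ C) :
    ∃ φ : ℕ → ℕ, StrictMono φ ∧ ∃ G : Lp ℝ 2 (nu m rl), ‖G‖ ^ 2 ≤ (ker_good m S.tri).B G G ∧
      (∀ (j : Fin 3) (h : Sph m → ℝ), Measurable h → (∃ K, ∀ θ, |h θ| ≤ K) →
        Tendsto (fun n => (∫ x, ff (r (φ n)) (E (φ n)) j x * h (dir x)) / δ (φ n)) atTop
          (𝓝 (∫ θ, G (j, θ) * h θ ∂(sig m)))) ∧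
      (G = 0 → ∀ j, Tendsto (fun n => (∫ x, |ff (r (φ n)) (E (φ n)) j x|) / δ (φ n)) atTop
        (𝓝 0)) := by
  obtain ⟨e, he, hDe⟩ := S.main_ineq
  obtain ⟨C1, hC1, hD⟩ := S.DD_le
  have hbd : ∀ᶠ n in atTop, ‖S.XX n‖ ≤ √(2 * C1) := by
    filter_upwards [S.norm_le_DD (lam := 1 / 2) (by norm_num) (by norm_num), hD] with n h1 h2
    have hd := S.dpos n
    refine Real.le_sqrt_of_sq_le ?_
    have : DD m (r n) (E n) / δ n ^ 2 ≤ C1 := by rwa [div_le_iff₀ (by positivity)]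
    linarith
  obtain ⟨N, hN⟩ := eventually_atTop.1 hbd
  have := sep_nu m rl
  obtain ⟨G, φ, hφ, hw⟩ := weak_seq_compact (fun n => S.XX (n + N)) _ fun n =>
    hN (n + N) (Nat.le_add_left _ _)
  let ψ : ℕ → ℕ := fun n => φ n + N
  have hψ : StrictMono ψ := hφ.add_const N
  have hψt := hψ.tendsto_atTop
  have hw' : WeakLim (fun n => S.XX (ψ n)) G := hw
  have hBl : Tendsto (fun n => (ker_good m S.tri).B (S.XX (ψ n)) (S.XX (ψ n))) atTop
      (𝓝 ((ker_good m S.tri).B G G)) :=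
    (ker_good m S.tri).B_weak _ _ _ (fun n => hN (ψ n) (Nat.le_add_left _ _)) hw'
  have hDl : Tendsto (fun n => (ker_good m S.tri).B (S.XX (ψ n)) (S.XX (ψ n)) + e (ψ n)) atTop
      (𝓝 ((ker_good m S.tri).B G G)) := by
    simpa using hBl.add (he.comp hψt)
  have hlam : ∀ lam : ℝ, 0 < lam → lam < 1 → lam * ‖G‖ ^ 2 ≤ (ker_good m S.tri).B G G := by
    intro lam h0 h1
    refine le_of_forall_pos_le_add fun η hη => ?_
    have hev : ∀ᶠ n in atTop, lam * ‖S.XX (ψ n)‖ ^ 2 ≤ (ker_good m S.tri).B G G + η := by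
      filter_upwards [hψt.eventually (S.norm_le_DD h0 h1),
        hDl.eventually_lt_const (lt_add_of_pos_right _ hη)] with n a b
      exact (a.trans (hDe _)).trans b.le
    have hpos : 0 ≤ (ker_good m S.tri).B G G + η := by
      obtain ⟨n, hn⟩ := hev.exists
      exact le_trans (by positivity) hn
    have := hw'.norm_le (C := √(((ker_good m S.tri).B G G + η) / lam)) (Real.sqrt_nonneg _) (by
      filter_upwards [hev] with n hn
      refine Real.le_sqrt_of_sq_le ?_
      rw [le_div_iff₀ h0]; linarith)
    have h2 := pow_le_pow_left₀ (norm_nonneg _) this 2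
    rw [Real.sq_sqrt (by positivity), le_div_iff₀ h0] at h2
    linarith
  refine ⟨ψ, hψ, G, ?_, ?_, ?_⟩
  · have : Tendsto (fun lam : ℝ => lam * ‖G‖ ^ 2) (𝓝[<] 1) (𝓝 (1 * ‖G‖ ^ 2)) :=
      (tendsto_id.mul_const _).mono_left nhdsWithin_le_nhds
    rw [one_mul] at this
    refine le_of_tendsto this ?_
    filter_upwards [Ioo_mem_nhdsLT (zero_lt_one' ℝ)] with lam hl
    exact hlam lam hl.1 hl.2
  · rintro j h hm ⟨K, hK⟩
    have h1 := ((S.pairing j hm hK).comp hψt).add (hw' ((single_memLp S.tri j hm hK).toLp _))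
    rw [zero_add, inner_single S.tri _ j hm hK] at h1
    refine h1.congr fun n => ?_
    simp only [Function.comp]; ring
  · rintro rfl j
    obtain ⟨A, hA, hP⟩ := S.P_sq_DD j
    rw [map_zero] at hDl
    have hη : Tendsto (fun n => √(A * max 0 ((ker_good m S.tri).B (S.XX (ψ n)) (S.XX (ψ n)) +
        e (ψ n)) + δ (ψ n))) atTop (𝓝 0) := by
      have h0 : Tendsto (fun _ : ℕ => (0 : ℝ)) atTop (𝓝 0) := tendsto_const_nhds
      have := (((h0.max hDl).const_mul A).add (S.dlim.comp hψt)).sqrt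
      simpa using this
    have hl := (hη.mul_const ((sig m).real univ + 1)).add ((S.far j).comp hψt)
    rw [zero_mul, zero_add] at hl
    refine squeeze_zero' (Eventually.of_forall fun n => ?_) ?_ hl
    · have := S.dpos (ψ n)
      exact div_nonneg (integral_nonneg fun _ => abs_nonneg _) this.le
    · filter_upwards [hψt.eventually hP] with n hn
      have hd := S.dpos (ψ n)
      have hM : 0 ≤ max 0 ((ker_good m S.tri).B (S.XX (ψ n)) (S.XX (ψ n)) + e (ψ n)) :=
        le_max_left _ _
      have hpos : 0 < A * max 0 ((ker_good m S.tri).B (S.XX (ψ n)) (S.XX (ψ n)) +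
        e (ψ n)) + δ (ψ n) := by positivity
      have hs := sq_int_avg (sig m) (rad_integrable (S.ng (ψ n) j).int.abs)
        (S.rad_sq_int (ψ n) j).1 hd (Real.sqrt_pos.2 hpos) (by
          rw [Real.sq_sqrt hpos.le]
          calc _ ≤ A * DD m (r (ψ n)) (E (ψ n)) / δ (ψ n) ^ 2 := by gcongr
            _ = A * (DD m (r (ψ n)) (E (ψ n)) / δ (ψ n) ^ 2) := by ring
            _ ≤ A * max 0 ((ker_good m S.tri).B (S.XX (ψ n)) (S.XX (ψ n)) + e (ψ n)) := by
              gcongr; exact (hDe _).trans (le_max_right _ _)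
            _ ≤ _ := by linarith)
      have hg : ∫ x, |gg (r (ψ n)) (E (ψ n)) (√(δ (ψ n))) j x| =
          ∫ θ, rad (fun x => |gg (r (ψ n)) (E (ψ n)) (√(δ (ψ n))) j x|) θ ∂(sig m) :=
        polar_integral (S.ng (ψ n) j).int.abs
      rw [← hg] at hs
      refine le_trans ?_ (add_le_add hs le_rfl)
      simp only [Function.comp]
      rw [← add_div]
      gcongr
      rw [← integral_add (S.ng (ψ n) j).int.abs (S.nfg (ψ n) j).int.abs]
      refine integral_mono (S.nf (ψ n) j).int.abs
        ((S.ng (ψ n) j).int.abs.add (S.nfg (ψ n) j).int.abs) fun x => ?_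
      have := abs_add_le (gg (r (ψ n)) (E (ψ n)) (√(δ (ψ n))) j x)
        (ff (r (ψ n)) (E (ψ n)) j x - gg (r (ψ n)) (E (ψ n)) (√(δ (ψ n))) j x)
      simpa using this

end Setup

/-! ### Symmetries of the sphere and orthogonal projection of a hemisphere -/

lemma rmeas_unit (m : ℕ) : rmeas m (Iio 1) ≠ 0 ∧ rmeas m (Iio 1) ≠ ⊤ := by
  have e : rmeas m (Iio 1) = ∫⁻ s in Ioo (0 : ℝ) 1, ENNReal.ofReal (s ^ m) := by
    rw [rmeas, withDensity_apply _ measurableSet_Iio, Measure.restrict_restrict measurableSet_Iio]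
    congr 2
    ext s; simp [and_comm]
  rw [e]
  constructor
  · refine (setLIntegral_pos_iff (by fun_prop)).2 ?_ |>.ne'
    have : Function.support (fun s : ℝ => ENNReal.ofReal (s ^ m)) ∩ Ioo 0 1 = Ioo 0 1 := by
      refine inter_eq_right.2 fun s hs => ?_
      have : 0 < s ^ m := pow_pos hs.1 m
      simpa using this
    rw [this]; simp
  · refine (lt_of_le_of_lt (setLIntegral_mono (g := fun _ => 1) measurable_const fun s hs => ?_)
      ?_).ne
    · rw [← ENNReal.ofReal_one]
      exact ENNReal.ofReal_le_ofReal (pow_le_one₀ hs.1.le hs.2.le)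
    · simp

/-- Integration over the sphere as integration over the unit ball. -/
lemma cone_lintegral {m : ℕ} {F : Sph m → ℝ≥0∞} (hF : Measurable F) :
    ∫⁻ x : Vec (m + 1), F (dir x) * (Iio 1).indicator 1 ‖x‖ =
      (∫⁻ θ, F θ ∂(sig m)) * rmeas m (Iio 1) := by
  have hm : Measurable fun x : Vec (m + 1) => F (dir x) * (Iio (1 : ℝ)).indicator 1 ‖x‖ :=
    (hF.comp (measurable_dir m)).mul
      ((measurable_one.indicator measurableSet_Iio).comp measurable_norm)
  have hmc : Measurable fun p : Sph m × ℝ => F (dir (p.2 • (p.1 : Vec (m + 1)))) *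
      (Iio (1 : ℝ)).indicator 1 ‖p.2 • (p.1 : Vec (m + 1))‖ := hm.comp (polar_mp m).measurable
  rw [← (polar_mp m).lintegral_comp hm, lintegral_prod _ hmc.aemeasurable,
    ← lintegral_mul_const _ hF]
  refine lintegral_congr fun θ => ?_
  have h1 : ∫⁻ s, F θ * (Iio (1 : ℝ)).indicator 1 s ∂(rmeas m) = F θ * rmeas m (Iio 1) := by
    rw [lintegral_const_mul _ (measurable_one.indicator measurableSet_Iio),
      lintegral_indicator_one measurableSet_Iio]
  rw [← h1]
  refine lintegral_congr_ae ?_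
  filter_upwards [rmeas_ae_pos m] with s hs
  rw [dir_smul hs]
  have : ‖s • (θ : Vec (m + 1))‖ = s := by simp [norm_smul, abs_of_pos hs]
  rw [this]

/-- Action of a linear isometry on the sphere. -/
def sm {m : ℕ} (U : Vec (m + 1) ≃ₗᵢ[ℝ] Vec (m + 1)) (θ : Sph m) : Sph m :=
  ⟨U θ, by simp⟩

lemma continuous_sm {m : ℕ} (U : Vec (m + 1) ≃ₗᵢ[ℝ] Vec (m + 1)) : Continuous (sm U) :=
  Continuous.subtype_mk (U.continuous.comp continuous_subtype_val) _

lemma dir_iso {m : ℕ} (U : Vec (m + 1) ≃ₗᵢ[ℝ] Vec (m + 1)) {x : Vec (m + 1)} (hx : x ≠ 0) :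
    dir (U x) = sm U (dir x) := by
  have h : U x ≠ 0 := by simpa using hx
  refine Subtype.ext ?_
  change (dir (U x) : Vec (m + 1)) = U (dir x : Vec (m + 1))
  rw [dir_coe h, dir_coe hx, U.norm_map, map_smul]

lemma sm_mp {m : ℕ} (U : Vec (m + 1) ≃ₗᵢ[ℝ] Vec (m + 1)) :
    MeasurePreserving (sm U) (sig m) (sig m) := by
  refine ⟨(continuous_sm U).measurable, ?_⟩
  refine Measure.ext_of_lintegral _ fun F hF => ?_
  rw [lintegral_map hF (continuous_sm U).measurable]
  refine (ENNReal.mul_left_inj (rmeas_unit m).1 (rmeas_unit m).2).1 ?_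
  have hc := cone_lintegral (F := fun θ => F (sm U θ)) (hF.comp (continuous_sm U).measurable)
  rw [← cone_lintegral hF, ← hc]
  refine Eq.trans ?_ (U.measurePreserving.lintegral_comp
    (f := fun x => F (dir x) * (Iio (1 : ℝ)).indicator 1 ‖x‖) ?_)
  · refine lintegral_congr_ae ?_
    have : ∀ᵐ x : Vec (m + 1), x ≠ 0 := by
      rw [ae_iff]; simp
    filter_upwards [this] with x hx
    rw [dir_iso U hx, U.norm_map]
  · exact (hF.comp (measurable_dir m)).mul
      ((measurable_one.indicator measurableSet_Iio).comp measurable_norm)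

/-- The reflection changing the sign of the first coordinate. -/
def R0 (m : ℕ) : Vec (m + 1) ≃ₗᵢ[ℝ] Vec (m + 1) := Submodule.reflection (Submodule.span ℝ {e0 m})ᗮ

lemma R0_apply {m : ℕ} (x : Vec (m + 1)) : R0 m x = x - (2 * x 0) • e0 m := by
  rw [R0, Submodule.reflection_orthogonal_apply, Submodule.reflection_singleton_apply]
  have : inner ℝ (e0 m) x = x 0 := by simp [e0, EuclideanSpace.inner_single_left]
  simp only [norm_e0, this]
  simp only [one_pow, RCLike.ofReal_real_eq_id, id]
  module

lemma R0_zero {m : ℕ} (x : Vec (m + 1)) : (R0 m x) 0 = - x 0 := by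
  rw [R0_apply]; simp [e0]; ring

lemma R0_sl {m : ℕ} (s : ℝ) (w : Vec m) : R0 m (sl (s, w)) = sl (-s, w) := by
  rw [R0_apply]
  ext i
  refine Fin.cases ?_ (fun i => ?_) i
  · simp [sl_zero, e0]; ring
  · simp [sl_succ, e0]

lemma R0_R0 {m : ℕ} (x : Vec (m + 1)) : R0 m (R0 m x) = x := by
  rw [R0]; exact Submodule.reflection_reflection _ _

/-- The open upper hemisphere. -/
def Up (m : ℕ) : Set (Sph m) := {θ | 0 < (θ : Vec (m + 1)) 0}

lemma Up_meas (m : ℕ) : MeasurableSet (Up m) :=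
  (isOpen_lt continuous_const (by fun_prop)).measurableSet

lemma half_integral {m : ℕ} {F : Sph m → ℝ} (hF : Integrable F (sig m)) :
    ∫ θ, F θ ∂(sig m) = ∫ θ in Up m, (F θ + F (sm (R0 m) θ)) ∂(sig m) := by
  have hmp := sm_mp (R0 m)
  have hemb : MeasurableEmbedding (sm (R0 m)) := by
    refine MeasurableEmbedding.of_measurable_inverse (g := sm (R0 m)) hmp.measurable ?_ hmp.measurable
      (fun θ => Subtype.ext (R0_R0 _))
    rw [range_eq_univ.2 fun θ => ⟨sm (R0 m) θ, Subtype.ext (R0_R0 _)⟩]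
    exact MeasurableSet.univ
  have hc : Integrable (fun θ => F (sm (R0 m) θ)) (sig m) := hmp.integrable_comp_of_integrable hF
  rw [integral_add hF.integrableOn hc.integrableOn]
  have h1 := hmp.setIntegral_preimage_emb hemb F (Up m)ᶜ
  have h2 : (sm (R0 m) ⁻¹' (Up m)ᶜ : Set (Sph m)) =ᵐ[sig m] (Up m : Set (Sph m)) := by
    have hn : ∀ᵐ θ : Sph m ∂(sig m), (θ : Vec (m + 1)) 0 ≠ 0 := by
      have := latitude_null (⟨e0 m, by simp [norm_e0]⟩ : Sph m) (t := 0) (by simp)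
      rw [ae_iff]
      refine measure_mono_null (fun θ hθ => ?_) this
      simpa [e0, EuclideanSpace.inner_single_left] using hθ
    filter_upwards [hn] with θ hθ
    refine propext ?_
    change (¬ 0 < (R0 m (θ : Vec (m + 1))) 0) ↔ 0 < (θ : Vec (m + 1)) 0
    rw [R0_zero]
    constructor
    · intro h; exact lt_of_le_of_ne (by linarith) hθ.symm
    · intro h; linarith
  rw [setIntegral_congr_set h2] at h1
  rw [h1, integral_add_compl (Up_meas m) hF]

lemma lintegral_scale {m : ℕ} {F : Vec m → ℝ≥0∞} (hF : Measurable F) {R : ℝ} (hR : 0 < R) :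
    ∫⁻ x, F x = ENNReal.ofReal (R ^ m) * ∫⁻ u, F (R • u) := by
  have h := Measure.map_addHaar_smul (volume : Measure (Vec m)) hR.ne'
  have h2 : ∫⁻ u, F (R • u) = ∫⁻ x, F x ∂(Measure.map (R • ·) (volume : Measure (Vec m))) :=
    (lintegral_map hF (measurable_const_smul R)).symm
  rw [h2, h, lintegral_smul_measure, smul_eq_mul, ← mul_assoc, ← ENNReal.ofReal_mul (by positivity)]
  have : R ^ m * |(R ^ Module.finrank ℝ (Vec m))⁻¹| = 1 := by
    rw [abs_of_pos (by positivity)]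
    simp only [finrank_euclideanSpace, Fintype.card_fin]
    field_simp
  rw [this]; simp

lemma sub_sqrt {a : ℝ} (ha : 0 ≤ a) (g : ℝ → ℝ≥0∞) : ∫⁻ s in Ioi 0, g s =
    ∫⁻ R in Ioi a, ENNReal.ofReal (R / √(R ^ 2 - a ^ 2)) * g (√(R ^ 2 - a ^ 2)) := by
  have hpos : ∀ R ∈ Ioi a, 0 < R ^ 2 - a ^ 2 := fun R hR => by
    have : a < R := hR
    nlinarith
  have himg : (fun R => √(R ^ 2 - a ^ 2)) '' Ioi a = Ioi 0 := by
    ext s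
    constructor
    · rintro ⟨R, hR, rfl⟩; exact Real.sqrt_pos.2 (hpos R hR)
    · intro hs
      have hs' : 0 < s := hs
      refine ⟨√(s ^ 2 + a ^ 2), ?_, ?_⟩
      · exact Real.lt_sqrt_of_sq_lt (by nlinarith)
      · change √(√(s ^ 2 + a ^ 2) ^ 2 - a ^ 2) = s
        rw [Real.sq_sqrt (by positivity), add_sub_cancel_right, Real.sqrt_sq hs'.le]
  rw [← himg, lintegral_image_eq_lintegral_abs_deriv_mul (f' := fun R => R / √(R ^ 2 - a ^ 2))
    measurableSet_Ioi]
  · refine setLIntegral_congr_fun measurableSet_Ioi fun R hR => ?_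
    have : a < R := hR
    rw [abs_of_nonneg (div_nonneg (by linarith) (Real.sqrt_nonneg _))]
  · intro R hR
    have h1 : HasDerivAt (fun R : ℝ => R ^ 2 - a ^ 2) (2 * R) R := by
      simpa using (hasDerivAt_pow 2 R).sub_const (a ^ 2)
    have h2 := (h1.sqrt (hpos R hR).ne').hasDerivWithinAt (s := Ioi a)
    rwa [mul_div_mul_left _ _ two_ne_zero] at h2
  · intro R hR R' hR' h
    have h3 := (Real.sqrt_inj (hpos R hR).le (hpos R' hR').le).1 h
    have h1 : a < R := hR
    have h2 : a < R' := hR'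
    nlinarith

/-- Height of the point of the upper hemisphere of radius `p` above `x`. -/
def hh {m : ℕ} (p : ℝ) (x : Vec m) : ℝ := √(p ^ 2 - ‖x‖ ^ 2)

/-- The direction of the point of the upper hemisphere of radius `p` above `x`. -/
def PP {m : ℕ} (p : ℝ) (x : Vec m) : Sph m := dir (sl (hh p x, x))

/-- Density of the surface measure in the coordinate `x`. -/
def ww {m : ℕ} (p : ℝ) (x : Vec m) : ℝ := p / (hh p x * p ^ m)

lemma hh_pos {m : ℕ} {p : ℝ} {x : Vec m} (hx : ‖x‖ < p) : 0 < hh p x :=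
  Real.sqrt_pos.2 (by nlinarith [norm_nonneg x])

lemma hh_sq {m : ℕ} {p : ℝ} {x : Vec m} (hx : ‖x‖ < p) : hh p x ^ 2 = p ^ 2 - ‖x‖ ^ 2 :=
  Real.sq_sqrt (by nlinarith [norm_nonneg x])

lemma continuous_hh {m : ℕ} (p : ℝ) : Continuous (hh p : Vec m → ℝ) := by
  unfold hh; fun_prop

lemma norm_lift {m : ℕ} {p : ℝ} {x : Vec m} (hx : ‖x‖ < p) : ‖sl (hh p x, x)‖ = p := by
  have h0 : 0 ≤ p := (norm_nonneg x).trans hx.le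
  rw [← sq_eq_sq₀ (norm_nonneg _) h0, sl_norm_sq, hh_sq hx]; ring

lemma PP_coe {m : ℕ} {p : ℝ} {x : Vec m} (hx : ‖x‖ < p) :
    (PP p x : Vec (m + 1)) = p⁻¹ • sl (hh p x, x) := by
  have h0 : 0 < p := (norm_nonneg x).trans_lt hx
  rw [PP, dir_coe, norm_lift hx]
  rw [← norm_ne_zero_iff, norm_lift hx]; exact h0.ne'

lemma measurable_PP {m : ℕ} (p : ℝ) : Measurable (PP p : Vec m → Sph m) :=
  (measurable_dir m).comp ((continuous_sl m).comp
    ((continuous_hh p).prodMk continuous_id)).measurable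

lemma measurable_ww {m : ℕ} (p : ℝ) : Measurable (ww p : Vec m → ℝ) := by
  have := (continuous_hh (m := m) p).measurable
  unfold ww; fun_prop

lemma ww_nonneg {m : ℕ} {p : ℝ} (hp : 0 < p) (x : Vec m) : 0 ≤ ww p x := by
  unfold ww hh; positivity

lemma sl_smul {m : ℕ} (c : ℝ) (p : ℝ × Vec m) : sl (c * p.1, c • p.2) = c • sl p := by
  ext i
  refine Fin.cases ?_ (fun i => ?_) i
  · simp [sl_zero]
  · simp [sl_succ]

lemma dir_pos_smul {m : ℕ} {s : ℝ} (hs : 0 < s) (x : Vec (m + 1)) : dir (s • x) = dir x := by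
  by_cases hx : x = 0
  · simp [hx]
  · have := dir_smul (s := s * ‖x‖) (by have := norm_pos_iff.2 hx; positivity) (dir x)
    rwa [mul_smul, norm_smul_dir] at this

lemma measurable_PP_joint {m : ℕ} {F : Sph m → ℝ≥0∞} (hF : Measurable F) :
    Measurable fun q : ℝ × Vec m => (Ioo 0 1).indicator (fun R => (ball (0 : Vec m) R).indicator
      (fun w => ENNReal.ofReal (R / hh R w) * F (PP R w)) q.2) q.1 := by
  have h1 : Measurable fun q : ℝ × Vec m => hh q.1 q.2 := by unfold hh; fun_prop
  have h2 : Measurable fun q : ℝ × Vec m => PP q.1 q.2 := by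
    unfold PP
    exact (measurable_dir m).comp ((continuous_sl m).measurable.comp (h1.prodMk measurable_snd))
  have hs : MeasurableSet {q : ℝ × Vec m | 0 < q.1 ∧ q.1 < 1 ∧ ‖q.2‖ < q.1} :=
    (measurableSet_lt measurable_const measurable_fst).inter
      ((measurableSet_lt measurable_fst measurable_const).inter
        (measurableSet_lt measurable_snd.norm measurable_fst))
  have h3 : Measurable fun q : ℝ × Vec m => ENNReal.ofReal (q.1 / hh q.1 q.2) * F (PP q.1 q.2) :=
    (measurable_fst.div h1).ennreal_ofReal.mul (hF.comp h2)
  convert h3.indicator hs using 1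
  ext q
  simp only [indicator, mem_Ioo, mem_ball_zero_iff, mem_ofPred_eq]
  split_ifs <;> first | rfl | (exfalso; tauto)

/-- Surface measure on the upper hemisphere in the coordinates given by orthogonal projection. -/
lemma proj_lintegral {m : ℕ} {F : Sph m → ℝ≥0∞} (hF : Measurable F) {p : ℝ} (hp : 0 < p) :
    ∫⁻ θ in Up m, F θ ∂(sig m) =
      ∫⁻ x in ball (0 : Vec m) p, ENNReal.ofReal (ww p x) * F (PP p x) := by
  refine (ENNReal.mul_left_inj (rmeas_unit m).1 (rmeas_unit m).2).1 ?_
  have hFU : Measurable ((Up m).indicator F) := hF.indicator (Up_meas m)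
  rw [← lintegral_indicator (Up_meas m), ← cone_lintegral hFU]
  have hmeas : Measurable fun x : Vec (m + 1) =>
      (Up m).indicator F (dir x) * (Iio (1 : ℝ)).indicator 1 ‖x‖ :=
    (hFU.comp (measurable_dir m)).mul
      ((measurable_one.indicator measurableSet_Iio).comp measurable_norm)
  have hmc : Measurable fun q : ℝ × Vec m =>
      (Up m).indicator F (dir (sl q)) * (Iio (1 : ℝ)).indicator 1 ‖sl q‖ :=
    hmeas.comp (continuous_sl m).measurable
  rw [← (sl_mp m).lintegral_comp hmeas]
  rw [show (volume : Measure (ℝ × Vec m)) = (volume : Measure ℝ).prod volume from rfl,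
    lintegral_prod_symm _ hmc.aemeasurable]
  have step1 : ∀ w : Vec m, ∫⁻ s, (Up m).indicator F (dir (sl (s, w))) *
      (Iio (1 : ℝ)).indicator 1 ‖sl (s, w)‖ = ∫⁻ R, (Ioo 0 1).indicator (fun R =>
        (ball (0 : Vec m) R).indicator
        (fun w => ENNReal.ofReal (R / hh R w) * F (PP R w)) w) R := by
    intro w
    have e1 : (fun s => (Up m).indicator F (dir (sl (s, w))) *
        (Iio (1 : ℝ)).indicator 1 ‖sl (s, w)‖) =ᵐ[volume] (Ioi 0).indicator (fun s =>
        F (dir (sl (s, w))) * (Iio (1 : ℝ)).indicator 1 ‖sl (s, w)‖) := by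
      have hz : ∀ᵐ s : ℝ, s ≠ 0 := by rw [ae_iff]; simp
      filter_upwards [hz] with s hs0
      by_cases hs : 0 < s
      · have hne : sl (s, w) ≠ 0 := fun h => by
          have := sl_zero (s, w); rw [h] at this; simp at this; linarith
        have : dir (sl (s, w)) ∈ Up m := by
          change 0 < (dir (sl (s, w)) : Vec (m + 1)) 0
          rw [dir_coe hne]
          have := norm_pos_iff.2 hne
          simp only [PiLp.smul_apply, sl_zero, smul_eq_mul]; positivity
        rw [indicator_of_mem this, indicator_of_mem (show s ∈ Ioi 0 from hs)]
      · rw [indicator_of_notMem (show s ∉ Ioi 0 from hs)]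
        have hne : sl (s, w) ≠ 0 := fun h => hs0 (by
          have := sl_zero (s, w); rw [h] at this; simpa using this.symm)
        rw [indicator_of_notMem, zero_mul]
        change ¬ 0 < (dir (sl (s, w)) : Vec (m + 1)) 0
        rw [dir_coe hne]
        have := norm_pos_iff.2 hne
        simp only [PiLp.smul_apply, sl_zero, smul_eq_mul, not_lt]
        exact mul_nonpos_of_nonneg_of_nonpos (by positivity) (not_lt.1 hs)
    rw [lintegral_congr_ae e1, lintegral_indicator measurableSet_Ioi, sub_sqrt (norm_nonneg w),
      ← lintegral_indicator measurableSet_Ioi]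
    refine lintegral_congr fun R => ?_
    by_cases hR : ‖w‖ < R
    · rw [indicator_of_mem (show R ∈ Ioi ‖w‖ from hR)]
      have h0 : 0 < R := (norm_nonneg w).trans_lt hR
      have hn := norm_lift hR
      rw [hh] at hn
      rw [hn]
      by_cases h1 : R < 1
      · rw [indicator_of_mem (show R ∈ Ioo 0 1 from ⟨h0, h1⟩),
          indicator_of_mem (show w ∈ ball (0 : Vec m) R by simpa using hR), indicator_of_mem (show R ∈ Iio 1 from h1)]
        simp [hh, PP]
      · rw [indicator_of_notMem (fun h : R ∈ Ioo 0 1 => h1 h.2),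
          indicator_of_notMem (fun h : R ∈ Iio 1 => h1 h)]
        simp
    · rw [indicator_of_notMem (show R ∉ Ioi ‖w‖ from hR)]
      by_cases h1 : R ∈ Ioo (0 : ℝ) 1
      · rw [indicator_of_mem h1, indicator_of_notMem (by simpa using hR)]
      · rw [indicator_of_notMem h1]
  simp_rw [step1]
  rw [lintegral_lintegral_swap (f := fun (w : Vec m) (R : ℝ) => (Ioo 0 1).indicator (fun R =>
      (ball (0 : Vec m) R).indicator (fun w => ENNReal.ofReal (R / hh R w) * F (PP R w)) w) R)
    ((measurable_PP_joint hF).comp measurable_swap).aemeasurable]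
  have step2 : ∀ R : ℝ, ∫⁻ w : Vec m, (Ioo 0 1).indicator (fun R =>
      (ball (0 : Vec m) R).indicator (fun w => ENNReal.ofReal (R / hh R w) * F (PP R w)) w) R =
      (∫⁻ x in ball (0 : Vec m) p, ENNReal.ofReal (ww p x) * F (PP p x)) *
      (Ioo 0 1).indicator (fun R => ENNReal.ofReal (R ^ m)) R := by
    intro R
    by_cases hR : R ∈ Ioo (0 : ℝ) 1
    · simp only [indicator_of_mem hR]
      have h0 := hR.1
      have hc : 0 < R / p := by positivity
      have hmR : Measurable ((ball (0 : Vec m) R).indicator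
          (fun w => ENNReal.ofReal (R / hh R w) * F (PP R w))) := by
        refine Measurable.indicator ?_ measurableSet_ball
        exact ((measurable_const.div (continuous_hh R).measurable).ennreal_ofReal).mul
          (hF.comp (measurable_PP R))
      have hmR' : Measurable fun u => (ball (0 : Vec m) R).indicator
          (fun w => ENNReal.ofReal (R / hh R w) * F (PP R w)) ((R / p) • u) :=
        hmR.comp (measurable_const_smul _)
      rw [lintegral_scale hmR hc, ← lintegral_indicator measurableSet_ball, mul_comm,
        ← lintegral_mul_const _ hmR', ← lintegral_mul_const]
      · refine lintegral_congr fun x => ?_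
        have hiff : (R / p) • x ∈ ball (0 : Vec m) R ↔ x ∈ ball (0 : Vec m) p := by
          simp only [mem_ball_zero_iff, norm_smul, Real.norm_eq_abs, abs_of_pos hc]
          rw [div_mul_eq_mul_div, div_lt_iff₀ hp, mul_lt_mul_iff_right₀ h0]
        by_cases hx : x ∈ ball (0 : Vec m) p
        · have hx' : ‖x‖ < p := by simpa using hx
          rw [indicator_of_mem hx, indicator_of_mem (hiff.2 hx)]
          have ehh : hh R ((R / p) • x) = R / p * hh p x := by
            rw [hh, hh, norm_smul, Real.norm_of_nonneg hc.le, ← Real.sqrt_sq hc.le,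
              ← Real.sqrt_mul (by positivity), Real.sqrt_sq hc.le]
            congr 1; field_simp
          have ePP : PP R ((R / p) • x) = PP p x := by
            rw [PP, PP, ehh, sl_smul (R / p) (hh p x, x), dir_pos_smul hc]
          have hhp := hh_pos hx'
          rw [ehh, ePP, mul_right_comm, mul_right_comm _ (F _), ← ENNReal.ofReal_mul (by positivity),
            ← ENNReal.ofReal_mul (ww_nonneg hp x)]
          congr 2
          rw [ww]; field_simp
          rw [← mul_pow, div_mul_cancel₀ _ hp.ne']
        · rw [indicator_of_notMem hx, indicator_of_notMem (fun h => hx (hiff.1 h))]; simp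
      · refine Measurable.indicator ?_ measurableSet_ball
        exact (measurable_ww p).ennreal_ofReal.mul (hF.comp (measurable_PP p))
    · simp [indicator_of_notMem hR]
  simp_rw [step2]
  rw [lintegral_const_mul _ (Measurable.indicator (by fun_prop) measurableSet_Ioo),
    lintegral_indicator measurableSet_Ioo, rmeas, withDensity_apply _ measurableSet_Iio,
    Measure.restrict_restrict measurableSet_Iio]
  congr 3
  ext s; simp [and_comm]

/-! ### The quadratic form on functions that are odd under a reflection -/

lemma PP_mp {m : ℕ} {p : ℝ} (hp : 0 < p) : MeasurePreserving (PP p : Vec m → Sph m)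
    (volume.withDensity fun x => ENNReal.ofReal (ww p x)) ((sig m).restrict (Up m)) := by
  refine ⟨measurable_PP p, Measure.ext_of_lintegral _ fun F hF => ?_⟩
  have hw := (measurable_ww (m := m) p).ennreal_ofReal
  have hFP : Measurable fun x : Vec m => F (PP p x) := hF.comp (measurable_PP p)
  rw [lintegral_map hF (measurable_PP p), proj_lintegral hF hp,
    lintegral_withDensity_eq_lintegral_mul _ hw hFP,
    ← lintegral_indicator measurableSet_ball]
  refine lintegral_congr fun x => ?_
  by_cases hx : ‖x‖ < p
  · rw [indicator_of_mem (by simpa using hx)]; rfl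
  · have : ww p x = 0 := by
      rw [ww, hh, Real.sqrt_eq_zero_of_nonpos (by nlinarith [not_lt.1 hx])]; simp
    rw [indicator_of_notMem (by simpa using hx)]
    simp [this]

lemma proj_integral {m : ℕ} {p : ℝ} (hp : 0 < p) {F : Sph m → ℝ} (hF : Integrable F (sig m)) :
    Integrable (fun x : Vec m => F (PP p x) * ww p x) ∧
      ∫ θ in Up m, F θ ∂(sig m) = ∫ x : Vec m, F (PP p x) * ww p x := by
  have hmp := PP_mp (m := m) hp
  have hw := (measurable_ww (m := m) p).ennreal_ofReal
  have hFr : Integrable F ((sig m).restrict (Up m)) := hF.integrableOn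
  have hi := hmp.integrable_comp_of_integrable hFr
  have e : ∀ x : Vec m, (ENNReal.ofReal (ww p x)).toReal • F (PP p x) = F (PP p x) * ww p x :=
    fun x => by rw [ENNReal.toReal_ofReal (ww_nonneg hp x), smul_eq_mul, mul_comm]
  constructor
  · rw [integrable_withDensity_iff_integrable_smul' hw (ae_of_all _ fun _ => ENNReal.ofReal_lt_top)]
      at hi
    exact hi.congr (ae_of_all _ e)
  · rw [← hmp.map_eq, integral_map hmp.measurable.aemeasurable (by
      rw [hmp.map_eq]; exact hFr.aestronglyMeasurable),
      integral_withDensity_eq_integral_toReal_smul hw (ae_of_all _ fun _ => ENNReal.ofReal_lt_top)]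
    exact integral_congr_ae (ae_of_all _ e)

/-- The symmetric form of the squared area of a triangle in the squares of its sides. -/
def qf (a b c : ℝ) : ℝ := 2 * a * b + 2 * a * c + 2 * b * c - a ^ 2 - b ^ 2 - c ^ 2

/-- Pairs `(x, y)` such that the heights above `x`, `y`, `-x-y` of the hemispheres of radii
`p`, `q`, `s` are the side lengths of a nondegenerate triangle. -/
def AA (m : ℕ) (p q s : ℝ) : Set (Vec m × Vec m) :=
  {z | ‖z.1‖ < p ∧ ‖z.2‖ < q ∧ ‖z.1 + z.2‖ < s ∧
    0 < qf (p ^ 2 - ‖z.1‖ ^ 2) (q ^ 2 - ‖z.2‖ ^ 2) (s ^ 2 - ‖z.1 + z.2‖ ^ 2)}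

lemma AA_open (m : ℕ) (p q s : ℝ) : IsOpen (AA m p q s) := by
  unfold AA qf
  simp only [Set.ofPred_and]
  refine IsOpen.inter ?_ (IsOpen.inter ?_ (IsOpen.inter ?_ ?_)) <;>
  exact isOpen_lt (by fun_prop) (by fun_prop)

lemma AA_swap {m : ℕ} {p q s : ℝ} {x y : Vec m} : (x, y) ∈ AA m p q s ↔ (y, x) ∈ AA m q p s := by
  simp only [AA, mem_ofPred_eq, qf, add_comm y x]
  constructor <;> rintro ⟨h1, h2, h3, h4⟩ <;> exact ⟨h2, h1, h3, by nlinarith⟩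

lemma AA_shear {m : ℕ} {p q s : ℝ} {x y : Vec m} :
    (x, y) ∈ AA m p q s ↔ (x, -x - y) ∈ AA m p s q := by
  have e1 : ‖-x - y‖ = ‖x + y‖ := by rw [← norm_neg]; congr 1; abel
  have e2 : ‖x + (-x - y)‖ = ‖y‖ := by rw [← norm_neg]; congr 1; abel
  simp only [AA, mem_ofPred_eq, qf, e1, e2]
  constructor <;> rintro ⟨h1, h2, h3, h4⟩ <;> exact ⟨h1, h3, h2, by nlinarith⟩

lemma AA_iff {m : ℕ} {p q s : ℝ} (hs : 0 < s) {x y : Vec m} (hx : ‖x‖ < p) (hy : ‖y‖ < q) :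
    (x, y) ∈ AA m p q s ↔ |s ^ 2 - p ^ 2 - q ^ 2 - 2 * inner ℝ x y| < 2 * hh p x * hh q y := by
  have h1 := hh_sq hx
  have h2 := hh_sq hy
  have p1 := hh_pos hx
  have p2 := hh_pos hy
  have hn : ‖x + y‖ ^ 2 = ‖x‖ ^ 2 + 2 * inner ℝ x y + ‖y‖ ^ 2 := norm_add_sq_real x y
  have hpos : 0 < 2 * hh p x * hh q y := by positivity
  have e : qf (p ^ 2 - ‖x‖ ^ 2) (q ^ 2 - ‖y‖ ^ 2) (s ^ 2 - ‖x + y‖ ^ 2) =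
      (2 * hh p x * hh q y) ^ 2 - (s ^ 2 - p ^ 2 - q ^ 2 - 2 * inner ℝ x y) ^ 2 := by
    rw [mul_pow, mul_pow, h1, h2, hn, qf]; ring
  simp only [AA, mem_ofPred_eq, e, sub_pos, sq_lt_sq, abs_of_pos hpos]
  constructor
  · exact fun h => h.2.2.2
  · intro h
    refine ⟨hx, hy, ?_, h⟩
    have h3 := (abs_lt.1 h).1
    have : ‖x + y‖ ^ 2 < s ^ 2 := by
      rw [hn]; nlinarith [sq_nonneg (hh p x - hh q y)]
    exact lt_of_pow_lt_pow_left₀ 2 hs.le this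

lemma volume_ball_eq {m : ℕ} {R : ℝ} (hR : 0 < R) : volume (ball (0 : Vec m) R) = volume (Bl m R) := by
  rw [Measure.addHaar_ball_of_pos _ _ hR, Bl, Measure.addHaar_closedBall' _ _ hR.le,
    Measure.addHaar_unitClosedBall_eq_addHaar_unitBall]

/-- The sections of `AA` are ellipsoids. -/
lemma AA_section {m : ℕ} {p q s R : ℝ} (hq : 0 < q) (hs : 0 < s) (hR : 0 < R)
    (hRe : 4 * R ^ 2 * p ^ 2 = heron s p q) {x : Vec m} (hx : ‖x‖ < p) :
    volume.real {y | (x, y) ∈ AA m p q s} = volume.real (Bl m R) * (hh p x / p) := by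
  have hp : 0 < p := (norm_nonneg x).trans_lt hx
  set h := hh p x with hh'
  have h0 : 0 < h := hh_pos hx
  have hsq : h ^ 2 = p ^ 2 - ‖x‖ ^ 2 := hh_sq hx
  set lam : ℝ := 1 / (h * (h + p))
  set tau : ℝ := (p ^ 2 + q ^ 2 - s ^ 2) / (2 * p ^ 2)
  have htau : tau * (2 * p ^ 2) = p ^ 2 + q ^ 2 - s ^ 2 := div_mul_cancel₀ _ (by positivity)
  have hlam : (2 * lam + lam ^ 2 * ‖x‖ ^ 2) * h ^ 2 = 1 := by
    have : ‖x‖ ^ 2 = p ^ 2 - h ^ 2 := by linarith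
    rw [this]; simp only [lam]; field_simp; ring
  set L : Vec m →ₗ[ℝ] Vec m := LinearMap.transvection (lam • (innerₛₗ ℝ x : Module.Dual ℝ (Vec m))) x
  have hL : ∀ u, L u = u + (lam * inner ℝ x u) • x := fun u => rfl
  have hdet : LinearMap.det L = p / h := by
    rw [LinearMap.transvection.det]
    have : ‖x‖ ^ 2 = p ^ 2 - h ^ 2 := by linarith
    simp only [LinearMap.smul_apply, innerₛₗ_apply_apply, real_inner_self_eq_norm_sq, this, smul_eq_mul]
    simp only [lam]; field_simp; ring
  have hset : {y | (x, y) ∈ AA m p q s} = (fun y => y + tau • x) ⁻¹' (L ⁻¹' ball 0 R) := by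
    ext y
    have hLn : ‖L (y + tau • x)‖ ^ 2 = ‖y + tau • x‖ ^ 2 + inner ℝ x (y + tau • x) ^ 2 / h ^ 2 := by
      rw [hL, norm_add_sq_real, inner_smul_right, norm_smul, real_inner_comm x, Real.norm_eq_abs, mul_pow,
        sq_abs]
      have : inner ℝ x (y + tau • x) ^ 2 / h ^ 2 =
        inner ℝ x (y + tau • x) ^ 2 * (2 * lam + lam ^ 2 * ‖x‖ ^ 2) := by
        rw [div_eq_iff (by positivity), mul_assoc, hlam, mul_one]
      rw [this]; ring
    have key : h ^ 2 * (R ^ 2 - ‖L (y + tau • x)‖ ^ 2) * 4 = 4 * h ^ 2 * (q ^ 2 - ‖y‖ ^ 2) -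
        (s ^ 2 - p ^ 2 - q ^ 2 - 2 * inner ℝ x y) ^ 2 := by
      have hR2 : R ^ 2 = q ^ 2 - tau ^ 2 * p ^ 2 := by
        have hp2 : (4 * p ^ 2 : ℝ) ≠ 0 := by positivity
        apply mul_left_cancel₀ hp2
        rw [heron] at hRe
        linear_combination hRe + (tau * (2 * p ^ 2) + (p ^ 2 + q ^ 2 - s ^ 2)) * htau
      rw [hLn, norm_add_sq_real, inner_add_right, inner_smul_right, inner_smul_right, norm_smul,
        real_inner_self_eq_norm_sq, real_inner_comm x y, Real.norm_eq_abs, mul_pow, sq_abs, hR2]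
      have hx2 : ‖x‖ ^ 2 = p ^ 2 - h ^ 2 := by linarith
      have hc : s ^ 2 = p ^ 2 + q ^ 2 - tau * (2 * p ^ 2) := by linarith
      rw [hx2, hc]
      field_simp
      ring
    have hball : y + tau • x ∈ L ⁻¹' ball 0 R ↔ ‖L (y + tau • x)‖ ^ 2 < R ^ 2 := by
      rw [mem_preimage, mem_ball_zero_iff, sq_lt_sq₀ (norm_nonneg _) hR.le]
    have h2 : 0 < h ^ 2 := by positivity
    rw [mem_preimage, hball]
    constructor
    · intro hy
      have hyq : ‖y‖ < q := hy.2.1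
      have hy' := (AA_iff hs hx hyq).1 hy
      have hq2 := hh_sq hyq
      have := sq_lt_sq' (abs_lt.1 hy').1 (abs_lt.1 hy').2
      rw [mul_pow, mul_pow, hq2] at this
      nlinarith
    · intro hy
      have hlt : (s ^ 2 - p ^ 2 - q ^ 2 - 2 * inner ℝ x y) ^ 2 < 4 * h ^ 2 * (q ^ 2 - ‖y‖ ^ 2) := by
        nlinarith [mul_pos h2 (sub_pos.2 hy)]
      have hyq : ‖y‖ < q := by
        have : 0 < q ^ 2 - ‖y‖ ^ 2 := by
          by_contra hcon
          nlinarith [sq_nonneg (s ^ 2 - p ^ 2 - q ^ 2 - 2 * inner ℝ x y), not_lt.1 hcon]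
        exact lt_of_pow_lt_pow_left₀ 2 hq.le (by linarith)
      refine (AA_iff hs hx hyq).2 (abs_lt_of_sq_lt_sq ?_ (by have := hh_pos hyq; positivity))
      rw [mul_pow, mul_pow, hh_sq hyq]
      linarith
  have hdne : LinearMap.det L ≠ 0 := by rw [hdet]; positivity
  rw [hset, Measure.real, measure_preimage_add_right, Measure.addHaar_preimage_linearMap _ hdne,
    volume_ball_eq hR, hdet, ENNReal.toReal_mul, ENNReal.toReal_ofReal (by positivity),
    abs_of_pos (by positivity), inv_div, mul_comm]
  rfl

/-- The function on the ball of radius `p` obtained from a function on the upper hemisphere by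
orthogonal projection, including the density. -/
def cc {m : ℕ} (F : Sph m → ℝ) (p : ℝ) (x : Vec m) : ℝ := F (PP p x) * ww p x

lemma ww_zero {m : ℕ} {p : ℝ} (hp : 0 < p) {x : Vec m} (hx : ¬ ‖x‖ < p) : ww p x = 0 := by
  rw [ww, hh, Real.sqrt_eq_zero_of_nonpos (by nlinarith [not_lt.1 hx])]; simp

lemma sph_int {m : ℕ} {F : Sph m → ℝ} (hF : Continuous F) : Integrable F (sig m) := by
  have := hF.continuousOn.integrableOn_compact (μ := sig m) isCompact_univ
  rwa [integrableOn_univ] at this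

lemma cc_meas {m : ℕ} {F : Sph m → ℝ} (hF : Continuous F) (p : ℝ) : Measurable (cc F p) :=
  (hF.measurable.comp (measurable_PP p)).mul (measurable_ww p)

lemma AA_meas (m : ℕ) (p q s : ℝ) : MeasurableSet (AA m p q s) := (AA_open m p q s).measurableSet

lemma diag_integral {m : ℕ} {p q s R : ℝ} (hp : 0 < p) (hq : 0 < q) (hs : 0 < s) (hR : 0 < R)
    (hRe : 4 * R ^ 2 * p ^ 2 = heron s p q) {F : Sph m → ℝ} (hF : Continuous F) :
    Integrable ((AA m p q s).indicator fun z => cc F p z.1 ^ 2) ∧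
    ∫ z, (AA m p q s).indicator (fun z => cc F p z.1 ^ 2) z =
      (∫ θ in Up m, F θ ^ 2 ∂(sig m)) * (volume.real (Bl m R) / p ^ m) := by
  have hpi := proj_integral (m := m) hp (F := fun θ => F θ ^ 2) (sph_int (hF.pow 2))
  have hsec : ∀ x : Vec m, MeasurableSet {y | (x, y) ∈ AA m p q s} := fun x =>
    measurable_prodMk_left (AA_meas m p q s)
  have hind : ∀ x y : Vec m, (AA m p q s).indicator (fun z => cc F p z.1 ^ 2) (x, y) =
      {y | (x, y) ∈ AA m p q s}.indicator (fun _ => cc F p x ^ 2) y := fun x y => by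
    simp only [indicator, mem_ofPred_eq]
  have hfin : ∀ x : Vec m, volume {y | (x, y) ∈ AA m p q s} ≠ ⊤ := fun x =>
    ((measure_mono fun y (hy : (x, y) ∈ AA m p q s) =>
      (mem_ball_zero_iff.2 hy.2.1 : y ∈ ball (0 : Vec m) q)).trans_lt measure_ball_lt_top).ne
  have hval : ∀ x : Vec m, ∫ y, (AA m p q s).indicator (fun z => cc F p z.1 ^ 2) (x, y) =
      F (PP p x) ^ 2 * ww p x * (volume.real (Bl m R) / p ^ m) := by
    intro x
    simp_rw [hind]
    rw [integral_indicator_const _ (hsec x), smul_eq_mul]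
    by_cases hx : ‖x‖ < p
    · rw [AA_section hq hs hR hRe hx, cc, ww]
      have := hh_pos hx
      field_simp
    · rw [cc, ww_zero hp hx]; simp
  have hm : Measurable ((AA m p q s).indicator fun z => cc F p z.1 ^ 2) :=
    (((cc_meas hF p).comp measurable_fst).pow_const 2).indicator (AA_meas m p q s)
  have hi : Integrable ((AA m p q s).indicator fun z => cc F p z.1 ^ 2) := by
    refine (integrable_prod_iff hm.aestronglyMeasurable).2 ⟨ae_of_all _ fun x => ?_, ?_⟩
    · simp_rw [hind]
      rw [integrable_indicator_iff (hsec x)]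
      exact integrableOn_const (hfin x) (by simp)
    · have : ∀ x : Vec m, ∫ y, ‖(AA m p q s).indicator (fun z => cc F p z.1 ^ 2) (x, y)‖ =
          F (PP p x) ^ 2 * ww p x * (volume.real (Bl m R) / p ^ m) := fun x => by
        rw [← hval x]
        refine integral_congr_ae (ae_of_all _ fun y => ?_)
        exact Real.norm_of_nonneg (indicator_nonneg (fun _ _ => sq_nonneg _) _)
      simp_rw [this]
      exact hpi.1.mul_const _
  refine ⟨hi, ?_⟩
  rw [hpi.2, Measure.volume_eq_prod, integral_prod _ hi]
  simp_rw [hval]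
  exact integral_mul_const _ _

lemma inner_PP {m : ℕ} {p q : ℝ} {x y : Vec m} (hx : ‖x‖ < p) (hy : ‖y‖ < q) :
    inner ℝ (PP p x : Vec (m + 1)) (PP q y : Vec (m + 1)) =
      (hh p x * hh q y + inner ℝ x y) / (p * q) ∧
    inner ℝ (PP p x : Vec (m + 1)) (sm (R0 m) (PP q y) : Vec (m + 1)) =
      (-(hh p x * hh q y) + inner ℝ x y) / (p * q) := by
  have e : (sm (R0 m) (PP q y) : Vec (m + 1)) = R0 m (PP q y : Vec (m + 1)) := rfl
  rw [e, PP_coe hx, PP_coe hy, map_smul, R0_sl, inner_smul_left, inner_smul_right, sl_inner,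
    inner_smul_left, inner_smul_right, sl_inner]
  simp only [conj_trivial]
  constructor <;> (rw [div_eq_mul_inv, mul_inv]; ring)

lemma inner_sm {m : ℕ} (U : Vec (m + 1) ≃ₗᵢ[ℝ] Vec (m + 1)) (θ θ' : Sph m) :
    inner ℝ (sm U θ : Vec (m + 1)) (sm U θ' : Vec (m + 1)) =
      inner ℝ (θ : Vec (m + 1)) (θ' : Vec (m + 1)) := U.inner_map_map _ _

lemma sm_R0_R0 {m : ℕ} (θ : Sph m) : sm (R0 m) (sm (R0 m) θ) = θ := Subtype.ext (R0_R0 _)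

lemma cross_integral {m : ℕ} {r : Fin 3 → ℝ} (hr : Tri r) {i j : Fin 3} (hij : i ≠ j)
    {F : Fin 3 → Sph m → ℝ} (hF : ∀ j, Continuous (F j))
    (hodd : ∀ j θ, F j (sm (R0 m) θ) = - F j θ) :
    Integrable ((AA m (r i) (r j) (r (thd i j))).indicator
      fun z => cc (F i) (r i) z.1 * cc (F j) (r j) z.2) ∧
    QQ m r F i j = -2 * ∫ z, (AA m (r i) (r j) (r (thd i j))).indicator
      (fun z => cc (F i) (r i) z.1 * cc (F j) (r j) z.2) z := by
  set p := r i with hpdef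
  set q := r j with hqdef
  set s := r (thd i j) with hsdef
  have hp : 0 < p := hr.pos i
  have hq : 0 < q := hr.pos j
  have hs : 0 < s := hr.pos _
  have htt : tt r i j = (s ^ 2 - p ^ 2 - q ^ 2) / (2 * p * q) := tt_eq r hij
  have hci : ∀ k, Integrable (cc (F k) (r k)) := fun k =>
    (proj_integral (m := m) (hr.pos k) (sph_int (hF k))).1
  have hInt : Integrable ((AA m p q s).indicator fun z => cc (F i) p z.1 * cc (F j) q z.2) := by
    have h := prod_mul_bdd (μ := (volume : Measure (Vec m))) (ν := (volume : Measure (Vec m)))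
      (hci i) (hci j) (h := (AA m p q s).indicator 1) (C := 1)
      (measurable_one.indicator (AA_meas m p q s)) (fun z => by
        by_cases hz : z ∈ AA m p q s <;> simp [hz])
    refine h.congr (ae_of_all _ fun z => ?_)
    by_cases hz : z ∈ AA m p q s <;> simp [hz, p, q]
  refine ⟨hInt, ?_⟩
  set I : Sph m → ℝ := fun θ => ∫ θ', F j θ' * hv m r i j (θ, θ') ∂(sig m) with hI
  have hprod := prod_mul_bdd (μ := sig m) (ν := sig m) (sph_int (hF i)) (sph_int (hF j))
    (hv_meas m r i j) (hv_bdd m r i j)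
  have hFI : ∀ θ, ∫ θ', F i θ * F j θ' * hv m r i j (θ, θ') ∂(sig m) = F i θ * I θ := fun θ => by
    simp_rw [hI, mul_assoc]; exact integral_const_mul _ _
  have hFIint : Integrable (fun θ => F i θ * I θ) (sig m) := by
    have := hprod.integral_prod_left
    exact this.congr (ae_of_all _ hFI)
  have e1 : QQ m r F i j = ∫ θ, F i θ * I θ ∂(sig m) := by
    rw [QQ, integral_prod _ hprod]
    exact integral_congr_ae (ae_of_all _ hFI)
  have hIodd : ∀ θ, I (sm (R0 m) θ) = - I θ := fun θ => by
    have hemb : MeasurableEmbedding (sm (R0 m) : Sph m → Sph m) := by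
      refine MeasurableEmbedding.of_measurable_inverse (g := sm (R0 m)) (sm_mp _).measurable ?_
        (sm_mp _).measurable (fun θ => sm_R0_R0 θ)
      rw [range_eq_univ.2 fun θ => ⟨sm (R0 m) θ, sm_R0_R0 θ⟩]
      exact MeasurableSet.univ
    simp only [hI]
    rw [← (sm_mp (R0 m)).integral_comp hemb, ← integral_neg]
    refine integral_congr_ae (ae_of_all _ fun θ' => ?_)
    simp only [hodd, hv, inner_sm]; ring
  have e2 : QQ m r F i j = 2 * ∫ θ in Up m, F i θ * I θ ∂(sig m) := by
    rw [e1, half_integral hFIint, ← integral_const_mul]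
    refine integral_congr_ae (ae_of_all _ fun θ => ?_)
    simp only [hodd, hIodd]; ring
  set k : Sph m → Sph m → ℝ := fun θ θ' => (if inner ℝ (θ : Vec (m + 1)) (θ' : Vec (m + 1)) ≤ tt r i j
    then 1 else 0) - (if inner ℝ (θ : Vec (m + 1)) (sm (R0 m) θ' : Vec (m + 1)) < tt r i j
    then 1 else 0) with hk
  have hFk : ∀ θ, Integrable (fun θ' => F j θ' * hv m r i j (θ, θ')) (sig m) := fun θ => by
    refine (sph_int (hF j)).mul_bdd (c := 1) ((hv_meas m r i j).comp
      measurable_prodMk_left).aestronglyMeasurable (ae_of_all _ fun θ' => hv_bdd m r i j _)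
  have hkm : ∀ θ, Measurable (k θ) := fun θ => by
    have h1 : Measurable fun θ' : Sph m => inner ℝ (θ : Vec (m + 1)) (θ' : Vec (m + 1)) := by fun_prop
    have h2 : Measurable fun θ' : Sph m => inner ℝ (θ : Vec (m + 1)) (sm (R0 m) θ' : Vec (m + 1)) :=
      h1.comp (continuous_sm (R0 m)).measurable
    exact (Measurable.ite (measurableSet_le h1 measurable_const) measurable_const
      measurable_const).sub (Measurable.ite (measurableSet_lt h2 measurable_const) measurable_const
      measurable_const)
  have hkint : ∀ θ, Integrable (fun θ' => F j θ' * k θ θ') (sig m) := fun θ => by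
    refine (sph_int (hF j)).mul_bdd (c := 1) (hkm θ).aestronglyMeasurable
      (ae_of_all _ fun θ' => ?_)
    simp only [hk]; split_ifs <;> simp
  have e3 : ∀ θ, I θ = ∫ θ' in Up m, F j θ' * k θ θ' ∂(sig m) := fun θ => by
    rw [hI]
    simp only
    rw [half_integral (hFk θ)]
    refine integral_congr_ae (ae_restrict_of_ae ?_)
    have hnull := latitude_null (sm (R0 m) θ) (hr.tt_lt hij)
    have hnull' : ∀ᵐ θ' : Sph m ∂(sig m),
        inner ℝ (sm (R0 m) θ : Vec (m + 1)) (θ' : Vec (m + 1)) ≠ tt r i j := by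
      rw [ae_iff]; simpa using hnull
    filter_upwards [hnull'] with θ' hθ'
    have e4 : inner ℝ (sm (R0 m) θ : Vec (m + 1)) (θ' : Vec (m + 1)) =
        inner ℝ (θ : Vec (m + 1)) (sm (R0 m) θ' : Vec (m + 1)) := by
      rw [← inner_sm (R0 m) θ (sm (R0 m) θ'), sm_R0_R0]
    rw [e4] at hθ'
    simp only [hk, hv, hodd, hθ'.le_iff_lt]; ring
  have e5 : ∀ x : Vec m, ‖x‖ < p → I (PP p x) =
      - ∫ y, cc (F j) q y * (AA m p q s).indicator 1 (x, y) := fun x hx => by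
    rw [e3, (proj_integral hq (hkint _)).2, ← integral_neg]
    refine integral_congr_ae (ae_of_all _ fun y => ?_)
    simp only [cc]
    by_cases hy : ‖y‖ < q
    · have h1 := hh_pos hx
      have h2 := hh_pos hy
      have hkk : k (PP p x) (PP q y) = - (AA m p q s).indicator 1 (x, y) := by
        simp only [hk]
        rw [(inner_PP hx hy).1, (inner_PP hx hy).2, htt]
        have hh1 : 0 < 2 * hh p x * hh q y := by positivity
        set L := s ^ 2 - p ^ 2 - q ^ 2 - 2 * inner ℝ x y with hL
        have c1 : (hh p x * hh q y + inner ℝ x y) / (p * q) ≤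
            (s ^ 2 - p ^ 2 - q ^ 2) / (2 * p * q) ↔ 2 * hh p x * hh q y ≤ L := by
          rw [mul_assoc 2 p q, ← div_div (_ : ℝ) 2 (p * q), div_le_div_iff_of_pos_right (by positivity)]
          constructor <;> intro h <;> linarith
        have c2 : (-(hh p x * hh q y) + inner ℝ x y) / (p * q) <
            (s ^ 2 - p ^ 2 - q ^ 2) / (2 * p * q) ↔ - (2 * hh p x * hh q y) < L := by
          rw [mul_assoc 2 p q, ← div_div (_ : ℝ) 2 (p * q), div_lt_div_iff_of_pos_right (by positivity)]
          constructor <;> intro h <;> linarith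
        have c3 := AA_iff hs hx hy
        rw [← hL] at c3
        simp only [c1, c2, indicator, c3, abs_lt, Pi.one_apply]
        split_ifs <;> first | (exfalso; grind) | norm_num
      rw [hkk]; ring
    · rw [ww_zero hq hy]; simp
  rw [e2, (proj_integral hp hFIint).2, Measure.volume_eq_prod, integral_prod _ hInt,
    neg_mul, ← mul_neg, ← integral_neg]
  congr 1
  refine integral_congr_ae (ae_of_all _ fun x => ?_)
  by_cases hx : ‖x‖ < p
  · simp only [e5 x hx]
    rw [mul_right_comm, ← cc, mul_neg, ← integral_const_mul]
    congr 1
    refine integral_congr_ae (ae_of_all _ fun y => ?_)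
    by_cases hz : (x, y) ∈ AA m p q s <;> simp [hz]
  · have : ∀ y : Vec m, (x, y) ∉ AA m p q s := fun y hy => hx hy.1
    simp [ww_zero hp hx, this]

lemma pull_integral {d : ℕ} {φ : Vec d × Vec d → Vec d × Vec d} (hφ : MeasurePreserving φ)
    (he : MeasurableEmbedding φ) {H G : Vec d × Vec d → ℝ} (hG : ∀ z, G z = H (φ z))
    (hH : Integrable H) : Integrable G ∧ ∫ z, G z = ∫ z, H z := by
  have e : G = H ∘ φ := funext hG
  exact ⟨e ▸ hφ.integrable_comp_of_integrable hH, by rw [e]; exact hφ.integral_comp he H⟩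

/-- On families that are odd under the reflection in the hyperplane orthogonal to `e0`, the quadratic
form `‖·‖² - B` is the integral of a perfect square. -/
lemma odd_identity {m : ℕ} {r : Fin 3 → ℝ} (hr : Tri r) {F : Fin 3 → Sph m → ℝ}
    (hF : ∀ j, Continuous (F j)) (hodd : ∀ j θ, F j (sm (R0 m) θ) = - F j θ) :
    Integrable ((AA m (r 0) (r 1) (r 2)).indicator fun z =>
      (cc (F 0) (r 0) z.1 + cc (F 1) (r 1) z.2 + cc (F 2) (r 2) (-z.1 - z.2)) ^ 2) ∧
    (∑ j, al m r j * ∫ θ, F j θ ^ 2 ∂(sig m)) - (QQ m r F 0 1 + QQ m r F 0 2 + QQ m r F 1 2) =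
      ∫ z, (AA m (r 0) (r 1) (r 2)).indicator (fun z =>
        (cc (F 0) (r 0) z.1 + cc (F 1) (r 1) z.2 + cc (F 2) (r 2) (-z.1 - z.2)) ^ 2) z := by
  have hsw : MeasurePreserving (Prod.swap : Vec m × Vec m → Vec m × Vec m) :=
    Measure.measurePreserving_swap
  have hswe : MeasurableEmbedding (Prod.swap : Vec m × Vec m → Vec m × Vec m) :=
    (MeasurableEquiv.prodComm (α := Vec m) (β := Vec m)).measurableEmbedding
  have hsh : MeasurePreserving (shear : Vec m × Vec m → Vec m × Vec m) := shear_mp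
  have hshe : MeasurableEmbedding (shear : Vec m × Vec m → Vec m × Vec m) :=
    shear.measurableEmbedding
  set A := AA m (r 0) (r 1) (r 2) with hA
  have half : ∀ j, (∫ θ in Up m, F j θ ^ 2 ∂(sig m)) * (volume.real (Bl m (RR r j)) / r j ^ m) =
      al m r j * ∫ θ, F j θ ^ 2 ∂(sig m) := fun j => by
    have hi : Integrable (fun θ => F j θ ^ 2) (sig m) := sph_int ((hF j).pow 2)
    rw [half_integral hi]
    simp only [hodd, neg_sq, ← two_mul]
    rw [integral_const_mul, al, aa]
    have := hr.pos j
    field_simp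
  have dg : ∀ i j, i ≠ j → _ := fun i j hij =>
    diag_integral (m := m) (hr.pos i) (hr.pos j) (hr.pos (thd i j)) (hr.RR_pos i)
    ((hr.RR_sq i).trans (HH_eq r hij)) (hF i)
  have d0 := dg 0 1 (by decide)
  have d1 := dg 1 0 (by decide)
  have d2 := dg 2 0 (by decide)
  have c01 := cross_integral hr (i := 0) (j := 1) (by decide) hF hodd
  have c02 := cross_integral hr (i := 0) (j := 2) (by decide) hF hodd
  have c12 := cross_integral hr (i := 1) (j := 2) (by decide) hF hodd
  rw [half] at d0 d1 d2
  rw [show thd 0 1 = 2 by decide] at d0 c01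
  rw [show thd 1 0 = 2 by decide] at d1
  rw [show thd 2 0 = 1 by decide] at d2
  rw [show thd 0 2 = 1 by decide] at c02
  rw [show thd 1 2 = 0 by decide] at c12
  have p1 := pull_integral hsw hswe (G := A.indicator fun z => cc (F 1) (r 1) z.2 ^ 2)
    (fun ⟨x, y⟩ => by
      have := AA_swap (m := m) (p := r 0) (q := r 1) (s := r 2) (x := x) (y := y)
      by_cases h : (x, y) ∈ A
      · simp [h, this.1 h]
      · simp [h, mt this.2 h]) d1.1
  have p2 := pull_integral (hsw.comp hsh) (hswe.comp hshe)
    (G := A.indicator fun z => cc (F 2) (r 2) (-z.1 - z.2) ^ 2)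
    (fun ⟨x, y⟩ => by
      have : (x, y) ∈ A ↔ (-x - y, x) ∈ AA m (r 2) (r 0) (r 1) := by
        rw [hA, AA_shear, AA_swap]
      by_cases h : (x, y) ∈ A
      · simp [h, this.1 h, shear]
      · simp [h, mt this.2 h, shear]) d2.1
  have p02 := pull_integral hsh hshe
    (G := A.indicator fun z => cc (F 0) (r 0) z.1 * cc (F 2) (r 2) (-z.1 - z.2))
    (fun ⟨x, y⟩ => by
      have := AA_shear (m := m) (p := r 0) (q := r 1) (s := r 2) (x := x) (y := y)
      by_cases h : (x, y) ∈ A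
      · simp [h, this.1 h, shear]
      · simp [h, mt this.2 h, shear]) c02.1
  have p12 := pull_integral (hsh.comp hsw) (hshe.comp hswe)
    (G := A.indicator fun z => cc (F 1) (r 1) z.2 * cc (F 2) (r 2) (-z.2 - z.1))
    (fun ⟨x, y⟩ => by
      have : (x, y) ∈ A ↔ (y, -y - x) ∈ AA m (r 1) (r 2) (r 0) := by
        rw [hA, AA_swap, AA_shear]
      by_cases h : (x, y) ∈ A
      · simp [h, this.1 h, shear]
      · simp [h, mt this.2 h, shear]) c12.1
  have hsum : (A.indicator fun z => (cc (F 0) (r 0) z.1 + cc (F 1) (r 1) z.2 +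
      cc (F 2) (r 2) (-z.1 - z.2)) ^ 2) = fun z =>
      (A.indicator (fun z => cc (F 0) (r 0) z.1 ^ 2) z + A.indicator (fun z => cc (F 1) (r 1) z.2 ^ 2) z
      + A.indicator (fun z => cc (F 2) (r 2) (-z.1 - z.2) ^ 2) z) +
      2 * (A.indicator (fun z => cc (F 0) (r 0) z.1 * cc (F 1) (r 1) z.2) z +
      A.indicator (fun z => cc (F 0) (r 0) z.1 * cc (F 2) (r 2) (-z.1 - z.2)) z +
      A.indicator (fun z => cc (F 1) (r 1) z.2 * cc (F 2) (r 2) (-z.2 - z.1)) z) := by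
    ext ⟨x, y⟩
    have e : -y - x = -x - y := by abel
    by_cases h : (x, y) ∈ A
    · simp only [indicator_of_mem h, e]; ring
    · simp only [indicator_of_notMem h]; ring
  have i1 := (d0.1.add p1.1).add p2.1
  have i2 := ((c01.1.add p02.1).add p12.1).const_mul 2
  refine ⟨by rw [hsum]; exact i1.add i2, ?_⟩
  rw [hsum]
  have e1 := integral_add i1 i2
  have e2 := integral_add (d0.1.add p1.1) p2.1
  have e3 := integral_add d0.1 p1.1
  have e4 := integral_const_mul (μ := (volume : Measure (Vec m × Vec m))) 2 (fun z =>
    (A.indicator (fun z => cc (F 0) (r 0) z.1 * cc (F 1) (r 1) z.2) z +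
      A.indicator (fun z => cc (F 0) (r 0) z.1 * cc (F 2) (r 2) (-z.1 - z.2)) z +
      A.indicator (fun z => cc (F 1) (r 1) z.2 * cc (F 2) (r 2) (-z.2 - z.1)) z))
  have e5 := integral_add (c01.1.add p02.1) p12.1
  have e6 := integral_add c01.1 p02.1
  simp only [Pi.add_apply] at e1 e2 e3 e4 e5 e6
  rw [e1, e4, e2, e3, e5, e6, Fin.sum_univ_three, p1.2, p2.2, p02.2, p12.2, d0.2, d1.2, d2.2,
    c01.2, c02.2, c12.2]
  ring

/-! ### The additive functional equation -/

/-- A continuous function that is additive near the origin is linear near the origin. -/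
lemma local_additive {V : Type*} [NormedAddCommGroup V] [NormedSpace ℝ V] {l : V → ℝ} {ε : ℝ}
    (hε : 0 < ε) (hadd : ∀ u v, ‖u‖ < ε → ‖v‖ < ε → ‖u + v‖ < ε → l (u + v) = l u + l v)
    (hc : ContinuousAt l 0) : ∃ L : V →L[ℝ] ℝ, ∀ u, ‖u‖ < ε → l u = L u := by
  have hit : ∀ (n : ℕ) (u : V), ‖(2⁻¹ : ℝ) ^ n • u‖ = ‖u‖ / 2 ^ n := fun n u => by
    rw [norm_smul, Real.norm_of_nonneg (by positivity), inv_pow]; field_simp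
  have step : ∀ u, ‖u‖ < ε → ∀ k : ℕ, 2 ^ k * l ((2⁻¹ : ℝ) ^ k • u) = l u := fun u hu k => by
    induction k with
    | zero => simp
    | succ k ih =>
      have e : (2⁻¹ : ℝ) ^ k • u = (2⁻¹ : ℝ) ^ (k + 1) • u + (2⁻¹ : ℝ) ^ (k + 1) • u := by
        rw [← two_smul ℝ, smul_smul]; congr 1; rw [pow_succ]; field_simp
      have h1 : ∀ j : ℕ, ‖(2⁻¹ : ℝ) ^ j • u‖ < ε := fun j => by
        rw [hit]; exact lt_of_le_of_lt (div_le_self (norm_nonneg _) (one_le_pow₀ (by norm_num))) hu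
      rw [← ih, e, hadd _ _ (h1 _) (h1 _) (e ▸ h1 k), pow_succ]; ring
  have hn : ∀ u : V, ∃ n : ℕ, ∀ k, n ≤ k → ‖(2⁻¹ : ℝ) ^ k • u‖ < ε := fun u => by
    obtain ⟨n, hn⟩ := exists_nat_gt (‖u‖ / ε)
    refine ⟨n, fun k hk => ?_⟩
    rw [hit, div_lt_iff₀ (by positivity)]
    rw [div_lt_iff₀ hε] at hn
    have : (n : ℝ) ≤ 2 ^ k := by
      have : n ≤ 2 ^ k := hk.trans Nat.lt_two_pow_self.le
      exact_mod_cast this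
    nlinarith
  choose n hn using hn
  have key : ∀ u k, n u ≤ k → 2 ^ k * l ((2⁻¹ : ℝ) ^ k • u) = 2 ^ (n u) * l ((2⁻¹ : ℝ) ^ (n u) • u) :=
    fun u k hk => by
    obtain ⟨j, rfl⟩ := Nat.exists_eq_add_of_le hk
    rw [← step _ (hn u (n u) le_rfl) j, smul_smul, ← pow_add, pow_add, add_comm j]; ring
  let Λ : V →+ ℝ := AddMonoidHom.mk' (fun u => 2 ^ (n u) * l ((2⁻¹ : ℝ) ^ (n u) • u)) fun u v => by
    set k := max (max (n u) (n v)) (n (u + v))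
    have ku : n u ≤ k := (le_max_left _ _).trans (le_max_left _ _)
    have kv : n v ≤ k := (le_max_right _ _).trans (le_max_left _ _)
    have kw : n (u + v) ≤ k := le_max_right _ _
    rw [← key u k ku, ← key v k kv, ← key (u + v) k kw, smul_add,
      hadd _ _ (hn u k ku) (hn v k kv) (smul_add ((2⁻¹ : ℝ) ^ k) u v ▸ hn _ k kw)]
    ring
  have hΛ : ∀ u, ‖u‖ < ε → l u = Λ u := fun u hu => (step u hu (n u)).symm
  have hcont : Continuous Λ := by
    refine continuous_of_continuousAt_zero Λ (hc.congr ?_)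
    filter_upwards [ball_mem_nhds (0 : V) hε] with u hu
    exact hΛ u (by simpa using hu)
  exact ⟨Λ.toRealLinearMap hcont, hΛ⟩

lemma local_affine {V : Type*} [NormedAddCommGroup V] [NormedSpace ℝ V] {A : Set (V × V)}
    (hA : IsOpen A) {f₀ f₁ f₂ : V → ℝ} (heq : ∀ x y, (x, y) ∈ A → f₀ x + f₁ y + f₂ (-x - y) = 0)
    {a b : V} (hab : (a, b) ∈ A) (hc : ContinuousAt f₀ a) :
    ∃ L : V →L[ℝ] ℝ, ∀ᶠ x in 𝓝 a, f₀ x = f₀ a + L (x - a) := by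
  obtain ⟨ε, hε, hball⟩ := Metric.isOpen_iff.1 hA _ hab
  have hmem : ∀ u v : V, ‖u‖ < ε → ‖v‖ < ε → (a + u, b + v) ∈ A := fun u v hu hv =>
    hball (by simp [dist_eq_norm, hu, hv])
  have h0 : ‖(0 : V)‖ < ε := by simpa using hε
  obtain ⟨L, hL⟩ := local_additive (l := fun u => f₀ (a + u) - f₀ a) hε (fun u v hu hv huv => by
    have e1 := heq _ _ (hmem u v hu hv)
    have e2 := heq _ _ (hmem (u + v) 0 huv h0)
    have e3 := heq _ _ (hmem 0 v h0 hv)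
    have e4 := heq _ _ (hmem v 0 hv h0)
    rw [show -(a + u) - (b + v) = -(a + (u + v)) - (b + 0) by abel] at e1
    rw [show -(a + 0) - (b + v) = -(a + v) - (b + 0) by abel] at e3
    rw [add_zero a] at e3
    linarith) (by
      have : ContinuousAt (fun u : V => f₀ (a + u)) 0 :=
        ContinuousAt.comp (f := fun u : V => a + u) (by simpa using hc) (by fun_prop)
      exact this.sub continuousAt_const)
  refine ⟨L, ?_⟩
  filter_upwards [ball_mem_nhds a hε] with x hx
  have := hL (x - a) (by rwa [mem_ball, dist_eq_norm] at hx)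
  simp only [add_sub_cancel] at this
  linarith

/-- Locally affine functions on a ball that agree with an affine function near the centre agree with
it on the whole ball. -/
lemma affine_of_local {V : Type*} [NormedAddCommGroup V] [NormedSpace ℝ V] {f : V → ℝ} {p : ℝ}
    (hp : 0 < p) (hf : ∀ a, ‖a‖ < p → ∃ L : V →L[ℝ] ℝ, ∀ᶠ x in 𝓝 a, f x = f a + L (x - a))
    {κ : ℝ} {L : V →L[ℝ] ℝ} (h0 : ∀ᶠ x in 𝓝 0, f x = κ + L x) {x : V} (hx : ‖x‖ < p) :
    f x = κ + L x := by
  have han : AnalyticOnNhd ℝ f (ball 0 p) := fun a ha => by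
    obtain ⟨L', hL'⟩ := hf a (by simpa using ha)
    have : AnalyticAt ℝ (fun x => f a + L' (x - a)) a := by
      refine analyticAt_const.add ?_
      exact (L'.analyticAt _).comp (analyticAt_id.sub analyticAt_const)
    exact this.congr (hL'.mono fun x hx => hx.symm)
  have hag : AnalyticOnNhd ℝ (fun x => κ + L x) (ball 0 p) := fun a _ =>
    analyticAt_const.add (L.analyticAt _)
  exact han.eqOn_of_preconnected_of_eventuallyEq hag (convex_ball _ _).isPreconnected
    (mem_ball_self hp) h0 (by simpa using hx)

lemma AA_point {m : ℕ} {p q s : ℝ} (hp : 0 < p) (hs : 0 < s)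
    (ht : |s ^ 2 - p ^ 2 - q ^ 2| < 2 * p * q) (hq : 0 < q) {x : Vec m} (hx : ‖x‖ < p) :
    (x, ((s ^ 2 - p ^ 2 - q ^ 2) / (2 * p ^ 2)) • x) ∈ AA m p q s := by
  set τ := (s ^ 2 - p ^ 2 - q ^ 2) / (2 * p ^ 2) with hτ
  have hτe : s ^ 2 - p ^ 2 - q ^ 2 = 2 * p ^ 2 * τ := by rw [hτ]; field_simp
  have hτp : |τ| * p < q := by
    rw [hτe, abs_mul, abs_of_pos (by positivity : 0 < 2 * p ^ 2)] at ht
    have : p * (|τ| * p) < p * q := by nlinarith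
    exact lt_of_mul_lt_mul_left this hp.le
  have hy : ‖τ • x‖ < q := by
    rw [norm_smul, Real.norm_eq_abs]
    nlinarith [abs_nonneg τ]
  rw [AA_iff hs hx hy, inner_smul_right, real_inner_self_eq_norm_sq, hτe]
  have h1 := hh_pos hx
  have h2 := hh_pos hy
  have h3 := hh_sq hx
  have h4 := hh_sq hy
  have h5 : |τ| * hh p x < hh q (τ • x) := by
    refine lt_of_pow_lt_pow_left₀ 2 h2.le ?_
    rw [mul_pow, h3, h4, norm_smul, mul_pow, Real.norm_eq_abs]
    nlinarith [abs_nonneg τ, mul_nonneg (abs_nonneg τ) hp.le]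
  have h6 : 2 * p ^ 2 * τ - 2 * (τ * ‖x‖ ^ 2) = 2 * τ * hh p x ^ 2 := by rw [h3]; ring
  rw [h6, abs_mul, abs_mul, abs_of_pos (by norm_num : (0 : ℝ) < 2), abs_of_pos (pow_pos h1 2)]
  nlinarith

lemma cc_continuousAt {m : ℕ} {F : Sph m → ℝ} (hF : Continuous F) {p : ℝ} (hp : 0 < p) {x : Vec m}
    (hx : ‖x‖ < p) : ContinuousAt (cc F p) x := by
  have hne : sl (hh p x, x) ≠ 0 := fun h => by
    have := norm_lift hx
    rw [h, norm_zero] at this; linarith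
  have h1 : ContinuousAt (fun x : Vec m => sl (hh p x, x)) x :=
    ((continuous_sl m).comp ((continuous_hh p).prodMk continuous_id)).continuousAt
  have h2 : ContinuousAt (PP p : Vec m → Sph m) x :=
    ContinuousAt.comp (f := fun x : Vec m => sl (hh p x, x)) (continuousAt_dir hne) h1
  have h3 : ContinuousAt (ww p : Vec m → ℝ) x :=
    continuousAt_const.div ((continuous_hh p).continuousAt.mul continuousAt_const)
      (mul_pos (hh_pos hx) (by positivity)).ne'
  exact (hF.continuousAt.comp h2).mul h3

/-- If the quadratic form is nonpositive on an odd continuous family, then its components, written in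
the coordinates of the equatorial hyperplane, are affine with a common linear part. -/
lemma odd_affine {m : ℕ} {r : Fin 3 → ℝ} (hr : Tri r) {F : Fin 3 → Sph m → ℝ}
    (hF : ∀ j, Continuous (F j)) (hodd : ∀ j θ, F j (sm (R0 m) θ) = - F j θ)
    (hQ : ∑ j, al m r j * ∫ θ, F j θ ^ 2 ∂(sig m) ≤ QQ m r F 0 1 + QQ m r F 0 2 + QQ m r F 1 2) :
    ∃ κ : Fin 3 → ℝ, ∃ L : Vec m →L[ℝ] ℝ, κ 0 + κ 1 + κ 2 = 0 ∧
      ∀ j x, ‖x‖ < r j → cc (F j) (r j) x = κ j + L x := by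
  obtain ⟨hInt, hid⟩ := odd_identity hr hF hodd
  set A := AA m (r 0) (r 1) (r 2) with hA
  have hAo : IsOpen A := AA_open _ _ _ _
  have hn0 : ∀ z : Vec m × Vec m, z ∈ A → ‖z.1‖ < r 0 := fun z h => h.1
  have hn1 : ∀ z : Vec m × Vec m, z ∈ A → ‖z.2‖ < r 1 := fun z h => h.2.1
  have hn2 : ∀ z : Vec m × Vec m, z ∈ A → ‖-z.1 - z.2‖ < r 2 := fun z h => by
    rw [show -z.1 - z.2 = -(z.1 + z.2) by abel, norm_neg]; exact h.2.2.1
  have hcts : ∀ j x, ‖x‖ < r j → ContinuousAt (cc (F j) (r j)) x := fun j x hx =>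
    cc_continuousAt (hF j) (hr.pos j) hx
  have heq : ∀ x y, (x, y) ∈ A →
      cc (F 0) (r 0) x + cc (F 1) (r 1) y + cc (F 2) (r 2) (-x - y) = 0 := by
    have hz : (A.indicator fun z => (cc (F 0) (r 0) z.1 + cc (F 1) (r 1) z.2 +
        cc (F 2) (r 2) (-z.1 - z.2)) ^ 2) =ᵐ[volume] 0 := by
      refine (integral_eq_zero_iff_of_nonneg (fun z => ?_) hInt).1 ?_
      · exact indicator_nonneg (fun _ _ => sq_nonneg _) z
      · refine le_antisymm (by linarith) (integral_nonneg fun z => ?_)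
        exact indicator_nonneg (fun _ _ => sq_nonneg _) z
    have hz' : (fun z : Vec m × Vec m => cc (F 0) (r 0) z.1 + cc (F 1) (r 1) z.2 +
        cc (F 2) (r 2) (-z.1 - z.2)) =ᵐ[volume.restrict A] fun _ => 0 := by
      rw [EventuallyEq, ae_restrict_iff' hAo.measurableSet]
      filter_upwards [hz] with z hz hzA
      rw [indicator_of_mem hzA] at hz
      exact pow_eq_zero_iff two_ne_zero |>.1 hz
    have := Measure.eqOn_open_of_ae_eq hz' hAo (fun z hz => by
      refine ContinuousAt.continuousWithinAt ?_
      have k0 : ContinuousAt (fun z : Vec m × Vec m => cc (F 0) (r 0) z.1) z :=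
        ContinuousAt.comp (g := cc (F 0) (r 0)) (f := Prod.fst) (hcts 0 _ (hn0 z hz)) continuousAt_fst
      have k1 : ContinuousAt (fun z : Vec m × Vec m => cc (F 1) (r 1) z.2) z :=
        ContinuousAt.comp (g := cc (F 1) (r 1)) (f := Prod.snd) (hcts 1 _ (hn1 z hz)) continuousAt_snd
      have k2 : ContinuousAt (fun z : Vec m × Vec m => cc (F 2) (r 2) (-z.1 - z.2)) z :=
        ContinuousAt.comp (g := cc (F 2) (r 2)) (f := fun z : Vec m × Vec m => -z.1 - z.2)
          (hcts 2 _ (hn2 z hz)) (by fun_prop)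
      exact (k0.add k1).add k2) continuousOn_const
    intro x y h
    exact @this (x, y) h
  have htri : ∀ i j, i ≠ j → |r (thd i j) ^ 2 - r i ^ 2 - r j ^ 2| < 2 * r i * r j := fun i j hij => by
    have h := hr.tt_lt hij
    have := hr.pos i
    have := hr.pos j
    rw [tt_eq r hij, abs_div, abs_of_pos (by positivity : 0 < 2 * r i * r j),
      div_lt_one (by positivity)] at h
    exact h
  have loc0 : ∀ a : Vec m, ‖a‖ < r 0 → ∃ L : Vec m →L[ℝ] ℝ, ∀ᶠ x in 𝓝 a,
      cc (F 0) (r 0) x = cc (F 0) (r 0) a + L (x - a) := fun a ha =>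
    local_affine hAo heq (AA_point (hr.pos 0) (hr.pos 2) (htri 0 1 (by decide)) (hr.pos 1) ha)
      (hcts 0 a ha)
  have loc1 : ∀ a : Vec m, ‖a‖ < r 1 → ∃ L : Vec m →L[ℝ] ℝ, ∀ᶠ x in 𝓝 a,
      cc (F 1) (r 1) x = cc (F 1) (r 1) a + L (x - a) := fun a ha =>
    local_affine (AA_open m (r 1) (r 0) (r 2)) (f₁ := cc (F 0) (r 0)) (f₂ := cc (F 2) (r 2))
      (fun x y h => by
        have := heq _ _ (AA_swap.1 h)
        rw [show -y - x = -x - y by abel] at this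
        linarith)
      (AA_point (hr.pos 1) (hr.pos 2) (htri 1 0 (by decide)) (hr.pos 0) ha)
      (hcts 1 a ha)
  have loc2 : ∀ a : Vec m, ‖a‖ < r 2 → ∃ L : Vec m →L[ℝ] ℝ, ∀ᶠ x in 𝓝 a,
      cc (F 2) (r 2) x = cc (F 2) (r 2) a + L (x - a) := fun a ha =>
    local_affine (AA_open m (r 2) (r 0) (r 1)) (f₁ := cc (F 0) (r 0)) (f₂ := cc (F 1) (r 1))
      (fun x y h => by
        have := heq _ _ (AA_shear.2 (by
          rw [show -y - (-x - y) = x by abel]; exact AA_swap.1 h) : (y, -x - y) ∈ A)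
        rw [show -y - (-x - y) = x by abel] at this
        linarith)
      (AA_point (hr.pos 2) (hr.pos 1) (htri 2 0 (by decide)) (hr.pos 0) ha)
      (hcts 2 a ha)
  have h00 : ((0 : Vec m), (0 : Vec m)) ∈ A := by
    simpa using AA_point (m := m) (hr.pos 0) (hr.pos 2) (htri 0 1 (by decide)) (hr.pos 1)
      (x := 0) (by simpa using hr.pos 0)
  obtain ⟨L, hL⟩ := loc0 0 (by simpa using hr.pos 0)
  simp only [sub_zero] at hL
  have e0 := heq 0 0 h00
  simp only [neg_zero, sub_zero] at e0
  have m1 : ∀ᶠ v : Vec m in 𝓝 0, (v, (0 : Vec m)) ∈ A :=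
    (by fun_prop : Continuous fun v : Vec m => (v, (0 : Vec m))).continuousAt.eventually_mem
      (hAo.mem_nhds h00)
  have m2 : ∀ᶠ v : Vec m in 𝓝 0, ((0 : Vec m), v) ∈ A :=
    (by fun_prop : Continuous fun v : Vec m => ((0 : Vec m), v)).continuousAt.eventually_mem
      (hAo.mem_nhds h00)
  have hneg : Tendsto (fun v : Vec m => -v) (𝓝 0) (𝓝 0) := by
    simpa using (continuous_neg (G := Vec m)).tendsto 0
  have n1 : ∀ᶠ v in 𝓝 0, cc (F 1) (r 1) v = cc (F 1) (r 1) 0 + L v := by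
    filter_upwards [m1, m2, hL] with v h1 h2 h3
    have a1 := heq _ _ h1
    have a2 := heq _ _ h2
    simp only [sub_zero, neg_zero, zero_sub] at a1 a2
    linarith
  have n2 : ∀ᶠ v in 𝓝 0, cc (F 2) (r 2) v = cc (F 2) (r 2) 0 + L v := by
    filter_upwards [hneg.eventually m1, hneg.eventually hL] with v h1 h3
    have a1 := heq _ _ h1
    simp only [sub_zero, neg_neg, map_neg] at a1 h3
    linarith
  refine ⟨fun j => cc (F j) (r j) 0, L, e0, fun j x hx => ?_⟩
  fin_cases j
  · exact affine_of_local (hr.pos 0) loc0 hL hx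
  · exact affine_of_local (hr.pos 1) loc1 n1 hx
  · exact affine_of_local (hr.pos 2) loc2 n2 hx

/-! ### The null directions -/

/-- Parameters of the null directions: constants, two translation vectors (the third one being
minus their sum), and a linear map. -/
abbrev PM (m : ℕ) := (Fin 3 → ℝ) × (Vec (m + 1) × Vec (m + 1)) × (Vec (m + 1) →ₗ[ℝ] Vec (m + 1))

/-- The three translation vectors, which sum to zero. -/
def vv {m : ℕ} (n : PM m) : Fin 3 → Vec (m + 1) := ![n.2.1.1, n.2.1.2, -n.2.1.1 - n.2.1.2]

/-- First order boundary variation of the balls of radii `r j` under dilations, translations and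
linear maps. -/
def tw {m : ℕ} (r : Fin 3 → ℝ) (n : PM m) (p : YY m) : ℝ :=
  n.1 p.1 + r p.1 ^ m * inner ℝ (vv n p.1) (p.2 : Vec (m + 1)) +
    r p.1 ^ (m + 1) * inner ℝ (n.2.2 p.2) (p.2 : Vec (m + 1))

lemma vv_sum {m : ℕ} (n : PM m) : vv n 0 + vv n 1 + vv n 2 = 0 := by simp [vv]

lemma vv_add {m : ℕ} (n n' : PM m) (j : Fin 3) : vv (n + n') j = vv n j + vv n' j := by
  fin_cases j <;> simp [vv]; abel

lemma vv_smul {m : ℕ} (c : ℝ) (n : PM m) (j : Fin 3) : vv (c • n) j = c • vv n j := by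
  fin_cases j <;> simp [vv, smul_sub]

lemma tw_add {m : ℕ} (r : Fin 3 → ℝ) (n n' : PM m) (p : YY m) :
    tw r (n + n') p = tw r n p + tw r n' p := by
  simp only [tw, vv_add, Prod.fst_add, Prod.snd_add, Pi.add_apply, LinearMap.add_apply,
    inner_add_left]
  ring

lemma tw_smul {m : ℕ} (r : Fin 3 → ℝ) (c : ℝ) (n : PM m) (p : YY m) :
    tw r (c • n) p = c * tw r n p := by
  simp only [tw, vv_smul, Prod.smul_fst, Prod.smul_snd, Pi.smul_apply, LinearMap.smul_apply,
    real_inner_smul_left, smul_eq_mul]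
  ring

lemma tw_cont {m : ℕ} (r : Fin 3 → ℝ) (n : PM m) : Continuous (tw r n) := by
  refine continuous_prod_of_discrete_left.2 fun j => ?_
  have hA : Continuous n.2.2 := n.2.2.continuous_of_finiteDimensional
  simp only [tw]
  fun_prop

/-- The last coordinates, as a linear map. -/
def tlL (m : ℕ) : Vec (m + 1) →ₗ[ℝ] Vec m where
  toFun := tl
  map_add' x y := by ext i; simp [tl]
  map_smul' c x := by ext i; simp [tl]

lemma inner_e0 {m : ℕ} (x : Vec (m + 1)) : inner ℝ (e0 m) x = x 0 := by
  simp [e0, EuclideanSpace.inner_single_left]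

/-- An odd continuous family on which the quadratic form is nonpositive is a null direction. -/
lemma odd_null {m : ℕ} {r : Fin 3 → ℝ} (hr : Tri r) {F : Fin 3 → Sph m → ℝ}
    (hF : ∀ j, Continuous (F j)) (hodd : ∀ j θ, F j (sm (R0 m) θ) = - F j θ)
    (hQ : ∑ j, al m r j * ∫ θ, F j θ ^ 2 ∂(sig m) ≤ QQ m r F 0 1 + QQ m r F 0 2 + QQ m r F 1 2) :
    ∃ n : PM m, ∀ j θ, F j θ = tw r n (j, θ) := by
  obtain ⟨κ, L, hκ, h⟩ := odd_affine hr hF hodd hQ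
  have up : ∀ j (θ : Sph m), 0 < (θ : Vec (m + 1)) 0 →
      F j θ = (κ j + r j * L (tl (θ : Vec (m + 1)))) * ((θ : Vec (m + 1)) 0 * r j ^ m) := by
    intro j θ hθ
    set t := (θ : Vec (m + 1)) 0 with ht
    set w := tl (θ : Vec (m + 1)) with hw
    set p := r j with hp
    have hp0 : 0 < p := hr.pos j
    have hθe : sl (t, w) = (θ : Vec (m + 1)) := sl_tl _
    have hn : t ^ 2 + ‖w‖ ^ 2 = 1 := by
      have := sl_norm_sq (t, w)
      rw [hθe, norm_eq_of_mem_sphere θ] at this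
      simpa using this.symm
    have hx : ‖p • w‖ < p := by
      rw [norm_smul, Real.norm_of_nonneg hp0.le]
      have : ‖w‖ < 1 := by nlinarith [norm_nonneg w]
      nlinarith
    have hhe : hh p (p • w) = p * t := by
      have h1 := hh_sq hx
      rw [norm_smul, Real.norm_of_nonneg hp0.le] at h1
      have h2 := hh_pos hx
      refine (sq_eq_sq₀ h2.le (by positivity)).1 ?_
      rw [h1]; nlinarith
    have hPP : PP p (p • w) = θ := by
      rw [PP, hhe, show sl (p * t, p • w) = p • sl (t, w) from sl_smul p (t, w), hθe,
        dir_smul hp0]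
    have := h j _ hx
    rw [← hp, cc, hPP, ww, hhe, map_smul, smul_eq_mul] at this
    rw [← this]
    field_simp
  have all : ∀ j (θ : Sph m),
      F j θ = (κ j + r j * L (tl (θ : Vec (m + 1)))) * ((θ : Vec (m + 1)) 0 * r j ^ m) := by
    intro j θ
    have h1 : (sm (R0 m) θ : Vec (m + 1)) 0 = - (θ : Vec (m + 1)) 0 := R0_zero _
    have h2 : tl (sm (R0 m) θ : Vec (m + 1)) = tl (θ : Vec (m + 1)) := by
      change tl (R0 m θ) = _
      conv_lhs => rw [← sl_tl (θ : Vec (m + 1)), R0_sl, tl_sl]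
    rcases lt_trichotomy ((θ : Vec (m + 1)) 0) 0 with hlt | heq | hgt
    · have h3 := up j (sm (R0 m) θ) (by rw [h1]; linarith)
      rw [hodd, h1, h2] at h3
      linarith
    · have : sm (R0 m) θ = θ := by
        ext1
        change R0 m θ = θ
        rw [R0_apply, heq]; simp
      have h3 := hodd j θ
      rw [this] at h3
      rw [heq]; simp; linarith
    · exact up j θ hgt
  refine ⟨(0, (κ 0 • e0 m, κ 1 • e0 m), (L.toLinearMap ∘ₗ tlL m).smulRight (e0 m)), fun j θ => ?_⟩
  have hv : vv ((0, (κ 0 • e0 m, κ 1 • e0 m), (L.toLinearMap ∘ₗ tlL m).smulRight (e0 m)) : PM m) j =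
      κ j • e0 m := by
    fin_cases j
    · simp [vv]
    · simp [vv]
    · simp only [vv]
      have : κ 2 = - κ 0 - κ 1 := by linarith
      simp [this, sub_smul]
  rw [tw, hv, all]
  simp only [LinearMap.smulRight_apply, real_inner_smul_left, inner_e0, Pi.zero_apply,
    LinearMap.comp_apply]
  change _ = _ + _ * (L (tl (θ : Vec (m + 1))) * _)
  ring

/-! ### Coercivity of the quadratic form modulo null directions -/

/-- The isometry `U` acting on the three spheres. -/
def SU {m : ℕ} (U : Vec (m + 1) ≃ₗᵢ[ℝ] Vec (m + 1)) (p : YY m) : YY m := (p.1, sm U p.2)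

lemma continuous_SU {m : ℕ} (U : Vec (m + 1) ≃ₗᵢ[ℝ] Vec (m + 1)) : Continuous (SU U) :=
  continuous_fst.prodMk ((continuous_sm U).comp continuous_snd)

lemma SU_symm {m : ℕ} (U : Vec (m + 1) ≃ₗᵢ[ℝ] Vec (m + 1)) (p : YY m) : SU U (SU U.symm p) = p := by
  ext1
  · rfl
  · ext1; exact U.apply_symm_apply _

lemma YY_int {m : ℕ} {r : Fin 3 → ℝ} {g : YY m → ℝ} (hg : Continuous g) : Integrable g (nu m r) := by
  have := hg.continuousOn.integrableOn_compact (μ := nu m r) isCompact_univ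
  rwa [integrableOn_univ] at this

lemma YY_memLp {m : ℕ} {r : Fin 3 → ℝ} {g : YY m → ℝ} (hg : Continuous g) : MemLp g 2 (nu m r) := by
  obtain ⟨C, hC⟩ := isCompact_univ.exists_bound_of_continuousOn hg.continuousOn
  exact MemLp.of_bound hg.aestronglyMeasurable C (ae_of_all _ fun p => hC p (mem_univ _))

lemma sph_comp {m : ℕ} (U : Vec (m + 1) ≃ₗᵢ[ℝ] Vec (m + 1)) (g : Sph m → ℝ) :
    ∫ θ, g (sm U θ) ∂(sig m) = ∫ θ, g θ ∂(sig m) := by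
  have he : MeasurableEmbedding (sm U : Sph m → Sph m) := by
    refine MeasurableEmbedding.of_measurable_inverse (g := sm U.symm) (sm_mp _).measurable ?_
      (sm_mp _).measurable (fun θ => by ext1; exact U.symm_apply_apply _)
    rw [range_eq_univ.2 fun θ => ⟨sm U.symm θ, by ext1; exact U.apply_symm_apply _⟩]
    exact MeasurableSet.univ
  exact (sm_mp U).integral_comp he g

lemma nu_comp {m : ℕ} {r : Fin 3 → ℝ} (hr : Tri r) (U : Vec (m + 1) ≃ₗᵢ[ℝ] Vec (m + 1))
    {g : YY m → ℝ} (hg : Integrable g (nu m r)) : ∫ p, g (SU U p) ∂(nu m r) = ∫ p, g p ∂(nu m r) := by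
  have h1 := (nu_integrable hr).1 hg
  rw [nu_integral hr h1, nu_integral hr (fun j => (sm_mp U).integrable_comp_of_integrable (h1 j))]
  refine Finset.sum_congr rfl fun j _ => ?_
  congr 1
  exact sph_comp U fun θ => g (j, θ)

lemma Kop_SU {m : ℕ} {r : Fin 3 → ℝ} (hr : Tri r) (U : Vec (m + 1) ≃ₗᵢ[ℝ] Vec (m + 1))
    {g : YY m → ℝ} (hg : Continuous g) (p : YY m) :
    Kop (ker m r) (nu m r) (fun q => g (SU U q)) p = Kop (ker m r) (nu m r) g (SU U p) := by
  have h := (ker_good m hr).integrable_mul (SU U p) (YY_int hg)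
  rw [Kop, Kop, ← nu_comp hr U h]
  refine integral_congr_ae (ae_of_all _ fun q => ?_)
  simp only [ker, SU, inner_sm]

lemma tw_SU {m : ℕ} (r : Fin 3 → ℝ) (U : Vec (m + 1) ≃ₗᵢ[ℝ] Vec (m + 1)) (n : PM m) :
    ∃ n' : PM m, ∀ p, tw r n (SU U p) = tw r n' p := by
  refine ⟨(n.1, (U.symm n.2.1.1, U.symm n.2.1.2), U.symm.toLinearMap ∘ₗ n.2.2 ∘ₗ U.toLinearMap),
    fun p => ?_⟩
  have hi : ∀ a (θ : Sph m), inner ℝ (U.symm a) (θ : Vec (m + 1)) = inner ℝ a (U θ) := fun a θ => by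
    rw [← U.inner_map_map, U.apply_symm_apply]
  obtain ⟨j, θ⟩ := p
  have hv : vv ((n.1, (U.symm n.2.1.1, U.symm n.2.1.2),
      U.symm.toLinearMap ∘ₗ n.2.2 ∘ₗ U.toLinearMap) : PM m) j = U.symm (vv n j) := by
    fin_cases j <;> simp [vv]
  rw [tw, tw, hv]
  simp only [LinearMap.comp_apply, SU]
  have h2 : inner ℝ (U.symm.toLinearMap (n.2.2 (U.toLinearMap (θ : Vec (m + 1))))) (θ : Vec (m + 1)) =
      inner ℝ (n.2.2 (U θ)) (U θ) := hi _ _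
  rw [hi, h2]; rfl

/-- Continuous eigenfunctions of the kernel modulo null directions, orthogonal to all null
directions. -/
structure Eig (m : ℕ) (r : Fin 3 → ℝ) (μ : ℝ) (g : YY m → ℝ) : Prop where
  cont : Continuous g
  eig : ∃ n : PM m, ∀ p, μ * g p = Kop (ker m r) (nu m r) g p + tw r n p
  orth : ∀ n : PM m, ∫ p, g p * tw r n p ∂(nu m r) = 0

lemma Eig.comp {m : ℕ} {r : Fin 3 → ℝ} {μ : ℝ} {g : YY m → ℝ} (h : Eig m r μ g) (hr : Tri r)
    (U : Vec (m + 1) ≃ₗᵢ[ℝ] Vec (m + 1)) : Eig m r μ (fun p => g (SU U p)) := by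
  refine ⟨h.cont.comp (continuous_SU U), ?_, fun n => ?_⟩
  · obtain ⟨n, hn⟩ := h.eig
    obtain ⟨n', hn'⟩ := tw_SU r U n
    exact ⟨n', fun p => by rw [hn, Kop_SU hr U h.cont, hn']⟩
  · obtain ⟨n', hn'⟩ := tw_SU r U.symm n
    have hi : Integrable (fun p => g p * tw r n' p) (nu m r) := YY_int (h.cont.mul (tw_cont r n'))
    rw [← h.orth n', ← nu_comp hr U hi]
    refine integral_congr_ae (ae_of_all _ fun p => ?_)
    simp only
    rw [← hn', show SU U.symm (SU U p) = p from SU_symm U.symm p]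

lemma Eig.sub {m : ℕ} {r : Fin 3 → ℝ} {μ : ℝ} {g g' : YY m → ℝ} (h : Eig m r μ g) (h' : Eig m r μ g')
    (hr : Tri r) : Eig m r μ (fun p => g p - g' p) := by
  refine ⟨h.cont.sub h'.cont, ?_, fun n => ?_⟩
  · obtain ⟨n, hn⟩ := h.eig
    obtain ⟨n', hn'⟩ := h'.eig
    refine ⟨n + (-1 : ℝ) • n', fun p => ?_⟩
    have hK : Kop (ker m r) (nu m r) (fun p => g p - g' p) p =
        Kop (ker m r) (nu m r) g p - Kop (ker m r) (nu m r) g' p := by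
      simp only [Kop, mul_sub]
      exact integral_sub ((ker_good m hr).integrable_mul p (YY_int h.cont))
        ((ker_good m hr).integrable_mul p (YY_int h'.cont))
    rw [hK, tw_add, tw_smul, mul_sub, hn, hn']; ring
  · simp only [sub_mul]
    have hi : Integrable (fun p => g p * tw r n p) (nu m r) := YY_int (h.cont.mul (tw_cont r n))
    have hi' : Integrable (fun p => g' p * tw r n p) (nu m r) :=
      YY_int (h'.cont.mul (tw_cont r n))
    rw [integral_sub hi hi', h.orth, h'.orth, sub_zero]

lemma cont_zero {m : ℕ} {r : Fin 3 → ℝ} (hr : Tri r) {g : YY m → ℝ} (hg : Continuous g)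
    (h0 : ∫ p, g p ^ 2 ∂(nu m r) = 0) : ∀ p, g p = 0 := by
  have h1 := (integral_eq_zero_iff_of_nonneg (fun p => sq_nonneg (g p)) (YY_int (hg.pow 2))).1 h0
  have h2 := (nu_ae hr).1 h1
  rintro ⟨j, θ⟩
  have hc : Continuous fun θ : Sph m => g (j, θ) := hg.comp (by fun_prop)
  have h3 : (fun θ : Sph m => g (j, θ)) =ᵐ[sig m] fun _ => 0 := by
    filter_upwards [h2 j] with θ hθ
    exact pow_eq_zero_iff two_ne_zero |>.1 hθ
  exact congrFun (Continuous.ae_eq_iff_eq (sig m) hc continuous_const |>.1 h3) θ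

lemma Eig.odd_zero {m : ℕ} {r : Fin 3 → ℝ} {μ : ℝ} (hμ : 1 ≤ μ) {g : YY m → ℝ} (h : Eig m r μ g)
    (hr : Tri r) (hodd : ∀ p, g (SU (R0 m) p) = - g p) : ∀ p, g p = 0 := by
  set F : Fin 3 → Sph m → ℝ := fun j θ => g (j, θ) with hF
  have hFc : ∀ j, Continuous (F j) := fun j => h.cont.comp (by fun_prop)
  have hm : MemLp (fun p : YY m => F p.1 p.2) 2 (nu m r) := YY_memLp h.cont
  have e1 := norm_sq_nu hr hm
  have e2 := B_cross hr hm
  have hae : (hm.toLp _ : YY m → ℝ) =ᵐ[nu m r] g := hm.coeFn_toLp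
  have hsq : ‖hm.toLp _‖ ^ 2 = ∫ p, g p ^ 2 ∂(nu m r) := by
    rw [e1, nu_integral hr (g := fun p => g p ^ 2)
      (fun j => sph_int ((hFc j).pow 2))]
  have hB : (ker_good m hr).B (hm.toLp _) (hm.toLp _) = μ * ∫ p, g p ^ 2 ∂(nu m r) := by
    obtain ⟨n, hn⟩ := h.eig
    have hK : ∀ p, Kop (ker m r) (nu m r) (hm.toLp _) p = Kop (ker m r) (nu m r) g p := fun p => by
      refine integral_congr_ae ?_
      filter_upwards [hae] with q hq
      rw [hq]
    have hi1 : Integrable (fun p => μ * g p ^ 2) (nu m r) := (YY_int (h.cont.pow 2)).const_mul μ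
    have hi2 : Integrable (fun p => g p * tw r n p) (nu m r) :=
      YY_int (h.cont.mul (tw_cont r n))
    rw [(ker_good m hr).B_eq, ← integral_const_mul, ← sub_zero (∫ p, μ * g p ^ 2 ∂(nu m r)),
      ← h.orth n, ← integral_sub hi1 hi2]
    refine integral_congr_ae ?_
    filter_upwards [hae] with q hq
    rw [hq, hK]
    linear_combination (-g q) * hn q
  have hle : ∫ p, g p ^ 2 ∂(nu m r) ≤ μ * ∫ p, g p ^ 2 ∂(nu m r) :=
    le_mul_of_one_le_left (integral_nonneg fun p => sq_nonneg _) hμ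
  obtain ⟨n, hn⟩ := odd_null hr hFc (fun j θ => hodd (j, θ)) (by
    rw [← e1, ← e2, hsq, hB]; exact hle)
  refine cont_zero hr h.cont ?_
  rw [← h.orth n]
  refine integral_congr_ae (ae_of_all _ fun ⟨j, θ⟩ => ?_)
  simp only
  rw [← hn, sq]

lemma Eig.const {m : ℕ} {r : Fin 3 → ℝ} {μ : ℝ} (hμ : 1 ≤ μ) {g : YY m → ℝ} (h : Eig m r μ g)
    (hr : Tri r) (j : Fin 3) (θ θ' : Sph m) : g (j, θ) = g (j, θ') := by
  by_cases hne : θ = θ'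
  · rw [hne]
  have hne' : (θ : Vec (m + 1)) - θ' ≠ 0 := fun hh => hne (Subtype.ext (sub_eq_zero.1 hh))
  have hn0 : ‖(θ : Vec (m + 1)) - θ'‖ ≠ 0 := norm_ne_zero_iff.2 hne'
  set w : Vec (m + 1) := ‖(θ : Vec (m + 1)) - θ'‖⁻¹ • ((θ : Vec (m + 1)) - θ') with hw
  have hwn : ‖e0 m‖ = ‖w‖ := by
    rw [norm_e0, hw, norm_smul, norm_inv, norm_norm, inv_mul_cancel₀ hn0]
  obtain ⟨U, hU⟩ := exists_isometry hwn
  have hs := h.comp hr U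
  have key := (hs.sub (hs.comp hr (R0 m)) hr).odd_zero hμ hr (fun p => by
    simp only [show SU (R0 m) (SU (R0 m) p) = p from by
      ext1
      · rfl
      · exact sm_R0_R0 _]
    ring) (j, sm U.symm θ)
  have e1 : sm U (sm U.symm θ) = θ := by ext1; exact U.apply_symm_apply _
  have e2 : sm U (sm (R0 m) (sm U.symm θ)) = θ' := by
    ext1
    change U (R0 m (U.symm θ)) = θ'
    have h1 : (U.symm (θ : Vec (m + 1))) 0 = inner ℝ w (θ : Vec (m + 1)) := by
      rw [← inner_e0, ← U.inner_map_map, hU, U.apply_symm_apply]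
    have h2 : 2 * inner ℝ ((θ : Vec (m + 1)) - θ') (θ : Vec (m + 1)) = ‖(θ : Vec (m + 1)) - θ'‖ ^ 2 := by
      rw [norm_sub_sq_real, inner_sub_left, real_inner_self_eq_norm_sq, norm_eq_of_mem_sphere,
        norm_eq_of_mem_sphere, real_inner_comm]; ring
    rw [R0_apply, map_sub, map_smul, hU, U.apply_symm_apply, h1, hw, real_inner_smul_left, smul_smul]
    have h3 : 2 * (‖(θ : Vec (m + 1)) - θ'‖⁻¹ * inner ℝ ((θ : Vec (m + 1)) - θ') (θ : Vec (m + 1))) *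
        ‖(θ : Vec (m + 1)) - θ'‖⁻¹ = 1 := by
      field_simp
      linarith
    rw [h3, one_smul]; abel
  simp only [SU, e1, e2] at key
  linarith

/-- The null directions as elements of `L²`. -/
def TW {m : ℕ} (r : Fin 3 → ℝ) : PM m →ₗ[ℝ] Lp ℝ 2 (nu m r) where
  toFun n := (YY_memLp (tw_cont r n)).toLp _
  map_add' n n' := by
    rw [← MemLp.toLp_add]
    exact MemLp.toLp_congr _ _ (ae_of_all _ fun p => tw_add r n n' p)
  map_smul' c n := by
    simp only [RingHom.id_apply]
    rw [← MemLp.toLp_const_smul]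
    exact MemLp.toLp_congr _ _ (ae_of_all _ fun p => tw_smul r c n p)

lemma TW_coe {m : ℕ} (r : Fin 3 → ℝ) (n : PM m) : (TW r n : YY m → ℝ) =ᵐ[nu m r] tw r n :=
  (YY_memLp (tw_cont r n)).coeFn_toLp

/-- The quadratic form is positive on the orthogonal complement of the null directions. -/
lemma coercive {m : ℕ} {r : Fin 3 → ℝ} (hr : Tri r) {x : Lp ℝ 2 (nu m r)}
    (hx : ∀ n : PM m, inner ℝ x (TW r n) = 0) (hQ : ‖x‖ ^ 2 ≤ (ker_good m hr).B x x) : x = 0 := by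
  by_contra hx0
  have := sep_nu m r
  set N : Submodule ℝ (Lp ℝ 2 (nu m r)) := LinearMap.range (TW (m := m) r) with hN
  have hmem : ∀ y, y ∈ Nᗮ ↔ ∀ n : PM m, inner ℝ y (TW r n) = 0 := fun y => by
    rw [Submodule.mem_orthogonal']
    constructor
    · exact fun h n => h _ ⟨n, rfl⟩
    · rintro h _ ⟨n, rfl⟩; exact h n
  obtain ⟨CB, hCB⟩ := (ker_good m hr).B_bound
  obtain ⟨y, hyN, hy1, μ, hμ, hy⟩ := exists_eigenvector (ker_good m hr).B (ker_good m hr).B_symm CB hCB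
    (ker_good m hr).B_weak Nᗮ N.triorthogonal_eq_orthogonal x ((hmem x).2 hx) hx0 hQ
  have hμ0 : μ ≠ 0 := by linarith
  have hd : μ • y - (ker_good m hr).KL y ∈ N := by
    rw [← Submodule.orthogonal_orthogonal N, Submodule.mem_orthogonal']
    intro z hz
    rw [inner_sub_left, real_inner_smul_left, ← (ker_good m hr).B_apply, hy z hz, sub_self]
  obtain ⟨n, hn⟩ := hd
  set g : YY m → ℝ := fun p => μ⁻¹ * (Kop (ker m r) (nu m r) y p + tw r n p) with hg
  have hgc : Continuous g := continuous_const.mul (((ker_good m hr).Kop_continuous y).add (tw_cont r n))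
  have hyg : (y : YY m → ℝ) =ᵐ[nu m r] g := by
    have h1 : ((ker_good m hr).KL y : YY m → ℝ) =ᵐ[nu m r] Kop (ker m r) (nu m r) y :=
      ((ker_good m hr).Kop_memLp y).coeFn_toLp
    have h2 : (TW r n : YY m → ℝ) =ᵐ[nu m r] (μ • y - (ker_good m hr).KL y : Lp ℝ 2 (nu m r)) := by
      rw [hn]
    filter_upwards [h1, h2, TW_coe r n, Lp.coeFn_sub (μ • y) ((ker_good m hr).KL y),
      Lp.coeFn_smul μ y] with p h1 h2 h3 h4 h5
    rw [h2, h4, Pi.sub_apply, h5, Pi.smul_apply, smul_eq_mul, h1] at h3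
    simp only [hg]
    rw [← h3]; field_simp; ring
  have hK : ∀ p, Kop (ker m r) (nu m r) y p = Kop (ker m r) (nu m r) g p := fun p => by
    refine integral_congr_ae ?_
    filter_upwards [hyg] with q hq
    rw [hq]
  have hE : Eig m r μ g := by
    refine ⟨hgc, ⟨n, fun p => ?_⟩, fun n' => ?_⟩
    · rw [← hK]; simp only [hg]; field_simp
    · have h1 := (hmem y).1 hyN n'
      rw [MeasureTheory.L2.inner_def] at h1
      rw [← h1]
      refine integral_congr_ae ?_
      filter_upwards [hyg, TW_coe r n'] with q h2 h3
      rw [h2, h3]; simp [mul_comm]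
  have θ₀ : Sph m := ⟨e0 m, by simp [norm_e0]⟩
  have hz : ∀ p, g p = 0 := by
    refine cont_zero hr hgc ?_
    rw [← hE.orth (fun j => g (j, θ₀), (0, 0), 0)]
    refine integral_congr_ae (ae_of_all _ fun ⟨j, θ⟩ => ?_)
    have hv : vv ((fun j => g (j, θ₀), (0, 0), 0) : PM m) j = 0 := by fin_cases j <;> simp [vv]
    simp only [tw, hv, inner_zero_left, LinearMap.zero_apply, mul_zero, add_zero]
    rw [hE.const hμ hr j θ₀ θ, sq]
  have hy0 : y = 0 := by
    rw [Lp.eq_zero_iff_ae_eq_zero]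
    filter_upwards [hyg] with p hp
    rw [hp, hz]; rfl
  rw [hy0, norm_zero] at hy1
  exact zero_ne_one hy1

/-! ### Volume preserving perturbations of the identity -/

lemma det_deriv {d : ℕ} (A : Vec d →ₗ[ℝ] Vec d) (hA : LinearMap.trace ℝ _ A = 0) :
    HasDerivAt (fun t : ℝ => LinearMap.det (LinearMap.id + t • A)) 0 0 := by
  set b := (EuclideanSpace.basisFun (Fin d) ℝ).toBasis
  set M := LinearMap.toMatrix b b A with hM
  have h1 : ∀ t : ℝ, LinearMap.det (LinearMap.id + t • A) = 1 +
      (Matrix.det (1 + (Polynomial.X : Polynomial ℝ) • M.map Polynomial.C)).divX.divX.eval t * t ^ 2 := by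
    intro t
    have htr : M.trace = 0 := by
      rw [hM, ← LinearMap.trace_eq_matrix_trace ℝ b, hA]
    rw [← LinearMap.det_toMatrix b, map_add, map_smul, LinearMap.toMatrix_id, Matrix.det_one_add_smul,
      htr, zero_mul, add_zero]
  simp only [h1]
  set q := (Matrix.det (1 + (Polynomial.X : Polynomial ℝ) • M.map Polynomial.C)).divX.divX
  have := ((q.hasDerivAt (0 : ℝ)).mul (hasDerivAt_pow 2 (0 : ℝ))).const_add 1
  simpa using! this

/-- A trace-free linear map is the velocity of a family of volume preserving linear maps. -/
lemma unimod {d : ℕ} (hd : 1 ≤ d) (A : Vec d →ₗ[ℝ] Vec d) (hA : LinearMap.trace ℝ _ A = 0)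
    {δ : ℕ → ℝ} (hδ : ∀ n, 0 < δ n) (hl : Tendsto δ atTop (𝓝 0)) :
    ∃ ψ : ℕ → Vec d ≃ₗ[ℝ] Vec d, (∀ n, MeasurePreserving (ψ n) volume volume) ∧
      ∀ η > 0, ∀ᶠ n in atTop, ∀ x, ‖ψ n x - x - δ n • A x‖ ≤ η * δ n * ‖x‖ := by
  set D : ℝ → ℝ := fun t => LinearMap.det (LinearMap.id + t • A) with hD
  have hD0 : D 0 = 1 := by simp [hD]
  have hDd : HasDerivAt D 0 0 := det_deriv A hA
  set lam : ℝ → ℝ := fun t => D t ^ (-(1 : ℝ) / d) with hlam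
  have hl0 : lam 0 = 1 := by simp [hlam, hD0]
  have hld : HasDerivAt lam 0 0 := by
    have := hDd.rpow_const (p := -(1 : ℝ) / d) (Or.inl (by rw [hD0]; norm_num))
    simpa using! this
  have hd0 : (d : ℝ) ≠ 0 := by positivity
  set N : ℕ → Vec d →ₗ[ℝ] Vec d := fun n => lam (δ n) • (LinearMap.id + δ n • A) with hN
  have hdet : ∀ n, 0 < D (δ n) → LinearMap.det (N n) = 1 := fun n hn => by
    rw [hN]
    simp only [LinearMap.det_smul, finrank_euclideanSpace, Fintype.card_fin]
    change (D (δ n) ^ (-(1 : ℝ) / d)) ^ d * D (δ n) = 1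
    rw [← Real.rpow_natCast, ← Real.rpow_mul hn.le, div_mul_cancel₀ _ hd0, Real.rpow_neg_one,
      inv_mul_cancel₀ hn.ne']
  classical
  refine ⟨fun n => if h : 0 < D (δ n) then
    LinearEquiv.ofIsUnitDet (f := N n) (v := (EuclideanSpace.basisFun (Fin d) ℝ).toBasis)
      (v' := (EuclideanSpace.basisFun (Fin d) ℝ).toBasis)
      (by rw [LinearMap.det_toMatrix, hdet n h]; exact isUnit_one) else LinearEquiv.refl ℝ _,
    fun n => ?_, fun η hη => ?_⟩
  · by_cases h : 0 < D (δ n)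
    · simp only [h, dif_pos]
      refine ⟨(LinearMap.continuous_of_finiteDimensional (N n)).measurable, ?_⟩
      have := Measure.map_linearMap_addHaar_eq_smul_addHaar (volume : Measure (Vec d)) (f := N n)
        (by rw [hdet n h]; exact one_ne_zero)
      rw [hdet n h] at this
      simp only [inv_one, abs_one, ENNReal.ofReal_one, one_smul] at this
      exact this
    · simp only [h, dif_neg, not_false_eq_true]
      exact MeasurePreserving.id _
  · have hpos : ∀ᶠ n in atTop, 0 < D (δ n) :=
      (hDd.continuousAt.tendsto.comp hl).eventually (lt_mem_nhds (by rw [hD0]; norm_num))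
    obtain ⟨K, hK⟩ : ∃ K : ℝ, ∀ x, ‖A x‖ ≤ K * ‖x‖ :=
      ⟨‖LinearMap.toContinuousLinearMap A‖, fun x => (LinearMap.toContinuousLinearMap A).le_opNorm x⟩
    have hK' : ∀ x, ‖A x‖ ≤ |K| * ‖x‖ := fun x => (hK x).trans (by gcongr; exact le_abs_self K)
    have ho : ∀ᶠ n in atTop, |lam (δ n) - 1| ≤ η / (1 + |K|) * δ n := by
      have h1 := (hasDerivAt_iff_isLittleO.1 hld).def (c := η / (1 + |K|)) (by positivity)
      filter_upwards [hl.eventually h1] with n hn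
      simpa [hl0, abs_of_pos (hδ n)] using hn
    have h1 : ∀ᶠ n in atTop, δ n < 1 := hl.eventually (gt_mem_nhds one_pos)
    filter_upwards [hpos, ho, h1] with n h1 h2 h3 x
    simp only [h1, dif_pos]
    change ‖N n x - x - δ n • A x‖ ≤ _
    have e : N n x - x - δ n • A x = (lam (δ n) - 1) • (x + δ n • A x) := by
      simp only [hN, LinearMap.smul_apply, LinearMap.add_apply, LinearMap.id_apply, sub_smul, one_smul]
      abel
    rw [e, norm_smul, Real.norm_eq_abs]
    have h4 : ‖x + δ n • A x‖ ≤ (1 + |K|) * ‖x‖ := by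
      refine (norm_add_le _ _).trans ?_
      rw [norm_smul, Real.norm_eq_abs, abs_of_pos (hδ n)]
      have := mul_le_of_le_one_left (norm_nonneg (A x)) h3.le
      linarith [hK' x]
    have hδn := hδ n
    calc _ ≤ (η / (1 + |K|) * δ n) * ((1 + |K|) * ‖x‖) := by gcongr
      _ = _ := by field_simp

lemma rmeas_ball (m : ℕ) {c : ℝ} (hc : 0 ≤ c) :
    Integrable (fun s => if s ≤ c then (1 : ℝ) else 0) (rmeas m) ∧
      ∫ s, (if s ≤ c then (1 : ℝ) else 0) ∂(rmeas m) = c ^ (m + 1) / (m + 1) := by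
  have h1 : ∫ s, (if s ≤ c then (1 : ℝ) else 0) ∂(rmeas m) = c ^ (m + 1) / (m + 1) := by
    rw [rmeas_integral]
    have : ∀ s : ℝ, s ^ m * (if s ≤ c then (1 : ℝ) else 0) = (Iic c).indicator (fun s => s ^ m) s :=
      fun s => by by_cases h : s ≤ c <;> simp [h]
    simp only [this]
    rw [setIntegral_indicator measurableSet_Iic, Ioi_inter_Iic,
      ← intervalIntegral.integral_of_le hc, integral_pow]
    simp
  refine ⟨?_, h1⟩
  rcases hc.eq_or_lt with h0 | h0
  · refine (integrable_zero _ _ _).congr ?_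
    filter_upwards [rmeas_ae_pos m] with s hs
    rw [if_neg (by linarith)]; rfl
  · by_contra hni
    rw [integral_undef hni] at h1
    have : 0 < c ^ (m + 1) / ((m : ℝ) + 1) := by positivity
    linarith

/-- Volume preserving linear maps `ψ n = 1 + δ n A + o(δ n)` with `δ n → 0`. -/
structure Pert (m : ℕ) (δ : ℕ → ℝ) (ψ : ℕ → Vec (m + 1) ≃ₗ[ℝ] Vec (m + 1))
    (A : Vec (m + 1) →ₗ[ℝ] Vec (m + 1)) : Prop where
  dpos : ∀ n, 0 < δ n
  dlim : Tendsto δ atTop (𝓝 0)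
  mp : ∀ n, MeasurePreserving (ψ n) volume volume
  err : ∀ η > 0, ∀ᶠ n in atTop, ∀ x, ‖ψ n x - x - δ n • A x‖ ≤ η * δ n * ‖x‖

/-- Radial velocity of the affine perturbation `x ↦ ψ n x + δ n v` on the sphere of radius `ρ`. -/
def uu {m : ℕ} (A : Vec (m + 1) →ₗ[ℝ] Vec (m + 1)) (v : Vec (m + 1)) (ρ : ℝ) (θ : Sph m) : ℝ :=
  ρ * inner ℝ (A θ) (θ : Vec (m + 1)) + inner ℝ v (θ : Vec (m + 1))

section
variable {m : ℕ} {δ : ℕ → ℝ} {ψ : ℕ → Vec (m + 1) ≃ₗ[ℝ] Vec (m + 1)}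
  {A : Vec (m + 1) →ₗ[ℝ] Vec (m + 1)}

lemma exists_bound (A : Vec (m + 1) →ₗ[ℝ] Vec (m + 1)) (v : Vec (m + 1)) (ρ : ℝ) :
    ∃ K : ℝ, 0 < K ∧ ‖v‖ ≤ K ∧ |ρ| ≤ K ∧ (∀ x, ‖A x‖ ≤ K * ‖x‖) ∧ ∀ θ, |uu A v ρ θ| ≤ K := by
  set K0 := ‖LinearMap.toContinuousLinearMap A‖
  have hA : ∀ x, ‖A x‖ ≤ K0 * ‖x‖ := fun x => (LinearMap.toContinuousLinearMap A).le_opNorm x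
  have hK0 : 0 ≤ K0 := norm_nonneg _
  have hi : ∀ (w : Vec (m + 1)) (θ : Sph m), |inner ℝ w (θ : Vec (m + 1))| ≤ ‖w‖ := fun w θ => by
    have := abs_real_inner_le_norm w (θ : Vec (m + 1))
    rwa [norm_eq_of_mem_sphere, mul_one] at this
  have hA1 : ∀ θ : Sph m, ‖A θ‖ ≤ K0 := fun θ => by
    have := hA θ
    rwa [norm_eq_of_mem_sphere, mul_one] at this
  have h1 : 0 ≤ |ρ| * K0 := by positivity
  have h2 := norm_nonneg v
  have h3 := abs_nonneg ρ
  refine ⟨1 + ‖v‖ + |ρ| + K0 + |ρ| * K0, by positivity, by linarith, by linarith, fun x => ?_,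
    fun θ => ?_⟩
  · refine (hA x).trans ?_
    gcongr
    linarith
  · refine (abs_add_le _ _).trans ?_
    rw [abs_mul]
    have := mul_le_mul_of_nonneg_left ((hi (A θ) θ).trans (hA1 θ)) h3
    linarith [hi v θ]

lemma uu_cont (A : Vec (m + 1) →ₗ[ℝ] Vec (m + 1)) (v : Vec (m + 1)) (ρ : ℝ) :
    Continuous (uu A v ρ) := by
  unfold uu
  have := LinearMap.continuous_of_finiteDimensional A
  fun_prop

set_option maxHeartbeats 1000000 in
/-- In polar coordinates the preimage of a ball of radius `r n → ρ` under `x ↦ ψ n x + δ n v` is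
`{s ≤ r n - δ n u + o(δ n)}`, uniformly in the direction. -/
lemma Pert.sandwich (P : Pert m δ ψ A) (v : Vec (m + 1)) {ρ : ℝ} (hρ : 0 < ρ) {r : ℕ → ℝ}
    (hr : Tendsto r atTop (𝓝 ρ)) {ε : ℝ} (hε : 0 < ε) :
    ∀ᶠ n in atTop, ∀ θ : Sph m, ∀ s : ℝ, 0 ≤ s →
      (s ≤ r n - δ n * (uu A v ρ θ + ε) → ‖ψ n (s • (θ : Vec (m + 1))) + δ n • v‖ ≤ r n) ∧
      (‖ψ n (s • (θ : Vec (m + 1))) + δ n • v‖ ≤ r n → s ≤ r n - δ n * (uu A v ρ θ - ε)) := by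
  obtain ⟨K, hK, hv, hρK, hA, hu⟩ := exists_bound A v ρ
  -- `ω` bounds the distance of `r n ∓ δ n (u ± ε)` to `ρ`
  set ω : ℝ := min (ρ / 2) (ε / (4 * K)) with hω
  have hω0 : 0 < ω := by positivity
  have hω1 : ω ≤ ρ / 2 := min_le_left _ _
  have hω2 : K * ω ≤ ε / 4 := by
    have : ω ≤ ε / (4 * K) := min_le_right _ _
    calc K * ω ≤ K * (ε / (4 * K)) := by gcongr
      _ = ε / 4 := by field_simp
  have hη : 0 < ε / (8 * ρ) := by positivity
  have e1 : ∀ᶠ n in atTop, |r n - ρ| < ω / 2 := by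
    have := (hr.sub_const ρ).abs
    rw [sub_self, abs_zero] at this
    exact this.eventually (gt_mem_nhds (by positivity))
  have small : ∀ c > 0, ∀ᶠ n in atTop, δ n < c := fun c hc => P.dlim.eventually (gt_mem_nhds hc)
  filter_upwards [e1, P.err _ hη, small (ω / 2 / (K + ε)) (by positivity), small (ρ / 2 / K) (by positivity),
    small (1 / 2 / (K + ε / (8 * ρ))) (by positivity),
    small (ε * ρ / (16 * ((K * (2 * ρ) + K) ^ 2))) (by positivity), small (ρ / (8 * ε)) (by positivity)]
    with n hn1 hn2 hn3 hn4 hn5 hn6 hn7 θ s hs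
  have hδ := P.dpos n
  rw [lt_div_iff₀ (by positivity)] at hn3 hn4 hn5 hn6 hn7
  set η := ε / (8 * ρ) with hηd
  have hηρ : η * ρ = ε / 8 := by rw [hηd]; field_simp
  set T : Vec (m + 1) := (θ : Vec (m + 1)) with hT
  have hTn : ‖T‖ = 1 := norm_eq_of_mem_sphere θ
  set a := inner ℝ (A T) T with ha
  set b := inner ℝ v T with hb
  have huab : uu A v ρ θ = ρ * a + b := rfl
  have haK : |a| ≤ K := by
    have := abs_real_inner_le_norm (A T) T
    rw [hTn, mul_one] at this
    have h2 := hA T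
    rw [hTn, mul_one] at h2
    exact this.trans h2
  have hrn := abs_lt.1 hn1
  have huθ := abs_le.1 (hu θ)
  have haK' := abs_le.1 haK
  set y : ℝ → Vec (m + 1) := fun s => ψ n (s • T) + δ n • v with hy
  set e : ℝ → Vec (m + 1) := fun s => ψ n (s • T) - s • T - δ n • A (s • T) with he
  have hen : ∀ s, 0 ≤ s → ‖e s‖ ≤ η * δ n * s := fun s hs => by
    have := hn2 (s • T)
    rwa [norm_smul, hTn, Real.norm_eq_abs, abs_of_nonneg hs, mul_one] at this
  have hye : ∀ s, y s = s • T + δ n • (s • A T + v) + e s := fun s => by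
    simp only [hy, he, map_smul, smul_add]; abel
  have hKε : δ n * K + δ n * ε < ω / 2 := by linarith [mul_add (δ n) K ε]
  have hδu : |δ n * uu A v ρ θ| ≤ δ n * K := by
    rw [abs_mul, abs_of_pos hδ]; gcongr; exact hu θ
  have hδu' := abs_le.1 hδu
  have hδε : 0 < δ n * ε := mul_pos hδ hε
  have hys : ψ n (s • T) + δ n • v = y s := rfl
  rw [hys]
  clear_value y e a b T
  constructor
  · intro hle
    set s' := r n - δ n * (uu A v ρ θ + ε) with hs'
    have hs'ρ : |s' - ρ| ≤ ω := by
      rw [hs', abs_le]; constructor <;> linarith [mul_add (δ n) (uu A v ρ θ) ε]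
    have hs'ρ' := abs_le.1 hs'ρ
    have hs'0 : 0 ≤ s' := by linarith
    set w := s' • A T + v with hw
    have hwn : ‖w‖ ≤ K * (2 * ρ) + K := by
      refine (norm_add_le _ _).trans (add_le_add ?_ hv)
      rw [norm_smul, Real.norm_eq_abs, abs_of_nonneg hs'0, mul_comm]
      have h2 := hA T
      rw [hTn, mul_one] at h2
      gcongr
      linarith
    have hwT : inner ℝ T w = uu A v ρ θ + a * (s' - ρ) := by
      rw [hw, inner_add_right, real_inner_smul_right, real_inner_comm, ← ha, real_inner_comm, ← hb,
        huab]; ring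
    have haw : |a * (s' - ρ)| ≤ ε / 4 := by
      rw [abs_mul]
      exact (mul_le_mul haK hs'ρ (abs_nonneg _) hK.le).trans hω2
    have haw' := abs_le.1 haw
    have h1 : ‖s' • T + δ n • w‖ ≤ r n - δ n * ε / 2 := by
      have hr0 : 0 ≤ r n - δ n * ε / 2 := by linarith
      refine abs_le_of_sq_le_sq' ?_ hr0 |>.2
      rw [norm_add_sq_real, norm_smul, norm_smul, hTn, real_inner_smul_left, real_inner_smul_right,
        hwT, Real.norm_eq_abs, Real.norm_eq_abs, mul_one, sq_abs, mul_pow, sq_abs]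
      have hp1 : s' + δ n * (uu A v ρ θ + a * (s' - ρ)) ≤ r n - 3 / 4 * (δ n * ε) := by
        rw [hs']
        have := mul_le_mul_of_nonneg_left haw'.2 hδ.le
        rw [hs'] at this
        linarith
      have hp0 : 0 ≤ s' + δ n * (uu A v ρ θ + a * (s' - ρ)) := by
        have := mul_le_mul_of_nonneg_left haw'.1 hδ.le
        have h5 : δ n * ε ≤ ρ / 8 := by linarith
        linarith [mul_add (δ n) (uu A v ρ θ) (a * (s' - ρ))]
      have hsq := pow_le_pow_left₀ hp0 hp1 2
      have hw2 : δ n ^ 2 * ‖w‖ ^ 2 ≤ δ n * (ε * ρ / 16) := by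
        have : ‖w‖ ^ 2 ≤ (K * (2 * ρ) + K) ^ 2 := pow_le_pow_left₀ (norm_nonneg _) hwn 2
        calc δ n ^ 2 * ‖w‖ ^ 2 ≤ δ n ^ 2 * (K * (2 * ρ) + K) ^ 2 := by gcongr
          _ = δ n * (δ n * (16 * (K * (2 * ρ) + K) ^ 2) / 16) := by ring
          _ ≤ _ := by gcongr
      have hlow : δ n * (ε * ρ / 16) ≤ (r n - δ n * ε / 2) ^ 2 - (r n - 3 / 4 * (δ n * ε)) ^ 2 := by
        have h6 : (r n - δ n * ε / 2) ^ 2 - (r n - 3 / 4 * (δ n * ε)) ^ 2 =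
          (δ n * ε) * (1 / 4 * (2 * r n - 5 / 4 * (δ n * ε))) := by ring
        have h7 : δ n * (ε * ρ / 16) = (δ n * ε) * (ρ / 16) := by ring
        rw [h6, h7]
        have h8 : δ n * ε ≤ ρ / 8 := by linarith
        gcongr
        linarith
      have hsq0 : 0 ≤ δ n ^ 2 * (uu A v ρ θ + a * (s' - ρ)) ^ 2 := by positivity
      linarith [hsq, hw2, hlow, hsq0]
    have h2 : ‖y s'‖ ≤ r n := by
      rw [hye]
      refine (norm_add_le _ _).trans ?_
      have h3 := hen s' hs'0
      have h4 : η * δ n * s' ≤ δ n * ε / 2 := by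
        calc η * δ n * s' ≤ η * δ n * (2 * ρ) := by gcongr; linarith
          _ = δ n * (2 * (η * ρ)) := by ring
          _ ≤ _ := by rw [hηρ]; linarith
      linarith
    have h0 : ‖y 0‖ ≤ r n := by
      simp only [hy, zero_smul, map_zero, zero_add]
      rw [norm_smul, Real.norm_eq_abs, abs_of_pos hδ]
      have := mul_le_mul_of_nonneg_left hv hδ.le
      linarith
    -- the preimage of the ball is convex, so it suffices to look at the ends of the segment
    rcases hs'0.eq_or_lt with hz | hz
    · have : s = 0 := by linarith
      rw [this]; exact h0
    · have hyq : ∀ q : ℝ, y (q * s') = (1 - q) • y 0 + q • y s' := fun q => by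
        simp only [hy, map_smul, zero_smul, zero_add]
        module
      have hyl : y s = (1 - s / s') • y 0 + (s / s') • y s' := by
        rw [← hyq, div_mul_cancel₀ _ hz.ne']
      have hq1 : s / s' ≤ 1 := (div_le_one hz).2 hle
      have hq0 : 0 ≤ s / s' := by positivity
      rw [hyl]
      refine (norm_add_le _ _).trans ?_
      rw [norm_smul, norm_smul, Real.norm_eq_abs, Real.norm_eq_abs, abs_of_nonneg hq0,
        abs_of_nonneg (by linarith : (0 : ℝ) ≤ 1 - s / s')]
      have i1 := mul_le_mul_of_nonneg_left h0 (by linarith : (0 : ℝ) ≤ 1 - s / s')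
      have i2 := mul_le_mul_of_nonneg_left h2 hq0
      linarith
  · intro hle
    by_contra hlt
    rw [not_le] at hlt
    set s' := r n - δ n * (uu A v ρ θ - ε) with hs'
    have hs'ρ : |s' - ρ| ≤ ω := by
      rw [hs', abs_le]; constructor <;> linarith [mul_sub (δ n) (uu A v ρ θ) ε]
    have hs'ρ' := abs_le.1 hs'ρ
    have haw : |a * (s' - ρ)| ≤ ε / 4 := by
      rw [abs_mul]
      exact (mul_le_mul haK hs'ρ (abs_nonneg _) hK.le).trans hω2
    have haw' := abs_le.1 haw
    have hin : inner ℝ (y s) T ≤ r n := by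
      have := real_inner_le_norm (y s) T
      rw [hTn, mul_one] at this
      exact this.trans hle
    have hin2 : inner ℝ (y s) T = s + δ n * (s * a + b) + inner ℝ (e s) T := by
      rw [hye, inner_add_left, inner_add_left, real_inner_smul_left, real_inner_smul_left,
        inner_add_left, real_inner_smul_left, real_inner_self_eq_norm_sq, hTn, ← ha, ← hb]; ring
    have hie : -(η * δ n * s) ≤ inner ℝ (e s) T := by
      have := abs_real_inner_le_norm (e s) T
      rw [hTn, mul_one] at this
      linarith [(abs_le.1 (this.trans (hen s hs))).1]
    have hfac : 0 ≤ 1 + δ n * (a - η) := by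
      have h1 : δ n * (-(K + η)) ≤ δ n * (a - η) := by gcongr; linarith
      linarith
    have hmono : s' * (1 + δ n * (a - η)) ≤ s * (1 + δ n * (a - η)) := by gcongr
    have hη2 : η * s' ≤ ε / 4 := by
      calc η * s' ≤ η * (2 * ρ) := by gcongr; linarith
        _ = 2 * (η * ρ) := by ring
        _ = ε / 4 := by rw [hηρ]; ring
    have hkey : s' * (1 + δ n * (a - η)) + δ n * b =
        r n + δ n * (ε + a * (s' - ρ) - η * s') := by
      have : s' = r n - δ n * (ρ * a + b - ε) := by rw [hs', huab]
      have h2 : s' * (1 + δ n * (a - η)) = s' + δ n * (s' * (a - η)) := by ring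
      rw [h2]
      nth_rewrite 1 [this]
      ring
    have hpos : 0 < δ n * (ε + a * (s' - ρ) - η * s') := by
      apply mul_pos hδ; linarith
    linarith
end

section
variable {m : ℕ} {δ : ℕ → ℝ} {ψ : ℕ → Vec (m + 1) ≃ₗ[ℝ] Vec (m + 1)}
  {A : Vec (m + 1) →ₗ[ℝ] Vec (m + 1)}

lemma pow_expand (m : ℕ) (hδ : ∀ n, 0 < δ n) (hl : Tendsto δ atTop (𝓝 0)) {ρ : ℝ} {r : ℕ → ℝ}
    (hr : Tendsto r atTop (𝓝 ρ)) (K : ℝ) {ε : ℝ} (hε : 0 < ε) :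
    ∀ᶠ n in atTop, ∀ x : ℝ, |x| ≤ K →
      |(r n - δ n * x) ^ (m + 1) / (m + 1) - r n ^ (m + 1) / (m + 1) + δ n * (ρ ^ m * x)|
        ≤ ε * δ n := by
  have hs := (hasStrictDerivAt_pow (m + 1) ρ).isLittleO.def (c := ε / (|K| + 1)) (by positivity)
  rw [Metric.eventually_nhds_iff] at hs
  obtain ⟨ω, hω, hs⟩ := hs
  have e1 : ∀ᶠ n in atTop, |r n - ρ| < ω / 2 := by
    have := (hr.sub_const ρ).abs
    rw [sub_self, abs_zero] at this
    exact this.eventually (gt_mem_nhds (by positivity))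
  filter_upwards [e1, hl.eventually (gt_mem_nhds (show 0 < ω / 2 / (|K| + 1) by positivity))]
    with n h1 h2 x hx
  have hδn := hδ n
  rw [lt_div_iff₀ (by positivity)] at h2
  have hxK : |x| ≤ |K| := hx.trans (le_abs_self K)
  have hdx : |δ n * x| < ω / 2 := by
    rw [abs_mul, abs_of_pos hδn]
    have := mul_le_mul_of_nonneg_left hxK hδn.le
    linarith
  have h1' := abs_lt.1 h1
  have hdx' := abs_lt.1 hdx
  have := @hs (r n - δ n * x, r n) (by
    rw [Prod.dist_eq, max_lt_iff]
    simp only [Real.dist_eq, abs_lt]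
    constructor <;> constructor <;> linarith)
  simp only [Real.norm_eq_abs, ContinuousLinearMap.toSpanSingleton_apply, smul_eq_mul,
    Nat.add_sub_cancel, sub_sub_cancel_left, abs_neg] at this
  have hm : (0 : ℝ) < m + 1 := by positivity
  have e : (r n - δ n * x) ^ (m + 1) / (m + 1) - r n ^ (m + 1) / (m + 1) + δ n * (ρ ^ m * x) =
      ((r n - δ n * x) ^ (m + 1) - r n ^ (m + 1) - -(δ n * x) * (((m + 1 : ℕ) : ℝ) * ρ ^ m)) / (m + 1) := by
    push_cast; field_simp; ring
  rw [e, abs_div, abs_of_pos hm, div_le_iff₀ hm]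
  refine this.trans ?_
  have h3 : |δ n * x| ≤ δ n * (|K| + 1) := by
    rw [abs_mul, abs_of_pos hδn]; gcongr; linarith
  calc ε / (|K| + 1) * |δ n * x| ≤ ε / (|K| + 1) * (δ n * (|K| + 1)) := by gcongr
    _ = ε * δ n * 1 := by field_simp
    _ ≤ _ := by gcongr; linarith [(Nat.cast_nonneg m : (0 : ℝ) ≤ m)]

/-- The affine perturbation `x ↦ ψ n x + δ n v`. -/
def aff (ψ : Vec (m + 1) ≃ₗ[ℝ] Vec (m + 1)) (w x : Vec (m + 1)) : Vec (m + 1) := ψ x + w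

lemma aff_cont (ψ : Vec (m + 1) ≃ₗ[ℝ] Vec (m + 1)) (w : Vec (m + 1)) : Continuous (aff ψ w) :=
  (LinearMap.continuous_of_finiteDimensional ψ.toLinearMap).add continuous_const

lemma aff_mp {ψ : Vec (m + 1) ≃ₗ[ℝ] Vec (m + 1)} (h : MeasurePreserving ψ volume volume)
    (w : Vec (m + 1)) : MeasurePreserving (aff ψ w) volume volume :=
  (measurePreserving_add_right volume w).comp h

/-- The inverse of `aff ψ w`. -/
def affInv (ψ : Vec (m + 1) ≃ₗ[ℝ] Vec (m + 1)) (w x : Vec (m + 1)) : Vec (m + 1) :=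
  ψ.symm (x - w)

lemma affInv_cont (ψ : Vec (m + 1) ≃ₗ[ℝ] Vec (m + 1)) (w : Vec (m + 1)) : Continuous (affInv ψ w) :=
  (LinearMap.continuous_of_finiteDimensional ψ.symm.toLinearMap).comp (continuous_id.sub continuous_const)

lemma aff_affInv (ψ : Vec (m + 1) ≃ₗ[ℝ] Vec (m + 1)) (w x : Vec (m + 1)) :
    aff ψ w (affInv ψ w x) = x := by simp [aff, affInv]

lemma affInv_aff (ψ : Vec (m + 1) ≃ₗ[ℝ] Vec (m + 1)) (w x : Vec (m + 1)) :
    affInv ψ w (aff ψ w x) = x := by simp [aff, affInv]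

lemma aff_emb (ψ : Vec (m + 1) ≃ₗ[ℝ] Vec (m + 1)) (w : Vec (m + 1)) :
    MeasurableEmbedding (aff ψ w) :=
  (Homeomorph.mk ⟨aff ψ w, affInv ψ w, affInv_aff ψ w, aff_affInv ψ w⟩ (aff_cont ψ w)
    (affInv_cont ψ w)).measurableEmbedding

lemma ind_pre {d : ℕ} (f : Vec d → Vec d) (E : Set (Vec d)) (x : Vec d) :
    ind (f ⁻¹' E) x = ind E (f x) := by
  simp [ind, indicator, Set.mem_preimage]; rfl

lemma meas_pre {d : ℕ} {f : Vec d → Vec d} (hf : MeasurePreserving f volume volume)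
    {E : Set (Vec d)} (hE : MeasurableSet E) : volume (f ⁻¹' E) = volume E :=
  hf.measure_preimage hE.nullMeasurableSet

/-- Perturbed ball minus ball. -/
def pb (m : ℕ) (ψ : Vec (m + 1) ≃ₗ[ℝ] Vec (m + 1)) (w : Vec (m + 1)) (ρ : ℝ) (x : Vec (m + 1)) : ℝ :=
  ind (aff ψ w ⁻¹' Bl (m + 1) ρ) x - ind (Bl (m + 1) ρ) x

lemma nice_pb {ψ : Vec (m + 1) ≃ₗ[ℝ] Vec (m + 1)} (h : MeasurePreserving ψ volume volume)
    (w : Vec (m + 1)) (ρ : ℝ) : Nice (pb m ψ w ρ) :=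
  nice_ind_sub ((aff_cont ψ w).measurable measurableSet_closedBall)
    (by rw [meas_pre (aff_mp h w) measurableSet_closedBall]; exact measure_closedBall_lt_top.ne)
    measurableSet_closedBall measure_closedBall_lt_top.ne

lemma ind_aff_Bl (ψ : Vec (m + 1) ≃ₗ[ℝ] Vec (m + 1)) (w : Vec (m + 1)) (ρ : ℝ) (x : Vec (m + 1)) :
    ind (aff ψ w ⁻¹' Bl (m + 1) ρ) x = if ‖ψ x + w‖ ≤ ρ then 1 else 0 := by
  rw [ind_pre, ind_Bl]; rfl

lemma ind_Bl_polar {s : ℝ} (hs : 0 < s) (θ : Sph m) (ρ : ℝ) :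
    ind (Bl (m + 1) ρ) (s • (θ : Vec (m + 1))) = if s ≤ ρ then 1 else 0 := by
  rw [ind_Bl, norm_smul, norm_eq_of_mem_sphere, mul_one, Real.norm_eq_abs, abs_of_pos hs]

lemma Pert.rad_lim (P : Pert m δ ψ A) (v : Vec (m + 1)) {ρ : ℝ} (hρ : 0 < ρ) {r : ℕ → ℝ}
    (hr : Tendsto r atTop (𝓝 ρ)) {ε : ℝ} (hε : 0 < ε) :
    ∀ᶠ n in atTop, ∀ θ : Sph m,
      |rad (pb m (ψ n) (δ n • v) (r n)) θ + δ n * (ρ ^ m * uu A v ρ θ)| ≤ ε * δ n := by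
  obtain ⟨K, hK, -, -, -, hu⟩ := exists_bound A v ρ
  set ε1 : ℝ := ε / 2 / (ρ ^ m) with hε1
  have hρm : 0 < ρ ^ m := by positivity
  have hε10 : 0 < ε1 := by positivity
  have hmul : ρ ^ m * ε1 = ε / 2 := by rw [hε1]; field_simp
  have e1 : ∀ᶠ n in atTop, ρ / 2 < r n := hr.eventually (lt_mem_nhds (by linarith))
  have small := P.dlim.eventually (gt_mem_nhds (show 0 < ρ / 2 / (K + ε1) by positivity))
  filter_upwards [P.sandwich v hρ hr hε10, e1, small,
    pow_expand m P.dpos P.dlim hr (K + ε1) (half_pos hε)] with n h1 h2 h3 h4 θ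
  have hδ := P.dpos n
  rw [lt_div_iff₀ (by positivity)] at h3
  have hK1 : |uu A v ρ θ + ε1| ≤ K + ε1 := (abs_add_le _ _).trans (by
    rw [abs_of_pos hε10]; linarith [hu θ])
  have hK2 : |uu A v ρ θ - ε1| ≤ K + ε1 := (abs_sub _ _).trans (by
    rw [abs_of_pos hε10]; linarith [hu θ])
  have hc : ∀ x, |x| ≤ K + ε1 → 0 ≤ r n - δ n * x := fun x hx => by
    have := mul_le_mul_of_nonneg_left ((le_abs_self x).trans hx) hδ.le
    linarith
  obtain ⟨i1, v1⟩ := rmeas_ball m (hc _ hK1)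
  obtain ⟨i2, v2⟩ := rmeas_ball m (hc _ hK2)
  obtain ⟨i3, v3⟩ := rmeas_ball m (by linarith : 0 ≤ r n)
  have hb1 := h4 _ hK1
  have hb2 := h4 _ hK2
  have hlow : ∀ᵐ s ∂(rmeas m), (if s ≤ r n - δ n * (uu A v ρ θ + ε1) then (1 : ℝ) else 0) ≤
      ind (aff (ψ n) (δ n • v) ⁻¹' Bl (m + 1) (r n)) (s • (θ : Vec (m + 1))) := by
    filter_upwards [rmeas_ae_pos m] with s hs
    rw [ind_aff_Bl]
    split_ifs with p q q <;> norm_num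
    exact q ((h1 θ s hs.le).1 p)
  have hupp : ∀ᵐ s ∂(rmeas m), ind (aff (ψ n) (δ n • v) ⁻¹' Bl (m + 1) (r n)) (s • (θ : Vec (m + 1))) ≤
      (if s ≤ r n - δ n * (uu A v ρ θ - ε1) then (1 : ℝ) else 0) := by
    filter_upwards [rmeas_ae_pos m] with s hs
    rw [ind_aff_Bl]
    split_ifs with p q q <;> norm_num
    exact q ((h1 θ s hs.le).2 p)
  have hmeas : Measurable fun s : ℝ =>
      ind (aff (ψ n) (δ n • v) ⁻¹' Bl (m + 1) (r n)) (s • (θ : Vec (m + 1))) := by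
    have h5 : Measurable (ind (aff (ψ n) (δ n • v) ⁻¹' Bl (m + 1) (r n))) :=
      measurable_one.indicator ((aff_cont _ _).measurable measurableSet_closedBall)
    exact h5.comp (by fun_prop)
  have i4 : Integrable (fun s : ℝ =>
      ind (aff (ψ n) (δ n • v) ⁻¹' Bl (m + 1) (r n)) (s • (θ : Vec (m + 1)))) (rmeas m) := by
    refine i2.mono' hmeas.aestronglyMeasurable ?_
    filter_upwards [hupp] with s hs
    rwa [Real.norm_eq_abs, abs_of_nonneg]
    rw [ind_aff_Bl]; split_ifs <;> norm_num
  have m1 := integral_mono_ae i1 i4 hlow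
  have m2 := integral_mono_ae i4 i2 hupp
  have hrad : rad (pb m (ψ n) (δ n • v) (r n)) θ = (∫ s,
      ind (aff (ψ n) (δ n • v) ⁻¹' Bl (m + 1) (r n)) (s • (θ : Vec (m + 1))) ∂(rmeas m)) -
      r n ^ (m + 1) / (m + 1) := by
    rw [← v3, ← integral_sub i4 i3]
    refine integral_congr_ae ?_
    filter_upwards [rmeas_ae_pos m] with s hs
    rw [pb, ind_Bl_polar hs]
  rw [hrad]
  rw [v1] at m1
  rw [v2] at m2
  have hb1' := abs_le.1 hb1
  have hb2' := abs_le.1 hb2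
  have hm1 : δ n * (ρ ^ m * (uu A v ρ θ + ε1)) = δ n * (ρ ^ m * uu A v ρ θ) + ε / 2 * δ n := by
    rw [mul_add (ρ ^ m), hmul]; ring
  have hm2 : δ n * (ρ ^ m * (uu A v ρ θ - ε1)) = δ n * (ρ ^ m * uu A v ρ θ) - ε / 2 * δ n := by
    rw [mul_sub (ρ ^ m), hmul]; ring
  rw [hm1] at hb1'
  rw [hm2] at hb2'
  rw [abs_le]
  constructor <;> linarith

lemma Pert.l1 (P : Pert m δ ψ A) (v : Vec (m + 1)) {ρ : ℝ} (hρ : 0 < ρ) {r : ℕ → ℝ}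
    (hr : Tendsto r atTop (𝓝 ρ)) :
    ∃ C : ℝ, ∀ᶠ n in atTop, ∫ x, |pb m (ψ n) (δ n • v) (r n) x| ≤ C * δ n := by
  obtain ⟨K, hK, -, -, -, hu⟩ := exists_bound A v ρ
  have e1 : ∀ᶠ n in atTop, ρ / 2 < r n := hr.eventually (lt_mem_nhds (by linarith))
  have small := P.dlim.eventually (gt_mem_nhds (show 0 < ρ / 2 / (K + 1) by positivity))
  refine ⟨(2 * (ρ ^ m * (K + 1)) + 2) * (sig m).real univ, ?_⟩
  filter_upwards [P.sandwich v hρ hr one_pos, e1, small,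
    pow_expand m P.dpos P.dlim hr (K + 1) one_pos] with n h1 h2 h3 h4
  have hδ := P.dpos n
  rw [lt_div_iff₀ (by positivity)] at h3
  have hni := nice_pb (P.mp n) (δ n • v) (r n)
  have hpt : ∀ θ : Sph m, rad (fun x => |pb m (ψ n) (δ n • v) (r n) x|) θ ≤
      (2 * (ρ ^ m * (K + 1)) + 2) * δ n := fun θ => by
    have hu' := abs_le.1 (hu θ)
    have hc1 : 0 ≤ r n - δ n * (K + 1) := by linarith
    have hc2 : 0 ≤ r n - δ n * (-(K + 1)) := by nlinarith
    obtain ⟨i1, v1⟩ := rmeas_ball m hc1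
    obtain ⟨i2, v2⟩ := rmeas_ball m hc2
    have hle : rad (fun x => |pb m (ψ n) (δ n • v) (r n) x|) θ ≤
        ∫ s, ((if s ≤ r n - δ n * (-(K + 1)) then (1 : ℝ) else 0) -
          (if s ≤ r n - δ n * (K + 1) then (1 : ℝ) else 0)) ∂(rmeas m) := by
      refine integral_mono_of_nonneg (ae_of_all _ fun s => abs_nonneg _) (i2.sub i1) ?_
      filter_upwards [rmeas_ae_pos m] with s hs
      obtain ⟨ha, hb⟩ := h1 θ s hs.le
      simp only [pb]
      rw [ind_Bl_polar hs, ind_aff_Bl]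
      have t1 : δ n * (uu A v ρ θ + 1) ≤ δ n * (K + 1) := by gcongr; linarith
      have t2 : δ n * (-(K + 1)) ≤ δ n * (uu A v ρ θ - 1) := by gcongr; linarith
      have t3 : 0 ≤ δ n * (K + 1) := by positivity
      by_cases p : s ≤ r n - δ n * (K + 1)
      · rw [if_pos (ha (by linarith)), if_pos (by linarith), if_pos (by linarith), if_pos p]; norm_num
      · by_cases q : s ≤ r n - δ n * (-(K + 1))
        · rw [if_pos q, if_neg p]; split_ifs <;> norm_num
        · rw [if_neg (fun hh => q ((hb hh).trans (by linarith))), if_neg (by intro hh; linarith), if_neg q, if_neg p]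
          norm_num
    rw [integral_sub i2 i1, v1, v2] at hle
    have b1 := abs_le.1 (h4 (K + 1) (by rw [abs_of_pos]; positivity))
    have b2 := abs_le.1 (h4 (-(K + 1)) (by rw [abs_neg, abs_of_pos]; positivity))
    linarith
  have hi := hni.abs.int
  have e := integral_mul_dir (h := fun _ : Sph m => (1 : ℝ)) (f := fun x => |pb m (ψ n) (δ n • v) (r n) x|)
    (by simpa using hi)
  simp only [mul_one] at e
  rw [e]
  calc _ ≤ ∫ θ : Sph m, (2 * (ρ ^ m * (K + 1)) + 2) * δ n ∂(sig m) :=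
        integral_mono (rad_integrable hi) (integrable_const _) hpt
    _ = _ := by rw [integral_const, smul_eq_mul]; ring

lemma Pert.test (P : Pert m δ ψ A) (v : Vec (m + 1)) {ρ : ℝ} (hρ : 0 < ρ) {r : ℕ → ℝ}
    (hr : Tendsto r atTop (𝓝 ρ)) {h : Sph m → ℝ} (hc : Continuous h) :
    Tendsto (fun n => (∫ x, pb m (ψ n) (δ n • v) (r n) x * h (dir x)) / δ n) atTop
      (𝓝 (-∫ θ, ρ ^ m * uu A v ρ θ * h θ ∂(sig m))) := by
  obtain ⟨M, hM⟩ : ∃ M, ∀ θ, |h θ| ≤ M := by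
    obtain ⟨M, hM⟩ := isCompact_univ.exists_bound_of_continuousOn hc.continuousOn
    exact ⟨M, fun θ => hM θ (mem_univ _)⟩
  have hM0 : 0 ≤ |M| := abs_nonneg M
  set sg := (sig m).real univ
  have hsg : 0 ≤ sg := measureReal_nonneg
  rw [Metric.tendsto_nhds]
  intro ε hε
  set η := ε / 2 / (|M| * sg + 1) with hη
  have hη0 : 0 < η := by positivity
  filter_upwards [P.rad_lim v hρ hr hη0] with n hn
  have hδ := P.dpos n
  have hni := nice_pb (P.mp n) (δ n • v) (r n)
  have hInt : Integrable (fun x => pb m (ψ n) (δ n • v) (r n) x * h (dir x)) := by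
    refine hni.int.mul_bdd (c := M) ?_ (ae_of_all _ fun x => hM _)
    exact (hc.measurable.comp (measurable_dir m)).aestronglyMeasurable
  have i1 : Integrable (fun θ => rad (pb m (ψ n) (δ n • v) (r n)) θ * h θ) (sig m) :=
    (rad_integrable hni.int).mul_bdd (c := M) hc.aestronglyMeasurable (ae_of_all _ hM)
  have i2 : Integrable (fun θ => δ n * (ρ ^ m * uu A v ρ θ * h θ)) (sig m) :=
    (sph_int ((continuous_const.mul (uu_cont A v ρ)).mul hc)).const_mul _
  have e : (∫ x, pb m (ψ n) (δ n • v) (r n) x * h (dir x)) / δ n - -∫ θ, ρ ^ m * uu A v ρ θ * h θ ∂(sig m)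
      = (∫ θ, (rad (pb m (ψ n) (δ n • v) (r n)) θ + δ n * (ρ ^ m * uu A v ρ θ)) * h θ ∂(sig m)) / δ n := by
    rw [integral_mul_dir hInt, eq_div_iff hδ.ne', sub_neg_eq_add, add_mul, div_mul_cancel₀ _ hδ.ne',
      mul_comm _ (δ n), ← integral_const_mul, ← integral_add i1 i2]
    refine integral_congr_ae (ae_of_all _ fun θ => ?_)
    simp only; ring
  rw [Real.dist_eq, e, abs_div, abs_of_pos hδ, div_lt_iff₀ hδ]
  calc _ ≤ ∫ θ : Sph m, η * δ n * |M| ∂(sig m) := by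
        rw [← Real.norm_eq_abs]
        refine norm_integral_le_of_norm_le (integrable_const _) (ae_of_all _ fun θ => ?_)
        rw [Real.norm_eq_abs, abs_mul]
        exact mul_le_mul (hn θ) ((hM θ).trans (le_abs_self M)) (abs_nonneg _) (by positivity)
    _ = η * (|M| * sg) * δ n := by rw [integral_const, smul_eq_mul]; ring
    _ ≤ ε / 2 * δ n := by
        gcongr
        calc η * (|M| * sg) ≤ η * (|M| * sg + 1) := by gcongr; linarith
          _ = ε / 2 := by rw [hη]; field_simp
    _ < ε * δ n := by gcongr; linarith
end

section
variable {m : ℕ} {δ : ℕ → ℝ} {ψ : ℕ → Vec (m + 1) ≃ₗ[ℝ] Vec (m + 1)}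
  {A : Vec (m + 1) →ₗ[ℝ] Vec (m + 1)}

lemma Pert.move (P : Pert m δ ψ A) (v : Vec (m + 1)) {ρ : ℝ} (hρ : 0 < ρ) {r : ℕ → ℝ}
    (hr : Tendsto r atTop (𝓝 ρ)) {h : Sph m → ℝ} (hc : Continuous h) {ε : ℝ} (hε : 0 < ε) :
    ∀ᶠ n in atTop, ∀ x : Vec (m + 1), |‖x‖ - r n| ≤ √(δ n) →
      |h (dir (affInv (ψ n) (δ n • v) x)) - h (dir x)| ≤ ε := by
  obtain ⟨K, hK, hv, -, hA, -⟩ := exists_bound A v ρ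
  set Q : Set (Vec (m + 1)) := closedBall 0 (2 * ρ) \ ball 0 (ρ / 4) with hQ
  have hQc : IsCompact Q := (isCompact_closedBall _ _).diff isOpen_ball
  have hcont : ContinuousOn (fun x => h (dir x)) Q := fun x hx => by
    have hx0 : x ≠ 0 := by
      rintro rfl
      exact hx.2 (mem_ball_self (by positivity))
    exact (hc.continuousAt.comp (continuousAt_dir hx0)).continuousWithinAt
  have huc := hQc.uniformContinuousOn_of_continuous hcont
  rw [Metric.uniformContinuousOn_iff] at huc
  obtain ⟨ω, hω, huc⟩ := huc ε hε
  have hsq : Tendsto (fun n => √(δ n)) atTop (𝓝 0) := by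
    have := (Real.continuous_sqrt.tendsto 0).comp P.dlim
    simpa using! this
  have e1 : ∀ᶠ n in atTop, |r n - ρ| < ρ / 4 := by
    have := (hr.sub_const ρ).abs
    rw [sub_self, abs_zero] at this
    exact this.eventually (gt_mem_nhds (by positivity))
  have small : ∀ c > 0, ∀ᶠ n in atTop, δ n < c := fun c hc => P.dlim.eventually (gt_mem_nhds hc)
  filter_upwards [e1, hsq.eventually (gt_mem_nhds (show 0 < ρ / 4 by positivity)), P.err 1 one_pos,
    small (1 / 2 / (K + 1)) (by positivity),
    small (min ω (ρ / 4) / (2 * (K + 1) * (2 * ρ + 1))) (by positivity)] with n h1 h2 h3 h4 h5 x hx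
  have hδ := P.dpos n
  rw [lt_div_iff₀ (by positivity)] at h4 h5
  set z := affInv (ψ n) (δ n • v) x with hz
  have hzx : ψ n z + δ n • v = x := aff_affInv (ψ n) (δ n • v) x
  have h1' := abs_lt.1 h1
  have hx' := abs_le.1 hx
  have hd : ‖x - z‖ ≤ δ n * (K + 1) * (‖z‖ + 1) := by
    have e : x - z = (ψ n z - z - δ n • A z) + δ n • (A z + v) := by
      rw [← hzx, smul_add]; abel
    rw [e]
    refine (norm_add_le _ _).trans ?_
    rw [norm_smul, Real.norm_eq_abs, abs_of_pos hδ]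
    have a1 := h3 z
    have a2 : δ n * ‖A z + v‖ ≤ δ n * (K * ‖z‖ + K) := by
      gcongr
      exact (norm_add_le _ _).trans (add_le_add (hA z) hv)
    linarith
  have hzn : ‖z‖ ≤ ‖x‖ + ‖x - z‖ := by
    have := norm_sub_le x (x - z)
    rwa [sub_sub_cancel] at this
  have hd2 : ‖x - z‖ ≤ 2 * (δ n * (K + 1)) * (‖x‖ + 1) := by
    have a1 : δ n * (K + 1) * (‖z‖ + 1) ≤ δ n * (K + 1) * (‖x‖ + ‖x - z‖ + 1) := by gcongr
    have a2 : δ n * (K + 1) * ‖x - z‖ ≤ 1 / 2 * ‖x - z‖ := by gcongr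
    linarith
  have hd3 : ‖x - z‖ < min ω (ρ / 4) := by
    refine hd2.trans_lt (lt_of_le_of_lt ?_ h5)
    have : 2 * (δ n * (K + 1)) * (‖x‖ + 1) ≤ 2 * (δ n * (K + 1)) * (2 * ρ + 1) := by
      gcongr; linarith
    linarith
  rw [lt_min_iff] at hd3
  have hxz : ‖x‖ ≤ ‖z‖ + ‖x - z‖ := by
    have := norm_add_le z (x - z)
    rwa [add_sub_cancel] at this
  have memQ : ∀ y : Vec (m + 1), ρ / 4 ≤ ‖y‖ → ‖y‖ ≤ 2 * ρ → y ∈ Q := fun y a b =>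
    ⟨by simpa using b, by simpa using a⟩
  have := huc z (memQ z (by linarith) (by linarith)) x (memQ x (by linarith) (by linarith)) (by
    rw [dist_comm, dist_eq_norm]; exact hd3.1)
  rw [Real.dist_eq] at this
  exact this.le

/-- The sets `{x | ψ n x + δ n v_j ∈ E_j}`. -/
def EE (δ : ℕ → ℝ) (ψ : ℕ → Vec (m + 1) ≃ₗ[ℝ] Vec (m + 1)) (v : Fin 3 → Vec (m + 1))
    (E : ℕ → Fin 3 → Set (Vec (m + 1))) (n : ℕ) (j : Fin 3) : Set (Vec (m + 1)) :=
  aff (ψ n) (δ n • v j) ⁻¹' E n j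

variable {r : ℕ → Fin 3 → ℝ} {rl : Fin 3 → ℝ} {E : ℕ → Fin 3 → Set (Vec (m + 1))} {C : ℝ}

lemma ff_EE (v : Fin 3 → Vec (m + 1)) (n : ℕ) (j : Fin 3) (x : Vec (m + 1)) :
    ff (r n) (EE δ ψ v E n) j x =
      ff (r n) (E n) j (aff (ψ n) (δ n • v j) x) + pb m (ψ n) (δ n • v j) (r n j) x := by
  simp only [ff, pb, EE, ind_pre]; ring

/-- First order effect of the perturbation on angular averages. -/
lemma Setup.moved (S : Setup m r rl E δ C) (P : Pert m δ ψ A) (v : Fin 3 → Vec (m + 1)) (j : Fin 3)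
    {h : Sph m → ℝ} (hc : Continuous h) {L : ℝ}
    (hL : Tendsto (fun n => (∫ x, ff (r n) (E n) j x * h (dir x)) / δ n) atTop (𝓝 L)) :
    Tendsto (fun n => (∫ x, ff (r n) (EE δ ψ v E n) j x * h (dir x)) / δ n) atTop
      (𝓝 (L - ∫ θ, rl j ^ m * uu A (v j) (rl j) θ * h θ ∂(sig m))) := by
  obtain ⟨M, hM⟩ : ∃ M, ∀ θ, |h θ| ≤ M := by
    obtain ⟨M, hM⟩ := isCompact_univ.exists_bound_of_continuousOn hc.continuousOn
    exact ⟨M, fun θ => hM θ (mem_univ _)⟩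
  have hM0 : 0 ≤ M := (abs_nonneg _).trans (hM (dir 0))
  have hmd : Measurable fun x : Vec (m + 1) => h (dir x) := hc.measurable.comp (measurable_dir m)
  have hmi : ∀ n, Measurable fun x : Vec (m + 1) => h (dir (affInv (ψ n) (δ n • v j) x)) := fun n =>
    hmd.comp (affInv_cont _ _).measurable
  have hi : ∀ (f : Vec (m + 1) → ℝ), Nice f → Integrable fun x => f x * h (dir x) := fun f hf =>
    hf.int.mul_bdd (c := M) hmd.aestronglyMeasurable (ae_of_all _ fun x => hM _)
  have hi' : ∀ (f : Vec (m + 1) → ℝ) n, Nice f →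
      Integrable fun x => f x * h (dir (affInv (ψ n) (δ n • v j) x)) := fun f n hf =>
    hf.int.mul_bdd (c := M) (hmi n).aestronglyMeasurable (ae_of_all _ fun x => hM _)
  -- the change of variables
  have hcv : ∀ n, ∫ x, ff (r n) (E n) j (aff (ψ n) (δ n • v j) x) * h (dir x) =
      ∫ y, ff (r n) (E n) j y * h (dir (affInv (ψ n) (δ n • v j) y)) := fun n => by
    rw [← (aff_mp (P.mp n) (δ n • v j)).integral_comp (aff_emb _ _)
      (fun y => ff (r n) (E n) j y * h (dir (affInv (ψ n) (δ n • v j) y)))]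
    simp only [affInv_aff]
  have hci : ∀ n, Integrable fun x => ff (r n) (E n) j (aff (ψ n) (δ n • v j) x) * h (dir x) := fun n => by
    have := (aff_mp (P.mp n) (δ n • v j)).integrable_comp_of_integrable (hi' _ n (S.nf n j))
    refine this.congr (ae_of_all _ fun x => ?_)
    simp only [Function.comp, affInv_aff]
  have hdiff : Tendsto (fun n => (∫ y, ff (r n) (E n) j y *
      (h (dir (affInv (ψ n) (δ n • v j) y)) - h (dir y))) / δ n) atTop (𝓝 0) := by
    rw [Metric.tendsto_nhds]
    intro ε hε
    have hCn := S.C_nonneg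
    have hη : 0 < ε / 4 / (C + 1) := by positivity
    have hfar := (S.far j).eventually (gt_mem_nhds (show 0 < ε / 4 / (2 * M + 1) by positivity))
    filter_upwards [P.move (v j) (S.tri.pos j) (S.lim j) hc hη, hfar] with n h1 h2
    have hδ := P.dpos n
    rw [div_lt_iff₀ hδ] at h2
    rw [dist_zero_right, norm_div, Real.norm_eq_abs (δ n), abs_of_pos hδ, div_lt_iff₀ hδ]
    have hb : ∀ y, ‖ff (r n) (E n) j y * (h (dir (affInv (ψ n) (δ n • v j) y)) - h (dir y))‖ ≤
        (ε / 4 / (C + 1)) * |gg (r n) (E n) (√(δ n)) j y| +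
          2 * M * |ff (r n) (E n) j y - gg (r n) (E n) (√(δ n)) j y| := fun y => by
      rw [Real.norm_eq_abs, abs_mul]
      by_cases hy : |‖y‖ - r n j| ≤ √(δ n)
      · have e : gg (r n) (E n) (√(δ n)) j y = ff (r n) (E n) j y := by rw [gg, if_pos hy]
        rw [e, sub_self, abs_zero, mul_zero, add_zero, mul_comm]
        gcongr
        exact h1 y hy
      · have e : gg (r n) (E n) (√(δ n)) j y = 0 := by rw [gg, if_neg hy]
        rw [e, sub_zero, abs_zero, mul_zero, zero_add, mul_comm]
        gcongr
        refine (abs_sub _ _).trans ?_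
        linarith [hM (dir (affInv (ψ n) (δ n • v j) y)), hM (dir y)]
    have j1 : Integrable fun y => (ε / 4 / (C + 1)) * |gg (r n) (E n) (√(δ n)) j y| :=
      (S.ng n j).abs.int.const_mul _
    have j2 : Integrable fun y => 2 * M * |ff (r n) (E n) j y - gg (r n) (E n) (√(δ n)) j y| :=
      (S.nfg n j).abs.int.const_mul _
    refine (norm_integral_le_of_norm_le (j1.add j2) (ae_of_all _ hb)).trans_lt ?_
    have e := integral_add j1 j2
    rw [integral_const_mul, integral_const_mul] at e
    refine e.le.trans_lt ?_
    have b1 : (ε / 4 / (C + 1)) * ∫ y, |gg (r n) (E n) (√(δ n)) j y| ≤ ε / 4 * δ n := by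
      calc _ ≤ (ε / 4 / (C + 1)) * (C * δ n) := by gcongr; exact S.closeg n j
        _ ≤ (ε / 4 / (C + 1)) * ((C + 1) * δ n) := by gcongr; linarith
        _ = _ := by field_simp
    have b2 : 2 * M * ∫ y, |ff (r n) (E n) j y - gg (r n) (E n) (√(δ n)) j y| ≤ ε / 4 * δ n := by
      calc _ ≤ 2 * M * (ε / 4 / (2 * M + 1) * δ n) := by gcongr
        _ ≤ (2 * M + 1) * (ε / 4 / (2 * M + 1) * δ n) := by gcongr; linarith
        _ = _ := by field_simp
    have : 0 < ε * δ n := by positivity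
    linarith
  have hsum := (hL.add hdiff).add (P.test (v j) (S.tri.pos j) (S.lim j) hc)
  rw [add_zero, ← sub_eq_add_neg] at hsum
  refine hsum.congr fun n => ?_
  rw [← add_div, ← add_div]
  congr 1
  have e1 : (∫ x, ff (r n) (EE δ ψ v E n) j x * h (dir x)) =
      (∫ x, ff (r n) (E n) j (aff (ψ n) (δ n • v j) x) * h (dir x)) +
        ∫ x, pb m (ψ n) (δ n • v j) (r n j) x * h (dir x) := by
    rw [← integral_add (hci n) (hi _ (nice_pb (P.mp n) _ _))]
    refine integral_congr_ae (ae_of_all _ fun x => ?_)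
    simp only [ff_EE]; ring
  rw [e1, hcv]
  congr 1
  rw [← eq_sub_iff_add_eq', ← integral_sub (hi' _ n (S.nf n j)) (hi _ (S.nf n j))]
  refine integral_congr_ae (ae_of_all _ fun x => ?_)
  simp only; ring

lemma Tfun_aff {ψ : Vec (m + 1) ≃ₗ[ℝ] Vec (m + 1)} (h : MeasurePreserving ψ volume volume)
    {w : Fin 3 → Vec (m + 1)} (hw : w 0 + w 1 + w 2 = 0) (E : Fin 3 → Set (Vec (m + 1))) :
    Tfun (fun j => aff ψ (w j) ⁻¹' E j) = Tfun E := by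
  have hmp := (aff_mp h (w 0)).prod (aff_mp h (w 1))
  have hemb : MeasurableEmbedding (Prod.map (aff ψ (w 0)) (aff ψ (w 1))) :=
    (aff_emb ψ (w 0)).prodMap (aff_emb ψ (w 1))
  have hmp' : MeasurePreserving (Prod.map (aff ψ (w 0)) (aff ψ (w 1))) volume volume := hmp
  unfold Tfun
  refine Eq.trans ?_ (hmp'.integral_comp hemb
    (fun p => ind (E 0) p.1 * ind (E 1) p.2 * ind (E 2) (-p.1 - p.2)))
  refine integral_congr_ae (ae_of_all _ fun p => ?_)
  have e : aff ψ (w 2) (-p.1 - p.2) = -aff ψ (w 0) p.1 - aff ψ (w 1) p.2 := by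
    simp only [aff, map_sub, map_neg]
    rw [eq_neg_of_add_eq_zero_right hw]; abel
  simp only [ind_pre, Prod.map_fst, Prod.map_snd, e]

lemma Setup.moved_close (S : Setup m r rl E δ C) (P : Pert m δ ψ A) (v : Fin 3 → Vec (m + 1)) :
    ∃ C' : ℝ, ∀ᶠ n in atTop, ∀ j, ∫ x, |ff (r n) (EE δ ψ v E n) j x| ≤ C' * δ n := by
  choose C1 hC1 using fun j => P.l1 (v j) (S.tri.pos j) (S.lim j)
  refine ⟨C + ∑ j, |C1 j|, ?_⟩
  filter_upwards [eventually_all.2 hC1] with n hn j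
  have hδ := P.dpos n
  have hmp := aff_mp (P.mp n) (δ n • v j)
  have e1 : ∫ x, |ff (r n) (E n) j (aff (ψ n) (δ n • v j) x)| = ∫ x, |ff (r n) (E n) j x| :=
    hmp.integral_comp (aff_emb _ _) (fun y => |ff (r n) (E n) j y|)
  have i1 : Integrable fun x => |ff (r n) (E n) j (aff (ψ n) (δ n • v j) x)| :=
    hmp.integrable_comp_of_integrable (S.nf n j).abs.int
  have i2 := (nice_pb (P.mp n) (δ n • v j) (r n j)).abs.int
  calc _ ≤ ∫ x, (|ff (r n) (E n) j (aff (ψ n) (δ n • v j) x)| + |pb m (ψ n) (δ n • v j) (r n j) x|) := by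
        refine integral_mono_of_nonneg (ae_of_all _ fun x => abs_nonneg _) (i1.add i2)
          (ae_of_all _ fun x => ?_)
        simp only [ff_EE]
        exact abs_add_le _ _
    _ ≤ C * δ n + C1 j * δ n := by
        rw [integral_add i1 i2, e1]
        exact add_le_add (S.close n j) (hn j)
    _ ≤ _ := by
        rw [← add_mul]
        gcongr
        exact (le_abs_self _).trans (Finset.single_le_sum (f := fun j => |C1 j|)
          (fun i _ => abs_nonneg _) (Finset.mem_univ j))

/-- The perturbed sets again satisfy the standing assumptions, after dropping finitely many
indices. -/
lemma Setup.moved_setup (S : Setup m r rl E δ C) (P : Pert m δ ψ A) {v : Fin 3 → Vec (m + 1)}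
    (hv : v 0 + v 1 + v 2 = 0) :
    ∃ (N : ℕ) (C' : ℝ), Setup m (fun n => r (n + N)) rl (fun n => EE δ ψ v E (n + N))
      (fun n => δ (n + N)) C' := by
  obtain ⟨C', hC'⟩ := S.moved_close P v
  obtain ⟨N, hN⟩ := eventually_atTop.1 hC'
  have hsh : Tendsto (fun n => n + N) atTop atTop := tendsto_add_atTop_nat N
  obtain ⟨ε, hε, hd⟩ := S.defect
  refine ⟨N, C', S.tri, fun j => (S.lim j).comp hsh, fun n j => S.pos _ j, fun n j => ?_, fun n j => ?_,
    fun n => S.dpos _, S.dlim.comp hsh, fun n j => hN _ (by omega) j, fun n => ε (n + N),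
    hε.comp hsh, fun n => ?_⟩
  · exact (aff_cont _ _).measurable (S.meas _ j)
  · rw [← S.vol (n + N) j]
    exact meas_pre (aff_mp (P.mp _) _) (S.meas _ j)
  · have : Tfun (EE δ ψ v E (n + N)) = Tfun (E (n + N)) :=
      Tfun_aff (P.mp _) (w := fun j => δ (n + N) • v j)
        (by rw [← smul_add, ← smul_add, hv, smul_zero]) _
    rw [this]
    exact hd _
end

/-! ### Removing the infinitesimal symmetries -/

lemma inner_TW {m : ℕ} {r : Fin 3 → ℝ} (hr : Tri r) (G : Lp ℝ 2 (nu m r)) (n : PM m) :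
    inner ℝ G (TW r n) = ∑ j, al m r j * ∫ θ, G (j, θ) * tw r n (j, θ) ∂(sig m) := by
  have hGi := (nu_integrable hr).1 (lp2_integrable G)
  have h1 : inner ℝ G (TW r n) = ∫ p, G p * tw r n p ∂(nu m r) := by
    rw [L2.inner_def]
    refine integral_congr_ae ?_
    filter_upwards [TW_coe r n] with p hp
    rw [hp]; simp [mul_comm]
  rw [h1, nu_integral hr]
  intro k
  have hc : Continuous fun θ : Sph m => tw r n (k, θ) :=
    (tw_cont r n).comp (Continuous.prodMk_right k)
  obtain ⟨K, hK⟩ := isCompact_univ.exists_bound_of_continuousOn hc.continuousOn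
  exact (hGi k).mul_bdd (c := K) hc.aestronglyMeasurable (ae_of_all _ fun θ => hK θ (mem_univ _))

lemma inner_TW_TW {m : ℕ} {r : Fin 3 → ℝ} (hr : Tri r) (n' n : PM m) :
    inner ℝ (TW r n') (TW r n) =
      ∑ j, al m r j * ∫ θ, tw r n' (j, θ) * tw r n (j, θ) ∂(sig m) := by
  rw [inner_TW hr]
  refine Finset.sum_congr rfl fun j _ => ?_
  congr 1
  refine integral_congr_ae ?_
  filter_upwards [(nu_ae hr).1 (TW_coe r n') j] with θ hθ
  rw [hθ]

/-- Splitting of an infinitesimal symmetry into a volume preserving one and a dilation of each ball: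
the multiple of the identity contained in the linear map acts like a dilation. -/
lemma trace_split {m : ℕ} (r : Fin 3 → ℝ) (n : PM m) :
    ∃ (k : Fin 3 → ℝ) (n' : PM m), n'.1 = 0 ∧ LinearMap.trace ℝ _ n'.2.2 = 0 ∧
      ∀ p, tw r n p = tw r n' p + tw r ((k, 0) : PM m) p := by
  set τ : ℝ := LinearMap.trace ℝ _ n.2.2 / (m + 1) with hτ
  refine ⟨fun j => n.1 j + r j ^ (m + 1) * τ, (0, n.2.1, n.2.2 - τ • LinearMap.id), rfl, ?_, ?_⟩
  · have : (m + 1 : ℝ) ≠ 0 := by positivity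
    simp only [map_sub, map_smul, LinearMap.trace_id, finrank_euclideanSpace, Fintype.card_fin,
      smul_eq_mul]
    rw [hτ]; push_cast
    field_simp; ring
  · rintro ⟨j, θ⟩
    have e : vv ((0, n.2.1, n.2.2 - τ • LinearMap.id) : PM m) j = vv n j := rfl
    have e' : vv (((fun j => n.1 j + r j ^ (m + 1) * τ), 0) : PM m) j = 0 := by
      fin_cases j <;> simp [vv]
    have hθ : ‖(θ : Vec (m + 1))‖ = 1 := by simp
    simp only [tw, e, e', LinearMap.sub_apply, LinearMap.smul_apply, LinearMap.id_apply,
      inner_sub_left, inner_smul_left, real_inner_self_eq_norm_sq, hθ, Prod.snd_zero,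
      LinearMap.zero_apply, inner_zero_left, Pi.zero_apply]
    simp
    ring

lemma tw_zero_fst {m : ℕ} (r : Fin 3 → ℝ) {n : PM m} (h : n.1 = 0) (j : Fin 3) (θ : Sph m) :
    tw r n (j, θ) = r j ^ m * uu n.2.2 (vv n j) (r j) θ := by
  simp only [tw, uu, h, Pi.zero_apply]; ring

lemma tw_const {m : ℕ} (r : Fin 3 → ℝ) (k : Fin 3 → ℝ) (j : Fin 3) (θ : Sph m) :
    tw r ((k, 0) : PM m) (j, θ) = k j := by
  have e' : vv ((k, 0) : PM m) j = 0 := by fin_cases j <;> simp [vv]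
  simp [tw, e']

/-- No sequence of triples with vanishing relative deficit can stay at distance `δ n` from the orbit
of balls: the weak limit of the rescaled boundary densities, after removal of its component along
the infinitesimal symmetries, satisfies the hypotheses of `coercive`, hence is zero. -/
theorem Setup.contra {m : ℕ} {r : ℕ → Fin 3 → ℝ} {rl : Fin 3 → ℝ}
    {E : ℕ → Fin 3 → Set (Vec (m + 1))} {δ : ℕ → ℝ} {C : ℝ} (S₀ : Setup m r rl E δ C)
    (far₀ : ∀ n (ψ : Vec (m + 1) ≃ₗ[ℝ] Vec (m + 1)) (v : Fin 3 → Vec (m + 1)),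
      v 0 + v 1 + v 2 = 0 → MeasurePreserving ψ volume volume →
      ∃ j, δ n ≤ ∫ x, |ff (r n) (fun j => aff ψ (v j) ⁻¹' E n j) j x|) : False := by
  obtain ⟨φ, hφ, G, -, hG, -⟩ := S₀.weak_limit
  have S := S₀.comp hφ
  have far : ∀ n (ψ : Vec (m + 1) ≃ₗ[ℝ] Vec (m + 1)) (v : Fin 3 → Vec (m + 1)),
      v 0 + v 1 + v 2 = 0 → MeasurePreserving ψ volume volume →
      ∃ j, (δ ∘ φ) n ≤ ∫ x, |ff ((r ∘ φ) n) (fun j => aff ψ (v j) ⁻¹' (E ∘ φ) n j) j x| :=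
    fun n => far₀ (φ n)
  have hG' : ∀ (j : Fin 3) (h : Sph m → ℝ), Continuous h →
      Tendsto (fun n => (∫ x, ff ((r ∘ φ) n) ((E ∘ φ) n) j x * h (dir x)) / (δ ∘ φ) n) atTop
        (𝓝 (∫ θ, G (j, θ) * h θ ∂(sig m))) := fun j h hc => by
    obtain ⟨K, hK⟩ := isCompact_univ.exists_bound_of_continuousOn hc.continuousOn
    exact hG j h hc.measurable ⟨K, fun θ => hK θ (mem_univ _)⟩
  clear hG far₀
  generalize r ∘ φ = r at *
  generalize E ∘ φ = E at *
  generalize δ ∘ φ = δ at *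
  have hr := S.tri
  obtain ⟨_, ⟨n₀, rfl⟩, z, hz, hGz⟩ :=
    (LinearMap.range (TW (m := m) rl)).exists_add_mem_mem_orthogonal G
  have hz' : ∀ n, inner ℝ z (TW rl n) = 0 := fun n =>
    (Submodule.mem_orthogonal' _ _).1 hz _ ⟨n, rfl⟩
  obtain ⟨k, n₁, hn1, htr, hsplit⟩ := trace_split rl n₀
  have hTW : TW rl n₀ = TW rl n₁ + TW rl ((k, 0) : PM m) := by
    rw [← map_add]
    exact MemLp.toLp_congr (YY_memLp (tw_cont rl _)) (YY_memLp (tw_cont rl _))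
      (ae_of_all _ fun p => by rw [tw_add]; exact hsplit p)
  obtain ⟨ψ, hmp, herr⟩ := unimod (Nat.le_add_left 1 m) n₁.2.2 htr S.dpos S.dlim
  have P : Pert m δ ψ n₁.2.2 := ⟨S.dpos, S.dlim, hmp, herr⟩
  obtain ⟨N, C', S'⟩ := S.moved_setup P (vv_sum n₁)
  obtain ⟨φ', hφ', G', hB, hGl, h0⟩ := S'.weak_limit
  have hsub : Tendsto (fun n => φ' n + N) atTop atTop :=
    (tendsto_add_atTop_nat N).comp hφ'.tendsto_atTop
  -- The new weak limit is the old one minus the infinitesimal symmetry.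
  have key : ∀ (j : Fin 3) (h : Sph m → ℝ), Continuous h →
      ∫ θ, G' (j, θ) * h θ ∂(sig m) =
        (∫ θ, G (j, θ) * h θ ∂(sig m)) - ∫ θ, tw rl n₁ (j, θ) * h θ ∂(sig m) := fun j h hc => by
    obtain ⟨K, hK⟩ := isCompact_univ.exists_bound_of_continuousOn hc.continuousOn
    have l1 := hGl j h hc.measurable ⟨K, fun θ => hK θ (mem_univ _)⟩
    have l2 := (S.moved P (vv n₁) j hc (hG' j h hc)).comp hsub
    have := tendsto_nhds_unique l1 l2
    simp only [tw_zero_fst rl hn1]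
    exact this
  have hmean : ∀ j, ∫ θ, G' (j, θ) ∂(sig m) = 0 := fun j => by
    have l1 := hGl j (fun _ => 1) measurable_const ⟨1, fun θ => by simp⟩
    simp only [mul_one] at l1
    refine tendsto_nhds_unique l1 ?_
    have : ∀ n, (∫ x, ff (r (φ' n + N)) (EE δ ψ (vv n₁) E (φ' n + N)) j x) = 0 := fun n =>
      integral_ff (S'.meas _ j) (S'.vol _ j)
    simp only [this, zero_div]
    exact tendsto_const_nhds
  have hinner : ∀ n, inner ℝ G' (TW rl n) = inner ℝ (TW rl ((k, 0) : PM m)) (TW rl n) := fun n => by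
    have e1 : inner ℝ G' (TW rl n) = inner ℝ G (TW rl n) - inner ℝ (TW rl n₁) (TW rl n) := by
      rw [inner_TW hr, inner_TW hr, inner_TW_TW hr, ← Finset.sum_sub_distrib]
      refine Finset.sum_congr rfl fun j _ => ?_
      rw [key j (fun θ => tw rl n (j, θ)) ((tw_cont rl n).comp (Continuous.prodMk_right j)),
        mul_sub]
    rw [e1, hGz, inner_add_left, hz', hTW, inner_add_left]; ring
  have hk : TW rl ((k, 0) : PM m) = 0 := by
    rw [← inner_self_eq_zero (𝕜 := ℝ), ← hinner, inner_TW hr]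
    refine Finset.sum_eq_zero fun j _ => ?_
    simp only [tw_const, integral_mul_const, hmean, zero_mul, mul_zero]
  have hG0 : G' = 0 := coercive hr (fun n => by rw [hinner, hk, inner_zero_left]) hB
  have hev := eventually_all.2 fun j => (h0 hG0 j).eventually (gt_mem_nhds one_pos)
  obtain ⟨n, hn⟩ := hev.exists
  obtain ⟨j, hj⟩ := far (φ' n + N) (ψ (φ' n + N)) (fun j => δ (φ' n + N) • vv n₁ j)
    (by rw [← smul_add, ← smul_add, vv_sum, smul_zero]) (hmp _)
  have := hn j
  rw [div_lt_one (S.dpos _)] at this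
  exact absurd hj (not_le.2 this)

/-! ### Normalisation of a triple -/

/-- `L¹` continuity of the trilinear form at a triple of balls. -/
lemma Tfun_sub_le {m : ℕ} {R : Fin 3 → ℝ} {E : Fin 3 → Set (Vec (m + 1))}
    (hE : ∀ j, MeasurableSet (E j)) (hv : ∀ j, volume (E j) = volume (Bl (m + 1) (R j)))
    {η M : ℝ} (hη : ∀ j, ∫ x, |ff R E j x| ≤ η) (hM : ∀ j, volume.real (Bl (m + 1) (R j)) ≤ M) :
    Tfun E ≤ Tfun (fun j => Bl (m + 1) (R j)) + 3 * (η * M) := by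
  have hE' : ∀ j, Nice (ind (E j)) := fun j =>
    nice_ind (hE j) (by rw [hv]; exact measure_closedBall_lt_top.ne)
  have hB : ∀ j, Nice (ind (Bl (m + 1) (R j))) := fun j => nice_Bl _ _
  have hf : ∀ j, Nice (ff R E j) := fun j => nice_ff (hE j) (hv j)
  have h0 : ∀ F : Fin 3 → Set (Vec (m + 1)), Tfun F = T3 (ind (F 0)) (ind (F 1)) (ind (F 2)) :=
    fun F => rfl
  have he : ∀ j, ind (E j) = fun x => ind (Bl (m + 1) (R j)) x + ff R E j x := fun j => by
    funext x; rw [ff]; ring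
  have iE : ∀ j, ∫ x, |ind (E j) x| ≤ M := fun j => by
    have : ∀ x, |ind (E j) x| = ind (E j) x := fun x => by
      rw [abs_of_nonneg]; unfold ind; exact indicator_nonneg (fun _ _ => zero_le_one) _
    simp only [this]
    rw [integral_ind (hE j), measureReal_def, hv]; exact hM j
  have iB : ∀ j, ∫ x, |ind (Bl (m + 1) (R j)) x| ≤ M := fun j => by
    have : ∀ x, |ind (Bl (m + 1) (R j)) x| = ind (Bl (m + 1) (R j)) x := fun x => by
      rw [abs_of_nonneg]; unfold ind; exact indicator_nonneg (fun _ _ => zero_le_one) _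
    simp only [this]
    rw [integral_ind measurableSet_closedBall]; exact hM j
  have s0 : T3 (ind (E 0)) (ind (E 1)) (ind (E 2)) =
      T3 (ind (Bl (m + 1) (R 0))) (ind (E 1)) (ind (E 2)) + T3 (ff R E 0) (ind (E 1)) (ind (E 2)) := by
    rw [← T3_add1 (hB 0) (hf 0) (hE' 1) (hE' 2), ← he 0]
  have s1 : T3 (ind (Bl (m + 1) (R 0))) (ind (E 1)) (ind (E 2)) =
      T3 (ind (Bl (m + 1) (R 0))) (ind (Bl (m + 1) (R 1))) (ind (E 2)) +
        T3 (ind (Bl (m + 1) (R 0))) (ff R E 1) (ind (E 2)) := by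
    rw [← T3_add2 (hB 1) (hf 1) (hB 0) (hE' 2), ← he 1]
  have s2 : T3 (ind (Bl (m + 1) (R 0))) (ind (Bl (m + 1) (R 1))) (ind (E 2)) =
      T3 (ind (Bl (m + 1) (R 0))) (ind (Bl (m + 1) (R 1))) (ind (Bl (m + 1) (R 2))) +
        T3 (ind (Bl (m + 1) (R 0))) (ind (Bl (m + 1) (R 1))) (ff R E 2) := by
    rw [← T3_add3 (hB 2) (hf 2) (hB 0) (hB 1), ← he 2]
  have b0 := le_of_abs_le (T3_abs_le' (hf 0) (hE' 1) (hE' 2) (hη 0) (iE 1))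
  have b1 := le_of_abs_le (T3_abs_le' (hf 1) (hB 0) (hE' 2) (hη 1) (iB 0))
  have b2 := le_of_abs_le (T3_abs_le' (hf 2) (hB 0) (hB 1) (hη 2) (iB 0))
  rw [T3_swap12] at b1
  rw [T3_swap12, T3_swap23] at b2
  rw [h0, h0, s0, s1, s2]
  linarith

section
variable {m : ℕ}

/-- Measure preserving change of variables in the symmetric difference. -/
lemma symm_real {ψ : Vec (m + 1) ≃ₗ[ℝ] Vec (m + 1)} (h : MeasurePreserving ψ volume volume)
    (w : Vec (m + 1)) {E : Set (Vec (m + 1))} (hE : MeasurableSet E) (R : ℝ) :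
    (volume (symmDiff E ((fun y => ψ y + w) '' Bl (m + 1) R))).toReal =
      ∫ x, |ind (aff ψ w ⁻¹' E) x - ind (Bl (m + 1) R) x| := by
  rw [integral_abs_ind_sub ((aff_cont ψ w).measurable hE) measurableSet_closedBall, measureReal_def]
  have h1 : MeasurableSet (aff ψ w '' Bl (m + 1) R) :=
    (aff_emb ψ w).measurableSet_image.2 measurableSet_closedBall
  have h2 : aff ψ w ⁻¹' (symmDiff E (aff ψ w '' Bl (m + 1) R)) =
      symmDiff (aff ψ w ⁻¹' E) (Bl (m + 1) R) := by
    rw [Set.preimage_symmDiff, Set.preimage_image_eq _ (aff_emb ψ w).injective]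
  rw [← h2, meas_pre (aff_mp h w) (hE.symmDiff h1)]
  rfl

/-- Distance of the triple `E`, transported by `ψ` and `v`, to the triple of balls of radii `R`. -/
def NN3 (R : Fin 3 → ℝ) (E : Fin 3 → Set (Vec (m + 1))) (ψ : Vec (m + 1) ≃ₗ[ℝ] Vec (m + 1))
    (v : Fin 3 → Vec (m + 1)) (j : Fin 3) : ℝ :=
  ∫ x, |ff R (fun j => aff ψ (v j) ⁻¹' E j) j x|

lemma tripleDist_eq (R : Fin 3 → ℝ) {E : Fin 3 → Set (Vec (m + 1))}
    (hE : ∀ j, MeasurableSet (E j)) :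
    tripleDist E (fun j => Bl (m + 1) (R j)) =
      sInf {s : ℝ | ∃ (ψ : Vec (m + 1) ≃ₗ[ℝ] Vec (m + 1)) (v : Fin 3 → Vec (m + 1)),
        v 0 + v 1 + v 2 = 0 ∧ MeasurePreserving ψ volume volume ∧
        s = max (NN3 R E ψ v 0) (max (NN3 R E ψ v 1) (NN3 R E ψ v 2))} := by
  unfold tripleDist
  congr 1
  ext s
  refine exists_congr fun ψ => exists_congr fun v => and_congr_right fun _ =>
    and_congr_right fun h => ?_
  rw [symm_real h _ (hE 0), symm_real h _ (hE 1), symm_real h _ (hE 2)]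
  rfl

lemma NN3_nonneg (R : Fin 3 → ℝ) (E : Fin 3 → Set (Vec (m + 1)))
    (ψ : Vec (m + 1) ≃ₗ[ℝ] Vec (m + 1)) (v : Fin 3 → Vec (m + 1)) (j : Fin 3) : 0 ≤ NN3 R E ψ v j :=
  integral_nonneg fun _ => abs_nonneg _

lemma tripleDist_nonneg (R : Fin 3 → ℝ) {E : Fin 3 → Set (Vec (m + 1))}
    (hE : ∀ j, MeasurableSet (E j)) : 0 ≤ tripleDist E (fun j => Bl (m + 1) (R j)) := by
  rw [tripleDist_eq R hE]
  refine Real.sInf_nonneg ?_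
  rintro s ⟨ψ, v, -, -, rfl⟩
  exact (NN3_nonneg R E ψ v 0).trans (le_max_left _ _)

lemma tripleDist_le (R : Fin 3 → ℝ) {E : Fin 3 → Set (Vec (m + 1))}
    (hE : ∀ j, MeasurableSet (E j)) {ψ : Vec (m + 1) ≃ₗ[ℝ] Vec (m + 1)} {v : Fin 3 → Vec (m + 1)}
    (hv : v 0 + v 1 + v 2 = 0) (hψ : MeasurePreserving ψ volume volume) :
    ∃ j, tripleDist E (fun j => Bl (m + 1) (R j)) ≤ NN3 R E ψ v j := by
  have h : tripleDist E (fun j => Bl (m + 1) (R j)) ≤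
      max (NN3 R E ψ v 0) (max (NN3 R E ψ v 1) (NN3 R E ψ v 2)) := by
    rw [tripleDist_eq R hE]
    refine csInf_le ⟨0, ?_⟩ ⟨ψ, v, hv, hψ, rfl⟩
    rintro s ⟨ψ, v, -, -, rfl⟩
    exact (NN3_nonneg R E ψ v 0).trans (le_max_left _ _)
  rcases le_max_iff.1 h with h | h
  · exact ⟨0, h⟩
  · rcases le_max_iff.1 h with h | h
    exacts [⟨1, h⟩, ⟨2, h⟩]

lemma exists_lt_tripleDist (R : Fin 3 → ℝ) {E : Fin 3 → Set (Vec (m + 1))}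
    (hE : ∀ j, MeasurableSet (E j)) {η : ℝ}
    (hη : tripleDist E (fun j => Bl (m + 1) (R j)) < η) :
    ∃ (ψ : Vec (m + 1) ≃ₗ[ℝ] Vec (m + 1)) (v : Fin 3 → Vec (m + 1)), v 0 + v 1 + v 2 = 0 ∧
      MeasurePreserving ψ volume volume ∧ ∀ j, NN3 R E ψ v j ≤ η := by
  rw [tripleDist_eq R hE] at hη
  obtain ⟨s, hmem, hs⟩ := exists_lt_of_csInf_lt (by
    refine ⟨_, LinearEquiv.refl ℝ _, 0, ?_, MeasurePreserving.id volume, rfl⟩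
    simp) hη
  obtain ⟨ψ, v, hv, hψ, rfl⟩ := hmem
  rw [max_lt_iff, max_lt_iff] at hs
  refine ⟨ψ, v, hv, hψ, fun j => ?_⟩
  fin_cases j
  exacts [hs.1.le, hs.2.1.le, hs.2.2.le]

/-- Dilation of a triple by `l⁻¹`. -/
def dil (l : ℝ) (E : Fin 3 → Set (Vec (m + 1))) (j : Fin 3) : Set (Vec (m + 1)) :=
  (fun x => l • x) ⁻¹' E j

lemma dil_Bl {l : ℝ} (hl : 0 < l) (R : Fin 3 → ℝ) (j : Fin 3) :
    dil l (fun j => Bl (m + 1) (R j)) j = Bl (m + 1) (R j / l) := by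
  ext x
  simp only [dil, Set.mem_preimage, mem_closedBall, dist_zero_right, norm_smul, Real.norm_eq_abs,
    abs_of_pos hl]
  rw [le_div_iff₀ hl, mul_comm]

lemma ff_dil {l : ℝ} (hl : 0 < l) (R : Fin 3 → ℝ) (E : Fin 3 → Set (Vec (m + 1))) (j : Fin 3)
    (x : Vec (m + 1)) : ff (fun j => R j / l) (dil l E) j x = ff R E j (l • x) := by
  rw [ff, ff, ← dil_Bl hl, dil, dil, ind_pre, ind_pre]

lemma integral_ff_dil {l : ℝ} (hl : 0 < l) (R : Fin 3 → ℝ) (E : Fin 3 → Set (Vec (m + 1)))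
    (j : Fin 3) : ∫ x, |ff (fun j => R j / l) (dil l E) j x| =
      (∫ x, |ff R E j x|) / l ^ (m + 1) := by
  simp only [ff_dil hl]
  rw [Measure.integral_comp_smul volume (fun x => |ff R E j x|) l, finrank_euclideanSpace,
    Fintype.card_fin, abs_of_pos (by positivity), smul_eq_mul, div_eq_inv_mul]

lemma Tfun_dil {l : ℝ} (hl : 0 < l) (E : Fin 3 → Set (Vec (m + 1))) :
    Tfun (dil l E) = Tfun E / (l ^ (m + 1)) ^ 2 := by
  have : (volume : Measure (Vec (m + 1) × Vec (m + 1))).IsAddHaarMeasure := by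
    rw [Measure.volume_eq_prod]; infer_instance
  have h := Measure.integral_comp_smul (volume : Measure (Vec (m + 1) × Vec (m + 1)))
    (fun p => ind (E 0) p.1 * ind (E 1) p.2 * ind (E 2) (-p.1 - p.2)) l
  rw [Module.finrank_prod, finrank_euclideanSpace, Fintype.card_fin, abs_of_pos (by positivity),
    smul_eq_mul] at h
  unfold Tfun
  rw [div_eq_inv_mul, ← pow_mul, mul_two, ← h]
  refine integral_congr_ae (ae_of_all _ fun p => ?_)
  simp only [dil, ind_pre, Prod.smul_fst, Prod.smul_snd, smul_sub, smul_neg]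

lemma NN3_dil {l : ℝ} (hl : 0 < l) (R : Fin 3 → ℝ) (E : Fin 3 → Set (Vec (m + 1)))
    (ψ : Vec (m + 1) ≃ₗ[ℝ] Vec (m + 1)) (v : Fin 3 → Vec (m + 1)) (j : Fin 3) :
    NN3 (fun j => R j / l) (dil l E) ψ v j = NN3 R E ψ (fun j => l • v j) j / l ^ (m + 1) := by
  unfold NN3
  rw [← integral_ff_dil hl]
  have : (fun j => aff ψ (v j) ⁻¹' dil l E j) = dil l (fun j => aff ψ (l • v j) ⁻¹' E j) := by
    funext j
    ext x
    simp only [dil, aff, Set.mem_preimage, smul_add, map_smul]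
  rw [this]

lemma NN3_aff (R : Fin 3 → ℝ) (E : Fin 3 → Set (Vec (m + 1)))
    (ψ ψ' : Vec (m + 1) ≃ₗ[ℝ] Vec (m + 1)) (v v' : Fin 3 → Vec (m + 1)) (j : Fin 3) :
    NN3 R (fun j => aff ψ (v j) ⁻¹' E j) ψ' v' j =
      NN3 R E (ψ'.trans ψ) (fun j => ψ (v' j) + v j) j := by
  unfold NN3
  have : (fun j => aff ψ' (v' j) ⁻¹' (aff ψ (v j) ⁻¹' E j)) =
      fun j => aff (ψ'.trans ψ) (ψ (v' j) + v j) ⁻¹' E j := by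
    funext j
    ext x
    simp only [aff, Set.mem_preimage, map_add, LinearEquiv.trans_apply, add_assoc]
  rw [this]

lemma volume_dil {l : ℝ} (hl : 0 < l) {E : Fin 3 → Set (Vec (m + 1))} {R : Fin 3 → ℝ} {j : Fin 3}
    (hv : volume (E j) = volume (Bl (m + 1) (R j))) :
    volume (dil l E j) = volume (Bl (m + 1) (R j / l)) := by
  rw [← dil_Bl hl, dil, dil, Measure.addHaar_preimage_smul _ hl.ne',
    Measure.addHaar_preimage_smul _ hl.ne', hv]

/-- A triple at positive distance `D` from the orbit of the balls can be moved by a symmetry and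
dilated by `l⁻¹` so that it is within `2 D / l ^ d` of the balls themselves. -/
lemma normalize {R : Fin 3 → ℝ} {E : Fin 3 → Set (Vec (m + 1))}
    (hE : ∀ j, MeasurableSet (E j)) (hv : ∀ j, volume (E j) = volume (Bl (m + 1) (R j)))
    {l : ℝ} (hl : 0 < l) (hD : 0 < tripleDist E (fun j => Bl (m + 1) (R j))) :
    ∃ E' : Fin 3 → Set (Vec (m + 1)), (∀ j, MeasurableSet (E' j)) ∧
      (∀ j, volume (E' j) = volume (Bl (m + 1) (R j / l))) ∧
      (∀ j, ∫ x, |ff (fun j => R j / l) E' j x| ≤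
        2 * (tripleDist E (fun j => Bl (m + 1) (R j)) / l ^ (m + 1))) ∧
      Tfun (fun j => Bl (m + 1) (R j / l)) - Tfun E' =
        (Tfun (fun j => Bl (m + 1) (R j)) - Tfun E) / (l ^ (m + 1)) ^ 2 ∧
      ∀ (ψ : Vec (m + 1) ≃ₗ[ℝ] Vec (m + 1)) (v : Fin 3 → Vec (m + 1)),
        v 0 + v 1 + v 2 = 0 → MeasurePreserving ψ volume volume →
        ∃ j, tripleDist E (fun j => Bl (m + 1) (R j)) / l ^ (m + 1) ≤
          ∫ x, |ff (fun j => R j / l) (fun j => aff ψ (v j) ⁻¹' E' j) j x| := by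
  obtain ⟨ψ, v, hs, hψ, hN⟩ := exists_lt_tripleDist R hE (η := 2 * tripleDist E _)
    (by linarith)
  refine ⟨dil l (fun j => aff ψ (v j) ⁻¹' E j), fun j => ?_, fun j => ?_, fun j => ?_, ?_,
    fun ψ' v' hs' hψ' => ?_⟩
  · exact measurable_const_smul l ((aff_cont ψ (v j)).measurable (hE j))
  · refine volume_dil hl ?_
    rw [meas_pre (aff_mp hψ (v j)) (hE j), hv]
  · rw [integral_ff_dil hl, ← mul_div_assoc]
    gcongr
    exact hN j
  · have : (fun j => Bl (m + 1) (R j / l)) = dil l (fun j => Bl (m + 1) (R j)) := by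
      funext j; rw [dil_Bl hl]
    rw [this, Tfun_dil hl, Tfun_dil hl, Tfun_aff hψ hs, sub_div]
  · have hc : MeasurePreserving (ψ'.trans ψ) volume volume := hψ.comp hψ'
    obtain ⟨j, hj⟩ := tripleDist_le R hE (v := fun j => ψ (l • v' j) + v j) (ψ := ψ'.trans ψ)
      (by
        have e : ψ (l • v' 0) + v 0 + (ψ (l • v' 1) + v 1) + (ψ (l • v' 2) + v 2) =
            l • ψ (v' 0 + v' 1 + v' 2) + (v 0 + v 1 + v 2) := by
          simp only [map_add, map_smul, smul_add]; abel
        rw [e, hs', hs, map_zero, smul_zero, add_zero]) hc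
    refine ⟨j, ?_⟩
    have := NN3_dil hl R (fun j => aff ψ (v j) ⁻¹' E j) ψ' v' j
    rw [NN3_aff] at this
    refine le_trans ?_ this.ge
    gcongr
end

/-! ### The compactness argument -/

/-- Radius of the ball `E⋆`. -/
def starRad {m : ℕ} (E : Set (Vec (m + 1))) : ℝ :=
  ((volume E).toReal / (volume (closedBall (0 : Vec (m + 1)) 1)).toReal) ^
    ((1 : ℝ) / ((m + 1 : ℕ) : ℝ))

/-- Volume of the unit ball. -/
def om (m : ℕ) : ℝ := (volume (closedBall (0 : Vec (m + 1)) 1)).toReal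

lemma om_pos (m : ℕ) : 0 < om m :=
  ENNReal.toReal_pos (measure_closedBall_pos volume _ one_pos).ne' measure_closedBall_lt_top.ne

lemma starRad_nonneg {m : ℕ} (E : Set (Vec (m + 1))) : 0 ≤ starRad E := by
  unfold starRad; positivity

lemma starRad_pow {m : ℕ} (E : Set (Vec (m + 1))) : starRad E ^ (m + 1) = (volume E).toReal / om m := by
  unfold starRad
  rw [← Real.rpow_natCast, ← Real.rpow_mul (by positivity), one_div, inv_mul_cancel₀ (by positivity),
    Real.rpow_one]
  rfl

lemma volume_starRad {m : ℕ} {E : Set (Vec (m + 1))} (h : volume E ≠ ⊤) :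
    volume E = volume (Bl (m + 1) (starRad E)) := by
  have ho := om_pos m
  rw [Bl, Measure.addHaar_closedBall' _ _ (starRad_nonneg E), finrank_euclideanSpace, Fintype.card_fin,
    starRad_pow, ← ENNReal.ofReal_toReal (measure_closedBall_lt_top (μ := (volume : Measure (Vec (m + 1))))
      (x := 0) (r := 1)).ne, ← ENNReal.ofReal_mul (by positivity)]
  change _ = ENNReal.ofReal (_ / om m * om m)
  rw [div_mul_cancel₀ _ ho.ne', ENNReal.ofReal_toReal h]

lemma starRad_eq {m : ℕ} (E : Set (Vec (m + 1))) :
    starRad E = (volume E).toReal ^ ((1 : ℝ) / ((m + 1 : ℕ) : ℝ)) /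
      om m ^ ((1 : ℝ) / ((m + 1 : ℕ) : ℝ)) := by
  unfold starRad
  rw [Real.div_rpow ENNReal.toReal_nonneg ENNReal.toReal_nonneg]
  rfl

lemma admissible_div {ρ c : ℝ} (hc : 0 < c) {s : Fin 3 → ℝ} (h : RhoStrictlyAdmissible ρ s) :
    RhoStrictlyAdmissible ρ (fun j => s j / c) := by
  refine ⟨fun j => div_pos (h.1 j) hc, fun i j k hijk => ?_, fun i j => ?_⟩
  · rw [← add_div, ← mul_div_assoc]
    exact div_le_div_of_nonneg_right (h.2.1 i j k hijk) hc.le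
  · rw [← mul_div_assoc]
    exact div_le_div_of_nonneg_right (h.2.2 i j) hc.le

lemma triple_univ : ({0, 1, 2} : Set (Fin 3)) = univ ∧ ({0, 2, 1} : Set (Fin 3)) = univ ∧
    ({1, 2, 0} : Set (Fin 3)) = univ := by
  refine ⟨?_, ?_, ?_⟩ <;> ext i <;> fin_cases i <;> simp

/-- A triple violating the inequality is at positive distance from the orbit: at distance zero, `T(E)`
equals `T(E⋆)` by continuity of `T`, whatever the constant `c`. -/
lemma dist_pos {m : ℕ} {R : Fin 3 → ℝ} {E : Fin 3 → Set (Vec (m + 1))}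
    (hE : ∀ j, MeasurableSet (E j)) (hv : ∀ j, volume (E j) = volume (Bl (m + 1) (R j)))
    {c : ℝ} (hT : Tfun (fun j => Bl (m + 1) (R j)) -
      c * tripleDist E (fun j => Bl (m + 1) (R j)) ^ 2 < Tfun E) :
    0 < tripleDist E (fun j => Bl (m + 1) (R j)) := by
  refine (tripleDist_nonneg R hE).lt_of_ne' fun h0 => ?_
  rw [h0] at hT
  have hgap : 0 < Tfun E - Tfun (fun j => Bl (m + 1) (R j)) := by linarith
  set g := Tfun E - Tfun (fun j => Bl (m + 1) (R j)) with hg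
  set M := ∑ j, volume.real (Bl (m + 1) (R j)) with hMdef
  have hM : 0 ≤ M := Finset.sum_nonneg fun _ _ => measureReal_nonneg
  obtain ⟨ψ, v, hs, hψ, hN⟩ := exists_lt_tripleDist R hE (η := g / (4 * (M + 1)))
    (by rw [h0]; positivity)
  have := Tfun_sub_le (R := R) (E := fun j => aff ψ (v j) ⁻¹' E j) (M := M)
    (fun j => (aff_cont ψ (v j)).measurable (hE j))
    (fun j => by rw [meas_pre (aff_mp hψ (v j)) (hE j), hv]) hN
    (fun j => Finset.single_le_sum (f := fun j => volume.real (Bl (m + 1) (R j)))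
      (fun _ _ => measureReal_nonneg) (Finset.mem_univ j))
  rw [Tfun_aff hψ hs] at this
  have h3 : g / (4 * (M + 1)) * M ≤ g / 4 := by
    calc _ ≤ g / (4 * (M + 1)) * (M + 1) := by gcongr; linarith
      _ = _ := by field_simp
  linarith

/-- The theorem in dimension `m + 1`, by contradiction along a sequence of triples that violate it with
constants tending to `0`. -/
theorem main (m : ℕ) {ρ : ℝ} (hρ : 0 < ρ) :
    ∃ δ₀ > (0 : ℝ), ∃ c > (0 : ℝ), ∀ E : Fin 3 → Set (Vec (m + 1)),
      (∀ j, MeasurableSet (E j)) → (∀ j, volume (E j) ≠ ⊤) →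
      RhoStrictlyAdmissible ρ (fun j => (volume (E j)).toReal ^ ((1 : ℝ) / ((m + 1 : ℕ) : ℝ))) →
      tripleDist E (fun j => ballStar (E j)) ≤
        δ₀ * max (volume (E 0)).toReal (max (volume (E 1)).toReal (volume (E 2)).toReal) →
      Tfun E ≤ Tfun (fun j => ballStar (E j))
        - c * (tripleDist E (fun j => ballStar (E j))) ^ 2 := by
  by_contra hcon
  push Not at hcon
  choose E hE hfin hadm hclose hT using fun n : ℕ =>
    hcon (1 / ((n : ℝ) + 1)) Nat.one_div_pos_of_nat (1 / ((n : ℝ) + 1)) Nat.one_div_pos_of_nat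
  clear hcon
  set R : ℕ → Fin 3 → ℝ := fun n j => starRad (E n j) with hR
  have hstar : ∀ n, (fun j => ballStar (E n j)) = fun j => Bl (m + 1) (R n j) := fun n => rfl
  simp only [hstar] at hclose hT
  have hvol : ∀ n j, volume (E n j) = volume (Bl (m + 1) (R n j)) := fun n j => volume_starRad (hfin n j)
  have hD : ∀ n, 0 < tripleDist (E n) (fun j => Bl (m + 1) (R n j)) := fun n =>
    dist_pos (hE n) (hvol n) (hT n)
  have hadmR : ∀ n, RhoStrictlyAdmissible ρ (R n) := fun n => by
    have : R n = fun j => (volume (E n j)).toReal ^ ((1 : ℝ) / ((m + 1 : ℕ) : ℝ)) /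
        om m ^ ((1 : ℝ) / ((m + 1 : ℕ) : ℝ)) := by
      funext j; exact starRad_eq _
    rw [this]
    exact admissible_div (Real.rpow_pos_of_pos (om_pos m) _) (hadm n)
  have hl : ∀ n, 0 < R n 0 := fun n => (hadmR n).1 0
  choose E' hE' hvol' hcl' hdef hfar using fun n => normalize (hE n) (hvol n) (hl n) (hD n)
  set r : ℕ → Fin 3 → ℝ := fun n j => R n j / R n 0 with hr
  set δ : ℕ → ℝ := fun n => tripleDist (E n) (fun j => Bl (m + 1) (R n j)) / R n 0 ^ (m + 1) with hδ
  have hadmr : ∀ n, RhoStrictlyAdmissible ρ (r n) := fun n => admissible_div (hl n) (hadmR n)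
  have hr0 : ∀ n, r n 0 = 1 := fun n => div_self (hl n).ne'
  have hrI : ∀ n, r n ∈ Icc (fun _ : Fin 3 => ρ) (fun _ => ρ⁻¹) := fun n => by
    refine ⟨fun j => ?_, fun j => ?_⟩
    · have := (hadmr n).2.2 0 j
      rwa [hr0, mul_one] at this
    · have := (hadmr n).2.2 j 0
      rw [hr0] at this
      rwa [← one_div, le_div_iff₀ hρ, mul_comm]
  have hδ0 : Tendsto δ atTop (𝓝 0) := by
    have hlim : Tendsto (fun n : ℕ => 1 / ((n : ℝ) + 1) * (om m * ρ⁻¹ ^ (m + 1))) atTop (𝓝 0) := by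
      simpa using (tendsto_one_div_add_atTop_nhds_zero_nat (𝕜 := ℝ)).mul_const
        (om m * ρ⁻¹ ^ (m + 1))
    refine squeeze_zero (fun n => (div_pos (hD n) (pow_pos (hl n) _)).le) (fun n => ?_) hlim
    rw [hδ]
    simp only
    rw [div_le_iff₀ (pow_pos (hl n) _)]
    refine (hclose n).trans ?_
    rw [mul_assoc]
    gcongr
    have hj : ∀ j, (volume (E n j)).toReal ≤ om m * ρ⁻¹ ^ (m + 1) * R n 0 ^ (m + 1) := fun j => by
      have e : (volume (E n j)).toReal = om m * R n j ^ (m + 1) := by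
        rw [hR]; simp only [starRad_pow]
        rw [mul_div_cancel₀ _ (om_pos m).ne']
      have h1 : R n j ≤ ρ⁻¹ * R n 0 := by
        have := (hrI n).2 j
        rwa [hr, div_le_iff₀ (hl n)] at this
      have := om_pos m
      have := ((hadmR n).1 j).le
      rw [e, mul_assoc, ← mul_pow]
      gcongr
    exact max_le (hj 0) (max_le (hj 1) (hj 2))
  obtain ⟨rl, hrl, φ, hφ, hlim⟩ := isCompact_Icc.tendsto_subseq hrI
  have hlimj : ∀ j, Tendsto (fun n => r (φ n) j) atTop (𝓝 (rl j)) := fun j =>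
    (tendsto_pi_nhds.1 hlim) j
  have hpos : ∀ j, 0 < rl j := fun j => hρ.trans_le (hrl.1 j)
  have htri : ∀ i j k : Fin 3, ({i, j, k} : Set (Fin 3)) = univ → rl k < rl i + rl j :=
    fun i j k hijk => by
      have : rl k ≤ (1 - ρ) * (rl i + rl j) :=
        le_of_tendsto_of_tendsto' (hlimj k) (((hlimj i).add (hlimj j)).const_mul _)
          fun n => (hadmr (φ n)).2.1 i j k hijk
      nlinarith [hpos i, hpos j]
  have S : Setup m (r ∘ φ) rl (E' ∘ φ) (δ ∘ φ) 2 := by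
    refine ⟨⟨hpos, fun j => ?_⟩, hlimj, fun n j => (hadmr (φ n)).1 j, fun n j => hE' (φ n) j,
      fun n j => hvol' (φ n) j, fun n => div_pos (hD _) (pow_pos (hl _) _),
      hδ0.comp hφ.tendsto_atTop, fun n j => hcl' (φ n) j, fun n => 1 / ((φ n : ℝ) + 1),
      (tendsto_one_div_add_atTop_nhds_zero_nat (𝕜 := ℝ)).comp hφ.tendsto_atTop, fun n => ?_⟩
    · have h0 := htri 1 2 0 triple_univ.2.2
      have h1 := htri 0 2 1 triple_univ.2.1
      have h2 := htri 0 1 2 triple_univ.1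
      fin_cases j
      · change 2 * rl 0 < _; linarith
      · change 2 * rl 1 < _; linarith
      · change 2 * rl 2 < _; linarith
    · refine (hdef (φ n)).le.trans ?_
      have hp : 0 < (R (φ n) 0 ^ (m + 1)) ^ 2 := pow_pos (pow_pos (hl _) _) 2
      change _ ≤ 1 / ((φ n : ℝ) + 1) *
        (tripleDist (E (φ n)) (fun j => Bl (m + 1) (R (φ n) j)) / R (φ n) 0 ^ (m + 1)) ^ 2
      rw [div_pow, ← mul_div_assoc]
      refine div_le_div_of_nonneg_right ?_ hp.le
      linarith [hT (φ n)]
  exact S.contra fun n => hfar (φ n)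

end RS

/-- Perturbative form of the sharpened Riesz–Sobolev inequality: it suffices to treat
triples within distance `δ₀ · max_j |E_j|` of the extremizing orbit. -/
theorem sharpened_riesz_sobolev_perturbative (d : ℕ) (hd : 1 ≤ d) (ρ : ℝ) (hρ : 0 < ρ) :
    ∃ δ₀ > (0 : ℝ), ∃ c > (0 : ℝ), ∀ E : Fin 3 → Set (Vec d),
      (∀ j, MeasurableSet (E j)) → (∀ j, volume (E j) ≠ ⊤) →
      RhoStrictlyAdmissible ρ (fun j => (volume (E j)).toReal ^ ((1 : ℝ) / d)) →
      tripleDist E (fun j => ballStar (E j)) ≤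
        δ₀ * max (volume (E 0)).toReal (max (volume (E 1)).toReal (volume (E 2)).toReal) →
      Tfun E ≤ Tfun (fun j => ballStar (E j))
        - c * (tripleDist E (fun j => ballStar (E j))) ^ 2 := by
  obtain ⟨m, rfl⟩ : ∃ m, d = m + 1 := ⟨d - 1, by omega⟩
  exact RS.main m hρ
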